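/- Let K(n) be the contact algebra, n = 2m+1 ≥ 3. Each Sq(x_i) (1 ≤ i ≤ 2m) and Sq(1) is a 2-cocycle of K(n) with adjoint coefficients, and for every 2-cocycle ψ of K(n) there exist unique scalars c_0, c_1, …, c_{2m} ∈ F such that ψ − c_0·Sq(1) − Σ_{i=1}^{2m} c_i·Sq(x_i) is a 2-coboundary. (Equivalently, H²(K(n),K(n)) = ⊕_{i=1}^{2m} ⟨Sq(x_i)⟩ ⊕ ⟨Sq(1)⟩.) -/

import Mathlib

/-!
Notation: `A = TruncP F p (2m+1)` is `K'(n)` with the bracket `br`, and `Ksub` is `K(n)` inside it.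
A monomial is called regular if it lies in `K(n)`, has nonnegative degree and is not `x_n`.
Brackets with regular monomials have no constant term (`cf0_reg`). The plane of `i` is the pair of
coordinates `x_i, x_{i'}`. The radical of a bilinear form `c` is the set of `x` with `c(x, ·) = 0`.

**Detecting the squarings.** Let `LamQ i ψ` be the constant term of `ψ(x_i², x_i^{p-1} x_{i'})` and
`Lam0 ψ` that of `ψ(x_n², x_n^{p-1})`. These functionals kill coboundaries (`lamQ_dl`, `lam0_dl`).
On the squarings of `1` and the `x_j`, `LamQ i` is nonzero only on `Sq(x_{i'})` and `Lam0` only on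
`Sq(1)`. This gives uniqueness of the scalars. Squarings are cocycles because they are
sums over pairs of divided powers of `ad z` of total order `p` (`sq_coc`), so existence amounts to:
a cocycle on which all these functionals vanish is a coboundary (`exact_of_lam`).

**The constant term.** The constant term of `ψ` on regular monomials is a scalar 2-cocycle `c`.
After a normalisation at `x_n` (`stepA1`), `c` pairs only monomials of total degree `-2` modulo `p`.
Such forms, with the two vanishing conditions, are the structure `Coc`. The form `c` is the
coboundary of a functional (`redA`): subtracting coboundaries of functionals, one puts into its
radical

* the elements `x_i x_{i'}` (`stepA2`), so that `c` preserves weights;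
* the squares `x_i²` (`stepA3`). Values at the edge of the truncation cannot be removed by a
  functional. They vanish by the cocycle identity, except those at `x_i^{p-1} x_{i'}`, which vanish
  because `LamQ` does (`kappa`). Now `c` is invariant under one copy of `sl₂` for each
  plane, so that in each plane the exponents of two monomials paired nontrivially are swapped or
  complementary to `p-1` (`Coc3.sel`);
* after a last normalisation (`stepA4`), at monomials whose exponents in each plane are `(0,0)` or
  `(p-1,p-1)`, also `x_n x_o`, `x_o x_j` and `x_o³` for a fixed `o` (`rnx`, `rxx`, `rcube`).
  The vanishing of `Lam0` enters at the first of these.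

Induction on the degree then shows that every regular monomial is in the radical (`Coc4.zero`).

**Reconstruction.** Once its constant terms vanish, `ψ` is made to vanish on `1, x_1, …, x_{2m}`, one
at a time (`cocStep`), by means of the Taylor expansion along the nilpotent derivation `Z = ad z`
(`DP.taylor`). The obstruction, the sum of `Z^a ψ(z, ·) Z^b` over `a + b = p-1`, is a derivation
(`thk_p_der`), hence inner in `A` (`der_inner`), which allows it to be removed. The remaining values
commute with `1` and all `x_i`, hence are constants (`comm_N`), hence zero (`partC`). Finally, the
primitive maps `K(n)` to itself because `K(n)` is perfect (`prim_mem`).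
-/

set_option maxHeartbeats 1000000
set_option synthInstance.maxHeartbeats 400000

open scoped BigOperators
noncomputable section

variable (F : Type*) [Field F] (p n : ℕ)

/-- The ideal `(X_1^p, …, X_n^p)` of the polynomial ring. -/
def truncIdeal : Ideal (MvPolynomial (Fin n) F) :=
  Ideal.span (Set.range fun i : Fin n => MvPolynomial.X i ^ p)

/-- The truncated polynomial algebra `A(n) = F[x_1,…,x_n]/(x_1^p,…,x_n^p)`. -/
abbrev TruncP := MvPolynomial (Fin n) F ⧸ truncIdeal F p n

/-- The monomial `x^a` in `A(n)`. -/
def xpow (a : Fin n → ℕ) : TruncP F p n :=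
  Ideal.Quotient.mk _ (MvPolynomial.monomial (Finsupp.equivFunOnFinite.symm a) 1)

/-- Lift an `F`-linear map killing the truncation ideal to the quotient. -/
def liftF {N : Type*} [AddCommGroup N] [Module F N]
    (f : MvPolynomial (Fin n) F →ₗ[F] N)
    (h : (truncIdeal F p n).restrictScalars F ≤ LinearMap.ker f) :
    TruncP F p n →ₗ[F] N :=
  (Submodule.liftQ ((truncIdeal F p n).restrictScalars F) f h) ∘ₗ
    (Submodule.Quotient.restrictScalarsEquiv F (truncIdeal F p n)).symm.toLinearMap

lemma liftF_mk {N : Type*} [AddCommGroup N] [Module F N]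
    (f : MvPolynomial (Fin n) F →ₗ[F] N)
    (h : (truncIdeal F p n).restrictScalars F ≤ LinearMap.ker f)
    (x : MvPolynomial (Fin n) F) :
    liftF F p n f h (Ideal.Quotient.mk _ x) = f x := by
  simp only [liftF, LinearMap.coe_comp, Function.comp_apply, LinearEquiv.coe_coe]
  have : (Ideal.Quotient.mk (truncIdeal F p n)) x = Submodule.Quotient.mk x := rfl
  rw [this, Submodule.Quotient.restrictScalarsEquiv_symm_mk, Submodule.liftQ_apply]

lemma truncIdeal_pderiv_mem [CharP F p] (j : Fin n) {f : MvPolynomial (Fin n) F}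
    (hf : f ∈ truncIdeal F p n) :
    Ideal.Quotient.mk (truncIdeal F p n) (MvPolynomial.pderiv j f) = 0 := by
  classical
  let K : Ideal (MvPolynomial (Fin n) F) :=
    { carrier := {g | Ideal.Quotient.mk (truncIdeal F p n) (MvPolynomial.pderiv j g) = 0 ∧
        Ideal.Quotient.mk (truncIdeal F p n) g = 0},
      add_mem' := by
        rintro a b ⟨ha1, ha2⟩ ⟨hb1, hb2⟩
        refine ⟨?_, ?_⟩
        · rw [map_add, map_add, ha1, hb1, add_zero]
        · rw [map_add, ha2, hb2, add_zero]
      zero_mem' := ⟨by rw [map_zero, map_zero], by rw [map_zero]⟩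
      smul_mem' := by
        rintro c x ⟨hx1, hx2⟩
        refine ⟨?_, ?_⟩
        · have hL : MvPolynomial.pderiv j (c * x)
              = c * MvPolynomial.pderiv j x + x * MvPolynomial.pderiv j c := by
            have := (MvPolynomial.pderiv j).leibniz c x
            simpa [smul_eq_mul, mul_comm] using this
          rw [smul_eq_mul, hL]
          rw [map_add, map_mul, map_mul, hx1, hx2, mul_zero, zero_mul, add_zero]
        · rw [smul_eq_mul, map_mul, hx2, mul_zero] }
  have hle : truncIdeal F p n ≤ K := by
    rw [truncIdeal, Ideal.span_le]
    rintro _ ⟨i, rfl⟩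
    refine ⟨?_, ?_⟩
    · have hgen : MvPolynomial.pderiv j (MvPolynomial.X (R := F) i ^ p) = 0 := by
        rw [MvPolynomial.X_pow_eq_monomial, MvPolynomial.pderiv_monomial]
        rcases eq_or_ne i j with h | h
        · subst h
          simp [Finsupp.single_apply, CharP.cast_eq_zero F p]
        · simp [Finsupp.single_apply, h]
      rw [hgen, map_zero]
    · exact Ideal.Quotient.eq_zero_iff_mem.mpr (Ideal.subset_span ⟨i, rfl⟩)
  exact (hle hf).1

lemma truncIdeal_support {f : MvPolynomial (Fin n) F} (hf : f ∈ truncIdeal F p n) :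
    ∀ d ∈ f.support, ∃ i, p ≤ d i := by
  classical
  let K : Ideal (MvPolynomial (Fin n) F) :=
    { carrier := {g | ∀ d ∈ g.support, ∃ i, p ≤ d i},
      add_mem' := by
        intro a b ha hb d hd
        rcases Finset.mem_union.mp (MvPolynomial.support_add hd) with h | h
        · exact ha d h
        · exact hb d h
      zero_mem' := by simp
      smul_mem' := by
        intro c x hx d hd
        rw [smul_eq_mul] at hd
        obtain ⟨d1, hd1, d2, hd2, rfl⟩ := Finset.mem_add.mp (MvPolynomial.support_mul c x hd)
        obtain ⟨i, hi⟩ := hx d2 hd2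
        exact ⟨i, le_trans hi (by simp)⟩ }
  have hle : truncIdeal F p n ≤ K := by
    rw [truncIdeal, Ideal.span_le]
    rintro _ ⟨i, rfl⟩ d hd
    simp only [MvPolynomial.X_pow_eq_monomial] at hd
    rw [MvPolynomial.support_monomial] at hd
    simp only [one_ne_zero, if_false] at hd
    rcases Finset.mem_singleton.mp hd with rfl
    exact ⟨i, by simp⟩
  exact hle hf

/-- The coefficient of `x^a` (for `a` componentwise `< p`) of an element of `A(n)`,
as a linear functional. For `a` not in the box this is defined to be `0`. -/
def coeffT (a : Fin n → ℕ) : TruncP F p n →ₗ[F] F :=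
  if h : ∀ i, a i < p then
    liftF F p n
      { toFun := fun f => f.coeff (Finsupp.equivFunOnFinite.symm a),
        map_add' := fun f g => MvPolynomial.coeff_add _ f g,
        map_smul' := fun c f => MvPolynomial.coeff_smul _ c f }
      (by
        intro f hf
        have hf' : f ∈ truncIdeal F p n := hf
        simp only [LinearMap.mem_ker, LinearMap.coe_mk, AddHom.coe_mk]
        by_contra hne
        have hmem : Finsupp.equivFunOnFinite.symm a ∈ f.support :=
          MvPolynomial.mem_support_iff.mpr hne
        obtain ⟨i, hi⟩ := truncIdeal_support F p n hf' _ hmem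
        have heq : (Finsupp.equivFunOnFinite.symm a) i = a i := rfl
        have h2 := h i
        rw [heq] at hi
        omega)
  else 0

/-- The Jacobson–Witt algebra `W(n) = Der_F A(n)`. -/
abbrev Witt := Derivation F (TruncP F p n) (TruncP F p n)

def DjL [CharP F p] (j : Fin n) : TruncP F p n →ₗ[F] TruncP F p n :=
  liftF F p n
    ((Ideal.Quotient.mkₐ F (truncIdeal F p n)).toLinearMap ∘ₗ (MvPolynomial.pderiv j).toLinearMap)
    (by
      intro f hf
      have hf' : f ∈ truncIdeal F p n := hf
      simp only [LinearMap.mem_ker, LinearMap.coe_comp, Function.comp_apply,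
        AlgHom.toLinearMap_apply, Ideal.Quotient.mkₐ_eq_mk, Derivation.coeFn_coe]
      exact truncIdeal_pderiv_mem F p n j hf')

lemma DjL_mk [CharP F p] (j : Fin n) (f : MvPolynomial (Fin n) F) :
    DjL F p n j (Ideal.Quotient.mk _ f) = Ideal.Quotient.mk _ (MvPolynomial.pderiv j f) := by
  rw [DjL, liftF_mk]
  simp

/-- The partial derivative `D_j = ∂/∂x_j`, as a derivation of `A(n)`. -/
def Dj [CharP F p] (j : Fin n) : Witt F p n where
  toLinearMap := DjL F p n j
  map_one_eq_zero' := by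
    have h1 : (1 : TruncP F p n) = Ideal.Quotient.mk _ (1 : MvPolynomial (Fin n) F) :=
      (map_one _).symm
    rw [LinearMap.coe_mk] at *
    show DjL F p n j 1 = 0
    rw [h1, DjL_mk]
    simp
  leibniz' := by
    intro a b
    obtain ⟨x, rfl⟩ := Ideal.Quotient.mk_surjective a
    obtain ⟨y, rfl⟩ := Ideal.Quotient.mk_surjective b
    show DjL F p n j _ = _ • DjL F p n j _ + _ • DjL F p n j _
    rw [← map_mul, DjL_mk, DjL_mk, DjL_mk, smul_eq_mul, smul_eq_mul, ← map_mul, ← map_mul,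
      ← map_add]
    congr 1
    have := (MvPolynomial.pderiv j).leibniz x y
    simpa [smul_eq_mul] using this
section Cochains

variable (F : Type*) [Field F] {L : Type*} [AddCommGroup L] [Module F L]

/-- A map of two arguments which is `F`-linear in each argument. -/
def IsBilinear (ψ : L → L → L) : Prop :=
  (∀ x, IsLinearMap F (ψ x)) ∧ ∀ y, IsLinearMap F fun x => ψ x y

/-- A 2-cochain with adjoint coefficients: an alternating `F`-bilinear map. -/
def IsCochain (ψ : L → L → L) : Prop :=
  IsBilinear F ψ ∧ ∀ x, ψ x x = 0

/-- A 2-cocycle with adjoint coefficients, for the bracket `B`. -/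
def IsCocycle (B : L → L → L) (ψ : L → L → L) : Prop :=
  IsCochain F ψ ∧ ∀ x y z,
    B x (ψ y z) - B y (ψ x z) + B z (ψ x y)
      - ψ (B x y) z + ψ (B x z) y - ψ (B y z) x = 0

/-- A 2-coboundary with adjoint coefficients, for the bracket `B`. -/
def IsCoboundary (B : L → L → L) (ψ : L → L → L) : Prop :=
  ∃ φ : L →ₗ[F] L, ∀ x y, ψ x y = B x (φ y) - B y (φ x) - φ (B x y)

/-- A 2-cocycle of a subspace `V` (closed under the bracket `B` of the ambient space),
with adjoint coefficients.  The cochain is recorded as an everywhere-defined bilinear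
map preserving `V`; only its restriction to `V` is relevant. -/
def IsCocycleOn (V : Submodule F L) (B : L → L → L) (ψ : L → L → L) : Prop :=
  IsBilinear F ψ ∧ (∀ x ∈ V, ∀ y ∈ V, ψ x y ∈ V) ∧ (∀ x ∈ V, ψ x x = 0) ∧
    ∀ x ∈ V, ∀ y ∈ V, ∀ z ∈ V,
      B x (ψ y z) - B y (ψ x z) + B z (ψ x y)
        - ψ (B x y) z + ψ (B x z) y - ψ (B y z) x = 0

/-- A 2-coboundary of a subspace `V`, with adjoint coefficients. -/
def IsCoboundaryOn (V : Submodule F L) (B : L → L → L) (ψ : L → L → L) : Prop :=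
  ∃ φ : L →ₗ[F] L, (∀ x ∈ V, φ x ∈ V) ∧
    ∀ x ∈ V, ∀ y ∈ V, ψ x y = B x (φ y) - B y (φ x) - φ (B x y)

/-- A derivation of a subspace `V` closed under the bracket `B`:
an `F`-linear map preserving `V` and satisfying the Leibniz rule on `V`. -/
def IsDerivationOn (V : Submodule F L) (B : L → L → L) (γ : L →ₗ[F] L) : Prop :=
  (∀ x ∈ V, γ x ∈ V) ∧ ∀ x ∈ V, ∀ y ∈ V, γ (B x y) = B (γ x) y + B x (γ y)

/-- An inner derivation of a subspace `V`: a map agreeing on `V` with `ad z = B z ·`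
for some `z ∈ V`. -/
def IsInnerOn (V : Submodule F L) (B : L → L → L) (δ : L → L) : Prop :=
  ∃ z ∈ V, ∀ y ∈ V, δ y = B z y

/-- An inner derivation: `δ = ad z = B z ·` for some `z`. -/
def IsInner (B : L → L → L) (δ : L → L) : Prop := ∃ z, ∀ y, δ y = B z y

/-- The squaring `Sq(γ)(x,y) = ∑_{i=1}^{p-1} [γ^i(x), γ^{p-i}(y)]/(i!·(p-i)!)`
of an operator `γ`, relative to the bracket `B`. -/
def Squaring (p : ℕ) (B : L → L → L) (γ : L → L) : L → L → L := fun x y =>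
  ∑ i ∈ Finset.Ioo 0 p,
    (((Nat.factorial i * Nat.factorial (p - i) : ℕ) : F))⁻¹ • B (γ^[i] x) (γ^[p - i] y)

/-- `Sq(z) := Sq(ad z)` for an element `z`. -/
def SqE (p : ℕ) (B : L → L → L) (z : L) : L → L → L :=
  Squaring F p B (fun y => B z y)

/-- The Hochschild operator
`H_ψ(x)(y) = ∑_{j=0}^{p-1} (ad x)^j (ψ(x, (ad x)^{p-1-j}(y))) − ψ(x^{[p]}, y)`,
for the bracket `B`, the 2-cochain `ψ`, and the chosen `p`-th power `xp` of `x`. -/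
def HOp (p : ℕ) (B : L → L → L) (ψ : L → L → L) (x xp : L) : L → L := fun y =>
  (∑ j ∈ Finset.range p, (fun z => B x z)^[j] (ψ x ((fun z => B x z)^[p - 1 - j] y)))
    - ψ xp y

end Cochains

section Symplectic

variable (F : Type*) [Field F] (m : ℕ)

/-- The sign `σ(j)` for `1 ≤ j ≤ 2m`: `1` if `j ≤ m` and `−1` if `j > m`. -/
def sg (j : Fin (2 * m)) : F := if (j : ℕ) < m then 1 else -1

/-- The conjugate index `j' = j ± m`. -/
def cj (j : Fin (2 * m)) : Fin (2 * m) :=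
  if h : (j : ℕ) < m then ⟨(j : ℕ) + m, by omega⟩
  else ⟨(j : ℕ) - m, by have := j.isLt; omega⟩

end Symplectic

section Contact

variable (F : Type*) [Field F] (p m : ℕ) [CharP F p]

/-- The operator `D_H(f)(g) = ∑_{j=1}^{2m} σ(j)·D_j(f)·D_{j'}(g)` on `A(2m+1)`. -/
def DHK (f g : TruncP F p (2 * m + 1)) : TruncP F p (2 * m + 1) :=
  ∑ j : Fin (2 * m),
    sg F m j • (Dj F p (2 * m + 1) j.castSucc f * Dj F p (2 * m + 1) (cj m j).castSucc g)

/-- The Euler-type operator `E(g) = ∑_{i=1}^{2m} x_i D_i(g) + 2 x_n D_n(g) − 2g`,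
so that `E(x^b) = deg(x^b)·x^b` for the contact grading. -/
def EulK (g : TruncP F p (2 * m + 1)) : TruncP F p (2 * m + 1) :=
  (∑ j : Fin (2 * m),
      xpow F p (2 * m + 1) (Pi.single j.castSucc 1) * Dj F p (2 * m + 1) j.castSucc g)
    + (2 : TruncP F p (2 * m + 1)) *
        (xpow F p (2 * m + 1) (Pi.single (Fin.last (2 * m)) 1) *
          Dj F p (2 * m + 1) (Fin.last (2 * m)) g)
    - (2 : TruncP F p (2 * m + 1)) * g

/-- The contact bracket on `K'(n) = A(n)`, `n = 2m+1`:
`[f,g] = D_H(f)(g) + D_n(f)·E(g) − D_n(g)·E(f)`, which on monomials is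
`[x^a, x^b] = D_H(x^a)(x^b) + (a_n·deg(x^b) − b_n·deg(x^a))·x^{a+b−ε_n}`. -/
def Kbr (f g : TruncP F p (2 * m + 1)) : TruncP F p (2 * m + 1) :=
  DHK F p m f g
    + Dj F p (2 * m + 1) (Fin.last (2 * m)) f * EulK F p m g
    - Dj F p (2 * m + 1) (Fin.last (2 * m)) g * EulK F p m f

/-- The contact algebra `K(n) = [K'(n), K'(n)]`: all of `K'(n)` if `p ∤ (m+2)`, and
the span of the monomials `x^a`, `a ≠ τ`, if `p ∣ (m+2)`. -/
def Ksub : Submodule F (TruncP F p (2 * m + 1)) :=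
  if p ∣ (m + 2) then
    Submodule.span F
      {f | ∃ a : Fin (2 * m + 1) → ℕ,
        (∀ i, a i < p) ∧ a ≠ (fun _ => p - 1) ∧ f = xpow F p (2 * m + 1) a}
  else ⊤

open scoped Classical in
/-- The `[p]`-th power of the monomial `x^a` in `K(n)`: `x^a` itself if
`x^a = x_i x_{i'}` (`1 ≤ i ≤ m`) or `x^a = x_n`, and `0` otherwise. -/
noncomputable def KpPow (a : Fin (2 * m + 1) → ℕ) : TruncP F p (2 * m + 1) :=
  if (∃ i : Fin (2 * m), (i : ℕ) < m ∧
        a = Pi.single i.castSucc 1 + Pi.single (cj m i).castSucc 1)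
      ∨ a = Pi.single (Fin.last (2 * m)) 1
  then xpow F p (2 * m + 1) a else 0

end Contact

namespace KH
set_option linter.unusedSectionVars false
set_option linter.unusedSimpArgs false

/-! ### Monomials with integer multi-indices and their brackets -/

section
variable {F : Type*} [Field F] {p m : ℕ}

theorem xpow_mul {n : ℕ} (a b : Fin n → ℕ) :
    xpow F p n a * xpow F p n b = xpow F p n (a + b) := by
  unfold xpow
  rw [← map_mul, MvPolynomial.monomial_mul, one_mul]
  have : Finsupp.equivFunOnFinite.symm a + Finsupp.equivFunOnFinite.symm b
    = Finsupp.equivFunOnFinite.symm (a + b) := by ext i; simp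
  rw [this]

theorem xpow_eq_zero {n : ℕ} (a : Fin n → ℕ) (i : Fin n) (h : p ≤ a i) : xpow F p n a = 0 := by
  classical
  unfold xpow
  rw [Ideal.Quotient.eq_zero_iff_mem]
  have h1 : MvPolynomial.monomial (Finsupp.equivFunOnFinite.symm a) (1 : F)
      = MvPolynomial.monomial (Finsupp.equivFunOnFinite.symm a - Finsupp.single i p) 1
        * MvPolynomial.X i ^ p := by
    rw [MvPolynomial.X_pow_eq_monomial, MvPolynomial.monomial_mul, one_mul, tsub_add_cancel_of_le]
    rw [Finsupp.single_le_iff]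
    simpa using h
  rw [h1]
  exact Ideal.mul_mem_left _ _ (Ideal.subset_span ⟨i, rfl⟩)

theorem xpow_zero {n : ℕ} : xpow F p n 0 = 1 := by
  unfold xpow
  rw [← map_one (Ideal.Quotient.mk (truncIdeal F p n))]
  have : Finsupp.equivFunOnFinite.symm (0 : Fin n → ℕ) = 0 := by ext i; simp
  rw [this, ← MvPolynomial.C_apply, map_one]

theorem Dj_xpow [CharP F p] {n : ℕ} (j : Fin n) (a : Fin n → ℕ) :
    Dj F p n j (xpow F p n a) = (a j : F) • xpow F p n (a - Pi.single j 1) := by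
  classical
  have h0 : Dj F p n j (xpow F p n a) = DjL F p n j (xpow F p n a) := rfl
  rw [h0]
  unfold xpow
  rw [DjL_mk, MvPolynomial.pderiv_monomial, one_mul]
  have h2 : MvPolynomial.monomial (Finsupp.equivFunOnFinite.symm a - Finsupp.single j 1)
      ((Finsupp.equivFunOnFinite.symm a) j : F)
      = (a j : F) • MvPolynomial.monomial
        (Finsupp.equivFunOnFinite.symm (a - Pi.single j 1)) (1 : F) := by
    rw [MvPolynomial.smul_monomial, smul_eq_mul, mul_one]
    have : (Finsupp.equivFunOnFinite.symm a - Finsupp.single j 1)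
      = (Finsupp.equivFunOnFinite.symm (a - Pi.single j 1)) := by
      ext k
      by_cases hk : k = j
      · subst hk; simp
      · simp [hk]
    rw [this]
    rfl
  rw [h2]
  rfl

theorem coeffT_xpow {n : ℕ} (a b : Fin n → ℕ) (ha : ∀ i, a i < p) [Decidable (b = a)] :
    coeffT F p n a (xpow F p n b) = if b = a then 1 else 0 := by
  classical
  unfold coeffT xpow
  rw [dif_pos ha, liftF_mk]
  simp only [LinearMap.coe_mk, AddHom.coe_mk, MvPolynomial.coeff_monomial,
    EmbeddingLike.apply_eq_iff_eq]

theorem span_xpow {n : ℕ} :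
    Submodule.span F {f | ∃ a : Fin n → ℕ, (∀ i, a i < p) ∧ f = xpow F p n a} = ⊤ := by
  rw [eq_top_iff]
  rintro f -
  obtain ⟨g, rfl⟩ := Ideal.Quotient.mk_surjective f
  induction g using MvPolynomial.induction_on' with
  | monomial u c =>
    have h1 : Ideal.Quotient.mk (truncIdeal F p n) (MvPolynomial.monomial u c)
        = c • xpow F p n (fun i => u i) := by
      unfold xpow
      have : MvPolynomial.monomial u c = c • MvPolynomial.monomial
          (Finsupp.equivFunOnFinite.symm (fun i => u i)) (1 : F) := by
        rw [MvPolynomial.smul_monomial, smul_eq_mul, mul_one]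
        have : u = Finsupp.equivFunOnFinite.symm (fun i => u i) := by ext i; simp
        rw [← this]
      rw [this]
      rfl
    rw [h1]
    by_cases h : ∀ i, u i < p
    · exact Submodule.smul_mem _ _ (Submodule.subset_span ⟨_, h, rfl⟩)
    · push Not at h
      obtain ⟨i, hi⟩ := h
      rw [xpow_eq_zero _ i hi, smul_zero]
      exact zero_mem _
  | add a b ha hb => rw [map_add]; exact add_mem ha hb

variable (F p) in
/-- The monomial `x^a` for an integer multi-index, with value `0` as soon as some exponent is
negative. With this convention equalities of monomials reduce to linear identities in `ℤ`. -/
def X (a : Fin (2 * m + 1) → ℤ) : TruncP F p (2 * m + 1) :=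
  if ∀ i, 0 ≤ a i then xpow F p (2 * m + 1) (fun i => (a i).toNat) else 0

/-- The multi-index `ε_i` of the `i`-th plane variable. -/
def q (i : Fin (2 * m)) : Fin (2 * m + 1) → ℤ := Pi.single i.castSucc 1

variable (m) in
/-- The multi-index `ε_n` of the contact variable `x_n`. -/
def en : Fin (2 * m + 1) → ℤ := Pi.single (Fin.last (2 * m)) 1

@[simp] theorem q_same (i : Fin (2 * m)) : q i i.castSucc = 1 := by simp [q]
@[simp] theorem q_last (i : Fin (2 * m)) : q i (Fin.last (2 * m)) = 0 := by
  simp [q]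
theorem q_apply (i j : Fin (2 * m)) : q i j.castSucc = if j = i then 1 else 0 := by
  simp [q, Pi.single_apply]
theorem q_ne {i j : Fin (2 * m)} (h : j ≠ i) : q i j.castSucc = 0 := by simp [q_apply, h]
@[simp] theorem en_cast (j : Fin (2 * m)) : en m j.castSucc = 0 := by
  simp [en]
@[simp] theorem en_last : en m (Fin.last (2 * m)) = 1 := by simp [en]

/-- The degree `∑ a_i + 2 a_n - 2` of `x^a`. -/
def dg (a : Fin (2 * m + 1) → ℤ) : ℤ :=
  ∑ i : Fin (2 * m), a i.castSucc + 2 * a (Fin.last (2 * m)) - 2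

theorem dg_add (a b : Fin (2 * m + 1) → ℤ) : dg (a + b) = dg a + dg b + 2 := by
  simp only [dg, Pi.add_apply, Finset.sum_add_distrib]; ring
theorem dg_sub (a b : Fin (2 * m + 1) → ℤ) : dg (a - b) = dg a - dg b - 2 := by
  simp only [dg, Pi.sub_apply, Finset.sum_sub_distrib]; ring
theorem dg_smul (k : ℤ) (a : Fin (2 * m + 1) → ℤ) : dg (k • a) = k * (dg a + 2) - 2 := by
  simp only [dg, Pi.smul_apply, smul_eq_mul, ← Finset.mul_sum]; ring
@[simp] theorem dg_q (i : Fin (2 * m)) : dg (q i) = -1 := by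
  simp [dg, q_apply]
@[simp] theorem dg_en : dg (en m) = 0 := by simp [dg]
@[simp] theorem dg_zero : dg (0 : Fin (2 * m + 1) → ℤ) = -2 := by simp [dg]

theorem X_nonneg {a : Fin (2 * m + 1) → ℤ} (h : ∀ i, 0 ≤ a i) :
    X F p a = xpow F p (2 * m + 1) (fun i => (a i).toNat) := if_pos h
theorem X_neg {a : Fin (2 * m + 1) → ℤ} (i : Fin (2 * m + 1)) (h : a i < 0) : X F p a = 0 :=
  if_neg fun h' => absurd (h' i) (not_le.2 h)
theorem X_big {a : Fin (2 * m + 1) → ℤ} (i : Fin (2 * m + 1)) (h : (p : ℤ) ≤ a i) :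
    X F p a = 0 := by
  by_cases h' : ∀ i, 0 ≤ a i
  · rw [X_nonneg h', xpow_eq_zero _ i]; have := h' i; omega
  · exact if_neg h'
theorem X_cast (a : Fin (2 * m + 1) → ℕ) : X F p (fun i => (a i : ℤ)) = xpow F p (2 * m + 1) a := by
  rw [X_nonneg (by intro i; positivity)]; simp
@[simp] theorem X_zero : X F p (0 : Fin (2 * m + 1) → ℤ) = 1 := by
  rw [X_nonneg (by intro i; simp), ← xpow_zero]; rfl

theorem X_mul {a b : Fin (2 * m + 1) → ℤ} (ha : ∀ i, 0 ≤ a i) (hb : ∀ i, 0 ≤ b i) :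
    X F p a * X F p b = X F p (a + b) := by
  have hab : ∀ i, 0 ≤ (a + b) i := fun i => add_nonneg (ha i) (hb i)
  rw [X_nonneg ha, X_nonneg hb, xpow_mul, X_nonneg hab]
  congr 1; ext i; have := ha i; have := hb i; simp only [Pi.add_apply]; omega

theorem D_X [CharP F p] (j : Fin (2 * m + 1)) {a : Fin (2 * m + 1) → ℤ} (ha : ∀ i, 0 ≤ a i) :
    Dj F p (2 * m + 1) j (X F p a) = (a j : F) • X F p (a - Pi.single j 1) := by
  rw [X_nonneg ha, Dj_xpow]
  have h1 : (((a j).toNat : ℕ) : F) = (a j : F) := by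
    have : ((a j).toNat : ℤ) = a j := by have := ha j; omega
    conv_rhs => rw [← this]
    rw [Int.cast_natCast]
  rw [h1]
  by_cases h0 : a j = 0
  · simp [h0]
  · have hn : ∀ i, 0 ≤ (a - Pi.single j 1 : Fin (2 * m + 1) → ℤ) i := by
      intro i; have := ha i; have := ha j
      by_cases h : i = j
      · subst h; simp; omega
      · simp [h, ha i]
    rw [X_nonneg hn]
    congr 2; ext i
    by_cases h : i = j
    · subst h; simp
    · simp [h]

theorem D_mul_D [CharP F p] (i j : Fin (2 * m + 1)) {a b : Fin (2 * m + 1) → ℤ}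
    (ha : ∀ i, 0 ≤ a i) (hb : ∀ i, 0 ≤ b i) :
    Dj F p (2 * m + 1) i (X F p a) * Dj F p (2 * m + 1) j (X F p b)
      = ((a i : F) * (b j : F)) • X F p (a + b - Pi.single i 1 - Pi.single j 1) := by
  rw [D_X i ha, D_X j hb, smul_mul_smul_comm]
  by_cases h0 : a i = 0
  · simp [h0]
  by_cases h1 : b j = 0
  · simp [h1]
  rw [X_mul]
  · congr 2; abel
  · intro k; have := ha k; have := ha i
    by_cases h : k = i
    · subst h; simp; omega
    · simp [h, ha k]
  · intro k; have := hb k; have := hb j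
    by_cases h : k = j
    · subst h; simp; omega
    · simp [h, hb k]

theorem x_mul_D [CharP F p] (i : Fin (2 * m + 1)) {b : Fin (2 * m + 1) → ℤ} (hb : ∀ i, 0 ≤ b i) :
    xpow F p (2 * m + 1) (Pi.single i 1) * Dj F p (2 * m + 1) i (X F p b) = (b i : F) • X F p b := by
  have h1 : xpow F p (2 * m + 1) (Pi.single i 1) = X F p (Pi.single i (1 : ℤ)) := by
    rw [← X_cast]; congr 1; ext k; by_cases h : k = i
    · subst h; simp
    · simp [h]
  rw [h1, D_X i hb, mul_smul_comm]
  by_cases h0 : b i = 0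
  · simp [h0]
  rw [X_mul]
  · congr 2; abel
  · intro k; by_cases h : k = i
    · subst h; simp
    · simp [h]
  · intro k; have := hb k; have := hb i
    by_cases h : k = i
    · subst h; simp; omega
    · simp [h, hb k]

theorem Eul_X [CharP F p] {b : Fin (2 * m + 1) → ℤ} (hb : ∀ i, 0 ≤ b i) :
    EulK F p m (X F p b) = (dg b : F) • X F p b := by
  unfold EulK
  simp only [x_mul_D _ hb, ← Finset.sum_smul]
  have : ∀ y : TruncP F p (2 * m + 1), 2 * y = (2 : F) • y := by
    intro y; simp only [two_smul, two_mul]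
  rw [this, this, smul_smul, ← add_smul, ← sub_smul]
  congr 1
  simp [dg]

/-- The bracket of two monomials. -/
theorem br_X [CharP F p] {a b : Fin (2 * m + 1) → ℤ} (ha : ∀ i, 0 ≤ a i) (hb : ∀ i, 0 ≤ b i) :
    Kbr F p m (X F p a) (X F p b)
      = (∑ j : Fin (2 * m), (sg F m j * a j.castSucc * b (cj m j).castSucc) •
          X F p (a + b - q j - q (cj m j)))
        + ((a (Fin.last _) : F) * dg b - b (Fin.last _) * dg a) • X F p (a + b - en m) := by
  unfold Kbr DHK
  have e1 : ∀ {a b : Fin (2 * m + 1) → ℤ}, (∀ i, 0 ≤ a i) → (∀ i, 0 ≤ b i) →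
      Dj F p (2 * m + 1) (Fin.last (2 * m)) (X F p a) * X F p b
        = (a (Fin.last _) : F) • X F p (a + b - en m) := by
    intro a b ha hb
    rw [D_X _ ha, smul_mul_assoc]
    by_cases h0 : a (Fin.last (2 * m)) = 0
    · simp [h0]
    rw [X_mul _ hb]
    · congr 2; unfold en; abel
    · intro k; have := ha k; have := ha (Fin.last (2 * m))
      by_cases h : k = Fin.last (2 * m)
      · subst h; simp; omega
      · simp [h, ha k]
  rw [Eul_X ha, Eul_X hb, mul_smul_comm, mul_smul_comm, e1 ha hb, e1 hb ha]
  simp only [D_mul_D _ _ ha hb]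
  rw [add_sub_assoc, smul_smul, smul_smul, add_comm b a, ← sub_smul]
  congr 1
  · apply Finset.sum_congr rfl
    intro j _
    rw [smul_smul, mul_assoc]
    rfl
  · congr 1; ring
end

/-! ### The contact bracket as a bilinear map and the Jacobi identity -/

section
variable {F : Type*} [Field F] {p m : ℕ}

@[simp] theorem cj_cj (i : Fin (2 * m)) : cj m (cj m i) = i := by
  have := i.isLt
  unfold cj
  by_cases h : (i : ℕ) < m
  · simp [h]
  · rw [dif_neg h, dif_pos (by simp only; omega)]
    ext; simp only; omega
@[simp] theorem cj_ne (i : Fin (2 * m)) : cj m i ≠ i := by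
  intro h
  have h1 := congrArg (fun x : Fin (2 * m) => (x : ℕ)) h
  have := i.isLt
  unfold cj at h1
  split_ifs at h1 <;> simp only at h1 <;> omega
@[simp] theorem ne_cj (i : Fin (2 * m)) : i ≠ cj m i := (cj_ne i).symm
theorem cj_inj {i j : Fin (2 * m)} : cj m i = cj m j ↔ i = j :=
  ⟨fun h => by rw [← cj_cj i, h, cj_cj], fun h => by rw [h]⟩
theorem cj_eq {i j : Fin (2 * m)} : cj m i = j ↔ i = cj m j :=
  ⟨fun h => by rw [← h, cj_cj], fun h => by rw [h, cj_cj]⟩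
theorem sg_cj (i : Fin (2 * m)) : sg F m (cj m i) = - sg F m i := by
  have := i.isLt
  unfold sg cj
  by_cases h : (i : ℕ) < m
  · simp [h]
  · have : (i : ℕ) - m < m := by omega
    simp [h, this]
theorem sg_mul_self (i : Fin (2 * m)) : sg F m i * sg F m i = 1 := by
  unfold sg; split_ifs <;> simp
theorem sg_ne (i : Fin (2 * m)) : sg F m i ≠ 0 := by
  unfold sg; split_ifs <;> simp

theorem sum_cj {M : Type*} [AddCommMonoid M] (f : Fin (2 * m) → M) :
    ∑ j, f (cj m j) = ∑ j, f j :=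
  Function.Bijective.sum_comp (Function.Involutive.bijective cj_cj) f

variable [CharP F p]

-- Explicit instances for the quotient ring, which shorten instance search.
scoped instance ia1 (n : ℕ) : CommRing (TruncP F p n) := Ideal.Quotient.commRing _
scoped instance ia2 (n : ℕ) : Ring (TruncP F p n) := (Ideal.Quotient.commRing _).toRing
scoped instance ia3 (n : ℕ) : Semiring (TruncP F p n) := (Ideal.Quotient.commRing _).toRing.toSemiring
scoped instance ia5 (n : ℕ) : AddCommGroup (TruncP F p n) := (Ideal.Quotient.commRing _).toRing.toAddCommGroup
scoped instance ia4 (n : ℕ) : AddCommMonoid (TruncP F p n) := (Ideal.Quotient.commRing _).toRing.toAddCommGroup.toAddCommMonoid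
scoped instance ia6 (n : ℕ) : Algebra F (TruncP F p n) := Ideal.Quotient.algebra _
scoped instance ia7 (n : ℕ) : Module F (TruncP F p n) := (Ideal.Quotient.algebra _).toModule

/-- The Euler derivation `∑ⱼ xⱼ Dⱼ + 2 xₙ Dₙ`. -/
def E0 : Witt F p (2 * m + 1) :=
  (∑ j : Fin (2 * m), xpow F p (2 * m + 1) (Pi.single j.castSucc 1) • Dj F p (2 * m + 1) j.castSucc)
    + ((2 : TruncP F p (2 * m + 1)) * xpow F p (2 * m + 1) (Pi.single (Fin.last (2 * m)) 1)) •
      Dj F p (2 * m + 1) (Fin.last (2 * m))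

theorem der_sum_apply {n : ℕ} {ι : Type*} (s : Finset ι) (f : ι → Witt F p n) (x : TruncP F p n) :
    (∑ i ∈ s, f i) x = ∑ i ∈ s, f i x := by
  classical
  induction s using Finset.induction_on with
  | empty => simp
  | insert a s ha ih => rw [Finset.sum_insert ha, Finset.sum_insert ha, Derivation.add_apply, ih]

theorem EulK_eq (g : TruncP F p (2 * m + 1)) : EulK F p m g = E0 g - 2 * g := by
  unfold EulK E0
  rw [Derivation.add_apply, der_sum_apply, Derivation.smul_apply]
  simp only [Derivation.smul_apply, smul_eq_mul, mul_assoc]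

/-- The Hamiltonian vector field of `f`: the derivation part of the first order operator
`Kbr f`. -/
def Hf (f : TruncP F p (2 * m + 1)) : Witt F p (2 * m + 1) :=
  (∑ j : Fin (2 * m), (sg F m j • Dj F p (2 * m + 1) j.castSucc f) •
      Dj F p (2 * m + 1) (cj m j).castSucc)
    + Dj F p (2 * m + 1) (Fin.last (2 * m)) f • E0
    - EulK F p m f • Dj F p (2 * m + 1) (Fin.last (2 * m))

theorem Kbr_eq (f g : TruncP F p (2 * m + 1)) :
    Kbr F p m f g = Hf f g - 2 * Dj F p (2 * m + 1) (Fin.last (2 * m)) f * g := by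
  unfold Kbr Hf DHK
  rw [Derivation.sub_apply, Derivation.add_apply, der_sum_apply, EulK_eq g]
  simp only [Derivation.smul_apply, smul_eq_mul, smul_mul_assoc]
  ring

theorem Kbr_skew (f g : TruncP F p (2 * m + 1)) : Kbr F p m f g = - Kbr F p m g f := by
  unfold Kbr
  have : DHK F p m f g = - DHK F p m g f := by
    unfold DHK
    rw [← sum_cj, ← Finset.sum_neg_distrib]
    apply Finset.sum_congr rfl
    intro j _
    rw [sg_cj, cj_cj, neg_smul]
    congr 2; exact mul_comm _ _
  rw [this]; ring

theorem Hf_add (f g : TruncP F p (2 * m + 1)) : Hf (f + g) = Hf f + Hf g := by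
  unfold Hf
  simp only [EulK_eq, map_add, smul_add, add_smul, Finset.sum_add_distrib, mul_add, sub_smul]
  abel_nf
  simp only [add_smul, smul_add]
  abel

theorem Hf_apply (f x : TruncP F p (2 * m + 1)) : Hf f x = DHK F p m f x
    + Dj F p (2 * m + 1) (Fin.last (2 * m)) f * E0 x
    - EulK F p m f * Dj F p (2 * m + 1) (Fin.last (2 * m)) x := by
  unfold Hf DHK
  rw [Derivation.sub_apply, Derivation.add_apply, der_sum_apply]
  simp only [Derivation.smul_apply, smul_eq_mul, smul_mul_assoc]

theorem Hf_smul (c : F) (f : TruncP F p (2 * m + 1)) : Hf (c • f) = c • Hf f := by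
  refine Derivation.ext fun x => ?_
  rw [Derivation.smul_apply, Hf_apply, Hf_apply]
  unfold DHK
  simp only [EulK_eq, Derivation.map_smul, smul_comm _ c, smul_mul_assoc, mul_smul_comm,
    ← smul_sub, ← smul_add, ← Finset.smul_sum]

/-- The contact bracket as a bilinear map. -/
def br : TruncP F p (2 * m + 1) →ₗ[F] TruncP F p (2 * m + 1) →ₗ[F] TruncP F p (2 * m + 1) :=
  LinearMap.mk₂ F (Kbr F p m)
    (by intro f g h; simp only [Kbr_eq, Hf_add, Derivation.add_apply, map_add]; ring)
    (by intro c f g; simp only [Kbr_eq, Hf_smul, Derivation.smul_apply, Derivation.map_smul, smul_sub,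
          mul_smul_comm, smul_mul_assoc])
    (by intro f g h; simp only [Kbr_eq, map_add]; ring)
    (by intro c f g; simp only [Kbr_eq, Derivation.map_smul, smul_sub, mul_smul_comm])

theorem br_def (f g : TruncP F p (2 * m + 1)) : br f g = Kbr F p m f g := rfl

theorem br_skew (f g : TruncP F p (2 * m + 1)) : br f g = - br g f := Kbr_skew f g

/-- A derivation is determined by its values on the coordinates. -/
theorem der_ext {n : ℕ} (D : Witt F p n) (h : ∀ i, D (xpow F p n (Pi.single i 1)) = 0) :
    ∀ x, D x = 0 := by
  have hX : ∀ i, Ideal.Quotient.mk (truncIdeal F p n) (MvPolynomial.X i)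
      = xpow F p n (Pi.single i 1) := by
    intro i
    unfold xpow MvPolynomial.X
    congr 2
    have : Finsupp.equivFunOnFinite.symm (Pi.single i 1 : Fin n → ℕ) = Finsupp.single i 1 := by
      ext k
      simp [Finsupp.single_apply, Pi.single_apply, eq_comm]
    rw [this]
  intro x
  obtain ⟨f, rfl⟩ := Ideal.Quotient.mk_surjective x
  induction f using MvPolynomial.induction_on with
  | C a =>
    have : Ideal.Quotient.mk (truncIdeal F p n) (MvPolynomial.C a)
        = algebraMap F (TruncP F p n) a := rfl
    rw [this, Derivation.map_algebraMap]
  | add a b ha hb => rw [map_add, map_add, ha, hb, add_zero]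
  | mul_X a i ha => rw [map_mul, Derivation.leibniz, ha, hX, h, smul_zero, smul_zero, add_zero]

/-- The Jacobi defect of the bracket. -/
def Jd (f g h : TruncP F p (2 * m + 1)) : TruncP F p (2 * m + 1) :=
  br f (br g h) - br g (br f h) - br (br f g) h

/-- In its last argument the Jacobi defect is a first-order differential operator, so it vanishes if it
vanishes at `1` and at the coordinates. -/
theorem Jd_first_order (f g : TruncP F p (2 * m + 1)) (h1 : Jd f g 1 = 0)
    (hx : ∀ i, Jd f g (xpow F p (2 * m + 1) (Pi.single i 1)) = 0) (h : TruncP F p (2 * m + 1)) :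
    Jd f g h = 0 := by
  set D : Witt F p (2 * m + 1) := ⁅Hf f, Hf g⁆ - Hf (br f g) with hD
  have key : ∀ h, Jd f g h = D h + (- 2 * Hf f (Dj F p (2 * m + 1) (Fin.last (2 * m)) g)
      + 2 * Hf g (Dj F p (2 * m + 1) (Fin.last (2 * m)) f)
      + 2 * Dj F p (2 * m + 1) (Fin.last (2 * m)) (br f g)) * h := by
    intro h
    have h2 : ∀ D : Witt F p (2 * m + 1), D 2 = 0 := fun D => by
      have := D.map_natCast 2
      simpa using this
    unfold Jd
    rw [hD, Derivation.sub_apply, Derivation.commutator_apply, br_def g h, br_def f h,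
      br_def (br f g) h, br_def f (Kbr F p m g h), br_def g (Kbr F p m f h)]
    simp only [Kbr_eq, map_sub, Derivation.leibniz, h2, smul_eq_mul]
    ring
  have hc := key 1
  rw [h1, D.map_one_eq_zero, zero_add, mul_one] at hc
  rw [key, ← hc, zero_mul, add_zero]
  apply der_ext
  intro i
  have := key (xpow F p (2 * m + 1) (Pi.single i 1))
  rw [hx, ← hc, zero_mul, add_zero] at this
  exact this.symm

theorem Jd_swap (f g h : TruncP F p (2 * m + 1)) : Jd f g h = - Jd g f h := by
  unfold Jd; rw [br_skew f g, map_neg]; simp only [LinearMap.neg_apply]; abel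
theorem Jd_rot (f g h : TruncP F p (2 * m + 1)) : Jd f g h = Jd g h f := by
  unfold Jd
  rw [br_skew g (br h f), br_skew h (br g f), br_skew (br g h) f, br_skew h f, br_skew g f]
  simp only [map_neg, LinearMap.neg_apply]
  rw [br_skew (br f h) g, br_skew (br f g) h]; abel

theorem X_en : X F p (en m) = xpow F p (2 * m + 1) (Pi.single (Fin.last (2 * m)) 1) := by
  rw [← X_cast]; congr 1; ext k; unfold en
  by_cases h : k = Fin.last (2 * m)
  · subst h; simp
  · simp [h]
theorem X_q (i : Fin (2 * m)) : X F p (q i) = xpow F p (2 * m + 1) (Pi.single i.castSucc 1) := by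
  rw [← X_cast]; congr 1; ext k; unfold q
  by_cases h : k = i.castSucc
  · subst h; simp
  · simp [h]

theorem q_nonneg (i : Fin (2 * m)) (k) : 0 ≤ q i k := by
  by_cases h : k = i.castSucc
  · subst h; simp [q]
  · simp [q, h]
theorem en_nonneg (k) : 0 ≤ en m k := by
  by_cases h : k = Fin.last (2 * m)
  · subst h; simp [en]
  · simp [en, h]

theorem br_X' {a b : Fin (2 * m + 1) → ℤ} (ha : ∀ i, 0 ≤ a i) (hb : ∀ i, 0 ≤ b i) :
    br (X F p a) (X F p b)
      = (∑ j : Fin (2 * m), (sg F m j * a j.castSucc * b (cj m j).castSucc) •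
          X F p (a + b - q j - q (cj m j)))
        + ((a (Fin.last _) : F) * dg b - b (Fin.last _) * dg a) • X F p (a + b - en m) :=
  br_X ha hb

theorem sum_q (i : Fin (2 * m)) {M : Type*} [AddCommGroup M] [Module F M] (f : Fin (2 * m) → F)
    (g : Fin (2 * m) → M) :
    ∑ j : Fin (2 * m), (sg F m j * (q i j.castSucc : ℤ) * f j) • g j
      = (sg F m i * f i) • g i := by
  rw [Finset.sum_eq_single i]
  · simp
  · intro j _ hj
    rw [q_ne hj]; simp
  · simp

/-- Bracket with `1`. -/
theorem br_one (b : Fin (2 * m + 1) → ℤ) (hb : ∀ i, 0 ≤ b i) :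
    br (1 : TruncP F p (2 * m + 1)) (X F p b) = (2 * b (Fin.last _) : F) • X F p (b - en m) := by
  rw [← X_zero, br_X' (by intro i; simp) hb]
  simp [mul_comm]

theorem br_q (i : Fin (2 * m)) (b : Fin (2 * m + 1) → ℤ) (hb : ∀ i, 0 ≤ b i) :
    br (X F p (q i)) (X F p b) = (sg F m i * b (cj m i).castSucc) • X F p (b - q (cj m i))
      + (b (Fin.last _) : F) • X F p (b + q i - en m) := by
  rw [br_X' (q_nonneg i) hb, sum_q]
  congr 3
  · abel
  · simp
  · abel

theorem br_en (b : Fin (2 * m + 1) → ℤ) (hb : ∀ i, 0 ≤ b i) :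
    br (X F p (en m)) (X F p b) = (dg b : F) • X F p b := by
  rw [br_X' en_nonneg hb]
  simp

/-- The Jacobi identity on `e, x_i, n`, read off from their multiplication table. -/
theorem jac_table {M ι : Type*} [AddCommGroup M] [Module F M] (B : M →ₗ[F] M →ₗ[F] M)
    (e n : M) (x : ι → M) (s : ι → ι → F) (hsk : ∀ i j, s i j = - s j i)
    (b11 : B e e = 0) (b1q : ∀ i, B e (x i) = 0) (b1n : B e n = (2 : F) • e)
    (bqq : ∀ i j, B (x i) (x j) = s i j • e) (bnq : ∀ i, B n (x i) = - x i) (bnn : B n n = 0)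
    (bq1 : ∀ i, B (x i) e = 0) (bn1 : B n e = - ((2 : F) • e)) (bqn : ∀ i, B (x i) n = x i)
    (f g h : M) (hf : f = e ∨ (∃ i, f = x i) ∨ f = n) (hg : g = e ∨ (∃ i, g = x i) ∨ g = n)
    (hh : h = e ∨ (∃ i, h = x i) ∨ h = n) :
    B f (B g h) - B g (B f h) - B (B f g) h = 0 := by
  rcases hf with rfl | ⟨i, rfl⟩ | rfl <;> rcases hg with rfl | ⟨j, rfl⟩ | rfl <;>
  rcases hh with rfl | ⟨k, rfl⟩ | rfl <;>
  simp only [b11, b1q, b1n, bqq, bnq, bnn, bq1, bn1, bqn, map_zero, map_neg, map_smul,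
    LinearMap.neg_apply, LinearMap.smul_apply, LinearMap.zero_apply] <;>
  first
  | module
  | (rw [hsk i j]; module)

/-- The Jacobi identity for `1` and the coordinates. -/
theorem Jd_gen (s t u : Fin (2 * m + 1) → ℤ) (hs : s = 0 ∨ (∃ i, s = q i) ∨ s = en m)
    (ht : t = 0 ∨ (∃ i, t = q i) ∨ t = en m) (hu : u = 0 ∨ (∃ i, u = q i) ∨ u = en m) :
    Jd (X F p s) (X F p t) (X F p u) = 0 := by
  have b11 : br (1 : TruncP F p (2 * m + 1)) 1 = 0 := by
    have := br_one (F := F) (p := p) (0 : Fin (2 * m + 1) → ℤ) (by intro i; simp)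
    simpa using this
  have b1q : ∀ i : Fin (2 * m), br (1 : TruncP F p (2 * m + 1)) (X F p (q i)) = 0 := by
    intro i; rw [br_one _ (q_nonneg i)]; simp
  have b1n : br (1 : TruncP F p (2 * m + 1)) (X F p (en m)) = (2 : F) • 1 := by
    rw [br_one _ en_nonneg]; simp
  obtain ⟨σ, hs'⟩ : ∃ s : Fin (2 * m) → Fin (2 * m) → F,
      ∀ i j, s i j = if i = cj m j then sg F m i else 0 := ⟨_, fun _ _ => rfl⟩
  have hsk : ∀ i j, σ i j = - σ j i := by
    intro i j
    rw [hs', hs']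
    by_cases h : i = cj m j
    · have h' : j = cj m i := by rw [h, cj_cj]
      rw [if_pos h, if_pos h', h', sg_cj, neg_neg]
    · have h' : ¬ j = cj m i := fun h' => h (by rw [h', cj_cj])
      rw [if_neg h, if_neg h', neg_zero]
  have bqq : ∀ i j : Fin (2 * m), br (X F p (q i)) (X F p (q j))
      = σ i j • (1 : TruncP F p (2 * m + 1)) := by
    intro i j; rw [hs']; rw [br_q _ _ (q_nonneg j)]
    split_ifs with h
    · subst h; simp
    · have : cj m i ≠ j := fun h' => h (cj_eq.1 h')
      simp [q_ne this]
  have bnq : ∀ i : Fin (2 * m), br (X F p (en m)) (X F p (q i)) = - X F p (q i) := by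
    intro i; rw [br_en _ (q_nonneg i)]; simp
  have bnn : br (X F p (en m)) (X F p (en m)) = 0 := by
    rw [br_en _ en_nonneg]; simp
  have bq1 : ∀ i : Fin (2 * m), br (X F p (q i)) (1 : TruncP F p (2 * m + 1)) = 0 := by
    intro i; rw [br_skew, b1q, neg_zero]
  have bn1 : br (X F p (en m)) (1 : TruncP F p (2 * m + 1)) = - ((2 : F) • 1) := by
    rw [br_skew, b1n]
  have bqn : ∀ i : Fin (2 * m), br (X F p (q i)) (X F p (en m)) = X F p (q i) := by
    intro i; rw [br_skew, bnq, neg_neg]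
  have cov : ∀ {t : Fin (2 * m + 1) → ℤ}, (t = 0 ∨ (∃ i, t = q i) ∨ t = en m) →
      (X F p t = 1 ∨ (∃ i, X F p t = X F p (q i)) ∨ X F p t = X F p (en m)) := by
    rintro t (rfl | ⟨i, rfl⟩ | rfl)
    · exact Or.inl X_zero
    · exact Or.inr (Or.inl ⟨i, rfl⟩)
    · exact Or.inr (Or.inr rfl)
  exact jac_table br 1 (X F p (en m)) (fun i => X F p (q i)) σ hsk b11 b1q b1n bqq bnq bnn bq1 bn1
    bqn _ _ _ (cov hs) (cov ht) (cov hu)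

/-- The Jacobi identity. -/
theorem jac (f g h : TruncP F p (2 * m + 1)) :
    br f (br g h) = br g (br f h) + br (br f g) h := by
  have cover : ∀ i : Fin (2 * m + 1), ∃ s : Fin (2 * m + 1) → ℤ,
      xpow F p (2 * m + 1) (Pi.single i 1) = X F p s ∧ (s = 0 ∨ (∃ i, s = q i) ∨ s = en m) := by
    intro i
    refine Fin.lastCases ?_ (fun j => ?_) i
    · exact ⟨en m, X_en.symm, Or.inr (Or.inr rfl)⟩
    · exact ⟨q j, (X_q j).symm, Or.inr (Or.inl ⟨j, rfl⟩)⟩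
  have lift : ∀ f g : TruncP F p (2 * m + 1),
      (∀ s : Fin (2 * m + 1) → ℤ, (s = 0 ∨ (∃ i, s = q i) ∨ s = en m) → Jd f g (X F p s) = 0) →
      ∀ h, Jd f g h = 0 := by
    intro f g H h
    refine Jd_first_order f g ?_ ?_ h
    · rw [← X_zero]; exact H _ (Or.inl rfl)
    · intro i
      obtain ⟨s, hs, hs'⟩ := cover i
      rw [hs]; exact H _ hs'
  have h0 : Jd f g h = 0 := by
    refine lift f g (fun u hu => ?_) h
    rw [Jd_rot, Jd_rot]
    refine lift _ f (fun t ht => ?_) g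
    rw [Jd_rot, Jd_rot]
    exact lift _ _ (fun s hs => Jd_gen _ _ _ ht hu hs) f
  unfold Jd at h0
  rw [sub_sub, sub_eq_zero] at h0
  exact h0

end

/-! ### Powers of derivations in characteristic p -/

section
variable {F : Type*} [Field F] {p : ℕ} [CharP F p] [hp : Fact p.Prime]

theorem fact_ne {k : ℕ} (h : k < p) : (k.factorial : F) ≠ 0 := by
  rw [Ne, CharP.cast_eq_zero_iff F p, hp.out.dvd_factorial]; omega
theorem fact_zero {k : ℕ} (h : p ≤ k) : (k.factorial : F) = 0 := by
  rw [CharP.cast_eq_zero_iff F p, hp.out.dvd_factorial]; exact h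
theorem cast_ne {k : ℕ} (h0 : 0 < k) (h : k < p) : (k : F) ≠ 0 := by
  rw [Ne, CharP.cast_eq_zero_iff F p]; exact Nat.not_dvd_of_pos_of_lt h0 h

theorem choose_pred (k : ℕ) (hk : k < p) : ((p - 1).choose k : F) = (-1) ^ k := by
  induction k with
  | zero => simp
  | succ k ih =>
    have h1 := Nat.choose_succ_succ' (p - 1) k
    have h2 : p - 1 + 1 = p := by have := hp.out.pos; omega
    rw [h2] at h1
    have h3 : ((p.choose (k + 1) : ℕ) : F) = 0 := by
      rw [CharP.cast_eq_zero_iff F p]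
      exact hp.out.dvd_choose_self (by omega) hk
    rw [h1, Nat.cast_add, ih (by omega)] at h3
    rw [pow_succ]; linear_combination h3

section Leib
variable {M : Type*} [AddCommGroup M] [Module F M]

theorem pow_succ_app (T : Module.End F M) (n : ℕ) (x : M) : (T ^ (n + 1)) x = T ((T ^ n) x) := by
  rw [pow_succ']; rfl
theorem pow_succ_app' (T : Module.End F M) (n : ℕ) (x : M) : (T ^ (n + 1)) x = (T ^ n) (T x) := by
  rw [pow_succ]; rfl
theorem pow_mem (T : Module.End F M) (S : Submodule F M) (hT : ∀ s ∈ S, T s ∈ S) (n : ℕ) :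
    ∀ s ∈ S, (T ^ n) s ∈ S := by
  induction n with
  | zero => intro s hs; exact hs
  | succ n ih => intro s hs; rw [pow_succ_app]; exact hT _ (ih s hs)

theorem neg_one_pow_app (n : ℕ) (x : M) : ((-1 : Module.End F M) ^ n) x = (-1 : F) ^ n • x := by
  induction n with
  | zero => simp
  | succ n ih => rw [pow_succ_app, ih, pow_succ]; simp

/-- Leibniz rule for divided powers of a derivation, below the characteristic. -/
theorem leib_div (T : Module.End F M) (B : M →ₗ[F] M →ₗ[F] M) (S : Submodule F M)
    (hT : ∀ s ∈ S, T s ∈ S) (hB : ∀ s ∈ S, ∀ t ∈ S, T (B s t) = B (T s) t + B s (T t)) (n : ℕ) :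
    ∀ s ∈ S, ∀ t ∈ S, (T ^ n) (B s t)
      = ∑ ij ∈ Finset.HasAntidiagonal.antidiagonal n, (n.choose ij.1 : F) • B ((T ^ ij.1) s) ((T ^ ij.2) t) := by
  induction n with
  | zero => intro s _ t _; simp
  | succ n ih =>
    intro s hs t ht
    have e : ∀ ij : ℕ × ℕ, T (B ((T ^ ij.1) s) ((T ^ ij.2) t))
        = B ((T ^ (ij.1 + 1)) s) ((T ^ ij.2) t) + B ((T ^ ij.1) s) ((T ^ (ij.2 + 1)) t) := by
      intro ij
      rw [hB _ (pow_mem T S hT _ s hs) _ (pow_mem T S hT _ t ht), pow_succ_app, pow_succ_app]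
    rw [pow_succ_app, ih s hs t ht, map_sum]
    simp only [Nat.cast_smul_eq_nsmul, map_nsmul, e, nsmul_add, Finset.sum_add_distrib]
    rw [Finset.sum_antidiagonal_choose_succ_nsmul
      (fun i j => B ((T ^ i) s) ((T ^ j) t)) n, add_comm]
    congr 1
    apply Finset.sum_congr rfl
    intro ij hij
    rw [Finset.HasAntidiagonal.mem_antidiagonal] at hij
    rw [Nat.choose_symm_of_eq_add (show n = ij.1 + ij.2 from hij.symm)]

/-- In characteristic `p` the `p`-th power of a derivation is a derivation. -/
theorem leib_p (T : Module.End F M) (B : M →ₗ[F] M →ₗ[F] M) (S : Submodule F M)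
    (hT : ∀ s ∈ S, T s ∈ S) (hB : ∀ s ∈ S, ∀ t ∈ S, T (B s t) = B (T s) t + B s (T t))
    (s : M) (hs : s ∈ S) (t : M) (ht : t ∈ S) :
    (T ^ p) (B s t) = B ((T ^ p) s) t + B s ((T ^ p) t) := by
  rw [leib_div T B S hT hB p s hs t ht]
  have hp0 := hp.out.pos
  have hne : ((p, 0) : ℕ × ℕ) ≠ (0, p) := by simp [Prod.ext_iff]; omega
  rw [← Finset.sum_subset (s₁ := {(p, 0), (0, p)})]
  · rw [Finset.sum_pair hne]; simp
  · intro x hx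
    simp only [Finset.mem_insert, Finset.mem_singleton] at hx
    rcases hx with rfl | rfl <;> simp
  · rintro ⟨i, j⟩ hx hx'
    simp only [Finset.mem_insert, Finset.mem_singleton, Finset.HasAntidiagonal.mem_antidiagonal, Prod.mk.injEq,
      not_or] at hx hx'
    have : ((p.choose i : ℕ) : F) = 0 := by
      rw [CharP.cast_eq_zero_iff F p]
      exact hp.out.dvd_choose_self (by omega) (by omega)
    simp [this]

/-- `∑ Z^j ∘ ad b ∘ Z^(p-1-j) = ad (Z^(p-1) b)` for `Z = ad z` in characteristic `p`. -/
theorem sum_ad (B : M →ₗ[F] M →ₗ[F] M) (Z : Module.End F M)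
    (hZ : ∀ a b, Z (B a b) = B (Z a) b + B a (Z b)) (b v : M) :
    ∑ j ∈ Finset.range p, (Z ^ j) (B b ((Z ^ (p - 1 - j)) v)) = B ((Z ^ (p - 1)) b) v := by
  set L := LinearMap.mulLeft F Z
  set R := LinearMap.mulRight F Z
  have hc : Commute L R := LinearMap.commute_mulLeft_right (R := F) Z Z
  have h1 : ∀ n, ((L - R) ^ n) (B b) = B ((Z ^ n) b) := by
    intro n
    induction n with
    | zero => rfl
    | succ n ih =>
      rw [pow_succ_app, ih]
      ext v
      have := hZ ((Z ^ n) b) v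
      simp only [L, R, LinearMap.sub_apply, LinearMap.mulLeft_apply, LinearMap.mulRight_apply,
        Module.End.mul_apply, this, pow_succ_app]
      abel
  have h2 : (L - R) ^ (p - 1) = ∑ j ∈ Finset.range p, L ^ j * R ^ (p - 1 - j) := by
    have hp0 := hp.out.pos
    rw [sub_eq_add_neg, (hc.neg_right).add_pow, Nat.sub_add_cancel hp0]
    apply Finset.sum_congr rfl
    intro j hj
    rw [Finset.mem_range] at hj
    rw [neg_pow, ← Nat.choose_symm (by omega)]
    have h3 := choose_pred (F := F) (p := p) (p - 1 - j) (by omega)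
    ext f v
    simp only [Module.End.mul_apply, Module.End.natCast_apply]
    rw [← Nat.cast_smul_eq_nsmul F, h3]
    simp only [map_smul, LinearMap.smul_apply]
    rw [neg_one_pow_app]
    simp only [LinearMap.smul_apply, Module.End.one_apply, map_smul, smul_smul]
    rw [← mul_pow]; simp
  have h5 := h1 (p - 1)
  rw [h2] at h5
  have h6 := LinearMap.congr_fun h5 v
  rw [← h6]
  simp only [LinearMap.sum_apply, L, R]
  simp [LinearMap.pow_mulLeft, LinearMap.pow_mulRight, Module.End.mul_apply]
end Leib
end

/-! ### Taylor expansion along a nilpotent derivation -/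

section
variable {F : Type*} [Field F] {p : ℕ} [CharP F p] [hp : Fact p.Prime]
variable {A : Type*} [CommRing A] [Algebra F A]

/-- A nilpotent derivation `Z` of a commutative algebra with `Z u = 1` and `u ^ p = 0`. -/
structure DP (p : ℕ) (Z : Module.End F A) (u : A) : Prop where
  der : ∀ a b, Z (a * b) = a * Z b + b * Z a
  nil : ∀ y, (Z ^ p) y = 0
  Zu : Z u = 1
  up : u ^ p = 0

/-- Divided powers of `u` (zero in degrees `≥ p`, as `k!` vanishes there). -/
def dvp (F : Type*) [Field F] {A : Type*} [CommRing A] [Algebra F A] (u : A) (k : ℕ) : A :=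
  ((k.factorial : F))⁻¹ • u ^ k

@[simp] theorem dvp_zero (u : A) : dvp F u 0 = 1 := by simp [dvp]

theorem dvp_succ {u : A} (up : u ^ p = 0) (k : ℕ) (hk : k < p) :
    u * dvp F u k = ((k + 1 : ℕ) : F) • dvp F u (k + 1) := by
  unfold dvp
  rw [mul_smul_comm, ← pow_succ', smul_smul]
  rcases Nat.lt_or_ge (k + 1) p with h | h
  · congr 1
    have h1 := fact_ne (F := F) h
    rw [Nat.factorial_succ, Nat.cast_mul] at h1 ⊢
    have h2 := left_ne_zero_of_mul h1
    have h3 := right_ne_zero_of_mul h1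
    field_simp
  · have : k + 1 = p := by omega
    rw [this, up]; simp

namespace DP
variable {Z : Module.End F A} {u : A}

theorem Z_one (h : DP p Z u) : Z 1 = 0 := by
  have := h.der 1 1
  simp only [mul_one, one_mul] at this
  simpa using this

theorem Z_pow (h : DP p Z u) (k : ℕ) : Z (u ^ (k + 1)) = ((k + 1 : ℕ) : F) • u ^ k := by
  induction k with
  | zero => simp [h.Zu]
  | succ k ih =>
    rw [pow_succ, h.der, ih, h.Zu, mul_smul_comm, ← pow_succ', mul_one, Nat.cast_succ (k + 1),
      add_smul, one_smul, add_comm]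

theorem Z_dvp (h : DP p Z u) (k : ℕ) (hk : k + 1 < p) : Z (dvp F u (k + 1)) = dvp F u k := by
  unfold dvp
  rw [map_smul, h.Z_pow, smul_smul]
  congr 1
  have h1 := fact_ne (F := F) hk
  rw [Nat.factorial_succ, Nat.cast_mul] at h1 ⊢
  have h2 := left_ne_zero_of_mul h1
  have h3 := right_ne_zero_of_mul h1
  field_simp

/-- The antiderivative of `b` when `Z ^ (p - 1) b = 0`. -/
theorem antider (h : DP p Z u) (b : A) (n : ℕ) (hn : n < p) :
    Z (∑ k ∈ Finset.range n, ((-1 : F) ^ k) • (dvp F u (k + 1) * (Z ^ k) b))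
      = b - ((-1 : F) ^ n) • (dvp F u n * (Z ^ n) b) := by
  induction n with
  | zero => simp
  | succ n ih =>
    rw [Finset.sum_range_succ, map_add, ih (by omega), map_smul, h.der, h.Z_dvp n hn,
      ← pow_succ_app, mul_comm _ (dvp F u n)]
    module

/-- The projection onto `ker Z` along `u * A`. -/
def Q (Z : Module.End F A) (u : A) (p : ℕ) : Module.End F A :=
  ∑ k ∈ Finset.range p, ((-1 : F) ^ k) • (LinearMap.mulLeft F (dvp F u k) ∘ₗ (Z ^ k))

theorem Q_app (g : A) :
    Q Z u p g = ∑ k ∈ Finset.range p, ((-1 : F) ^ k) • (dvp F u k * (Z ^ k) g) := by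
  simp [Q, LinearMap.sum_apply]

theorem Z_Q (h : DP p Z u) (g : A) : Z (Q Z u p g) = 0 := by
  have key : ∀ n, n < p →
      Z (∑ k ∈ Finset.range (n + 1), ((-1 : F) ^ k) • (dvp F u k * (Z ^ k) g))
      = ((-1 : F) ^ n) • (dvp F u n * (Z ^ (n + 1)) g) := by
    intro n hn
    induction n with
    | zero => simp
    | succ n ih =>
      rw [Finset.sum_range_succ, map_add, ih (by omega), map_smul, h.der, h.Z_dvp n hn,
        ← pow_succ_app, mul_comm _ (dvp F u n)]
      module
  have hp0 := hp.out.pos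
  have := key (p - 1) (by omega)
  rw [Nat.sub_add_cancel hp0, h.nil, mul_zero, smul_zero] at this
  rw [Q_app, this]

theorem Q_ker (g : A) (hg : Z g = 0) : Q Z u p g = g := by
  have hp0 := hp.out.pos
  rw [Q_app, Finset.sum_eq_single_of_mem 0 (by simpa using hp0)]
  · simp
  · intro k _ hk
    obtain ⟨k, rfl⟩ := Nat.exists_eq_succ_of_ne_zero hk
    rw [Nat.succ_eq_add_one, pow_succ_app', hg, map_zero, mul_zero, smul_zero]

theorem Zk_u (h : DP p Z u) (g : A) (k : ℕ) :
    (Z ^ (k + 1)) (u * g) = u * (Z ^ (k + 1)) g + ((k + 1 : ℕ) : F) • (Z ^ k) g := by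
  induction k with
  | zero => simp [h.der, h.Zu]
  | succ k ih =>
    rw [pow_succ_app, ih, map_add, h.der, h.Zu, ← pow_succ_app, map_smul, ← pow_succ_app,
      Nat.cast_succ (k + 1), add_smul, one_smul, mul_one]
    abel

theorem Q_u (h : DP p Z u) (g : A) : Q Z u p (u * g) = 0 := by
  have key : ∀ n, n < p →
      ∑ k ∈ Finset.range (n + 1), ((-1 : F) ^ k) • (dvp F u k * (Z ^ k) (u * g))
      = ((-1 : F) ^ n) • (((n + 1 : ℕ) : F) • dvp F u (n + 1) * (Z ^ n) g) := by
    intro n hn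
    induction n with
    | zero =>
      have := dvp_succ (F := F) h.up 0 hn
      rw [← this]
      simp
    | succ n ih =>
      rw [Finset.sum_range_succ, ih (by omega), h.Zk_u, mul_add, ← mul_assoc,
        mul_comm _ u, dvp_succ h.up _ hn]
      rw [smul_mul_assoc, smul_mul_assoc, mul_smul_comm]
      module
  have hp0 := hp.out.pos
  have := key (p - 1) (by omega)
  rw [Nat.sub_add_cancel hp0, CharP.cast_eq_zero, zero_smul, zero_mul, smul_zero] at this
  rw [Q_app, this]

theorem dvp_dvd (k : ℕ) : dvp F u (k + 1) = u * (((k + 1).factorial : F)⁻¹ • u ^ k) := by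
  unfold dvp; rw [mul_smul_comm, ← pow_succ']

theorem Q_dvp (h : DP p Z u) (k : ℕ) (g : A) : Q Z u p (dvp F u (k + 1) * g) = 0 := by
  rw [dvp_dvd, mul_assoc, h.Q_u]

/-- Shifting lemma: `Z` lowers divided power expansions with coefficients in `ker Z`. -/
theorem Z_sum (h : DP p Z u) (c : ℕ → A) (hc : ∀ k, Z (c k) = 0) (hcp : c p = 0) :
    Z (∑ k ∈ Finset.range p, dvp F u k * c k) = ∑ k ∈ Finset.range p, dvp F u k * c (k + 1) := by
  obtain ⟨n, hn⟩ := Nat.exists_eq_succ_of_ne_zero hp.out.ne_zero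
  rw [map_sum]
  simp only [h.der, hc, mul_zero, zero_add]
  rw [hn, Nat.succ_eq_add_one, Finset.sum_range_succ', dvp_zero, h.Z_one, mul_zero, add_zero,
    Finset.sum_range_succ _ n]
  have : c (n + 1) = 0 := by rw [← Nat.succ_eq_add_one, ← hn, hcp]
  rw [this, mul_zero, add_zero]
  apply Finset.sum_congr rfl
  intro k hk
  rw [Finset.mem_range] at hk
  rw [h.Z_dvp k (by omega), mul_comm]

/-- Taylor expansion in `u`. -/
theorem taylor (h : DP p Z u) (g : A) :
    ∑ k ∈ Finset.range p, dvp F u k * Q Z u p ((Z ^ k) g) = g := by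
  have key : ∀ n g, (Z ^ n) g = 0 →
      ∑ k ∈ Finset.range p, dvp F u k * Q Z u p ((Z ^ k) g) = g := by
    intro n
    induction n with
    | zero => intro g hg; have : g = 0 := hg; subst this; simp
    | succ n ih =>
      intro g hg
      have h1 := ih (Z g) (by rw [← pow_succ_app']; exact hg)
      have h2 := h.Z_sum (fun k => Q Z u p ((Z ^ k) g)) (fun k => h.Z_Q _)
        (by simp only [h.nil, map_zero])
      simp only [pow_succ_app'] at h2
      rw [h1] at h2
      set t := ∑ k ∈ Finset.range p, dvp F u k * Q Z u p ((Z ^ k) g) with ht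
      have h3 : Q Z u p (t - g) = t - g := Q_ker _ (by rw [map_sub, h2, sub_self])
      have h4 : Q Z u p t = Q Z u p g := by
        rw [ht, map_sum, Finset.sum_eq_single_of_mem 0 (by simpa using hp.out.pos)]
        · simp only [dvp_zero, one_mul]; exact Q_ker _ (h.Z_Q _)
        · intro k _ hk
          obtain ⟨k, rfl⟩ := Nat.exists_eq_succ_of_ne_zero hk
          exact h.Q_dvp _ _
      rw [map_sub, h4, sub_self] at h3
      exact sub_eq_zero.mp h3.symm
  exact key p g (h.nil g)

theorem Zk_dvp (h : DP p Z u) (g : A) (hg : Z g = 0) (k n : ℕ) (hn : k + n < p) :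
    (Z ^ k) (dvp F u (k + n) * g) = dvp F u n * g := by
  induction k with
  | zero => simp
  | succ k ih =>
    rw [pow_succ_app', show k + 1 + n = k + n + 1 by omega, h.der, hg, mul_zero, zero_add,
      h.Z_dvp _ (by omega), mul_comm, ih (by omega)]

end DP
end

/-! ### Normalising derivations and cocycles at nilpotent elements -/

section
variable {F : Type*} [Field F] {p : ℕ} [CharP F p] [hp : Fact p.Prime]
variable {A : Type*} [CommRing A] [Algebra F A]

/-- `B` is a Lie bracket, `V` contains all brackets and has trivial centralizer. -/
structure LieSys (B : A →ₗ[F] A →ₗ[F] A) (V : Submodule F A) : Prop where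
  skew : ∀ x y, B x y = - B y x
  self : ∀ x, B x x = 0
  jac : ∀ x y z, B x (B y z) = B y (B x z) + B (B x y) z
  mem : ∀ x y, B x y ∈ V
  cent : ∀ g, (∀ y ∈ V, B g y = 0) → g = 0

/-- The data allowing a cochain already vanishing on `Dn` to be normalized on `z` as well:
`ad z` is a nilpotent derivation of the algebra with a primitive `u` killed by `Dn`, and
brackets of `Dn` with `z` are multiples of elements of `Dn` central in the span of `Dn, z`. -/
structure StepD (p : ℕ) (B : A →ₗ[F] A →ₗ[F] A) (V : Submodule F A) (Dn : Set A) (z u : A) :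
    Prop where
  zV : z ∈ V
  DnV : Dn ⊆ V
  dp : DP p (B z) u
  der : ∀ w ∈ Dn, ∀ a b, B w (a * b) = a * B w b + b * B w a
  wu : ∀ w ∈ Dn, B w u = 0
  wz : ∀ w ∈ Dn, ∃ c : F, ∃ e ∈ Dn, B w z = c • e ∧ B e z = 0 ∧ B w e = 0

variable {B : A →ₗ[F] A →ₗ[F] A} {V : Submodule F A} {Dn : Set A} {z u : A}

/-- `d` restricts to a derivation `V → A`. -/
def DerOn (B : A →ₗ[F] A →ₗ[F] A) (V : Submodule F A) (d : A →ₗ[F] A) : Prop :=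
  ∀ x ∈ V, ∀ y ∈ V, d (B x y) = B (d x) y + B x (d y)

theorem der_dvp {W : Module.End F A} (hW : ∀ a b, W (a * b) = a * W b + b * W a) (hu : W u = 0)
    (k : ℕ) (a : A) : W (dvp F u k * a) = dvp F u k * W a := by
  have h1 : W 1 = 0 := by
    have := hW 1 1
    simp only [mul_one, one_mul] at this
    simpa using this
  have h2 : ∀ k, W (u ^ k) = 0 := by
    intro k
    induction k with
    | zero => simpa using h1
    | succ k ih => rw [pow_succ, hW, ih, hu, mul_zero, mul_zero, add_zero]
  rw [hW, dvp, map_smul, h2, smul_zero, mul_zero, add_zero]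

theorem pow_memV (hL : LieSys B V) (z : A) (k : ℕ) {y : A} (hy : y ∈ V) : ((B z) ^ k : Module.End F A) y ∈ V :=
  pow_mem (B z) V (fun _ _ => hL.mem _ _) k y hy

theorem DerOn.pow (hL : LieSys B V) {d : A →ₗ[F] A} (hd : DerOn B V d) (hz : z ∈ V) (n : ℕ) :
    ∀ y ∈ V, d (((B z) ^ n : Module.End F A) y) = ((B z) ^ n : Module.End F A) (d y)
      + ∑ j ∈ Finset.range n, ((B z) ^ j : Module.End F A)
          (B (d z) (((B z) ^ (n - 1 - j) : Module.End F A) y)) := by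
  induction n with
  | zero => intro y _; simp
  | succ n ih =>
    intro y hy
    rw [pow_succ_app, hd _ hz _ (pow_memV hL z n hy), ih y hy, map_add, map_sum,
      Finset.sum_range_succ', ← pow_succ_app]
    have : ∀ j ∈ Finset.range n, B z (((B z) ^ j : Module.End F A)
          (B (d z) (((B z) ^ (n - 1 - j) : Module.End F A) y)))
        = ((B z) ^ (j + 1) : Module.End F A)
          (B (d z) (((B z) ^ (n + 1 - 1 - (j + 1)) : Module.End F A) y)) := by
      intro j hj
      rw [pow_succ_app, show n + 1 - 1 - (j + 1) = n - 1 - j by omega]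
    rw [Finset.sum_congr rfl this]
    simp only [pow_zero, Module.End.one_apply, Nat.add_sub_cancel, Nat.sub_zero]
    abel

/-- One normalization step for derivations. -/
theorem derStep (hL : LieSys B V) (h : StepD p B V Dn z u) (d : A →ₗ[F] A) (hd : DerOn B V d)
    (h0 : ∀ w ∈ Dn, d w = 0) :
    ∃ a, d z = B a z ∧ ∀ w ∈ Dn, B a w = 0 := by
  set b := d z with hb
  have hp0 := hp.out.pos
  have hw : ∀ k, ∀ w ∈ Dn, B w (((B z) ^ k : Module.End F A) b) = 0 := by
    intro k
    induction k with
    | zero =>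
      intro w hw
      obtain ⟨c, e, he, h1, h2, h3⟩ := h.wz w hw
      have := hd w (h.DnV hw) z h.zV
      rw [h1, map_smul, h0 e he, smul_zero, h0 w hw] at this
      simpa using this.symm
    | succ k ih =>
      intro w hw
      obtain ⟨c, e, he, h1, h2, h3⟩ := h.wz w hw
      rw [pow_succ_app, hL.jac, ih w hw, h1, map_smul, LinearMap.smul_apply, ih e he]
      simp
  have hb0 : ((B z) ^ (p - 1) : Module.End F A) b = 0 := by
    apply hL.cent
    intro y hy
    have h1 := hd.pow hL h.zV p y hy
    have h2 := sum_ad (p := p) B (B z) (fun a c => by rw [hL.jac]; abel) b y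
    rw [h2, h.dp.nil, h.dp.nil] at h1
    simpa using h1.symm
  refine ⟨- ∑ k ∈ Finset.range (p - 1), ((-1 : F) ^ k) • (dvp F u (k + 1) * ((B z) ^ k : Module.End F A) b),
    ?_, ?_⟩
  · rw [hL.skew, map_neg, neg_neg, h.dp.antider b (p - 1) (by omega), hb0]
    simp
  · intro w hw'
    rw [hL.skew, map_neg, neg_neg, map_sum]
    apply Finset.sum_eq_zero
    intro k _
    rw [map_smul, der_dvp (h.der w hw') (h.wu w hw'), hw k w hw']
    simp

/-- `∑_{a+b=k-1} Z^a θ Z^b`. -/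
def thk (Z θ : Module.End F A) : ℕ → Module.End F A
  | 0 => 0
  | k + 1 => Z * thk Z θ k + θ * Z ^ k

theorem thk_succ (Z θ : Module.End F A) (k : ℕ) (y : A) :
    thk Z θ (k + 1) y = Z (thk Z θ k y) + θ ((Z ^ k) y) := rfl

theorem thk_succ' (Z θ : Module.End F A) (k : ℕ) (y : A) :
    thk Z θ (k + 1) y = thk Z θ k (Z y) + (Z ^ k) (θ y) := by
  induction k generalizing y with
  | zero => simp [thk]
  | succ k ih =>
    rw [thk_succ, ih, thk_succ, map_add, pow_succ_app' Z k y, pow_succ_app Z k (θ y)]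
    abel

theorem thk_eq (Z θ : Module.End F A) (k : ℕ) (y : A) :
    thk Z θ k y = ∑ j ∈ Finset.range k, (Z ^ j) (θ ((Z ^ (k - 1 - j)) y)) := by
  induction k with
  | zero => simp [thk]
  | succ k ih =>
    rw [thk_succ, ih, map_sum, Finset.sum_range_succ']
    congr 1
    apply Finset.sum_congr rfl
    intro j hj
    rw [pow_succ_app, show k + 1 - 1 - (j + 1) = k - 1 - j by omega]

theorem thk_add (Z θ η : Module.End F A) (k : ℕ) (y : A) :
    thk Z (θ + η) k y = thk Z θ k y + thk Z η k y := by
  simp [thk_eq, Finset.sum_add_distrib]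

/-- A 2-cocycle on `V` (bilinear on the ambient space). -/
structure CocOn (B : A →ₗ[F] A →ₗ[F] A) (V : Submodule F A) (ψ : A →ₗ[F] A →ₗ[F] A) : Prop where
  self : ∀ x ∈ V, ψ x x = 0
  coc : ∀ x ∈ V, ∀ y ∈ V, ∀ z ∈ V,
      B x (ψ y z) - B y (ψ x z) + B z (ψ x y)
        - ψ (B x y) z + ψ (B x z) y - ψ (B y z) x = 0

theorem CocOn.skew {ψ : A →ₗ[F] A →ₗ[F] A} (h : CocOn B V ψ) {x y : A} (hx : x ∈ V)
    (hy : y ∈ V) : ψ x y = - ψ y x := by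
  have := h.self (x + y) (V.add_mem hx hy)
  simp only [map_add, LinearMap.add_apply, h.self x hx, h.self y hy, zero_add, add_zero] at this
  exact eq_neg_of_add_eq_zero_right this

/-- If `(ad z)^p = 0`, the sum of `Z^a ψ(z, ·) Z^b` over `a + b = p - 1`, with `Z = ad z`, is a derivation.
It is the off-diagonal part of the `p`-th power of `ad (z, 0)` on the extension of `A` by `A`
defined by the cocycle `ψ`. -/
theorem thk_p_der (hL : LieSys B V) {ψ : A →ₗ[F] A →ₗ[F] A} (hψ : CocOn B V ψ) (hz : z ∈ V)
    (nil : ∀ y, ((B z) ^ p : Module.End F A) y = 0) : DerOn B V (thk (B z) (ψ z) p) := by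
  let T : Module.End F (A × A) :=
    LinearMap.prod (B z ∘ₗ LinearMap.fst F A A)
      (B z ∘ₗ LinearMap.snd F A A + ψ z ∘ₗ LinearMap.fst F A A)
  have hTa : ∀ s, T s = (B z s.1, B z s.2 + ψ z s.1) := fun s => rfl
  let BB : (A × A) →ₗ[F] (A × A) →ₗ[F] (A × A) :=
    LinearMap.mk₂ F (fun s t => (B s.1 t.1, B s.1 t.2 - B t.1 s.2 + ψ s.1 t.1))
      (by intro a b c; ext <;> simp; abel)
      (by intro r a b; ext <;> simp [smul_sub])
      (by intro a b c; ext <;> simp; abel)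
      (by intro r a b; ext <;> simp [smul_sub])
  have hBa : ∀ s t, BB s t = (B s.1 t.1, B s.1 t.2 - B t.1 s.2 + ψ s.1 t.1) := fun s t => rfl
  have hTk : ∀ k s, (T ^ k) s = (((B z) ^ k : Module.End F A) s.1,
      ((B z) ^ k : Module.End F A) s.2 + thk (B z) (ψ z) k s.1) := by
    intro k
    induction k with
    | zero => intro s; ext <;> simp [thk]
    | succ k ih =>
      intro s
      rw [pow_succ_app, ih, hTa, pow_succ_app, pow_succ_app, thk_succ]
      ext
      · rfl
      · simp only [map_add]; abel
  have key := leib_p (F := F) (p := p) T BB (V.prod ⊤)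
    (by
      rintro s ⟨hs, -⟩
      exact ⟨hL.mem _ _, trivial⟩)
    (by
      rintro s ⟨hs, -⟩ t ⟨ht, -⟩
      rw [hTa s, hTa t, hBa, hBa, hBa, hTa]
      ext
      · simp only [Prod.fst_add]
        rw [hL.jac]; abel
      · simp only [Prod.snd_add, map_add, map_sub]
        have h1 := hψ.coc z hz s.1 hs t.1 ht
        rw [hL.jac z s.1 t.2, hL.jac z t.1 s.2, hψ.skew (hL.mem z t.1) hs,
          hψ.skew (hL.mem s.1 t.1) hz] at *
        rw [← sub_eq_zero]
        rw [← h1]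
        abel)
  intro x hx y hy
  have := key (x, 0) ⟨hx, trivial⟩ (y, 0) ⟨hy, trivial⟩
  rw [hTk, hTk, hTk, hBa, hBa, hBa] at this
  have h2 := congrArg Prod.snd this
  simp only [nil, map_zero, zero_add, Prod.snd_add, sub_zero, LinearMap.zero_apply,
    add_zero] at h2
  rw [← sub_eq_zero] at h2 ⊢
  rw [hL.skew (thk _ _ _ _) y, ← h2, zero_sub]

theorem pow_comm0 (hL : LieSys B V) {e : A} (hez : B e z = 0) : ∀ k y, B e (((B z) ^ k : Module.End F A) y) = ((B z) ^ k : Module.End F A) (B e y) := by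
  intro k
  induction k with
  | zero => intro y; rfl
  | succ k ih => intro y; rw [pow_succ_app, pow_succ_app, hL.jac, ih, hez]; simp

theorem pow_comm1 (hL : LieSys B V) {w e : A} {c : F} (hwz : B w z = c • e) (hez : B e z = 0) : ∀ k y, B w (((B z) ^ (k + 1) : Module.End F A) y)
    = ((B z) ^ (k + 1) : Module.End F A) (B w y)
      + (((k + 1 : ℕ) : F) * c) • ((B z) ^ k : Module.End F A) (B e y) := by
  intro k
  induction k with
  | zero => intro y; simp [hL.jac w z y, hwz]
  | succ k ih =>
    intro y
    rw [pow_succ_app, hL.jac, ih, hwz, map_add, map_smul, ← pow_succ_app, ← pow_succ_app,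
      map_smul, LinearMap.smul_apply, pow_comm0 hL hez, Nat.cast_succ (k + 1)]
    module

/-- Commutation of `ad w` with `thk`. -/
theorem thk_comm (hL : LieSys B V) (θ : Module.End F A)
    (hθ : ∀ w ∈ Dn, ∀ y ∈ V, B w (θ y) = θ (B w y)) {w e : A} (hw : w ∈ Dn) (he : e ∈ Dn) (c : F)
    (hwz : B w z = c • e) (hez : B e z = 0) (k : ℕ) :
    ∀ y ∈ V, B w (thk (B z) θ k y)
      = thk (B z) θ k (B w y) + ((k : F) * c) • B e (thk (B z) θ (k - 1) y) := by
  have hk0 := pow_comm0 (z := z) hL hez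
  have hk1 := pow_comm1 hL hwz hez
  have hk2 : ∀ k, ∀ y ∈ V, B e (thk (B z) θ k y) = thk (B z) θ k (B e y) := by
    intro k
    induction k with
    | zero => intro y _; simp [thk]
    | succ k ih =>
      intro y hy
      rw [thk_succ, thk_succ, map_add, hL.jac, ih y hy, hez, hθ e he _ (pow_memV hL z k hy), hk0]
      simp
  induction k with
  | zero => intro y _; simp [thk]
  | succ k ih =>
    intro y hy
    rw [thk_succ, thk_succ, map_add, hL.jac, ih y hy, hwz, hθ w hw _ (pow_memV hL z k hy)]
    rcases k with _ | k
    · simp [thk]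
    · rw [hk1, map_add, map_add, map_smul, map_smul, map_smul, LinearMap.smul_apply,
        Nat.add_sub_cancel, Nat.add_sub_cancel, hL.jac z e, hL.skew z e, hez, ← hk0,
        ← hθ e he _ (pow_memV hL z k hy), thk_succ _ _ k y, map_add, Nat.cast_succ (k + 1)]
      simp only [neg_zero, map_zero, LinearMap.zero_apply, add_zero]
      module

/-- One normalization step for 2-cocycles. -/
theorem cocStep (hL : LieSys B V) (h : StepD p B V Dn z u)
    (hder : ∀ d : A →ₗ[F] A, DerOn B V d → ∃ g, ∀ y ∈ V, d y = B g y)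
    {ψ : A →ₗ[F] A →ₗ[F] A} (hψ : CocOn B V ψ) (h0 : ∀ w ∈ Dn, ∀ y ∈ V, ψ w y = 0)
    (ε : A →ₗ[F] F) (hε : ∀ a, ε (u * a) = 0) :
    ∃ φ : A →ₗ[F] A, (∀ y, ε (φ y) = 0) ∧ (∀ w ∈ Dn, φ w = 0) ∧
      (∀ w ∈ Dn, ∀ y ∈ V, B w (φ y) = φ (B w y)) ∧
      ∀ y ∈ V, ψ z y = B z (φ y) - B y (φ z) - φ (B z y) := by
  have hp0 := hp.out.pos
  have hp2 := hp.out.two_le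
  -- The obstruction to solving `[ad z, φ] = ψ(z, ·)` is `ad g`.
  obtain ⟨g, hg⟩ := hder _ (thk_p_der hL hψ h.zV h.dp.nil)
  have hθ : ∀ w ∈ Dn, ∀ y ∈ V, B w (ψ z y) = ψ z (B w y) := by
    intro w hw y hy
    obtain ⟨c, e, he, h1, h2, h3⟩ := h.wz w hw
    have := hψ.coc w (h.DnV hw) z h.zV y hy
    rw [h0 w hw y hy, h0 w hw z h.zV, h1, map_smul, LinearMap.smul_apply, h0 e he y hy,
      hψ.skew (hL.mem w y) h.zV, hψ.skew (hL.mem z y) (h.DnV hw), h0 w hw _ (hL.mem z y)] at this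
    simp only [map_zero, sub_zero, add_zero, smul_zero, neg_zero] at this
    rw [← sub_eq_add_neg, sub_eq_zero] at this
    exact this
  -- The centraliser being trivial, `g` commutes with `z` and with `Dn`.
  have hzg : B z g = 0 := by
    apply hL.cent
    intro y hy
    have h1 := thk_succ (B z) (ψ z) p y
    rw [thk_succ', h.dp.nil, h.dp.nil, map_zero, add_zero, add_zero, hg y hy,
      hg _ (hL.mem z y), hL.jac z g y] at h1
    simpa using h1
  have hwg : ∀ w ∈ Dn, B w g = 0 := by
    intro w hw
    obtain ⟨c, e, he, h1, h2, h3⟩ := h.wz w hw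
    apply hL.cent
    intro y hy
    have h4 := thk_comm (Dn := Dn) hL (ψ z) hθ hw he c h1 h2 p y hy
    rw [CharP.cast_eq_zero, zero_mul, zero_smul, add_zero, hg y hy, hg _ (hL.mem w y),
      hL.jac w g y] at h4
    simpa using h4
  -- Since `[z, u] = 1`, `Z^{p-1} az = -g`, which removes the obstruction from `ψ(z, ·) + ad az`.
  obtain ⟨az, haz⟩ : ∃ az : A, az = - (dvp F u (p - 1) * g) := ⟨_, rfl⟩
  have hwa : ∀ w ∈ Dn, B w az = 0 := by
    intro w hw
    rw [haz, map_neg, der_dvp (h.der w hw) (h.wu w hw), hwg w hw]; simp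
  set θ : Module.End F A := ψ z + B az with hθd
  have hθa : ∀ y, θ y = ψ z y + B az y := fun y => rfl
  have hθc : ∀ w ∈ Dn, ∀ y ∈ V, B w (θ y) = θ (B w y) := by
    intro w hw y hy
    rw [hθa, hθa, map_add, hθ w hw y hy, hL.jac w az y, hwa w hw]
    simp
  have hθp : ∀ y ∈ V, thk (B z) θ p y = 0 := by
    intro y hy
    have h1 : ((B z) ^ (p - 1) : Module.End F A) az = - g := by
      have := h.dp.Zk_dvp g hzg (p - 1) 0 (by omega)
      rw [haz, map_neg]
      simpa using this
    rw [hθd, thk_add, hg y hy, thk_eq (B z) (B az),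
      sum_ad (p := p) B (B z) (fun a c => by rw [hL.jac]; abel) az y, h1]
    simp
  set Qz := DP.Q (B z) u p with hQz
  -- By Taylor expansion, this `φ` solves `[ad z, φ] = θ` once the obstruction of `θ` vanishes; `φ z` then
  -- accounts for the term `ad az`.
  let φ : A →ₗ[F] A := ∑ k ∈ Finset.range p,
    LinearMap.mulLeft F (dvp F u k) ∘ₗ Qz ∘ₗ thk (B z) θ k
  have hφ : ∀ y, φ y = ∑ k ∈ Finset.range p, dvp F u k * Qz (thk (B z) θ k y) := by
    intro y; simp [φ, LinearMap.sum_apply]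
  have hθz : θ z = - B z az := by
    rw [hθa, hψ.self z h.zV, zero_add, hL.skew]
  have hθkz : ∀ k, thk (B z) θ (k + 1) z = - ((B z) ^ (k + 1) : Module.End F A) az := by
    intro k
    rw [thk_succ', hL.self, map_zero, zero_add, hθz, map_neg, ← pow_succ_app']
  have hφz : φ z = - az := by
    have h1 := h.dp.taylor az
    have h2 : Qz az = 0 := by
      obtain ⟨n, hn⟩ : ∃ n, p - 1 = n + 1 := ⟨p - 2, by omega⟩
      rw [haz, hn, map_neg, h.dp.Q_dvp, neg_zero]
    rw [hφ]
    obtain ⟨n, hn⟩ := Nat.exists_eq_succ_of_ne_zero hp.out.ne_zero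
    conv_rhs => rw [← h1]
    rw [hn, Nat.succ_eq_add_one, Finset.sum_range_succ', Finset.sum_range_succ', neg_add,
      ← Finset.sum_neg_distrib]
    congr 1
    · apply Finset.sum_congr rfl
      intro k _
      rw [hθkz, map_neg, mul_neg, hQz, hn]
    · have h3 : DP.Q (B z) u (n + 1) (((B z) ^ 0 : Module.End F A) az) = Qz az := by
        rw [hQz, hn]; rfl
      rw [h3, h2]
      simp [thk]
  have hzφ : ∀ y ∈ V, B z (φ y) = φ (B z y) + θ y := by
    intro y hy
    rw [hφ, h.dp.Z_sum (fun k => Qz (thk (B z) θ k y)) (fun k => h.dp.Z_Q _)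
      (by simp only [hθp y hy, map_zero]), hφ]
    simp only [thk_succ', map_add, mul_add, Finset.sum_add_distrib]
    rw [h.dp.taylor (θ y)]
  have hE : u * dvp F u (p - 1) = 0 := by
    rw [dvp_succ h.dp.up _ (by omega), Nat.sub_add_cancel hp0, CharP.cast_eq_zero, zero_smul]
  refine ⟨φ, ?_, ?_, ?_, ?_⟩
  · intro y
    rw [hφ, map_sum]
    apply Finset.sum_eq_zero
    intro k _
    rcases k with _ | k
    · simp [thk]
    · rw [DP.dvp_dvd, mul_assoc, hε]
  · intro w hw
    have : ∀ k, ∀ w ∈ Dn, thk (B z) θ k w = 0 := by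
      intro k
      induction k with
      | zero => intro w _; rfl
      | succ k ih =>
        intro w hw
        obtain ⟨c, e, he, h1, h2, h3⟩ := h.wz w hw
        have h4 : θ w = 0 := by
          rw [hθa, hL.skew az w, hwa w hw, hψ.skew h.zV (h.DnV hw), h0 w hw z h.zV]; simp
        rw [thk_succ', hL.skew z w, h1, map_neg, map_smul, ih e he, h4]; simp
    rw [hφ]
    apply Finset.sum_eq_zero
    intro k _
    rw [this k w hw]; simp
  · intro w hw y hy
    obtain ⟨c, e, he, h1, h2, h3⟩ := h.wz w hw
    have hQ : ∀ a, B w (Qz a) = Qz (B w a) - c • (u * Qz (B e a)) := by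
      intro a
      obtain ⟨n, hn⟩ := Nat.exists_eq_succ_of_ne_zero hp.out.ne_zero
      have hn1 : p - 1 = n := by omega
      rw [hn1] at hE
      rw [hQz, DP.Q_app, DP.Q_app, DP.Q_app, map_sum, hn, Nat.succ_eq_add_one]
      simp only [map_smul, der_dvp (h.der w hw) (h.wu w hw)]
      rw [Finset.sum_range_succ', Finset.sum_range_succ' _ n, Finset.sum_range_succ _ n, mul_add,
        mul_smul_comm, ← mul_assoc u, hE, zero_mul, smul_zero, add_zero, Finset.mul_sum,
        Finset.smul_sum, add_sub_right_comm, ← Finset.sum_sub_distrib]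
      congr 1
      apply Finset.sum_congr rfl
      intro j hj
      rw [Finset.mem_range] at hj
      rw [pow_comm1 hL h1 h2, mul_add, mul_smul_comm _ u, ← mul_assoc u,
        dvp_succ h.dp.up _ (by omega), smul_mul_assoc, mul_smul_comm]
      module
    rw [hφ, hφ, map_sum]
    simp only [der_dvp (h.der w hw) (h.wu w hw), hQ, thk_comm (Dn := Dn) hL θ hθc hw he c h1 h2 _ y hy,
      map_add, map_smul, mul_add, mul_sub, Finset.sum_add_distrib, Finset.sum_sub_distrib]
    rw [add_sub_assoc, add_eq_left, sub_eq_zero]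
    obtain ⟨n, hn⟩ := Nat.exists_eq_succ_of_ne_zero hp.out.ne_zero
    have hn1 : p - 1 = n := by omega
    rw [hn1] at hE
    rw [hn, Nat.succ_eq_add_one, Finset.sum_range_succ', Finset.sum_range_succ _ n]
    rw [mul_smul_comm c, ← mul_assoc _ u, mul_comm _ u, hE]
    simp only [Nat.cast_zero, zero_mul, zero_smul, mul_zero, smul_zero, add_zero]
    apply Finset.sum_congr rfl
    intro j hj
    rw [Finset.mem_range] at hj
    rw [mul_smul_comm c, ← mul_assoc _ u, mul_comm _ u, dvp_succ h.dp.up _ (by omega),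
      Nat.add_sub_cancel, smul_mul_assoc, mul_smul_comm]
    module
  · intro y hy
    rw [hzφ y hy, hφz, hθa, map_neg, hL.skew az y]
    abel
end

/-! ### Monomials in one or two planes -/

section
variable {F : Type*} [Field F] {p m : ℕ}

variable (m) in
/-- Integer multi-indices for the `2m+1` variables. -/
abbrev Vec := Fin (2 * m + 1) → ℤ

/-- The multi-index `w` with the exponents of `x_i, x_{i'}, x_n` replaced by `α, β, l`. -/
def W (i : Fin (2 * m)) (w : Vec m) (α β l : ℤ) : Vec m :=
  Function.update (Function.update (Function.update w (Fin.last (2 * m)) l) (cj m i).castSucc β)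
    i.castSucc α

theorem castSucc_ne_last (i : Fin (2 * m)) : i.castSucc ≠ Fin.last (2 * m) :=
  (Fin.castSucc_lt_last i).ne

@[simp] theorem W_i (i : Fin (2 * m)) (w : Vec m) (α β l : ℤ) : W i w α β l i.castSucc = α := by
  simp [W]
@[simp] theorem W_c (i : Fin (2 * m)) (w : Vec m) (α β l : ℤ) :
    W i w α β l (cj m i).castSucc = β := by
  simp [W, Function.update_apply]
@[simp] theorem W_n (i : Fin (2 * m)) (w : Vec m) (α β l : ℤ) :
    W i w α β l (Fin.last _) = l := by
  simp [W, Function.update_apply, (castSucc_ne_last _).symm]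
theorem W_o {i j : Fin (2 * m)} (w : Vec m) (α β l : ℤ) (h : j ≠ i) (h' : j ≠ cj m i) :
    W i w α β l j.castSucc = w j.castSucc := by
  simp [W, Function.update_apply, h, h', castSucc_ne_last]

theorem vec_ext (i : Fin (2 * m)) {a b : Vec m} (h1 : a i.castSucc = b i.castSucc)
    (h2 : a (cj m i).castSucc = b (cj m i).castSucc) (h3 : a (Fin.last _) = b (Fin.last _))
    (h4 : ∀ j, j ≠ i → j ≠ cj m i → a j.castSucc = b j.castSucc) : a = b := by
  ext k
  refine Fin.lastCases h3 (fun j => ?_) k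
  by_cases hj : j = i
  · rw [hj, h1]
  by_cases hj' : j = cj m i
  · rw [hj', h2]
  exact h4 j hj hj'

theorem W_self (i : Fin (2 * m)) (b : Vec m) :
    W i b (b i.castSucc) (b (cj m i).castSucc) (b (Fin.last _)) = b :=
  vec_ext i (by simp) (by simp) (by simp) (fun j h h' => W_o _ _ _ _ h h')

theorem W_W (i : Fin (2 * m)) (w : Vec m) (α β l α' β' l' : ℤ) :
    W i (W i w α β l) α' β' l' = W i w α' β' l' :=
  vec_ext i (by simp) (by simp) (by simp) (fun j h h' => by
    rw [W_o _ _ _ _ h h', W_o _ _ _ _ h h', W_o _ _ _ _ h h'])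

theorem W_comm {i j : Fin (2 * m)} (h : j ≠ i) (h' : j ≠ cj m i) (w : Vec m)
    (α β γ δ l l' l'' : ℤ) :
    W i (W j w γ δ l') α β l = W j (W i w α β l'') γ δ l := by
  have h1 : cj m j ≠ i := fun e => h' (by rw [← e, cj_cj])
  have h2 : cj m j ≠ cj m i := fun e => h (cj_inj.1 e)
  apply vec_ext i
  · rw [W_i, W_o _ _ _ _ h.symm h1.symm, W_i]
  · rw [W_c, W_o _ _ _ _ h'.symm h2.symm, W_c]
  · rw [W_n, W_n]
  · intro k hk hk'
    rw [W_o _ _ _ _ hk hk']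
    by_cases e : k = j
    · subst e; simp
    by_cases e' : k = cj m j
    · subst e'; simp
    rw [W_o _ _ _ _ e e', W_o _ _ _ _ e e', W_o _ _ _ _ hk hk']

theorem W_cj (i : Fin (2 * m)) (w : Vec m) (α β l : ℤ) :
    W (cj m i) w α β l = W i w β α l := by
  apply vec_ext i
  · have := W_c (cj m i) w α β l
    rw [cj_cj] at this; rw [this, W_i]
  · simp
  · simp
  · intro j h h'
    rw [W_o _ _ _ _ h h', W_o _ _ _ _ h' (by rwa [cj_cj])]

/-- Sum of the exponents of the plane variables other than `x_i, x_{i'}`. -/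
def rs (i : Fin (2 * m)) (w : Vec m) : ℤ :=
  ∑ j ∈ (Finset.univ.erase i).erase (cj m i), w j.castSucc

theorem dg_eq (i : Fin (2 * m)) (a : Vec m) :
    dg a = rs i a + a i.castSucc + a (cj m i).castSucc + 2 * a (Fin.last _) - 2 := by
  unfold dg rs
  rw [← Finset.add_sum_erase _ _ (Finset.mem_univ i), ← Finset.add_sum_erase _ _
    (show cj m i ∈ Finset.univ.erase i by simp)]
  ring

theorem rs_W (i : Fin (2 * m)) (w : Vec m) (α β l : ℤ) : rs i (W i w α β l) = rs i w := by
  unfold rs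
  apply Finset.sum_congr rfl
  intro j hj
  simp only [Finset.mem_erase, Finset.mem_univ, and_true] at hj
  rw [W_o _ _ _ _ hj.2 hj.1]

theorem dg_W (i : Fin (2 * m)) (w : Vec m) (α β l : ℤ) :
    dg (W i w α β l) = rs i w + α + β + 2 * l - 2 := by
  rw [dg_eq i, rs_W]; simp

@[simp] theorem rs_zero (i : Fin (2 * m)) : rs i (0 : Vec m) = 0 := by simp [rs]

theorem rs_nonneg (i : Fin (2 * m)) {w : Vec m} (hw : ∀ k, 0 ≤ w k) : 0 ≤ rs i w :=
  Finset.sum_nonneg fun _ _ => hw _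

theorem W_nonneg {i : Fin (2 * m)} {w : Vec m} {α β l : ℤ} (hw : ∀ k, 0 ≤ w k) (h1 : 0 ≤ α)
    (h2 : 0 ≤ β) (h3 : 0 ≤ l) (k) : 0 ≤ W i w α β l k := by
  refine Fin.lastCases (by simpa) (fun j => ?_) k
  by_cases hj : j = i
  · subst hj; simpa
  by_cases hj' : j = cj m i
  · subst hj'; simpa
  rw [W_o _ _ _ _ hj hj']; exact hw _

variable [CharP F p]

/-- Bracket of monomials, the first one involving only `x_i, x_{i'}, x_n`. -/
theorem br_W (i : Fin (2 * m)) {w : Vec m} (hw : ∀ k, 0 ≤ w k) {α β k α' β' l : ℤ} (h1 : 0 ≤ α)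
    (h2 : 0 ≤ β) (h3 : 0 ≤ k) (h4 : 0 ≤ α') (h5 : 0 ≤ β') (h6 : 0 ≤ l) :
    br (X F p (W i 0 α β k)) (X F p (W i w α' β' l))
      = (sg F m i * (α * β' - β * α')) • X F p (W i w (α + α' - 1) (β + β' - 1) (k + l))
        + (k * (rs i w + α' + β' + 2 * l - 2) - l * (α + β + 2 * k - 2) : F) •
          X F p (W i w (α + α') (β + β') (k + l - 1)) := by
  rw [br_X' (W_nonneg (by intro k; simp) h1 h2 h3) (W_nonneg hw h4 h5 h6)]
  congr 1
  · rw [Fintype.sum_eq_add i (cj m i) (ne_cj i)]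
    · have e : W i 0 α β k + W i w α' β' l - q i - q (cj m i)
          = W i w (α + α' - 1) (β + β' - 1) (k + l) := by
        apply vec_ext i
        · simp [q_ne]
        · simp [q_ne]
        · simp
        · intro j h h'; simp [W_o _ _ _ _ h h', q_ne h, q_ne h']
      rw [cj_cj, sub_right_comm _ (q (cj m i)), e, sg_cj]
      simp only [W_i, W_c]
      module
    · intro j hj
      rw [W_o _ _ _ _ hj.1 hj.2]; simp
  · have e : W i 0 α β k + W i w α' β' l - en m = W i w (α + α') (β + β') (k + l - 1) := by
      apply vec_ext i
      · simp
      · simp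
      · simp
      · intro j h h'; simp [W_o _ _ _ _ h h']
    rw [e]
    simp only [W_n, dg_W, rs_zero]
    congr 1
    push_cast
    ring

/-- The multi-index `w` with the exponents of `x_i, x_{i'}, x_j, x_{j'}, x_n` replaced. -/
def W2 (i j : Fin (2 * m)) (w : Vec m) (α β γ δ l : ℤ) : Vec m := W i (W j w γ δ 0) α β l

/-- The planes of `i` and `j` are different. -/
def Ind (i j : Fin (2 * m)) : Prop := j ≠ i ∧ j ≠ cj m i

theorem Ind.symm {i j : Fin (2 * m)} (h : Ind i j) : Ind j i :=
  ⟨h.1.symm, fun e => h.2 (by rw [e, cj_cj])⟩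

theorem Ind.cj {i j : Fin (2 * m)} (h : Ind i j) : Ind i (cj m j) :=
  ⟨fun e => h.2 (by rw [← e, cj_cj]), fun e => h.1 (cj_inj.1 e)⟩

/-- Bracket of monomials, the first one involving only `x_i, x_{i'}, x_j, x_{j'}, x_n`. -/
theorem br_W2 {i j : Fin (2 * m)} (hij : Ind i j) {w : Vec m} (hw : ∀ k, 0 ≤ w k)
    {α β γ δ k α' β' γ' δ' l : ℤ} (h1 : 0 ≤ α) (h2 : 0 ≤ β) (h3 : 0 ≤ γ) (h4 : 0 ≤ δ) (h5 : 0 ≤ k)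
    (h1' : 0 ≤ α') (h2' : 0 ≤ β') (h3' : 0 ≤ γ') (h4' : 0 ≤ δ') (h5' : 0 ≤ l) :
    br (X F p (W2 i j 0 α β γ δ k)) (X F p (W2 i j w α' β' γ' δ' l))
      = (sg F m i * (α * β' - β * α')) •
            X F p (W2 i j w (α + α' - 1) (β + β' - 1) (γ + γ') (δ + δ') (k + l))
        + (sg F m j * (γ * δ' - δ * γ')) •
            X F p (W2 i j w (α + α') (β + β') (γ + γ' - 1) (δ + δ' - 1) (k + l))
        + (k * (dg (W2 i j w α' β' γ' δ' l) : F) - l * (α + β + γ + δ + 2 * k - 2) : F) •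
          X F p (W2 i j w (α + α') (β + β') (γ + γ') (δ + δ') (k + l - 1)) := by
  have hji := hij.symm
  have hjc := hij.cj
  have hcj := hij.symm.cj
  have hcc := hjc.symm.cj
  rw [br_X' (show ∀ k', 0 ≤ W2 i j 0 α β γ δ k k' from
      W_nonneg (W_nonneg (by intro k; simp) h3 h4 le_rfl) h1 h2 h5)
    (show ∀ k', 0 ≤ W2 i j w α' β' γ' δ' l k' from
      W_nonneg (W_nonneg hw h3' h4' le_rfl) h1' h2' h5')]
  have W2i : ∀ (w : Vec m) α β γ δ l, W2 i j w α β γ δ l i.castSucc = α := by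
    intros; simp [W2]
  have W2i' : ∀ (w : Vec m) α β γ δ l, W2 i j w α β γ δ l (cj m i).castSucc = β := by
    intros; simp [W2]
  have W2n : ∀ (w : Vec m) α β γ δ l, W2 i j w α β γ δ l (Fin.last _) = l := by
    intros; simp [W2]
  have W2j : ∀ (w : Vec m) α β γ δ l, W2 i j w α β γ δ l j.castSucc = γ := by
    intros; rw [W2, W_o _ _ _ _ hij.1 hij.2, W_i]
  have W2j' : ∀ (w : Vec m) α β γ δ l, W2 i j w α β γ δ l (cj m j).castSucc = δ := by
    intros; rw [W2, W_o _ _ _ _ hjc.1 hjc.2, W_c]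
  have W2o : ∀ (w : Vec m) α β γ δ l k, k ≠ i → k ≠ cj m i → k ≠ j → k ≠ cj m j →
      W2 i j w α β γ δ l k.castSucc = w k.castSucc := by
    intro w α β γ δ l k e1 e2 e3 e4; rw [W2, W_o _ _ _ _ e1 e2, W_o _ _ _ _ e3 e4]
  have ext2 : ∀ {a b : Vec m}, a i.castSucc = b i.castSucc →
      a (cj m i).castSucc = b (cj m i).castSucc → a j.castSucc = b j.castSucc →
      a (cj m j).castSucc = b (cj m j).castSucc → a (Fin.last _) = b (Fin.last _) →
      (∀ k, k ≠ i → k ≠ cj m i → k ≠ j → k ≠ cj m j → a k.castSucc = b k.castSucc) → a = b := by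
    intro a b e1 e2 e3 e4 e5 e6
    refine vec_ext i e1 e2 e5 fun k f1 f2 => ?_
    by_cases f3 : k = j
    · rw [f3, e3]
    by_cases f4 : k = cj m j
    · rw [f4, e4]
    exact e6 k f1 f2 f3 f4
  have q0 : ∀ {a b : Fin (2 * m)}, a ≠ b → q b a.castSucc = 0 := fun h => q_ne h
  have e1 : W2 i j 0 α β γ δ k + W2 i j w α' β' γ' δ' l - q i - q (cj m i)
      = W2 i j w (α + α' - 1) (β + β' - 1) (γ + γ') (δ + δ') (k + l) := by
    apply ext2
    · simp [W2i, q0 (ne_cj i)]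
    · simp [W2i', q0 (cj_ne i)]
    · simp [W2j, q0 hij.1, q0 hij.2]
    · simp [W2j', q0 hjc.1, q0 hjc.2]
    · simp [W2n]
    · intro k f1 f2 f3 f4
      simp [W2o _ _ _ _ _ _ _ f1 f2 f3 f4, q0 f1, q0 f2]
  have e2 : W2 i j 0 α β γ δ k + W2 i j w α' β' γ' δ' l - q j - q (cj m j)
      = W2 i j w (α + α') (β + β') (γ + γ' - 1) (δ + δ' - 1) (k + l) := by
    apply ext2
    · simp [W2i, q0 hji.1, q0 hji.2]
    · simp [W2i', q0 hcj.1, q0 hcj.2]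
    · simp [W2j, q0 (ne_cj j)]
    · simp [W2j', q0 (cj_ne j)]
    · simp [W2n]
    · intro k f1 f2 f3 f4
      simp [W2o _ _ _ _ _ _ _ f1 f2 f3 f4, q0 f3, q0 f4]
  have e3 : W2 i j 0 α β γ δ k + W2 i j w α' β' γ' δ' l - en m
      = W2 i j w (α + α') (β + β') (γ + γ') (δ + δ') (k + l - 1) := by
    apply ext2
    · simp [W2i]
    · simp [W2i']
    · simp [W2j]
    · simp [W2j']
    · simp [W2n]
    · intro k f1 f2 f3 f4
      simp [W2o _ _ _ _ _ _ _ f1 f2 f3 f4]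
  have hdg : dg (W2 i j (0 : Vec m) α β γ δ k) = α + β + γ + δ + 2 * k - 2 := by
    have : rs i (W j (0 : Vec m) γ δ 0) = γ + δ := by
      have h1 := dg_W i (W j (0 : Vec m) γ δ 0) 0 0 0
      rw [W_comm hij.1 hij.2 _ _ _ _ _ _ _ 0, dg_W] at h1
      have h2 : rs j (W i (0 : Vec m) 0 0 0) = 0 := by
        have : W i (0 : Vec m) 0 0 0 = 0 := W_self i 0
        rw [this, rs_zero]
      linarith
    rw [W2, dg_W, this]; ring
  congr 1
  · rw [← Finset.sum_subset (Finset.subset_univ ({i, cj m i, j, cj m j} : Finset (Fin (2 * m))))]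
    · rw [Finset.sum_insert, Finset.sum_insert, Finset.sum_pair (ne_cj j)]
      · simp only [cj_cj]
        rw [sub_right_comm _ (q (cj m i)), sub_right_comm _ (q (cj m j)), e1, e2, sg_cj, sg_cj]
        simp only [W2i, W2i', W2j, W2j']
        module
      · simp only [Finset.mem_insert, Finset.mem_singleton, not_or]
        exact ⟨hij.2.symm, hjc.2.symm⟩
      · simp only [Finset.mem_insert, Finset.mem_singleton, not_or]
        exact ⟨ne_cj i, hij.1.symm, hjc.1.symm⟩
    · intro k' _ hk'
      simp only [Finset.mem_insert, Finset.mem_singleton, not_or] at hk'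
      rw [W2o _ _ _ _ _ _ _ hk'.1 hk'.2.1 hk'.2.2.1 hk'.2.2.2]; simp
  · rw [e3]
    change ((W2 i j (0 : Vec m) α β γ δ k (Fin.last _) : F) * (dg (W2 i j w α' β' γ' δ' l) : F)
      - (W2 i j w α' β' γ' δ' l (Fin.last _) : F) * (dg (W2 i j (0 : Vec m) α β γ δ k) : F)) • _ = _
    rw [hdg, W2n, W2n]
    push_cast; rfl
end

/-! ### Coefficients, and K(n) as a Lie algebra with trivial centraliser -/

section
variable {F : Type*} [Field F] {p m : ℕ}

/-- Multi-indices of the nonzero monomials. -/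
def Box (p : ℕ) {m : ℕ} (a : Vec m) : Prop := ∀ k, 0 ≤ a k ∧ a k < p

variable (F p) in
/-- The coefficient of `x^a`, zero if `x^a` is not a nonzero monomial. -/
def cf (a : Vec m) : TruncP F p (2 * m + 1) →ₗ[F] F :=
  open Classical in if Box p a then coeffT F p _ (fun k => (a k).toNat) else 0

theorem X_not_box {a : Vec m} (h : ¬ Box p a) : X F p a = 0 := by
  unfold Box at h
  push Not at h
  obtain ⟨k, hk⟩ := h
  by_cases h0 : 0 ≤ a k
  · exact X_big k (hk h0)
  · exact X_neg k (not_le.1 h0)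

theorem cf_X {a : Vec m} (ha : Box p a) (c : Vec m) [Decidable (c = a)] :
    cf F p a (X F p c) = if c = a then 1 else 0 := by
  classical
  by_cases hc : Box p c
  · unfold cf
    rw [if_pos ha, X_nonneg fun k => (hc k).1, coeffT_xpow _ _ fun k => by have := ha k; omega]
    by_cases h : c = a
    · subst h; simp
    · rw [if_neg h, if_neg]
      intro h'; apply h; ext k
      have := congrFun h' k
      have h1 := ha k; have h2 := hc k
      omega
  · rw [X_not_box hc, map_zero, if_neg]
    rintro rfl; exact hc ha

theorem span_X : Submodule.span F {f | ∃ a : Vec m, Box p a ∧ f = X F p a} = ⊤ := by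
  rw [← span_xpow]
  congr 1; ext f; constructor
  · rintro ⟨a, ha, rfl⟩
    exact ⟨fun k => (a k).toNat, fun k => by have := ha k; simp only []; omega, X_nonneg fun k => (ha k).1⟩
  · rintro ⟨a, ha, rfl⟩
    exact ⟨fun k => a k, fun k => ⟨by positivity, Int.ofNat_lt.2 (ha k)⟩, (X_cast a).symm⟩

theorem lin_ext {M : Type*} [AddCommGroup M] [Module F M] {f g : TruncP F p (2 * m + 1) →ₗ[F] M}
    (h : ∀ b : Vec m, Box p b → f (X F p b) = g (X F p b)) : f = g := by
  apply LinearMap.ext_on span_X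
  rintro _ ⟨a, ha, rfl⟩
  exact h a ha

variable (F p) in
/-- The linear map with prescribed values on the monomials. -/
def lmk {M : Type*} [AddCommGroup M] [Module F M] (h : Vec m → M) :
    TruncP F p (2 * m + 1) →ₗ[F] M :=
  ∑ a : Fin (2 * m + 1) → Fin p, (cf F p (fun k => ((a k : ℕ) : ℤ))).smulRight (h fun k => ((a k : ℕ) : ℤ))

theorem lmk_X {M : Type*} [AddCommGroup M] [Module F M] (h : Vec m → M) {b : Vec m} (hb : Box p b) :
    lmk F p h (X F p b) = h b := by
  classical
  have hB : ∀ a : Fin (2 * m + 1) → Fin p, Box p (fun k => ((a k : ℕ) : ℤ)) := fun a k =>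
    ⟨by positivity, Int.ofNat_lt.2 (a k).isLt⟩
  unfold lmk
  rw [LinearMap.sum_apply, Finset.sum_eq_single
    (fun k => ⟨(b k).toNat, by have := hb k; omega⟩ : Fin (2 * m + 1) → Fin p)]
  · have : (fun k => (((⟨(b k).toNat, by have := hb k; omega⟩ : Fin p) : ℕ) : ℤ)) = b := by
      ext k; have := hb k; simp; omega
    rw [this, LinearMap.smulRight_apply, cf_X hb, if_pos rfl, one_smul]
  · intro a _ hne
    rw [LinearMap.smulRight_apply, cf_X (hB a), if_neg, zero_smul]
    intro e; apply hne; ext k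
    simp [e]
  · simp

theorem cf_eq_zero_of_lt {f : TruncP F p (2 * m + 1)} (h : ∀ a : Vec m, Box p a → cf F p a f = 0) :
    f = 0 := by
  have : (lmk F p (fun a : Vec m => X F p a) : TruncP F p (2 * m + 1) →ₗ[F] _) = LinearMap.id :=
    lin_ext fun b hb => by rw [lmk_X _ hb]; rfl
  have h2 := LinearMap.congr_fun this f
  rw [LinearMap.id_apply] at h2
  rw [← h2, lmk, LinearMap.sum_apply]
  refine Finset.sum_eq_zero fun a _ => ?_
  rw [LinearMap.smulRight_apply, h, zero_smul]
  exact fun k => ⟨by positivity, Int.ofNat_lt.2 (a k).isLt⟩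

variable (p m) in
/-- The top multi-index. -/
def tau : Vec m := fun _ => (p : ℤ) - 1

theorem tau_box (hp : 0 < p) : Box p (tau p m) := fun k => by simp [tau]; omega

theorem dg_tau : dg (tau p m) = (2 * m + 2) * (p - 1) - 2 := by
  simp [dg, tau]; ring

variable [CharP F p]

theorem mem_Ksub (hp : 0 < p) (f : TruncP F p (2 * m + 1)) :
    f ∈ Ksub F p m ↔ (p ∣ m + 2 → cf F p (tau p m) f = 0) := by
  classical
  unfold Ksub
  split_ifs with h
  · simp only [h, true_imp_iff]
    constructor
    · intro hf
      refine (Submodule.span_le (p := LinearMap.ker (cf F p (tau p m)))).2 ?_ hf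
      rintro _ ⟨a, ha, hne, rfl⟩
      rw [SetLike.mem_coe, LinearMap.mem_ker, ← X_cast, cf_X (tau_box hp), if_neg]
      intro e; apply hne; ext k
      have := congrFun e k
      simp only [tau] at this; omega
    · intro hf
      have : (lmk F p (fun a : Vec m => X F p a) : TruncP F p (2 * m + 1) →ₗ[F] _) = LinearMap.id :=
        lin_ext fun b hb => by rw [lmk_X _ hb]; rfl
      have h2 := LinearMap.congr_fun this f
      rw [LinearMap.id_apply] at h2
      rw [← h2, lmk, LinearMap.sum_apply]
      refine Submodule.sum_mem _ fun a _ => ?_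
      rw [LinearMap.smulRight_apply]
      by_cases ha : (fun k => ((a k : ℕ) : ℤ)) = tau p m
      · rw [ha, hf, zero_smul]; exact Submodule.zero_mem _
      · refine Submodule.smul_mem _ _ (Submodule.subset_span
          ⟨fun k => (a k : ℕ), fun k => (a k).isLt, ?_, X_cast _⟩)
        intro e; apply ha; ext k
        have := congrFun e k
        simp only [tau] at this ⊢; omega
  · simp [h]

theorem X_mem (hp : 0 < p) {a : Vec m} (h : p ∣ m + 2 → a ≠ tau p m) : X F p a ∈ Ksub F p m := by
  classical
  rw [mem_Ksub hp]
  intro h'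
  rw [cf_X (tau_box hp), if_neg (h h')]

/-- The coefficient of `x^τ` vanishes on brackets if `p ∣ m + 2`. -/
theorem br_mem [hp : Fact p.Prime] (f g : TruncP F p (2 * m + 1)) : br f g ∈ Ksub F p m := by
  classical
  have hp0 := hp.out.pos
  rw [mem_Ksub hp0]
  intro hdiv
  suffices h : (br.compr₂ (cf F p (tau p m)) : TruncP F p (2 * m + 1) →ₗ[F] _ →ₗ[F] F) = 0 by
    have := LinearMap.congr_fun₂ h f g
    simpa using this
  refine lin_ext fun a ha => lin_ext fun b hb => ?_
  rw [LinearMap.compr₂_apply, br_X' (fun k => (ha k).1) fun k => (hb k).1, map_add, map_sum]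
  simp only [map_smul, cf_X (tau_box hp0), smul_eq_mul, mul_ite, mul_one, mul_zero]
  have hcast : ∀ {x y : ℤ}, x + y = p → (y : F) = - x := by
    intro x y h
    have : ((x + y : ℤ) : F) = 0 := by rw [h]; simp
    push_cast at this; linear_combination this
  have h1 : ∀ j : Fin (2 * m), a + b - q j - q (cj m j) = tau p m →
      (b j.castSucc : F) = - a j.castSucc := by
    intro j e
    apply hcast
    have := congrFun e j.castSucc
    simp [q_ne (ne_cj j), tau] at this
    linarith
  have h0 : (∑ j : Fin (2 * m), if a + b - q j - q (cj m j) = tau p m then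
      sg F m j * (a j.castSucc : F) * (b (cj m j).castSucc : F) else 0) = 0 := by
    apply Finset.sum_involution (fun j _ => cj m j)
    · intro j _
      rw [cj_cj, sub_right_comm _ (q (cj m j)), sg_cj]
      split_ifs with e
      · rw [h1 j e, h1 (cj m j) (by rw [cj_cj, sub_right_comm, e])]; ring
      · simp
    · intro j _ _; exact cj_ne j
    · intro j _; exact Finset.mem_univ _
    · intro j _; exact cj_cj j
  rw [h0, zero_add, LinearMap.zero_apply, LinearMap.zero_apply]
  split_ifs with e
  · have e1 : (b (Fin.last _) : F) = - a (Fin.last _) := by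
      apply hcast
      have := congrFun e (Fin.last _)
      simp [tau] at this; linarith
    have e2 : dg a + dg b = (2 * m + 2) * p - 2 * ((m + 2 : ℕ) : ℤ) := by
      have := congrArg dg e
      rw [dg_sub, dg_add, dg_en, dg_tau] at this
      push_cast; linarith
    have e3 : (dg a : F) + dg b = 0 := by
      have : ((dg a + dg b : ℤ) : F) = 0 := by
        rw [e2]
        have : ((m + 2 : ℕ) : F) = 0 := (CharP.cast_eq_zero_iff F p _).2 hdiv
        simp at this; simp [this]
      exact_mod_cast this
    rw [e1]; linear_combination (a (Fin.last _) : F) * e3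
  · rfl

theorem X_en_sub (a : Vec m) : a - en m + en m = a := by abel

theorem cf_br_one {a : Vec m} (ha : Box p a) (h : 1 ≤ a (Fin.last _)) (f : TruncP F p (2 * m + 1)) :
    cf F p (a - en m) (br 1 f) = 2 * a (Fin.last _) * cf F p a f := by
  classical
  have hb : Box p (a - en m) := by
    intro k; have := ha k
    refine Fin.lastCases ?_ (fun j => ?_) k
    · have := ha (Fin.last _); simp; omega
    · have := ha j.castSucc; simpa using this
  suffices h : cf F p (a - en m) ∘ₗ br 1 = (2 * a (Fin.last _) : F) • cf F p a from
    LinearMap.congr_fun h f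
  refine lin_ext fun c hc => ?_
  rw [LinearMap.comp_apply, br_one c fun k => (hc k).1, map_smul, cf_X hb, LinearMap.smul_apply,
    cf_X ha]
  by_cases e : c = a
  · subst e; simp
  · rw [if_neg e, if_neg (fun e' => e (sub_left_injective e'))]; simp

theorem cf_br_q {a : Vec m} (ha : Box p a) (i : Fin (2 * m)) (h : 1 ≤ a (cj m i).castSucc)
    (f : TruncP F p (2 * m + 1)) :
    cf F p (a - q (cj m i)) (br (X F p (q i)) f) = sg F m i * a (cj m i).castSucc * cf F p a f
      + (a (Fin.last _) + 1) *
        cf F p (a - q i - q (cj m i) + en m) f := by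
  classical
  have hb : Box p (a - q (cj m i)) := by
    intro k; have := ha k
    have hh := q_nonneg (cj m i) k
    refine ⟨?_, by simp only [Pi.sub_apply]; omega⟩
    revert this hh
    refine Fin.lastCases ?_ (fun j => ?_) k
    · simp; omega
    · simp only [Pi.sub_apply, q_apply]; split_ifs with e
      · rw [e]; intros; omega
      · intros; omega
  suffices h : cf F p (a - q (cj m i)) ∘ₗ br (X F p (q i)) =
      (sg F m i * a (cj m i).castSucc : F) • cf F p a + (a (Fin.last _) + 1 : F) •
        cf F p (a - q i - q (cj m i) + en m) from LinearMap.congr_fun h f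
  refine lin_ext fun c hc => ?_
  rw [LinearMap.comp_apply, br_q i c fun k => (hc k).1, map_add, map_smul, map_smul, cf_X hb,
    cf_X hb, LinearMap.add_apply, LinearMap.smul_apply, LinearMap.smul_apply, cf_X ha]
  congr 1
  · by_cases e : c = a
    · subst e; simp
    · rw [if_neg e, if_neg (fun e' => e (sub_left_injective e'))]; simp
  · by_cases e : c + q i - en m = a - q (cj m i)
    · have e' : c = a - q i - q (cj m i) + en m := by
        rw [sub_right_comm, ← e]; abel
      subst e'
      rw [if_pos e, cf_X hc, if_pos rfl]; simp
    · rw [if_neg e]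
      by_cases hB : Box p (a - q i - q (cj m i) + en m)
      · rw [cf_X hB, if_neg]
        · simp
        · rintro rfl; apply e; abel
      · simp [cf, hB]

/-- A subspace stable under `ad 1` and all `ad x_i` without constant terms is zero. -/
theorem stable_zero [hp : Fact p.Prime] (hp5 : 5 ≤ p) (M : Submodule F (TruncP F p (2 * m + 1)))
    (h1 : ∀ f ∈ M, br 1 f ∈ M) (h2 : ∀ i, ∀ f ∈ M, br (X F p (q i)) f ∈ M)
    (h0 : ∀ f ∈ M, cf F p 0 f = 0) : ∀ f ∈ M, f = 0 := by
  have hc : ∀ x : ℤ, 1 ≤ x → x < p → (x : F) ≠ 0 := by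
    intro x hx hx' h
    rw [CharP.intCast_eq_zero_iff F p] at h
    have := Int.le_of_dvd (by omega) h
    omega
  have key : ∀ N : ℕ, ∀ a : Vec m, Box p a → ∑ k, a k = N → ∀ f ∈ M, cf F p a f = 0 := by
    intro N
    induction N using Nat.strong_induction_on with
    | _ N ih =>
      intro a ha hN f hf
      by_cases hn : 1 ≤ a (Fin.last _)
      · have hb : Box p (a - en m) := by
          intro k
          refine Fin.lastCases ?_ (fun j => ?_) k
          · have := ha (Fin.last _); simp; omega
          · have := ha j.castSucc; simpa using this
        have hs : ∑ k, (a - en m) k = (N : ℤ) - 1 := by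
          simp [Finset.sum_sub_distrib, hN, en]
        have hs0 : 0 ≤ ∑ k, (a - en m) k := Finset.sum_nonneg fun k _ => (hb k).1
        have h3 := ih (N - 1) (by omega) _ hb (by omega) _ (h1 f hf)
        rw [cf_br_one ha hn] at h3
        have h4 := hc _ hn (ha _).2
        have h5 := hc 2 (by norm_num) (by omega)
        push_cast at h5
        simpa [h4, h5] using h3
      · have hn0 : a (Fin.last _) = 0 := by have := ha (Fin.last _); omega
        by_cases hex : ∃ i : Fin (2 * m), 1 ≤ a (cj m i).castSucc
        · obtain ⟨i, hi⟩ := hex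
          have hb : Box p (a - q (cj m i)) := by
            intro k
            refine Fin.lastCases ?_ (fun j => ?_) k
            · have := ha (Fin.last _); simp; omega
            · have := ha j.castSucc
              simp only [Pi.sub_apply, q_apply]; split_ifs with e
              · rw [e] at this ⊢; omega
              · omega
          have hs : ∑ k, (a - q (cj m i)) k = (N : ℤ) - 1 := by
            simp [Finset.sum_sub_distrib, hN, q]
          have hs0 : 0 ≤ ∑ k, (a - q (cj m i)) k := Finset.sum_nonneg fun k _ => (hb k).1
          have h3 := ih (N - 1) (by omega) _ hb (by omega) _ (h2 i f hf)
          rw [cf_br_q ha i hi] at h3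
          have h6 : cf F p (a - q i - q (cj m i) + en m) f = 0 := by
            by_cases hB : Box p (a - q i - q (cj m i) + en m)
            · have hs : ∑ k, (a - q i - q (cj m i) + en m) k = (N : ℤ) - 1 := by
                simp [Finset.sum_sub_distrib, Finset.sum_add_distrib, hN, q, en]
              exact ih (N - 1) (by omega) _ hB (by omega) _ hf
            · simp [cf, hB]
          have h4 := hc _ hi (ha _).2
          rw [h6] at h3
          simpa [h4, sg_ne] using h3
        · push Not at hex
          have : a = 0 := by
            ext k
            refine Fin.lastCases hn0 (fun j => ?_) k
            have h7 := hex (cj m j); rw [cj_cj] at h7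
            have := ha j.castSucc
            simp only [Pi.zero_apply]; omega
          rw [this]; exact h0 f hf
  intro f hf
  refine cf_eq_zero_of_lt fun a ha => ?_
  have h0' : 0 ≤ ∑ k, a k := Finset.sum_nonneg fun k _ => (ha k).1
  exact key (∑ k, a k).toNat a ha (by omega) f hf

theorem box_zero (hp : 0 < p) : Box p (0 : Vec m) := fun k => by simpa using hp

/-- Elements commuting with `1` and all `x_i` are constants. -/
theorem comm_N [hp : Fact p.Prime] (hp5 : 5 ≤ p) {f : TruncP F p (2 * m + 1)}
    (h1 : br 1 f = 0) (h2 : ∀ i, br (X F p (q i)) f = 0) : f = cf F p 0 f • 1 := by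
  classical
  have e1 : br (1 : TruncP F p (2 * m + 1)) 1 = 0 := by
    have := br_one (F := F) (p := p) (m := m) 0 (by simp)
    simpa using this
  have e2 : ∀ i, br (X F p (q i)) (1 : TruncP F p (2 * m + 1)) = 0 := by
    intro i
    have := br_q (F := F) (p := p) (m := m) i 0 (by simp)
    simpa using this
  have h00 : cf F p 0 (1 : TruncP F p (2 * m + 1)) = 1 := by
    rw [← X_zero, cf_X (box_zero hp.out.pos), if_pos rfl]
  have := stable_zero hp5 (F ∙ (f - cf F p 0 f • (1 : TruncP F p (2 * m + 1)))) ?_ ?_ ?_ _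
    (Submodule.mem_span_singleton_self _)
  · exact sub_eq_zero.1 this
  · intro g hg
    obtain ⟨c, rfl⟩ := Submodule.mem_span_singleton.1 hg
    rw [map_smul, map_sub, map_smul, h1, e1, smul_zero, sub_zero, smul_zero]
    exact Submodule.zero_mem _
  · intro i g hg
    obtain ⟨c, rfl⟩ := Submodule.mem_span_singleton.1 hg
    rw [map_smul, map_sub, map_smul, h2, e2, smul_zero, sub_zero, smul_zero]
    exact Submodule.zero_mem _
  · intro g hg
    obtain ⟨c, rfl⟩ := Submodule.mem_span_singleton.1 hg
    rw [map_smul, map_sub, map_smul, h00, smul_eq_mul, smul_eq_mul, mul_one, sub_self, mul_zero]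

theorem two_ne [hp : Fact p.Prime] (hp5 : 5 ≤ p) : (2 : F) ≠ 0 := by
  intro h
  have : ((2 : ℕ) : F) = 0 := by exact_mod_cast h
  rw [CharP.cast_eq_zero_iff F p] at this
  have := Nat.le_of_dvd (by norm_num) this
  omega

/-- Square-free monomials lie in `K(n)`. -/
theorem small_mem (hp5 : 5 ≤ p) (hm : 1 ≤ m) {a : Vec m} (h : ∀ k, a k ≤ 1) : X F p a ∈ Ksub F p m := by
  apply X_mem (by omega)
  rintro - e
  have := h 0
  rw [e] at this; simp [tau] at this; omega

theorem one_mem_K (hp5 : 5 ≤ p) (hm : 1 ≤ m) : (1 : TruncP F p (2 * m + 1)) ∈ Ksub F p m := by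
  rw [← X_zero]; exact small_mem hp5 hm (by simp)
theorem q_mem_K (hp5 : 5 ≤ p) (hm : 1 ≤ m) (i : Fin (2 * m)) : X F p (q i) ∈ Ksub F p m :=
  small_mem hp5 hm (by intro k; simp only [q, Pi.single_apply]; split_ifs <;> simp)
theorem en_mem_K (hp5 : 5 ≤ p) (hm : 1 ≤ m) : X F p (en m) ∈ Ksub F p m :=
  small_mem hp5 hm (by intro k; simp only [en, Pi.single_apply]; split_ifs <;> simp)

theorem br_self [Fact p.Prime] (hp5 : 5 ≤ p) (f : TruncP F p (2 * m + 1)) : br f f = 0 := by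
  have h := br_skew f f
  have h2 : (2 : F) • br f f = 0 := by rw [two_smul]; nth_rewrite 1 [h]; simp
  exact (smul_eq_zero.1 h2).resolve_left (two_ne hp5)

theorem lieSys [hp : Fact p.Prime] (hp5 : 5 ≤ p) (hm : 1 ≤ m) :
    LieSys (br : TruncP F p (2 * m + 1) →ₗ[F] _) (Ksub F p m) where
  skew := br_skew
  self := br_self hp5
  jac := jac
  mem := br_mem
  cent := by
    intro g hg
    have h := comm_N hp5 (f := g) (by rw [br_skew, hg _ (one_mem_K hp5 hm), neg_zero])
      (fun i => by rw [br_skew, hg _ (q_mem_K hp5 hm i), neg_zero])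
    have h2 := hg _ (en_mem_K hp5 hm)
    rw [h, map_smul, LinearMap.smul_apply, br_one _ en_nonneg, en_last, sub_self, X_zero] at h2
    have h3 := congrArg (cf F p 0) h2
    have h00 : cf F p 0 (1 : TruncP F p (2 * m + 1)) = 1 := by
      classical
      rw [← X_zero, cf_X (box_zero hp.out.pos), if_pos rfl]
    simp [h00, two_ne hp5] at h3
    rw [h, h3, zero_smul]
end

/-! ### Regular monomials and generation by brackets -/

section
variable {F : Type*} [Field F] {p m : ℕ}

/-- The multi-indices of the monomials of nonnegative degree in `K(n)`, other than `x_n`. -/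
structure Reg (p : ℕ) {m : ℕ} (a : Vec m) : Prop where
  box : Box p a
  deg : 0 ≤ dg a
  ne : a ≠ en m
  top : p ∣ m + 2 → a ≠ tau p m

theorem Box.W {i : Fin (2 * m)} {w : Vec m} (hw : Box p w) {α β l : ℤ} (h1 : 0 ≤ α) (h1' : α < p)
    (h2 : 0 ≤ β) (h2' : β < p) (h3 : 0 ≤ l) (h3' : l < p) : Box p (W i w α β l) := by
  intro k
  refine Fin.lastCases (by simp; omega) (fun j => ?_) k
  by_cases hj : j = i
  · subst hj; simp; omega
  by_cases hj' : j = cj m i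
  · subst hj'; simp; omega
  rw [W_o _ _ _ _ hj hj']; exact hw _

theorem reg_W {i : Fin (2 * m)} {w : Vec m} (hw : Box p w) {α β l : ℤ} (h1 : 0 ≤ α) (h1' : α < p)
    (h2 : 0 ≤ β) (h2' : β < p) (h3 : 0 ≤ l) (h3' : l < p) (hd : 2 ≤ rs i w + α + β + 2 * l)
    (hn : l = 1 → 1 ≤ rs i w + α + β) (ht : α + 2 ≤ p ∨ β + 2 ≤ p ∨ l + 2 ≤ p) :
    Reg p (W i w α β l) where
  box := hw.W h1 h1' h2 h2' h3 h3'
  deg := by rw [dg_W]; omega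
  ne := by
    intro e
    have e1 := congrFun e (Fin.last _)
    have e2 := congrArg dg e
    rw [dg_W, dg_en] at e2
    simp at e1
    have := hn e1; omega
  top := by
    rintro - e
    have e1 := congrFun e (Fin.last _)
    have e2 := congrFun e i.castSucc
    have e3 := congrFun e (cj m i).castSucc
    simp [tau] at e1 e2 e3
    omega

theorem box0 (hp : 5 ≤ p) : Box p (0 : Vec m) := box_zero (by omega)

theorem reg_W0 (hp5 : 5 ≤ p) {i : Fin (2 * m)} {α β l : ℤ} (h1 : 0 ≤ α) (h1' : α < p)
    (h2 : 0 ≤ β) (h2' : β < p) (h3 : 0 ≤ l) (h3' : l < p) (hd : 2 ≤ α + β + 2 * l)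
    (hn : l = 1 → 1 ≤ α + β) (ht : α + 2 ≤ p ∨ β + 2 ≤ p ∨ l + 2 ≤ p) :
    Reg p (W i (0 : Vec m) α β l) :=
  reg_W (box0 hp5) h1 h1' h2 h2' h3 h3' (by simpa) (by simpa) ht

theorem W_zero (i : Fin (2 * m)) : W i (0 : Vec m) 0 0 0 = 0 := W_self i 0

theorem W_add (i : Fin (2 * m)) (w : Vec m) (α β l : ℤ) :
    W i w α β l = W i w 0 0 0 + α • q i + β • q (cj m i) + l • en m := by
  apply vec_ext i
  · simp [q_ne (ne_cj i)]
  · simp [q_ne (cj_ne i)]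
  · simp
  · intro j h h'; simp [W_o _ _ _ _ h h', q_ne h, q_ne h']

theorem om_W (ω : Vec m →+ F) (hω : ∀ j, ω (q j) + ω (q (cj m j)) = ω (en m)) (i : Fin (2 * m))
    (w : Vec m) (α β l : ℤ) :
    ω (W i w α β l) = ω (W i w 0 0 0) + (α - β) * ω (q i) + (β + l) * ω (en m) := by
  rw [W_add]
  rw [map_add, map_add, map_add, map_zsmul, map_zsmul, map_zsmul, zsmul_eq_mul, zsmul_eq_mul,
    zsmul_eq_mul, ← hω i]
  ring

theorem reg_cases {M : Vec m} (h : Reg p M) (i : Fin (2 * m)) :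
    (0 ≤ M i.castSucc ∧ M i.castSucc < p) ∧ (0 ≤ M (cj m i).castSucc ∧ M (cj m i).castSucc < p) ∧
    (0 ≤ M (Fin.last _) ∧ M (Fin.last _) < p) ∧ 0 ≤ rs i M ∧
    2 ≤ rs i M + M i.castSucc + M (cj m i).castSucc + 2 * M (Fin.last _) ∧
    (M (Fin.last _) = 1 → 1 ≤ rs i M + M i.castSucc + M (cj m i).castSucc) := by
  have h1 := rs_nonneg i fun k => (h.box k).1
  have h2 := dg_eq i M
  have h3 := h.deg
  refine ⟨h.box _, h.box _, h.box _, h1, by omega, fun hn => ?_⟩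
  by_contra hc
  apply h.ne
  have ha := (h.box i.castSucc).1
  have hb := (h.box (cj m i).castSucc).1
  have hr : rs i M = 0 := by omega
  apply vec_ext i
  · simp; omega
  · simp; omega
  · simp [hn]
  · intro j hj hj'
    have := (Finset.sum_eq_zero_iff_of_nonneg (fun j _ => (h.box j.castSucc).1)).1 hr j (by
      simp [hj, hj'])
    simp [this]

theorem dvd_small {x : ℤ} (h : (p : ℤ) ∣ x) (h1 : -p < x) (h2 : x < p) : x = 0 := by
  obtain ⟨k, rfl⟩ := h
  have h3 : k < 1 := by by_contra h; nlinarith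
  have h4 : -1 < k := by by_contra h; nlinarith
  have : k = 0 := by omega
  simp [this]

variable [CharP F p]

/-- Small nonzero integers are nonzero in `F`. -/
theorem ic_ne {x : ℤ} (h : x ≠ 0) (h1 : -p < x) (h2 : x < p) : (x : F) ≠ 0 := fun h' =>
  h (dvd_small ((CharP.intCast_eq_zero_iff F p _).1 h') h1 h2)

theorem pcast : (((p : ℕ) : ℤ) : F) = 0 := by simp

/-- A functional killing all brackets of regular monomials of total weight `s` kills all regular
monomials of weight `s`, for any grading of the contact bracket with values in `F`. -/
theorem gen1 [hp : Fact p.Prime] (hp5 : 5 ≤ p) (hm : 1 ≤ m) (ω : Vec m →+ F)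
    (hω : ∀ j, ω (q j) + ω (q (cj m j)) = ω (en m)) (g : TruncP F p (2 * m + 1) →ₗ[F] F) (s : F)
    (hg : ∀ a b, Reg p a → Reg p b → ω a + ω b - ω (en m) = s → g (br (X F p a) (X F p b)) = 0)
    {M : Vec m} (hM : Reg p M) (hs : ω M = s) : g (X F p M) = 0 := by
  have hb0 := box0 (m := m) hp5
  have hneg : ∀ {w : Vec m}, Box p w → ∀ k, 0 ≤ w k := fun h k => (h k).1
  have hsM : ∀ i, ω (W i M 0 0 0) + (M i.castSucc - M (cj m i).castSucc) * ω (q i)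
      + (M (cj m i).castSucc + M (Fin.last _)) * ω (en m) = s := by
    intro i
    have := om_W ω hω i M (M i.castSucc) (M (cj m i).castSucc) (M (Fin.last _))
    rw [W_self, hs] at this; exact this.symm
  have h00 : ∀ i : Fin (2 * m), ω (W i 0 0 0 0) = 0 := fun i => by rw [W_zero, map_zero]
  by_cases hu : ∃ i : Fin (2 * m), M i.castSucc ≠ M (cj m i).castSucc
  · obtain ⟨i, hi⟩ := hu
    obtain ⟨ha, hb, hl, hr, hd, hn⟩ := reg_cases hM i
    have h := hg (W i 0 1 1 0) M (reg_W0 hp5 (by omega) (by omega) (by omega) (by omega) (by omega)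
      (by omega) (by omega) (by omega) (by omega)) hM (by
        rw [om_W ω hω i 0, h00, hs]; push_cast; ring)
    rw [← W_self i M, br_W i (hneg hM.box) (by omega) (by omega) (by omega) (by omega) (by omega)
      (by omega)] at h
    rw [map_add, map_smul, map_smul] at h
    have e : W i M (1 + M i.castSucc - 1) (1 + M (cj m i).castSucc - 1) (0 + M (Fin.last _)) = M := by
      rw [add_sub_cancel_left, add_sub_cancel_left, zero_add, W_self]
    rw [e] at h
    have hne : ((M (cj m i).castSucc - M i.castSucc : ℤ) : F) ≠ 0 :=
      ic_ne (by omega) (by omega) (by omega)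
    have h2 : sg F m i * ((M (cj m i).castSucc - M i.castSucc : ℤ) : F) * g (X F p M) = 0 := by
      push_cast at h ⊢
      simp only [smul_eq_mul] at h
      linear_combination h
    exact (mul_eq_zero.1 h2).resolve_left (mul_ne_zero (sg_ne i) hne)
  push Not at hu
  -- balanced monomials
  have mid : ∀ (M : Vec m), Reg p M → ω M = s → ∀ i, M i.castSucc = M (cj m i).castSucc →
      1 ≤ M i.castSucc → M i.castSucc + 2 ≤ p → g (X F p M) = 0 := by
    intro M hM hs i h1 h2 h3
    obtain ⟨ha, hb, hl, hr, hd, hn⟩ := reg_cases hM i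
    have hsM := om_W ω hω i M (M i.castSucc) (M (cj m i).castSucc) (M (Fin.last _))
    rw [W_self, hs] at hsM
    have h := hg (W i 0 2 0 0) (W i M (M i.castSucc - 1) (M i.castSucc + 1) (M (Fin.last _)))
      (reg_W0 hp5 (by omega) (by omega) (by omega) (by omega) (by omega)
      (by omega) (by omega) (by omega) (by omega))
      (reg_W hM.box (by omega) (by omega) (by omega) (by omega) (by omega)
      (by omega) (by omega) (by omega) (by omega)) (by
        rw [om_W ω hω i 0, om_W ω hω i M, h00, hsM, ← h1]; push_cast; ring)
    rw [br_W i (hneg hM.box) (by omega) (by omega) (by omega) (by omega) (by omega)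
      (by omega)] at h
    rw [map_add, map_smul, map_smul] at h
    have e : W i M (2 + (M i.castSucc - 1) - 1) (0 + (M i.castSucc + 1) - 1) (0 + M (Fin.last _))
        = M := by
      conv_rhs => rw [← W_self i M, ← h1]
      congr 1 <;> ring
    rw [e] at h
    have hne : ((2 * (M i.castSucc + 1) : ℤ) : F) ≠ 0 := by
      push_cast
      refine mul_ne_zero (two_ne hp5) ?_
      have := ic_ne (F := F) (p := p) (x := M i.castSucc + 1) (by omega) (by omega) (by omega)
      exact_mod_cast this
    have h2 : sg F m i * ((2 * (M i.castSucc + 1) : ℤ) : F) * g (X F p M) = 0 := by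
      push_cast at h ⊢
      simp only [smul_eq_mul] at h
      linear_combination h
    exact (mul_eq_zero.1 h2).resolve_left (mul_ne_zero (sg_ne i) hne)
  by_cases hk : ∃ i : Fin (2 * m), 1 ≤ M i.castSucc ∧ M i.castSucc + 2 ≤ p
  · obtain ⟨i, h1, h2⟩ := hk
    exact mid M hM hs i (hu i) h1 h2
  push Not at hk
  have hv : ∀ i : Fin (2 * m), M i.castSucc = 0 ∨ M i.castSucc = p - 1 := by
    intro i; have := hM.box i.castSucc; have := hk i; omega
  by_cases hz : 1 ≤ M (Fin.last _) ∧ ∃ j : Fin (2 * m), M j.castSucc = 0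
  · obtain ⟨hl1, j, hj⟩ := hz
    obtain ⟨ha, hb, hl, hr, hd, hn⟩ := reg_cases hM j
    have hj' := hu j
    have h := hg (W j 0 1 0 1) (W j M 0 1 (M (Fin.last _) - 1))
      (reg_W0 hp5 (by omega) (by omega) (by omega) (by omega) (by omega)
      (by omega) (by omega) (by omega) (by omega))
      (reg_W hM.box (by omega) (by omega) (by omega) (by omega) (by omega)
      (by omega) (by omega) (by omega) (by omega)) (by
        rw [om_W ω hω j 0, om_W ω hω j M, h00, ← hsM j, ← hj', hj]; push_cast; ring)
    rw [br_W j (hneg hM.box) (by omega) (by omega) (by omega) (by omega) (by omega)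
      (by omega)] at h
    rw [map_add, map_smul, map_smul] at h
    have e : W j M (1 + 0 - 1) (0 + 1 - 1) (1 + (M (Fin.last _) - 1)) = M := by
      conv_rhs => rw [← W_self j M, ← hj', hj]
      congr 1; ring
    rw [e, mid (W j M (1 + 0) (0 + 1) (1 + (M (Fin.last _) - 1) - 1)) ?_ ?_ j ?_ ?_ ?_] at h
    · simpa [sg_ne] using h
    · exact reg_W hM.box (by omega) (by omega) (by omega) (by omega) (by omega)
        (by omega) (by omega) (by omega) (by omega)
    · rw [om_W ω hω j M, ← hsM j, ← hj', hj]; push_cast; ring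
    · rw [W_i, W_c]; omega
    · rw [W_i]; omega
    · rw [W_i]; omega
  have htop : ∃ i : Fin (2 * m), M i.castSucc = p - 1 := by
    by_contra hc
    push Not at hc
    have h0 : ∀ i : Fin (2 * m), M i.castSucc = 0 := fun i => (hv i).resolve_right (hc i)
    have hl : M (Fin.last _) = 0 := by
      by_contra hl
      apply hz
      exact ⟨by have := hM.box (Fin.last _); omega, ⟨0, by omega⟩, h0 _⟩
    have := hM.deg
    simp [dg, h0, hl] at this
  obtain ⟨i, hi⟩ := htop
  obtain ⟨ha, hb, hl, hr, hd, hn⟩ := reg_cases hM i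
  have hi' := hu i
  by_cases hlt : M (Fin.last _) + 2 ≤ p
  · have h := hg (W i 0 2 2 0) (W i M (p - 3) (p - 3) (M (Fin.last _) + 1))
      (reg_W0 hp5 (by omega) (by omega) (by omega) (by omega) (by omega)
      (by omega) (by omega) (by omega) (by omega))
      (reg_W hM.box (by omega) (by omega) (by omega) (by omega) (by omega)
      (by omega) (by omega) (by omega) (by omega)) (by
        rw [om_W ω hω i 0, om_W ω hω i M, h00, ← hsM i, ← hi', hi]; push_cast; ring)
    rw [br_W i (hneg hM.box) (by omega) (by omega) (by omega) (by omega) (by omega)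
      (by omega)] at h
    rw [map_add, map_smul, map_smul] at h
    have e : W i M (2 + (p - 3)) (2 + (p - 3)) (0 + (M (Fin.last _) + 1) - 1) = M := by
      conv_rhs => rw [← W_self i M, ← hi', hi]
      congr 1 <;> ring
    rw [e] at h
    have hne : ((2 * (M (Fin.last _) + 1) : ℤ) : F) ≠ 0 := by
      push_cast
      refine mul_ne_zero (two_ne hp5) ?_
      have := ic_ne (F := F) (p := p) (x := M (Fin.last _) + 1) (by omega) (by omega) (by omega)
      exact_mod_cast this
    have h2 : ((2 * (M (Fin.last _) + 1) : ℤ) : F) * g (X F p M) = 0 := by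
      push_cast at h ⊢
      simp only [smul_eq_mul, CharP.cast_eq_zero] at h
      linear_combination -h
    exact (mul_eq_zero.1 h2).resolve_left hne
  -- only `x^τ` is left
  have hall : ∀ j : Fin (2 * m), M j.castSucc = p - 1 := fun j =>
    (hv j).resolve_left fun h => hz ⟨by omega, j, h⟩
  have hMt : M = tau p m := by
    ext k
    refine Fin.lastCases ?_ (fun j => ?_) k
    · simp [tau]; omega
    · simp [tau, hall]
  have hpm : ¬ p ∣ m + 2 := fun h => hM.top h hMt
  have hln : M (Fin.last _) = p - 1 := by omega
  have h := hg (W i 0 1 1 1) (W i M (p - 2) (p - 2) (p - 1))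
      (reg_W0 hp5 (by omega) (by omega) (by omega) (by omega) (by omega)
      (by omega) (by omega) (by omega) (by omega))
      (reg_W hM.box (by omega) (by omega) (by omega) (by omega) (by omega)
      (by omega) (by omega) (by omega) (by omega)) (by
        rw [om_W ω hω i 0, om_W ω hω i M, h00, ← hsM i, ← hi', hi, hln]; push_cast; ring)
  rw [br_W i (hneg hM.box) (by omega) (by omega) (by omega) (by omega) (by omega)
    (by omega)] at h
  rw [map_add, map_smul, map_smul] at h
  have e : W i M (1 + (p - 2)) (1 + (p - 2)) (1 + (p - 1) - 1) = M := by
    conv_rhs => rw [← W_self i M, ← hi', hi, hln]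
    congr 1 <;> ring
  rw [e] at h
  have hrs : (rs i M : F) = - 2 * m + 2 := by
    have h1 := dg_eq i M
    rw [hMt, dg_tau] at h1
    simp only [tau] at h1
    have : rs i (tau p m) = 2 * m * p - 2 * m + 2 - 2 * p := by linear_combination -h1
    rw [hMt, this]; push_cast; simp
  have hne : ((2 : ℤ) : F) * ((m + 2 : ℕ) : F) ≠ 0 := by
    refine mul_ne_zero ?_ fun h' => hpm ((CharP.cast_eq_zero_iff F p _).1 h')
    exact_mod_cast two_ne hp5
  have h2 : ((2 : ℤ) : F) * ((m + 2 : ℕ) : F) * g (X F p M) = 0 := by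
    push_cast at h ⊢
    simp only [smul_eq_mul, CharP.cast_eq_zero, hrs] at h
    linear_combination -h
  exact (mul_eq_zero.1 h2).resolve_left hne
end

/-! ### Cocycles without constant terms are coboundaries -/

section
variable {F : Type*} [Field F] {p : ℕ} [CharP F p] [hp : Fact p.Prime]
variable {A : Type*} [CommRing A] [Algebra F A]
variable {B : A →ₗ[F] A →ₗ[F] A} {V : Submodule F A}

/-- The coboundary of a linear map. -/
def dl (B : A →ₗ[F] A →ₗ[F] A) (φ : A →ₗ[F] A) : A →ₗ[F] A →ₗ[F] A :=
  B.compl₂ φ - (B.compl₂ φ).flip - B.compr₂ φ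

theorem dl_apply (φ : A →ₗ[F] A) (x y : A) :
    dl B φ x y = B x (φ y) - B y (φ x) - φ (B x y) := by
  simp [dl]

theorem CocOn.sub_dl (hL : LieSys B V) {ψ : A →ₗ[F] A →ₗ[F] A} (h : CocOn B V ψ) (φ : A →ₗ[F] A) :
    CocOn B V (ψ - dl B φ) where
  self := fun x hx => by
    rw [LinearMap.sub_apply, LinearMap.sub_apply, h.self x hx, dl_apply, hL.self]; simp
  coc := fun x hx y hy z hz => by
    have h1 := h.coc x hx y hy z hz
    have h2 : B x (dl B φ y z) - B y (dl B φ x z) + B z (dl B φ x y)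
        - dl B φ (B x y) z + dl B φ (B x z) y - dl B φ (B y z) x = 0 := by
      simp only [dl_apply, map_sub]
      have e1 := hL.jac x y (φ z)
      have e2 := hL.jac x z (φ y)
      have e3 := hL.jac y z (φ x)
      have e4 := congrArg φ (hL.jac x y z)
      rw [map_add] at e4
      rw [hL.skew (B x z) y, hL.skew (B y z) x, map_neg, map_neg, e1, e2, e3, e4]
      abel
    simp only [LinearMap.sub_apply, map_sub]
    have : ∀ a b c d e f a' b' c' d' e' f' : A, a - b + c - d + e - f = 0 →
        a' - b' + c' - d' + e' - f' = 0 →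
        a - a' - (b - b') + (c - c') - (d - d') + (e - e') - (f - f') = 0 := by
      intro a b c d e f a' b' c' d' e' f' h h'
      have := congrArg₂ (· - ·) h h'
      simp only [sub_zero] at this
      rw [← this]; abel
    exact this _ _ _ _ _ _ _ _ _ _ _ _ h1 h2
end

section
variable {F : Type*} [Field F] {p m : ℕ} [CharP F p] [hp : Fact p.Prime]

/-- The set `{1} ∪ {x_i : i ∈ S}`. -/
def NS (F : Type*) [Field F] (p : ℕ) (S : Finset (Fin (2 * m))) : Set (TruncP F p (2 * m + 1)) :=
  {w | w = 1 ∨ ∃ i ∈ S, w = X F p (q i)}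

theorem br_der {z : TruncP F p (2 * m + 1)} (h : Dj F p (2 * m + 1) (Fin.last (2 * m)) z = 0)
    (f : TruncP F p (2 * m + 1)) : br z f = Hf z f := by
  rw [br_def, Kbr_eq, h, mul_zero, zero_mul, sub_zero]

theorem Dn_one : Dj F p (2 * m + 1) (Fin.last (2 * m)) 1 = 0 := Derivation.map_one_eq_zero _

theorem Dn_q (i : Fin (2 * m)) : Dj F p (2 * m + 1) (Fin.last (2 * m)) (X F p (q i)) = 0 := by
  rw [D_X _ (q_nonneg i)]; simp [q, (castSucc_ne_last i).symm]

theorem br_der_mul {z : TruncP F p (2 * m + 1)}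
    (h : Dj F p (2 * m + 1) (Fin.last (2 * m)) z = 0) (a b : TruncP F p (2 * m + 1)) :
    br z (a * b) = a * br z b + b * br z a := by
  rw [br_der h, br_der h, br_der h, Derivation.leibniz, smul_eq_mul, smul_eq_mul]

/-- `(ad z)^p = 0` when `z` does not involve `x_n` and `(ad z)²` kills the coordinates. -/
theorem br_nil {z : TruncP F p (2 * m + 1)} (h : Dj F p (2 * m + 1) (Fin.last (2 * m)) z = 0)
    (h2 : ∀ i, br z (br z (xpow F p (2 * m + 1) (Pi.single i 1))) = 0) (y : TruncP F p (2 * m + 1)) :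
    ((br z) ^ p : Module.End F (TruncP F p (2 * m + 1))) y = 0 := by
  have hl := leib_p (p := p) (br z : Module.End F (TruncP F p (2 * m + 1)))
    (LinearMap.mul F (TruncP F p (2 * m + 1)))
    ⊤ (fun _ _ => Submodule.mem_top) (fun a _ b _ => by
      simp only [LinearMap.mul_apply']
      rw [br_der_mul h]; ring)
  let D : Witt F p (2 * m + 1) := Derivation.mk'
    ((br z) ^ p : Module.End F (TruncP F p (2 * m + 1))) (fun a b => by
      have := hl a Submodule.mem_top b Submodule.mem_top
      simp only [LinearMap.mul_apply'] at this
      rw [this, smul_eq_mul, smul_eq_mul]; ring)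
  refine der_ext D (fun i => ?_) y
  change ((br z) ^ p : Module.End F (TruncP F p (2 * m + 1))) _ = 0
  obtain ⟨k, hk⟩ := Nat.exists_eq_add_of_le' hp.out.two_le
  have : ∀ n, n = k + 2 → ((br z) ^ n : Module.End F (TruncP F p (2 * m + 1)))
      (xpow F p (2 * m + 1) (Pi.single i 1)) = 0 := by
    rintro _ rfl
    rw [pow_succ_app', pow_succ_app', h2, map_zero]
  exact this p hk

theorem br_one_q (i : Fin (2 * m)) : br (1 : TruncP F p (2 * m + 1)) (X F p (q i)) = 0 := by
  rw [br_one _ (q_nonneg i)]; simp [q, (castSucc_ne_last i).symm]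

theorem br_one_en : br (1 : TruncP F p (2 * m + 1)) (X F p (en m)) = (2 : F) • 1 := by
  rw [br_one _ en_nonneg]; simp

theorem br_one_one : br (1 : TruncP F p (2 * m + 1)) 1 = 0 := by
  have := br_one (F := F) (p := p) (m := m) 0 (by simp)
  simpa using this

theorem br_q_q (i j : Fin (2 * m)) : br (X F p (q i)) (X F p (q j))
    = (if j = cj m i then sg F m i else 0) • (1 : TruncP F p (2 * m + 1)) := by
  rw [br_q _ _ (q_nonneg j)]
  by_cases h : j = cj m i
  · subst h; simp [q, (castSucc_ne_last _).symm]
  · rw [if_neg h, q_ne (Ne.symm h)]; simp [q, (castSucc_ne_last _).symm]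

theorem br_q_en (i : Fin (2 * m)) : br (X F p (q i)) (X F p (en m)) = X F p (q i) := by
  rw [br_q _ _ en_nonneg]; simp

theorem br_q_one (i : Fin (2 * m)) : br (X F p (q i)) (1 : TruncP F p (2 * m + 1)) = 0 := by
  rw [br_skew, br_one_q, neg_zero]

theorem gens {P : TruncP F p (2 * m + 1) → Prop} (h1 : ∀ i : Fin (2 * m), P (X F p (q i)))
    (h2 : P (X F p (en m))) (i : Fin (2 * m + 1)) : P (xpow F p (2 * m + 1) (Pi.single i 1)) := by
  refine Fin.lastCases ?_ (fun i => ?_) i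
  · rw [← X_en]; exact h2
  · rw [← X_q]; exact h1 i

theorem X_pow {a : Vec m} (ha : ∀ i, 0 ≤ a i) (k : ℕ) : X F p a ^ k = X F p (k • a) := by
  induction k with
  | zero => simp
  | succ k ih =>
    rw [pow_succ, ih, X_mul (fun i => by simpa using mul_nonneg (by positivity) (ha i)) ha,
      succ_nsmul]

theorem X_pow_p {a : Vec m} (ha : ∀ i, 0 ≤ a i) (k : Fin (2 * m + 1)) (h : a k = 1) :
    X F p a ^ p = 0 := by
  rw [X_pow ha, X_big k (by simp [h])]

/-- The data for the normalisation at `1`: the conjugate element is `x_n / 2`. -/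
theorem stepOne (hp5 : 5 ≤ p) (hm : 1 ≤ m) :
    StepD p (br : TruncP F p (2 * m + 1) →ₗ[F] _) (Ksub F p m) ∅ 1 ((2 : F)⁻¹ • X F p (en m)) where
  zV := one_mem_K hp5 hm
  DnV := by simp
  dp :=
    { der := br_der_mul Dn_one
      nil := br_nil Dn_one (gens (P := fun x => br 1 (br 1 x) = 0) (fun i => by rw [br_one_q, map_zero])
        (by rw [br_one_en, map_smul, br_one_one, smul_zero]))
      Zu := by rw [map_smul, br_one_en, smul_smul, inv_mul_cancel₀ (two_ne hp5), one_smul]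
      up := by rw [smul_pow, X_pow_p en_nonneg (Fin.last _) (by simp), smul_zero] }
  der := by simp
  wu := by simp
  wz := by simp

theorem NS_mem (hp5 : 5 ≤ p) (hm : 1 ≤ m) (S : Finset (Fin (2 * m))) : NS F p S ⊆ Ksub F p m := by
  rintro w (rfl | ⟨i, -, rfl⟩)
  · exact one_mem_K hp5 hm
  · exact q_mem_K hp5 hm i

theorem NS_Dn {S : Finset (Fin (2 * m))} {w : TruncP F p (2 * m + 1)} (hw : w ∈ NS F p S) :
    Dj F p (2 * m + 1) (Fin.last (2 * m)) w = 0 := by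
  rcases hw with rfl | ⟨i, -, rfl⟩
  · exact Dn_one
  · exact Dn_q i

/-- The data for the normalisation at `x_i`: the conjugate element is `± x_{i'}`. -/
theorem stepQ (hp5 : 5 ≤ p) (hm : 1 ≤ m) (S : Finset (Fin (2 * m))) (i : Fin (2 * m)) (hi : i ∉ S) :
    StepD p (br : TruncP F p (2 * m + 1) →ₗ[F] _) (Ksub F p m) (NS F p S) (X F p (q i))
      (sg F m i • X F p (q (cj m i))) where
  zV := q_mem_K hp5 hm i
  DnV := NS_mem hp5 hm S
  dp :=
    { der := br_der_mul (Dn_q i)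
      nil := br_nil (Dn_q i) (gens (P := fun x => br (X F p (q i)) (br (X F p (q i)) x) = 0) (fun j => by rw [br_q_q, map_smul, br_q_one, smul_zero])
        (by rw [br_q_en, br_self hp5]))
      Zu := by rw [map_smul, br_q_q, if_pos rfl, smul_smul, sg_mul_self, one_smul]
      up := by rw [smul_pow, X_pow_p (q_nonneg _) (cj m i).castSucc (by simp), smul_zero] }
  der := fun w hw => br_der_mul (NS_Dn hw)
  wu := by
    rintro w (rfl | ⟨j, hj, rfl⟩)
    · rw [map_smul, br_one_q, smul_zero]
    · rw [map_smul, br_q_q, if_neg, zero_smul, smul_zero]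
      intro h
      rw [cj_inj] at h
      exact hi (h ▸ hj)
  wz := by
    rintro w (rfl | ⟨j, hj, rfl⟩)
    · exact ⟨0, 1, Or.inl rfl, by rw [br_one_q, zero_smul], br_one_q i, br_one_one⟩
    · exact ⟨_, 1, Or.inl rfl, br_q_q j i, br_one_q i, br_q_one j⟩

/-- A linear map is determined on `V` by the monomials of `V`. -/
theorem K_ext {M : Type*} [AddCommGroup M] [Module F M] {f : TruncP F p (2 * m + 1) →ₗ[F] M}
    (h : ∀ a : Vec m, Box p a → (p ∣ m + 2 → a ≠ tau p m) → f (X F p a) = 0) :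
    ∀ y ∈ Ksub F p m, f y = 0 := by
  classical
  intro y hy
  rw [mem_Ksub hp.out.pos] at hy
  by_cases hd : p ∣ m + 2
  · have : f = (cf F p (tau p m)).smulRight (f (X F p (tau p m))) := by
      refine lin_ext fun b hb => ?_
      rw [LinearMap.smulRight_apply, cf_X (tau_box hp.out.pos)]
      by_cases e : b = tau p m
      · rw [if_pos e, e, one_smul]
      · rw [if_neg e, zero_smul, h b hb fun _ => e]
    rw [this, LinearMap.smulRight_apply, hy hd, zero_smul]
  · have : f = 0 := lin_ext fun b hb => h b hb fun e => absurd e hd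
    rw [this]; rfl

theorem dg_neg_cases {a : Vec m} (ha : ∀ k, 0 ≤ a k) (h : dg a < 0) : a = 0 ∨ ∃ i, a = q i := by
  by_cases h0 : a = 0
  · exact Or.inl h0
  right
  have hl := ha (Fin.last _)
  by_cases hi : ∀ i : Fin (2 * m), a i.castSucc = 0
  · exfalso
    apply h0
    ext k
    refine Fin.lastCases ?_ (fun i => hi i) k
    simp [dg, hi] at h
    simp; omega
  push Not at hi
  obtain ⟨i, hi⟩ := hi
  have h1 := ha i.castSucc
  have h2 : ∑ j ∈ Finset.univ.erase i, a j.castSucc + a i.castSucc = ∑ j : Fin (2 * m), a j.castSucc :=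
    Finset.sum_erase_add _ _ (Finset.mem_univ i)
  have h3 : 0 ≤ ∑ j ∈ Finset.univ.erase i, a j.castSucc := Finset.sum_nonneg fun j _ => ha _
  have h4 : ∑ j ∈ Finset.univ.erase i, a j.castSucc = 0 := by unfold dg at h; omega
  rw [Finset.sum_eq_zero_iff_of_nonneg fun j _ => ha _] at h4
  refine ⟨i, ?_⟩
  unfold dg at h
  ext k
  refine Fin.lastCases ?_ (fun j => ?_) k
  · simp [q, (castSucc_ne_last _).symm]; omega
  · by_cases e : j = i
    · subst e; simp; omega
    · rw [q_ne e]; exact h4 j (by simp [e])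

/-- The monomials of `V`: `1`, `x_i`, `x_n`, and the regular ones. -/
theorem K_cases {a : Vec m} (ha : Box p a) (ht : p ∣ m + 2 → a ≠ tau p m) :
    (a = 0 ∨ ∃ i, a = q i) ∨ a = en m ∨ Reg p a := by
  by_cases h : dg a < 0
  · exact Or.inl (dg_neg_cases (fun k => (ha k).1) h)
  by_cases e : a = en m
  · exact Or.inr (Or.inl e)
  · exact Or.inr (Or.inr ⟨ha, by omega, e, ht⟩)

theorem dg_pos_of {a : Vec m} (ha : ∀ k, 0 ≤ a k) (h : dg a = -2) : a = 0 := by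
  rcases dg_neg_cases ha (by omega) with h0 | ⟨i, rfl⟩
  · exact h0
  · rw [dg_q] at h; omega

theorem Reg.nonneg {a : Vec m} (h : Reg p a) (k) : 0 ≤ a k := (h.box k).1

/-- Brackets with regular monomials have no constant term. -/
theorem cf0_reg {b : Vec m} (hb : Reg p b) (f : TruncP F p (2 * m + 1)) :
    cf F p 0 (br (X F p b) f) = 0 := by
  classical
  have h : (cf F p (0 : Vec m)) ∘ₗ br (X F p b) = 0 := by
    refine lin_ext fun a ha => ?_
    have ha0 : ∀ k, 0 ≤ a k := fun k => (ha k).1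
    have hz := box_zero (m := m) hp.out.pos
    have hda : -2 ≤ dg a := by
      have h1 := ha0 (Fin.last _)
      have h2 : 0 ≤ ∑ j : Fin (2 * m), a j.castSucc := Finset.sum_nonneg fun j _ => ha0 _
      unfold dg; omega
    have hdb := hb.deg
    simp only [LinearMap.comp_apply, LinearMap.zero_apply]
    rw [br_X' hb.nonneg ha0, map_add, map_sum, map_smul, cf_X hz]
    by_cases h0 : a = 0
    · subst h0
      rw [if_neg, smul_zero, add_zero]
      · refine Finset.sum_eq_zero fun j _ => ?_
        simp
      · rw [sub_eq_zero, add_zero]; exact hb.ne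
    rw [if_neg, smul_zero, add_zero]
    · refine Finset.sum_eq_zero fun j _ => ?_
      rw [map_smul, cf_X hz, if_neg, smul_zero]
      intro e
      have := congrArg dg e
      rw [dg_sub, dg_sub, dg_add, dg_q, dg_q, dg_zero] at this
      exact h0 (dg_pos_of ha0 (by omega))
    · intro e
      have := congrArg dg e
      rw [dg_sub, dg_add, dg_en, dg_zero] at this
      exact h0 (dg_pos_of ha0 (by omega))
  exact LinearMap.congr_fun h f

theorem cf0_en (f : TruncP F p (2 * m + 1)) :
    cf F p 0 (br (X F p (en m)) f) = -2 * cf F p 0 f := by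
  classical
  have h : (cf F p (0 : Vec m)) ∘ₗ br (X F p (en m)) = (-2 : F) • cf F p 0 := by
    refine lin_ext fun a ha => ?_
    have hz := box_zero (m := m) hp.out.pos
    simp only [LinearMap.comp_apply, LinearMap.smul_apply]
    rw [br_en _ fun k => (ha k).1, map_smul, cf_X hz]
    by_cases e : a = 0
    · subst e; simp
    · simp [e]
  simpa using LinearMap.congr_fun h f

/-- Every derivation `V → A` is inner in `A`. -/
theorem der_inner (hp5 : 5 ≤ p) (hm : 1 ≤ m) (d : TruncP F p (2 * m + 1) →ₗ[F] TruncP F p (2 * m + 1))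
    (hd : DerOn br (Ksub F p m) d) : ∃ g, ∀ y ∈ Ksub F p m, d y = br g y := by
  classical
  have hL := lieSys (F := F) hp5 hm
  have hsub : ∀ g (d : TruncP F p (2 * m + 1) →ₗ[F] TruncP F p (2 * m + 1)),
      DerOn br (Ksub F p m) d → DerOn br (Ksub F p m) (d - br g) := by
    intro g d hd x hx y hy
    simp only [LinearMap.sub_apply, map_sub]
    rw [hd x hx y hy, hL.jac g x y]; abel
  have key : ∀ S : Finset (Fin (2 * m)), ∃ g, ∀ w ∈ NS F p S, d w = br g w := by
    intro S
    induction S using Finset.induction_on with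
    | empty =>
      obtain ⟨a, ha, -⟩ := derStep hL (stepOne hp5 hm) d hd (by simp)
      refine ⟨a, ?_⟩
      rintro w (rfl | ⟨i, hi, -⟩)
      · exact ha
      · simp at hi
    | insert i S hi ih =>
      obtain ⟨g, hg⟩ := ih
      obtain ⟨a, ha, ha2⟩ := derStep hL (stepQ hp5 hm S i hi) (d - br g) (hsub g d hd)
        (fun w hw => by rw [LinearMap.sub_apply, hg w hw, sub_self])
      refine ⟨g + a, ?_⟩
      have h2 : ∀ w ∈ NS F p S, d w = br (g + a) w := by
        intro w hw
        rw [map_add, LinearMap.add_apply, hg w hw, ha2 w hw, add_zero]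
      rintro w (rfl | ⟨j, hj, rfl⟩)
      · exact h2 _ (Or.inl rfl)
      · rcases Finset.mem_insert.1 hj with rfl | hj
        · rw [map_add, LinearMap.add_apply, ← ha, LinearMap.sub_apply]; abel
        · exact h2 _ (Or.inr ⟨j, hj, rfl⟩)
  obtain ⟨g, hg⟩ := key Finset.univ
  obtain ⟨c, hc⟩ : ∃ c : F, c = (2 : F)⁻¹ * cf F p 0 (d (X F p (en m)) - br g (X F p (en m))) :=
    ⟨_, rfl⟩
  have h1N : ∀ w ∈ NS F p (Finset.univ : Finset (Fin (2 * m))), br 1 w = 0 := by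
    rintro w (rfl | ⟨i, -, rfl⟩)
    · exact br_one_one
    · exact br_one_q i
  obtain ⟨e, he⟩ : ∃ e, e = d - br (g + c • 1) := ⟨_, rfl⟩
  have hed : DerOn br (Ksub F p m) e := he ▸ hsub _ d hd
  have heN : ∀ w ∈ NS F p (Finset.univ : Finset (Fin (2 * m))), e w = 0 := by
    intro w hw
    rw [he, LinearMap.sub_apply, hg w hw, map_add, LinearMap.add_apply, map_smul,
      LinearMap.smul_apply, h1N w hw]; simp
  have hcf1 : cf F p (0 : Vec m) 1 = 1 := by
    rw [← X_zero, cf_X (box_zero hp.out.pos), if_pos rfl]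
  have heen : cf F p 0 (e (X F p (en m))) = 0 := by
    have h2 := two_ne (F := F) hp5
    rw [he, LinearMap.sub_apply, map_add, LinearMap.add_apply, map_smul,
      LinearMap.smul_apply, br_one_en, ← sub_sub, map_sub, map_smul, map_smul, hcf1, hc]
    simp only [smul_eq_mul]; field_simp; ring
  have hreg : ∀ M : Vec m, Reg p M → cf F p 0 (e (X F p M)) = 0 := by
    intro M hM
    refine gen1 (F := F) hp5 hm 0 (by simp) (cf F p 0 ∘ₗ e) 0 ?_ hM (by simp)
    intro a b ha hb _
    rw [LinearMap.comp_apply, hed _ (X_mem hp.out.pos ha.top) _ (X_mem hp.out.pos hb.top), map_add,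
      cf0_reg ha, br_skew, map_neg, cf0_reg hb]; simp
  have hall : ∀ y ∈ Ksub F p m, cf F p 0 (e y) = 0 := by
    refine K_ext (f := cf F p 0 ∘ₗ e) fun a ha ht => ?_
    rw [LinearMap.comp_apply]
    rcases K_cases ha ht with (rfl | ⟨i, rfl⟩) | rfl | h
    · rw [heN _ (Or.inl X_zero), map_zero]
    · rw [heN _ (Or.inr ⟨i, by simp, rfl⟩), map_zero]
    · exact heen
    · exact hreg a h
  have hstab : ∀ w ∈ NS F p (Finset.univ : Finset (Fin (2 * m))),
      ∀ f ∈ (Ksub F p m).map e, br w f ∈ (Ksub F p m).map e := by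
    rintro w hw _ ⟨y, hy, rfl⟩
    refine ⟨br w y, hL.mem _ _, ?_⟩
    rw [hed w (NS_mem hp5 hm _ hw) y hy, heN w hw]; simp
  have hz := stable_zero hp5 ((Ksub F p m).map e) (hstab 1 (Or.inl rfl))
    (fun i => hstab _ (Or.inr ⟨i, by simp, rfl⟩)) (by rintro _ ⟨y, hy, rfl⟩; exact hall y hy)
  refine ⟨g + c • 1, fun y hy => ?_⟩
  have := hz _ ⟨y, hy, rfl⟩
  rwa [he, LinearMap.sub_apply, sub_eq_zero] at this

theorem cf0_mul (e : Vec m) (he : ∀ k, 0 ≤ e k) (k) (hk : e k = 1) (c : F)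
    (a : TruncP F p (2 * m + 1)) : cf F p 0 ((c • X F p e) * a) = 0 := by
  classical
  have h : (cf F p (0 : Vec m)) ∘ₗ LinearMap.mulLeft F (c • X F p e) = 0 := by
    refine lin_ext fun b hb => ?_
    simp only [LinearMap.comp_apply, LinearMap.mulLeft_apply, LinearMap.zero_apply]
    rw [smul_mul_assoc, X_mul he fun k => (hb k).1, map_smul, cf_X (box_zero hp.out.pos), if_neg,
      smul_zero]
    intro e'
    have := congrFun e' k
    simp [hk] at this
    have := (hb k).1
    omega
  exact LinearMap.congr_fun h a

/-- A cocycle whose constant terms vanish on the monomials of nonnegative degree is a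
coboundary. -/
theorem partC (hp5 : 5 ≤ p) (hm : 1 ≤ m)
    (ψ : TruncP F p (2 * m + 1) →ₗ[F] TruncP F p (2 * m + 1) →ₗ[F] TruncP F p (2 * m + 1))
    (hψ : CocOn br (Ksub F p m) ψ)
    (h0 : ∀ a b : Vec m, (a = en m ∨ Reg p a) → (b = en m ∨ Reg p b) →
      cf F p 0 (ψ (X F p a) (X F p b)) = 0) :
    ∃ φ, ∀ x ∈ Ksub F p m, ∀ y ∈ Ksub F p m, ψ x y = dl br φ x y := by
  classical
  have hL := lieSys (F := F) hp5 hm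
  have step : ∀ (φ : TruncP F p (2 * m + 1) →ₗ[F] TruncP F p (2 * m + 1)) (Dn) (z u),
      (∀ y, cf F p 0 (φ y) = 0) →
      (∀ w ∈ Dn, ∀ y ∈ Ksub F p m, ψ w y = dl br φ w y) →
      StepD p br (Ksub F p m) Dn z u → (∀ a, cf F p 0 (u * a) = 0) →
      ∃ φ : TruncP F p (2 * m + 1) →ₗ[F] TruncP F p (2 * m + 1), (∀ y, cf F p 0 (φ y) = 0) ∧
        (∀ y ∈ Ksub F p m, ψ z y = dl br φ z y) ∧
        (∀ w ∈ Dn, ∀ y ∈ Ksub F p m, ψ w y = dl br φ w y) := by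
    intro φ Dn z u hφ hw hs hu
    obtain ⟨φ', h1, h2, h3, h4⟩ := cocStep hL hs (der_inner hp5 hm) (hψ.sub_dl hL φ)
      (fun w hwD y hy => by
        rw [LinearMap.sub_apply, LinearMap.sub_apply, hw w hwD y hy, sub_self]) (cf F p 0) hu
    have hadd : ∀ x y, dl br (φ + φ') x y = dl br φ x y + dl br φ' x y := by
      intro x y; simp only [dl_apply, LinearMap.add_apply, map_add]; abel
    refine ⟨φ + φ', fun y => by rw [LinearMap.add_apply, map_add, hφ, h1, add_zero], ?_, ?_⟩
    · intro y hy
      have := h4 y hy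
      rw [← dl_apply, LinearMap.sub_apply, LinearMap.sub_apply] at this
      rw [hadd, ← this]; abel
    · intro w hwD y hy
      rw [hadd, hw w hwD y hy, dl_apply φ', h2 w hwD, h3 w hwD y hy]; simp
  have key : ∀ S : Finset (Fin (2 * m)), ∃ φ : TruncP F p (2 * m + 1) →ₗ[F] TruncP F p (2 * m + 1),
      (∀ y, cf F p 0 (φ y) = 0) ∧ ∀ w ∈ NS F p S, ∀ y ∈ Ksub F p m, ψ w y = dl br φ w y := by
    intro S
    induction S using Finset.induction_on with
    | empty =>
      obtain ⟨φ, h1, h2, -⟩ := step 0 ∅ 1 _ (by simp) (by simp) (stepOne hp5 hm)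
        (cf0_mul _ en_nonneg (Fin.last _) (by simp) _)
      refine ⟨φ, h1, ?_⟩
      rintro w (rfl | ⟨i, hi, -⟩)
      · exact h2
      · simp at hi
    | insert i S hi ih =>
      obtain ⟨φ, h1, h2⟩ := ih
      obtain ⟨φ', h1', h2', h3'⟩ := step φ _ _ _ h1 h2 (stepQ hp5 hm S i hi)
        (cf0_mul _ (q_nonneg _) (cj m i).castSucc (by simp) _)
      refine ⟨φ', h1', ?_⟩
      rintro w (rfl | ⟨j, hj, rfl⟩)
      · exact h3' _ (Or.inl rfl)
      · rcases Finset.mem_insert.1 hj with rfl | hj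
        · exact h2'
        · exact h3' _ (Or.inr ⟨j, hj, rfl⟩)
  obtain ⟨φ, hφ, hN⟩ := key Finset.univ
  refine ⟨φ, ?_⟩
  obtain ⟨χ, hχ⟩ : ∃ χ, χ = ψ - dl br φ := ⟨_, rfl⟩
  have hc : CocOn br (Ksub F p m) χ := hχ ▸ hψ.sub_dl hL φ
  have hN' : ∀ w ∈ NS F p (Finset.univ : Finset (Fin (2 * m))), ∀ y ∈ Ksub F p m, χ w y = 0 := by
    intro w hw y hy
    rw [hχ, LinearMap.sub_apply, LinearMap.sub_apply, hN w hw y hy, sub_self]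
  have hcf : ∀ a : Vec m, (a = en m ∨ Reg p a) → ∀ y, cf F p 0 (br (X F p a) (φ y)) = 0 := by
    rintro a (rfl | ha) y
    · rw [cf0_en, hφ, mul_zero]
    · rw [cf0_reg ha]
  have hχ0 : ∀ a b : Vec m, (a = en m ∨ Reg p a) → (b = en m ∨ Reg p b) →
      cf F p 0 (χ (X F p a) (X F p b)) = 0 := by
    intro a b ha hb
    rw [hχ, LinearMap.sub_apply, LinearMap.sub_apply, map_sub, h0 a b ha hb, dl_apply, map_sub,
      map_sub, hcf a ha, hcf b hb, hφ]; simp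
  have hK : ∀ x ∈ Ksub F p m, ∀ y ∈ Ksub F p m, cf F p 0 (χ x y) = 0 := by
    intro x hx y hy
    refine K_ext (f := cf F p 0 ∘ₗ χ.flip y) (fun a ha ht => ?_) x hx
    rw [LinearMap.comp_apply, LinearMap.flip_apply]
    have haK := X_mem (F := F) hp.out.pos ht
    refine K_ext (f := cf F p 0 ∘ₗ χ (X F p a)) (fun b hb htb => ?_) y hy
    rw [LinearMap.comp_apply]
    have hbK := X_mem (F := F) hp.out.pos htb
    have hn : ∀ {c : Vec m}, (c = 0 ∨ ∃ i, c = q i) →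
        X F p c ∈ NS F p (Finset.univ : Finset (Fin (2 * m))) := by
      rintro c (rfl | ⟨i, rfl⟩)
      · exact Or.inl X_zero
      · exact Or.inr ⟨i, by simp, rfl⟩
    rcases K_cases ha ht with h | h
    · rw [hN' _ (hn h) _ hbK, map_zero]
    rcases K_cases hb htb with h' | h'
    · rw [hc.skew haK hbK, hN' _ (hn h') _ haK]; simp
    · exact hχ0 a b h h'
  obtain ⟨M, hM⟩ : ∃ M : Submodule F (TruncP F p (2 * m + 1)),
      M = Submodule.span F {f | ∃ x ∈ Ksub F p m, ∃ y ∈ Ksub F p m, f = χ x y} := ⟨_, rfl⟩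
  have hmem : ∀ x ∈ Ksub F p m, ∀ y ∈ Ksub F p m, χ x y ∈ M := fun x hx y hy =>
    hM ▸ Submodule.subset_span ⟨x, hx, y, hy, rfl⟩
  have hstab : ∀ w ∈ NS F p (Finset.univ : Finset (Fin (2 * m))), ∀ f ∈ M, br w f ∈ M := by
    intro w hw f hf
    have : M ≤ M.comap (br w) := by
      nth_rewrite 1 [hM]
      rw [Submodule.span_le]
      rintro _ ⟨x, hx, y, hy, rfl⟩
      have hwK := NS_mem hp5 hm _ hw
      have h := hc.coc w hwK x hx y hy
      rw [hN' w hw y hy, hN' w hw x hx, hc.skew (hL.mem x y) hwK, hN' w hw _ (hL.mem x y)] at h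
      have e : br w (χ x y) = χ (br w x) y - χ (br w y) x := by
        simp only [map_zero, sub_zero, add_zero, neg_zero] at h
        rw [← sub_eq_zero, ← h]; abel
      change br w (χ x y) ∈ M
      rw [e]
      exact M.sub_mem (hmem _ (hL.mem _ _) _ hy) (hmem _ (hL.mem _ _) _ hx)
    exact this hf
  have hz := stable_zero hp5 M (hstab 1 (Or.inl rfl))
    (fun i => hstab _ (Or.inr ⟨i, by simp, rfl⟩)) (by
      intro f hf
      have : M ≤ LinearMap.ker (cf F p (0 : Vec m)) := by
        rw [hM, Submodule.span_le]
        rintro _ ⟨x, hx, y, hy, rfl⟩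
        exact hK x hx y hy
      exact this hf)
  intro x hx y hy
  have := hz _ (hmem x hx y hy)
  rwa [hχ, LinearMap.sub_apply, LinearMap.sub_apply, sub_eq_zero] at this
end

/-! ### Squarings are cocycles -/

section
variable {F : Type*} [Field F] {p : ℕ} [CharP F p] [hp : Fact p.Prime]
variable {M : Type*} [AddCommGroup M] [Module F M]

/-- The divided power `T^k/k!`, which is `0` for `k ≥ p` because `0⁻¹ = 0`. -/
def dv (F : Type*) [Field F] {M : Type*} [AddCommGroup M] [Module F M] (T : Module.End F M)
    (k : ℕ) : Module.End F M := (k.factorial : F)⁻¹ • T ^ k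

theorem dv_zero (T : Module.End F M) (x : M) : dv F T 0 x = x := by simp [dv]

theorem dv_big (T : Module.End F M) {k : ℕ} (hk : p ≤ k) (x : M) : dv F T k x = 0 := by
  simp [dv, fact_zero hk]

theorem dv_br (T : Module.End F M) (B : M →ₗ[F] M →ₗ[F] M)
    (hB : ∀ s t, T (B s t) = B (T s) t + B s (T t)) {k : ℕ} (hk : k < p) (s t : M) :
    dv F T k (B s t) = ∑ ij ∈ Finset.HasAntidiagonal.antidiagonal k,
      B (dv F T ij.1 s) (dv F T ij.2 t) := by
  rw [dv, LinearMap.smul_apply, leib_div T B ⊤ (fun _ _ => trivial) (fun s _ t _ => hB s t) k s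
    trivial t trivial, Finset.smul_sum]
  apply Finset.sum_congr rfl
  rintro ⟨i, j⟩ hij
  rw [Finset.HasAntidiagonal.mem_antidiagonal] at hij
  have hij : i + j = k := hij
  have h1 := Nat.choose_mul_factorial_mul_factorial (show i ≤ k by omega)
  rw [show k - i = j by omega] at h1
  have h2 : ((k.choose i : ℕ) : F) * (i.factorial : F) * (j.factorial : F) = k.factorial := by
    rw [← Nat.cast_mul, ← Nat.cast_mul, h1]
  have hi := fact_ne (F := F) (p := p) (k := i) (by omega)
  have hj := fact_ne (F := F) (p := p) (k := j) (by omega)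
  have hk := fact_ne (F := F) (p := p) (k := k) (by omega)
  simp only [dv, LinearMap.smul_apply, map_smul, smul_smul]
  congr 1
  rw [← h2] at hk ⊢
  have h3 : ((k.choose i : ℕ) : F) ≠ 0 := by
    intro h; rw [h] at hk; simp at hk
  field_simp

/-- The squaring as a sum over all pairs of divided powers of total order `p`. -/
def sq (F : Type*) [Field F] {M : Type*} [AddCommGroup M] [Module F M] (p : ℕ)
    (B : M →ₗ[F] M →ₗ[F] M) (T : Module.End F M) : M →ₗ[F] M →ₗ[F] M :=
  ∑ ij ∈ Finset.HasAntidiagonal.antidiagonal p, B.compl₁₂ (dv F T ij.1) (dv F T ij.2)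

theorem sq_apply (B : M →ₗ[F] M →ₗ[F] M) (T : Module.End F M) (x y : M) :
    sq F p B T x y = ∑ ij ∈ Finset.HasAntidiagonal.antidiagonal p,
      B (dv F T ij.1 x) (dv F T ij.2 y) := by
  simp [sq, LinearMap.sum_apply]

theorem Squaring_eq (B : M →ₗ[F] M →ₗ[F] M) (b : M → M → M) (hb : ∀ x y, b x y = B x y)
    (T : Module.End F M) (x y : M) :
    Squaring F p b T x y = sq F p B T x y := by
  rw [sq_apply, Squaring, Finset.Nat.sum_antidiagonal_eq_sum_range_succ
    (fun i j => B (dv F T i x) (dv F T j y)) p]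
  apply Finset.sum_subset_zero_on_sdiff
  · intro i hi; simp at hi ⊢; omega
  · intro i hi
    simp only [Finset.mem_sdiff, Finset.mem_range, Finset.mem_Ioo, not_and_or, not_lt] at hi
    obtain ⟨h1, h2 | h2⟩ := hi
    · have : i = 0 := by omega
      subst this
      rw [dv_big (p := p) T (k := p - 0) (by omega), map_zero]
    · rw [dv_big (p := p) T (k := i) (by omega), map_zero, LinearMap.zero_apply]
  · intro i hi
    rw [hb, dv, dv, LinearMap.smul_apply, LinearMap.smul_apply, map_smul, map_smul,
      LinearMap.smul_apply, smul_smul, Nat.cast_mul, mul_inv, mul_comm, Module.End.pow_apply,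
      Module.End.pow_apply]

/-- Cyclic permutation of a sum over triples of total `n`. -/
theorem sum_cyc (f : ℕ → ℕ → ℕ → M) (n : ℕ) :
    ∑ ak ∈ Finset.HasAntidiagonal.antidiagonal n, ∑ ij ∈ Finset.HasAntidiagonal.antidiagonal ak.1,
        f ij.1 ij.2 ak.2
      = ∑ ak ∈ Finset.HasAntidiagonal.antidiagonal n,
        ∑ ij ∈ Finset.HasAntidiagonal.antidiagonal ak.1, f ak.2 ij.1 ij.2 := by
  rw [Finset.sum_sigma', Finset.sum_sigma']
  refine Finset.sum_nbij'
    (fun s => ⟨(s.2.2 + s.1.2, s.2.1), (s.2.2, s.1.2)⟩)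
    (fun s => ⟨(s.1.2 + s.2.1, s.2.2), (s.1.2, s.2.1)⟩) ?_ ?_ ?_ ?_ ?_
  · rintro ⟨⟨a, k⟩, ⟨i, j⟩⟩ h
    simp only [Finset.mem_sigma, Finset.HasAntidiagonal.mem_antidiagonal] at h ⊢
    refine ⟨?_, trivial⟩
    have := h.1; have := h.2; omega
  · rintro ⟨⟨a, k⟩, ⟨i, j⟩⟩ h
    simp only [Finset.mem_sigma, Finset.HasAntidiagonal.mem_antidiagonal] at h ⊢
    refine ⟨?_, trivial⟩
    have := h.1; have := h.2; omega
  · rintro ⟨⟨a, k⟩, ⟨i, j⟩⟩ h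
    simp only [Finset.mem_sigma, Finset.HasAntidiagonal.mem_antidiagonal] at h ⊢
    obtain ⟨-, rfl⟩ := h
    rfl
  · rintro ⟨⟨a, k⟩, ⟨i, j⟩⟩ h
    simp only [Finset.mem_sigma, Finset.HasAntidiagonal.mem_antidiagonal] at h ⊢
    obtain ⟨-, rfl⟩ := h
    rfl
  · rintro ⟨⟨a, k⟩, ⟨i, j⟩⟩ h
    rfl

section
variable (B : M →ₗ[F] M →ₗ[F] M) (T : Module.End F M)

/-- The two terms of the cocycle identity in which `z` is outermost, as one sum over all triples of divided
powers of total order `p`. -/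
theorem sq_br (hB : ∀ s t, T (B s t) = B (T s) t + B s (T t)) (x y z : M) :
    sq F p B T (B x y) z + B (sq F p B T x y) z
    = ∑ ak ∈ Finset.HasAntidiagonal.antidiagonal p,
        ∑ ij ∈ Finset.HasAntidiagonal.antidiagonal ak.1,
          B (B (dv F T ij.1 x) (dv F T ij.2 y)) (dv F T ak.2 z) := by
  have hp0 := hp.out.pos
  have hmem : ((p, 0) : ℕ × ℕ) ∈ Finset.HasAntidiagonal.antidiagonal p := by simp
  rw [sq_apply, ← Finset.add_sum_erase _ _ hmem, ← Finset.add_sum_erase _ _ hmem]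
  simp only
  rw [dv_big (p := p) T le_rfl, map_zero, LinearMap.zero_apply, zero_add, dv_zero, add_comm,
    sq_apply, map_sum, LinearMap.sum_apply]
  congr 1
  apply Finset.sum_congr rfl
  rintro ⟨a, k⟩ h
  rw [Finset.mem_erase, Finset.HasAntidiagonal.mem_antidiagonal, Ne, Prod.mk.injEq] at h
  simp only at h ⊢
  rw [dv_br (p := p) T B hB (by omega), map_sum, LinearMap.sum_apply]

theorem sq_skew (hs : ∀ x y, B x y = - B y x) (x y : M) : sq F p B T x y = - sq F p B T y x := by
  rw [sq_apply, sq_apply, ← Finset.sum_neg_distrib,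
    ← Finset.Nat.sum_antidiagonal_swap (n := p)]
  apply Finset.sum_congr rfl
  intro ij _
  rw [hs]; rfl

/-- The squaring of a derivation is a cocycle: the cyclic sum of `sq_br` vanishes by the Jacobi identity. -/
theorem sq_coc (hB : ∀ s t, T (B s t) = B (T s) t + B s (T t))
    (hs : ∀ x y, B x y = - B y x) (hj : ∀ x y z, B x (B y z) = B y (B x z) + B (B x y) z)
    (x y z : M) : B x (sq F p B T y z) - B y (sq F p B T x z) + B z (sq F p B T x y)
    - sq F p B T (B x y) z + sq F p B T (B x z) y - sq F p B T (B y z) x = 0 := by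
  have h1 := sq_br (p := p) B T hB x y z
  have h2 := sq_br (p := p) B T hB y z x
  have h3 := sq_br (p := p) B T hB z x y
  rw [sum_cyc (fun i j k => B (B (dv F T i z) (dv F T j x)) (dv F T k y)) p,
    sum_cyc (fun i j k => B (B (dv F T k z) (dv F T i x)) (dv F T j y)) p] at h3
  have h4 : (sq F p B T (B x y) z + B (sq F p B T x y) z)
      + (sq F p B T (B y z) x + B (sq F p B T y z) x)
      + (sq F p B T (B z x) y + B (sq F p B T z x) y) = 0 := by
    rw [h1, h2, h3, sum_cyc (fun i j k => B (B (dv F T i x) (dv F T j y)) (dv F T k z)) p]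
    rw [← Finset.sum_add_distrib, ← Finset.sum_add_distrib]
    apply Finset.sum_eq_zero
    intro ak _
    rw [← Finset.sum_add_distrib, ← Finset.sum_add_distrib]
    apply Finset.sum_eq_zero
    intro ij _
    have e : ∀ a b c : M, B (B a b) c + B (B b c) a + B (B c a) b = 0 := by
      intro a b c
      rw [hs (B b c) a, hs (B c a) b, hj a b c, hs c a, map_neg]; abel
    exact e _ _ _
  rw [hs (sq F p B T x y) z, hs (sq F p B T y z) x, hs (sq F p B T z x) y,
    sq_skew B T hs z x, hs z x] at h4
  simp only [map_neg, LinearMap.neg_apply, neg_neg] at h4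
  rw [← neg_eq_zero, ← h4]
  abel
end
end

section
variable {F : Type*} [Field F] {p m : ℕ} [CharP F p] [hp : Fact p.Prime]

theorem sqE_eq (z x y : TruncP F p (2 * m + 1)) :
    SqE F p (Kbr F p m) z x y = sq F p (br (F := F) (p := p) (m := m)) (br z) x y :=
  Squaring_eq br (Kbr F p m) (fun _ _ => rfl) (br z) x y

/-- Squarings are cocycles of `K(n)` with values in `K(n)`. -/
theorem sqE_coc (hp5 : 5 ≤ p) (z : TruncP F p (2 * m + 1)) :
    IsCocycleOn F (Ksub F p m) (Kbr F p m) (SqE F p (Kbr F p m) z) := by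
  have e : SqE F p (Kbr F p m) z = fun x y => sq F p (br (F := F) (p := p) (m := m)) (br z) x y := by
    funext x y; exact sqE_eq z x y
  have hB : ∀ s t, br z (br s t) = br (br z s) t + br s (br z t) := by
    intro s t; exact (jac z s t).trans (by abel)
  rw [e]
  refine ⟨⟨fun x => ⟨map_add _, map_smul _⟩, fun y => ⟨fun a b => ?_, fun c a => ?_⟩⟩, ?_, ?_, ?_⟩
  · simp only [map_add, LinearMap.add_apply]
  · simp only [map_smul, LinearMap.smul_apply]
  · intro x _ y _
    show sq F p br (br z) x y ∈ _
    rw [sq_apply]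
    exact Submodule.sum_mem _ fun _ _ => br_mem _ _
  · intro x _
    have h := sq_skew (p := p) br (br z) br_skew x x
    have h2 : (2 : F) • sq F p br (br z) x x = 0 := by
      rw [two_smul]; nth_rewrite 1 [h]; simp
    exact (smul_eq_zero.1 h2).resolve_left (two_ne hp5)
  · intro x _ y _ w _
    exact sq_coc (p := p) br (br z) hB br_skew jac x y w
end

/-! ### Functionals detecting the squarings -/

section
variable {F : Type*} [Field F] {p : ℕ} [CharP F p] [hp : Fact p.Prime]
variable {M : Type*} [AddCommGroup M] [Module F M]

theorem dv_shift (T : Module.End F M) {x : M} {c : ℕ} (h : (T ^ c) x = 0) (k : ℕ) (hk : c ≤ k) :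
    dv F T k x = 0 := by
  rw [dv, LinearMap.smul_apply, ← Nat.sub_add_cancel hk, pow_add, Module.End.mul_apply, h, map_zero,
    smul_zero]

/-- The squaring on an element annihilated by the cube of the operator. -/
theorem sq_small (hp5 : 5 ≤ p) (B : M →ₗ[F] M →ₗ[F] M) (T : Module.End F M) {x : M}
    (h : T (T (T x)) = 0) (y : M) : sq F p B T x y
      = B (T x) (dv F T (p - 1) y) + (2 : F)⁻¹ • B (T (T x)) (dv F T (p - 2) y) := by
  have h3 : ∀ k, 3 ≤ k → dv F T k x = 0 := dv_shift T (c := 3) h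
  rw [sq_apply, Finset.Nat.sum_antidiagonal_eq_sum_range_succ
    (fun i j => B (dv F T i x) (dv F T j y)) p]
  obtain ⟨n, hn⟩ : ∃ n, p.succ = n + 3 := ⟨p - 2, by omega⟩
  rw [hn, Finset.sum_range_succ', Finset.sum_range_succ', Finset.sum_range_succ',
    Finset.sum_eq_zero, Nat.sub_zero, dv_big (p := p) T le_rfl]
  · simp [dv, pow_succ, add_comm, smul_comm (2 : F)⁻¹]
  · intro k _; rw [h3 _ (by omega), map_zero, LinearMap.zero_apply]
end

section
variable {F : Type*} [Field F] {p m : ℕ} [CharP F p] [hp : Fact p.Prime]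
local notation "A" => TruncP F p (2 * m + 1)

/-- The functional on cochains detecting the squaring of `x_{i'}`. -/
def LamQ (i : Fin (2 * m)) (ψ : A →ₗ[F] A →ₗ[F] A) : F :=
  cf F p 0 (ψ (X F p (W i 0 2 0 0)) (X F p (W i 0 (p - 1) 1 0)))

/-- The functional on cochains detecting the squaring of `1`. -/
def Lam0 (ψ : A →ₗ[F] A →ₗ[F] A) : F :=
  cf F p 0 (ψ (X F p ((2 : ℤ) • en m)) (X F p ((p - 1 : ℤ) • en m)))

theorem W_en (i : Fin (2 * m)) (l : ℤ) : W i (0 : Vec m) 0 0 l = l • en m := by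
  rw [W_add, W_zero]; simp
theorem W_q (i : Fin (2 * m)) : W i (0 : Vec m) 1 0 0 = q i := by
  rw [W_add, W_zero]; simp
theorem W_qc (i : Fin (2 * m)) : W i (0 : Vec m) 0 1 0 = q (cj m i) := by
  rw [W_add, W_zero]; simp

theorem zn : ∀ k, 0 ≤ (0 : Vec m) k := by simp

theorem lamQ_dl (hp5 : 5 ≤ p) (i : Fin (2 * m)) (φ : A →ₗ[F] A) : LamQ i (dl br φ) = 0 := by
  have r1 : Reg p (W i (0 : Vec m) 2 0 0) :=
    reg_W0 hp5 (by omega) (by omega) (by omega) (by omega) (by omega)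
      (by omega) (by omega) (by omega) (by omega)
  have r2 : Reg p (W i (0 : Vec m) (p - 1) 1 0) :=
    reg_W0 hp5 (by omega) (by omega) (by omega) (by omega) (by omega)
      (by omega) (by omega) (by omega) (by omega)
  rw [LamQ, dl_apply, map_sub, map_sub, cf0_reg r1, cf0_reg r2, br_W i zn (by omega) (by omega)
    (by omega) (by omega) (by omega) (by omega), X_big i.castSucc, X_big i.castSucc]
  · simp
  · simp; omega
  · simp; omega

theorem lam0_dl (hp5 : 5 ≤ p) (hm : 1 ≤ m) (φ : A →ₗ[F] A) : Lam0 (dl br φ) = 0 := by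
  obtain ⟨i⟩ : Nonempty (Fin (2 * m)) := ⟨⟨0, by omega⟩⟩
  rw [Lam0, ← W_en i, ← W_en i]
  have r1 : Reg p (W i (0 : Vec m) 0 0 2) :=
    reg_W0 hp5 (by omega) (by omega) (by omega) (by omega) (by omega)
      (by omega) (by omega) (by omega) (by omega)
  have r2 : Reg p (W i (0 : Vec m) 0 0 (p - 1)) :=
    reg_W0 hp5 (by omega) (by omega) (by omega) (by omega) (by omega)
      (by omega) (by omega) (by omega) (by omega)
  rw [dl_apply, map_sub, map_sub, cf0_reg r1, cf0_reg r2, br_W _ zn (by omega) (by omega)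
    (by omega) (by omega) (by omega) (by omega), X_big (Fin.last _), X_big (Fin.last _)]
  · simp
  · simp; omega
  · simp; omega

theorem pow_one_X (i : Fin (2 * m)) (a k : ℕ) (h : k ≤ a) :
    ((br 1 : Module.End F A) ^ k) (X F p (W i 0 0 0 a))
      = (2 ^ k * a.descFactorial k : F) • X F p (W i 0 0 0 (a - k : ℤ)) := by
  induction k with
  | zero => simp
  | succ k ih =>
    rw [pow_succ_app, ih (by omega), map_smul, br_one _ (W_nonneg zn le_rfl le_rfl (by omega)),
      smul_smul, Nat.descFactorial_succ]
    congr 1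
    · push_cast [Nat.cast_sub (show k ≤ a by omega)]; simp; ring
    · congr 1
      rw [W_add, W_add i 0 0 0 (a - (k + 1 : ℕ) : ℤ)]; push_cast; module

theorem pow_q_X (i : Fin (2 * m)) (a k : ℕ) (β : ℤ) (hβ : 0 ≤ β) (h : k ≤ a) :
    ((br (X F p (q (cj m i))) : Module.End F A) ^ k) (X F p (W i 0 a β 0))
      = (sg F m (cj m i) ^ k * a.descFactorial k : F) • X F p (W i 0 (a - k : ℤ) β 0) := by
  induction k with
  | zero => simp
  | succ k ih =>
    rw [pow_succ_app, ih (by omega), map_smul, br_q _ _ (W_nonneg zn (by omega) hβ le_rfl),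
      cj_cj, W_n, W_i, Int.cast_zero, zero_smul, add_zero,
      smul_smul, Nat.descFactorial_succ]
    congr 1
    · push_cast [Nat.cast_sub (show k ≤ a by omega)]; ring
    · congr 1
      rw [W_add, W_add i 0 (a - (k + 1 : ℕ) : ℤ)]; push_cast; module

theorem dv_top {T : Module.End F A} {s : F} {x : A} {y : ℕ → A} (k : ℕ) (hk : k < p)
    (h : (T ^ k) x = (s ^ k * (p - 1).descFactorial k : F) • y k) :
    dv F T k x = (-s) ^ k • y k := by
  rw [dv, LinearMap.smul_apply, h, smul_smul, Nat.descFactorial_eq_factorial_mul_choose,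
    Nat.cast_mul, choose_pred k hk, neg_pow s]
  congr 1
  have := fact_ne (F := F) hk
  field_simp

theorem sq_zero (hp5 : 5 ≤ p) {z x : A} (h : br z x = 0) (y : A) : sq F p br (br z) x y = 0 := by
  rw [sq_small hp5 _ _ (by rw [h, map_zero, map_zero]), h]; simp

theorem lamQ_sq_one (hp5 : 5 ≤ p) (i : Fin (2 * m)) : LamQ i (sq F p (br : A →ₗ[F] _) (br 1)) = 0 := by
  rw [LamQ, sq_zero hp5, map_zero]
  rw [br_one _ (W_nonneg zn (by omega) le_rfl le_rfl)]; simp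

theorem lamQ_sq_ne (hp5 : 5 ≤ p) {i j : Fin (2 * m)} (h : j ≠ cj m i) :
    LamQ i (sq F p (br : A →ₗ[F] _) (br (X F p (q j)))) = 0 := by
  rw [LamQ, sq_zero hp5, map_zero]
  rw [br_q _ _ (W_nonneg zn (by omega) le_rfl le_rfl), W_n]
  have h1 : cj m j ≠ i := fun e => h (by rw [← e, cj_cj])
  by_cases h2 : cj m j = cj m i
  · rw [h2, W_c]; simp
  · rw [W_o _ _ _ _ h1 h2]; simp

theorem lamQ_sq (hp5 : 5 ≤ p) (i : Fin (2 * m)) :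
    LamQ i (sq F p (br : A →ₗ[F] _) (br (X F p (q (cj m i))))) ≠ 0 := by
  have t : br (X F p (q (cj m i))) (X F p (W i 0 2 0 0))
      = (2 * sg F m (cj m i)) • X F p (q i) := by
    have := pow_q_X (F := F) (p := p) i 2 1 0 le_rfl (by omega)
    simp only [pow_one, Nat.cast_ofNat, Nat.descFactorial_one, Nat.cast_one] at this
    rw [this, mul_comm (sg F m (cj m i)), show (2 - 1 : ℤ) = 1 by norm_num, W_q]
  have t2 : br (X F p (q (cj m i))) (br (X F p (q (cj m i))) (X F p (W i 0 2 0 0)))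
      = (2 : F) • 1 := by
    rw [t, map_smul, br_q_q, cj_cj, if_pos rfl, smul_smul]
    congr 1; rw [mul_assoc, sg_mul_self, mul_one]
  rw [LamQ, sq_small hp5, t2, t]
  · have d : ∀ k : ℕ, k < p → _ := fun k hk => dv_top (F := F) (p := p) k hk
      (y := fun k => X F p (W i 0 ((p - 1 : ℕ) - k : ℤ) 1 0))
      (pow_q_X (F := F) (p := p) i (p - 1) k 1 (by omega) (by omega))
    have hc : (((p - 1 : ℕ) : ℤ)) = p - 1 := by have := hp.out.pos; omega
    have hc2 : (((p - 2 : ℕ) : ℤ)) = p - 2 := by omega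
    simp only [hc] at d
    rw [d _ (by omega), d _ (by omega), hc, hc2]
    rw [show (p - 1 - (p - 1) : ℤ) = 0 by ring, W_qc]
    rw [map_smul, map_smul, map_smul, LinearMap.smul_apply, br_q_q, if_pos rfl,
      map_smul br, LinearMap.smul_apply, br_one _ (W_nonneg zn (by omega) (by omega) le_rfl), W_n]
    rw [← X_zero, map_add, map_smul, map_smul, map_smul, cf_X (box_zero (by omega)), if_pos rfl]
    have h2 := two_ne (F := F) hp5
    have h3 := sg_ne (F := F) i
    have h4 := sg_ne (F := F) (cj m i)
    simp [h2, h3, h4]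
  · rw [t2, map_smul, br_q_one, smul_zero]

theorem lam0_sq_q (hp5 : 5 ≤ p) (i : Fin (2 * m)) :
    Lam0 (sq F p (br : A →ₗ[F] _) (br (X F p (q i)))) = 0 := by
  have t : br (X F p (q i)) (X F p ((2 : ℤ) • en m)) = (2 : F) • X F p (W i 0 1 0 1) := by
    rw [br_q _ _ (by rw [← W_en i]; exact W_nonneg zn le_rfl le_rfl (by omega)), ← W_en i, W_c, W_n,
      Int.cast_zero, mul_zero, zero_smul, zero_add]
    push_cast
    congr 2
    rw [W_add, W_add i 0 1 0 1]; module
  have t2 : br (X F p (q i)) (br (X F p (q i)) (X F p ((2 : ℤ) • en m)))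
      = (2 : F) • X F p (W i 0 2 0 0) := by
    rw [t, map_smul, br_q _ _ (W_nonneg zn (by omega) le_rfl (by omega)), W_c, W_n,
      Int.cast_zero, mul_zero, zero_smul, zero_add, Int.cast_one, one_smul]
    congr 2
    rw [W_add, W_add i 0 2 0 0]; module
  rw [Lam0, sq_small hp5, t2, t, map_smul, map_smul, map_add, map_smul, LinearMap.smul_apply,
    LinearMap.smul_apply, map_smul, map_smul, cf0_reg, cf0_reg]
  · simp
  · exact reg_W0 hp5 (by omega) (by omega) (by omega) (by omega) (by omega)
      (by omega) (by omega) (by omega) (by omega)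
  · exact reg_W0 hp5 (by omega) (by omega) (by omega) (by omega) (by omega)
      (by omega) (by omega) (by omega) (by omega)
  · rw [t2, map_smul, br_q _ _ (W_nonneg zn (by omega) le_rfl (by omega)), W_c, W_n]; simp

theorem lam0_sq_one (hp5 : 5 ≤ p) (hm : 1 ≤ m) : Lam0 (sq F p (br : A →ₗ[F] _) (br 1)) ≠ 0 := by
  obtain ⟨i⟩ : Nonempty (Fin (2 * m)) := ⟨⟨0, by omega⟩⟩
  have t : br 1 (X F p ((2 : ℤ) • en m)) = (4 : F) • X F p (en m) := by
    rw [br_one _ (by rw [← W_en i]; exact W_nonneg zn le_rfl le_rfl (by omega)), ← W_en i, W_n]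
    congr 1
    · push_cast; norm_num
    · congr 1; rw [W_en]; module
  have t2 : br 1 (br 1 (X F p ((2 : ℤ) • en m))) = (8 : F) • (1 : A) := by
    rw [t, map_smul, br_one_en, smul_smul]; norm_num
  rw [Lam0, sq_small hp5, t2, t]
  · have d : ∀ k : ℕ, k < p → _ := fun k hk => dv_top (F := F) (p := p) k hk
      (y := fun k => X F p (W i 0 0 0 ((p - 1 : ℕ) - k : ℤ)))
      (pow_one_X (F := F) (p := p) i (p - 1) k (by omega))
    have hc : (((p - 1 : ℕ) : ℤ)) = p - 1 := by have := hp.out.pos; omega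
    have hc2 : (((p - 2 : ℕ) : ℤ)) = p - 2 := by omega
    simp only [hc] at d
    rw [← W_en i (p - 1), d _ (by omega), d _ (by omega), hc, hc2]
    rw [show (p - 1 - (p - 1) : ℤ) = 0 by ring, show (p - 1 - (p - 2) : ℤ) = 1 by ring, W_zero,
      W_en, one_smul]
    simp only [map_smul, map_add, LinearMap.smul_apply, cf0_en, br_one_en, smul_smul]
    rw [← X_zero, cf_X (box_zero (by omega)), if_pos rfl]
    have h2 := two_ne (F := F) hp5
    have h3 : (3 : F) ≠ 0 := by
      have := ic_ne (F := F) (p := p) (x := 3) (by omega) (by omega) (by omega)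
      exact_mod_cast this
    have e : p - 1 = p - 2 + 1 := by omega
    rw [e, pow_succ]
    have : (-(2 : F)) ^ (p - 2) * (2 ^ 3 * 3) ≠ 0 :=
      mul_ne_zero (pow_ne_zero _ (neg_ne_zero.2 h2)) (mul_ne_zero (pow_ne_zero _ h2) h3)
    intro h
    apply this
    simp only [smul_eq_mul] at h
    have h8 : (2 : F)⁻¹ * 8 = 4 := by
      rw [show (8 : F) = 2 * 4 by norm_num, inv_mul_cancel_left₀ h2]
    rw [← h]
    linear_combination (-(-(2 : F)) ^ (p - 2) * 2) * h8
  · rw [t2, map_smul, br_one_one, smul_zero]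
end

/-! ### Scalar cocycles on the regular monomials -/

section
variable {F : Type*} [Field F] {p m : ℕ} [CharP F p] [hp : Fact p.Prime]
local notation "A" => TruncP F p (2 * m + 1)

/-- The value of a bilinear form on a pair of monomials. -/
def cv (c : A →ₗ[F] A →ₗ[F] F) (a b : Vec m) : F := c (X F p a) (X F p b)

/-- Scalar cocycles on the span of the regular monomials, extended by zero, all of whose
values pair monomials of total degree `-2` modulo `p`. The values at the pairs that detect the
squarings are required to vanish. -/
structure Coc (c : A →ₗ[F] A →ₗ[F] F) : Prop where
  off : ∀ a, ¬ Reg p a → ∀ y, c (X F p a) y = 0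
  skew : ∀ x y, c x y = - c y x
  tri : ∀ {a b z}, Reg p a → Reg p b → Reg p z → c (br (X F p a) (X F p b)) (X F p z)
    = c (X F p a) (br (X F p b) (X F p z)) - c (X F p b) (br (X F p a) (X F p z))
  deg : ∀ a b, cv c a b ≠ 0 → ((dg a + dg b + 2 : ℤ) : F) = 0
  lamQ : ∀ i, cv c (W i 0 2 0 0) (W i 0 (p - 1) 1 0) = 0
  lam0 : ∀ i, cv c (W i 0 0 0 2) (W i 0 0 0 (p - 1)) = 0

/-- The form `c` is given on regular monomials by a functional of the bracket. -/
def Red (c : A →ₗ[F] A →ₗ[F] F) : Prop :=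
  ∃ f : A →ₗ[F] F, ∀ a b, Reg p a → Reg p b → cv c a b = f (br (X F p a) (X F p b))

open Classical in
/-- The projection onto the span of the regular monomials. -/
def prj (F : Type*) [Field F] (p : ℕ) {m : ℕ} [CharP F p] :
    TruncP F p (2 * m + 1) →ₗ[F] TruncP F p (2 * m + 1) :=
  lmk F p fun b : Vec m => if Reg p b then X F p b else 0

theorem prj_X {a : Vec m} (h : Reg p a) : prj F p (X F p a) = X F p a := by
  classical
  rw [prj, lmk_X _ h.box, if_pos h]

theorem prj_X0 {a : Vec m} (h : ¬ Reg p a) : prj F p (X F p a) = 0 := by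
  classical
  by_cases hb : Box p a
  · rw [prj, lmk_X _ hb, if_neg h]
  · rw [X_not_box hb, map_zero]

/-- The coboundary of a functional, extended by zero. -/
def dlf (f : A →ₗ[F] F) : A →ₗ[F] A →ₗ[F] F :=
  ((br : A →ₗ[F] A →ₗ[F] A).compl₁₂ (prj F p) (prj F p)).compr₂ f

theorem dlf_apply (f : A →ₗ[F] F) (x y : A) : dlf f x y = f (br (prj F p x) (prj F p y)) := rfl

theorem cv_dlf (f : A →ₗ[F] F) {a b : Vec m} (ha : Reg p a) (hb : Reg p b) :
    cv (dlf f) a b = f (br (X F p a) (X F p b)) := by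
  rw [cv, dlf_apply, prj_X ha, prj_X hb]

theorem cv_sub (c c' : A →ₗ[F] A →ₗ[F] F) (a b : Vec m) : cv (c - c') a b = cv c a b - cv c' a b :=
  rfl

theorem Red.sub {c : A →ₗ[F] A →ₗ[F] F} {f : A →ₗ[F] F} (h : Red (c - dlf f)) : Red c := by
  obtain ⟨g, hg⟩ := h
  refine ⟨g + f, fun a b ha hb => ?_⟩
  have := hg a b ha hb
  rw [cv_sub, cv_dlf f ha hb] at this
  rw [LinearMap.add_apply, ← this]; ring

theorem Reg.two {a : Vec m} (ha : Reg p a) (h : dg a = 0) : a (Fin.last _) = 0 := by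
  have h1 : dg a = (∑ j : Fin (2 * m), a j.castSucc) + 2 * a (Fin.last _) - 2 := rfl
  have h2 : 0 ≤ ∑ j : Fin (2 * m), a j.castSucc := Finset.sum_nonneg fun j _ => ha.nonneg _
  by_contra h0
  have h3 := ha.nonneg (Fin.last _)
  have h4 : a (Fin.last _) = 1 := by omega
  have h5 : ∑ j : Fin (2 * m), a j.castSucc = 0 := by omega
  apply ha.ne
  ext k
  refine Fin.lastCases (by simp [h4]) (fun j => ?_) k
  rw [(Finset.sum_eq_zero_iff_of_nonneg fun j _ => ha.nonneg _).1 h5 j (Finset.mem_univ _)]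
  simp

/-- A linear map killing all monomials of degree `dg a + dg b` kills `[X a, X b]`. -/
theorem br_hom {M : Type*} [AddCommGroup M] [Module F M] (f : A →ₗ[F] M) {a b : Vec m}
    (ha : ∀ k, 0 ≤ a k) (hb : ∀ k, 0 ≤ b k) (hf : ∀ e, dg e = dg a + dg b → f (X F p e) = 0) :
    f (br (X F p a) (X F p b)) = 0 := by
  rw [br_X' ha hb, map_add, map_sum, map_smul, hf _ (by rw [dg_sub, dg_add, dg_en]; ring), smul_zero,
    add_zero]
  refine Finset.sum_eq_zero fun j _ => ?_
  rw [map_smul, hf _ (by rw [dg_sub, dg_sub, dg_add, dg_q, dg_q]; ring), smul_zero]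

/-- The bracket of two regular monomials is a combination of regular monomials. -/
theorem prj_br (hp5 : 5 ≤ p) {a b : Vec m} (ha : Reg p a) (hb : Reg p b) :
    prj F p (br (X F p a) (X F p b)) = br (X F p a) (X F p b) := by
  classical
  have hda := ha.deg
  have hdb := hb.deg
  have hp0 : 0 < p := by omega
  obtain ⟨y, hy⟩ : ∃ y, y = br (X F p a) (X F p b) := ⟨_, rfl⟩
  have hyK : y ∈ Ksub F p m := hy ▸ br_mem _ _
  -- the projection onto the monomials of degree `dg a + dg b` other than `x_n` fixes the bracket
  obtain ⟨π, hπ⟩ : ∃ π : A →ₗ[F] A, π = lmk F p fun e : Vec m =>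
    if dg e = dg a + dg b ∧ e ≠ en m then X F p e else 0 := ⟨_, rfl⟩
  have hπ1 : ∀ e, dg e = dg a + dg b → e ≠ en m → π (X F p e) = X F p e := by
    intro e h1 h2
    by_cases hbox : Box p e
    · rw [hπ, lmk_X _ hbox, if_pos ⟨h1, h2⟩]
    · rw [X_not_box hbox, map_zero]
  have hfix : π y = y := by
    by_cases hz : dg a + dg b = 0
    · have h1 := ha.two (by omega)
      have h2 := hb.two (by omega)
      rw [hy, br_X' ha.nonneg hb.nonneg, h1, h2]
      simp only [Int.cast_zero, zero_mul, sub_zero, zero_smul, add_zero]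
      rw [map_sum]
      refine Finset.sum_congr rfl fun j _ => ?_
      rw [map_smul, hπ1 _ (by rw [dg_sub, dg_sub, dg_add, dg_q, dg_q]; ring)]
      intro e
      have := congrFun e (Fin.last _)
      simp [h1, h2] at this
    · have := br_hom (LinearMap.id - π) ha.nonneg hb.nonneg (fun e he => by
        rw [LinearMap.sub_apply, hπ1 e he (by rintro rfl; rw [dg_en] at he; omega)]; simp)
      rw [← hy] at this
      exact (sub_eq_zero.1 this).symm
  have := K_ext (f := (LinearMap.id - prj F p).comp π) (by
    intro e hbox ht
    rw [LinearMap.comp_apply, hπ, lmk_X _ hbox]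
    split_ifs with h
    · rw [LinearMap.sub_apply, prj_X ⟨hbox, by omega, h.2, ht⟩]; simp
    · rw [map_zero]) y hyK
  rw [LinearMap.comp_apply, hfix] at this
  rw [← hy]
  exact (sub_eq_zero.1 this).symm

/-- The cocycle identity with an arbitrary third argument in the regular span. -/
theorem Coc.tri' {c : A →ₗ[F] A →ₗ[F] F} (hc : Coc c) {a b : Vec m} (ha : Reg p a) (hb : Reg p b)
    {y : A} (hy : prj F p y = y) : c (br (X F p a) (X F p b)) y
      = c (X F p a) (br (X F p b) y) - c (X F p b) (br (X F p a) y) := by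
  have := lin_ext (f := (c (br (X F p a) (X F p b))).comp (prj F p))
    (g := (c (X F p a)).comp ((br (X F p b)).comp (prj F p))
      - (c (X F p b)).comp ((br (X F p a)).comp (prj F p))) (by
    intro z _
    simp only [LinearMap.comp_apply, LinearMap.sub_apply]
    by_cases hz : Reg p z
    · rw [prj_X hz, hc.tri ha hb hz]
    · rw [prj_X0 hz]; simp)
  have h2 := LinearMap.congr_fun this y
  simpa only [LinearMap.comp_apply, LinearMap.sub_apply, hy] using h2

theorem cv_skew {c : A →ₗ[F] A →ₗ[F] F} (hc : Coc c) (a b : Vec m) : cv c a b = - cv c b a :=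
  hc.skew _ _

theorem cv_off {c : A →ₗ[F] A →ₗ[F] F} (hc : Coc c) {a b : Vec m} (h : ¬ (Reg p a ∧ Reg p b)) :
    cv c a b = 0 := by
  by_cases ha : Reg p a
  · rw [cv_skew hc, cv, hc.off b (fun hb => h ⟨ha, hb⟩), neg_zero]
  · exact hc.off a ha _

theorem cv_ne {c : A →ₗ[F] A →ₗ[F] F} (hc : Coc c) {a b : Vec m} (h : cv c a b ≠ 0) :
    Reg p a ∧ Reg p b := by
  by_contra h'
  exact h (cv_off hc h')

/-- A form vanishes on `X a` as soon as it vanishes on all pairs `(X a, X z)`. -/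
theorem R_of {c : A →ₗ[F] A →ₗ[F] F} {a : Vec m} (h : ∀ z, cv c a z = 0) : c (X F p a) = 0 :=
  lin_ext fun z _ => h z

/-- Invariance under elements of the radical. -/
theorem Coc.inv {c : A →ₗ[F] A →ₗ[F] F} (hc : Coc c) {a b : Vec m} (ha : Reg p a) (hb : Reg p b)
    (h : c (X F p a) = 0) {y : A} (hy : prj F p y = y) :
    c (br (X F p a) (X F p b)) y = - c (X F p b) (br (X F p a) y) := by
  rw [hc.tri' ha hb hy, h]; simp

theorem Coc.inv' {c : A →ₗ[F] A →ₗ[F] F} (hc : Coc c) {a b z : Vec m} (ha : Reg p a) (hb : Reg p b)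
    (hz : Reg p z) (h : c (X F p a) = 0) :
    c (X F p b) (br (X F p a) (X F p z)) = - c (br (X F p a) (X F p b)) (X F p z) := by
  rw [hc.inv ha hb h (prj_X hz), neg_neg]

/-- The radical is closed under brackets. -/
theorem Coc.rad {c : A →ₗ[F] A →ₗ[F] F} (hc : Coc c) {a b : Vec m} (ha : Reg p a) (hb : Reg p b)
    (h : c (X F p a) = 0) (h' : c (X F p b) = 0) : c (br (X F p a) (X F p b)) = 0 := by
  refine lin_ext fun z _ => ?_
  by_cases hz : Reg p z
  · rw [hc.tri ha hb hz, h, h']; simp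
  · rw [hc.skew, hc.off z hz]; simp

/-- Two elements commuting with each other: the cocycle identity is symmetric. -/
theorem Coc.com {c : A →ₗ[F] A →ₗ[F] F} (hc : Coc c) {a b z : Vec m} (ha : Reg p a) (hb : Reg p b)
    (hz : Reg p z) (h : br (X F p a) (X F p b) = 0) :
    c (X F p a) (br (X F p b) (X F p z)) = c (X F p b) (br (X F p a) (X F p z)) := by
  have := hc.tri ha hb hz
  rw [h, map_zero, LinearMap.zero_apply] at this
  exact (sub_eq_zero.1 this.symm)

theorem regW {i : Fin (2 * m)} {w : Vec m} (hw : Box p w) {α β l : ℤ} (h : 0 ≤ rs i w → 0 ≤ α ∧ α < p ∧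
    0 ≤ β ∧ β < p ∧ 0 ≤ l ∧ l < p ∧ 2 ≤ rs i w + α + β + 2 * l ∧ (l = 1 → 1 ≤ rs i w + α + β) ∧
    (α + 2 ≤ p ∨ β + 2 ≤ p ∨ l + 2 ≤ p)) : Reg p (W i w α β l) := by
  obtain ⟨h1, h2, h3, h4, h5, h6, h7, h8, h9⟩ := h (rs_nonneg i fun k => (hw k).1)
  exact reg_W hw h1 h2 h3 h4 h5 h6 h7 h8 h9

theorem regW0 (hp5 : 5 ≤ p) {i : Fin (2 * m)} {α β l : ℤ} (h : 0 ≤ α ∧ α < p ∧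
    0 ≤ β ∧ β < p ∧ 0 ≤ l ∧ l < p ∧ 2 ≤ α + β + 2 * l ∧ (l = 1 → 1 ≤ α + β) ∧
    (α + 2 ≤ p ∨ β + 2 ≤ p ∨ l + 2 ≤ p)) : Reg p (W i (0 : Vec m) α β l) :=
  regW (box0 hp5) fun _ => by simpa using h

theorem Reg.bd {i : Fin (2 * m)} {w : Vec m} {α β l : ℤ} (h : Reg p (W i w α β l)) :
    0 ≤ α ∧ α < p ∧ 0 ≤ β ∧ β < p ∧ 0 ≤ l ∧ l < p ∧ 0 ≤ rs i w ∧ 2 ≤ rs i w + α + β + 2 * l ∧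
    (l = 1 → 1 ≤ rs i w + α + β) := by
  have := reg_cases h i
  simp only [W_i, W_c, W_n, rs_W] at this
  tauto

/-- Subtracting a coboundary of total degree `-2`. -/
theorem Coc.sub_dlf (hp5 : 5 ≤ p) {c : A →ₗ[F] A →ₗ[F] F} (hc : Coc c) {f : A →ₗ[F] F}
    (hf : ∀ e : Vec m, ((dg e + 2 : ℤ) : F) ≠ 0 → f (X F p e) = 0) : Coc (c - dlf f) where
  off := by
    intro a ha y
    rw [LinearMap.sub_apply, LinearMap.sub_apply, hc.off a ha, dlf_apply, prj_X0 ha]; simp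
  skew := by
    intro x y
    simp only [LinearMap.sub_apply, dlf_apply]
    rw [hc.skew, br_skew, map_neg]; ring
  tri := by
    intro a b z ha hb hz
    have hjac := jac (X F p a) (X F p b) (X F p z)
    simp only [LinearMap.sub_apply, dlf_apply, prj_X ha, prj_X hb, prj_X hz, prj_br hp5 ha hb,
      prj_br hp5 hb hz, prj_br hp5 ha hz]
    rw [hc.tri ha hb hz, hjac, map_add]; ring
  deg := by
    intro a b h
    by_contra hd
    apply h
    rw [cv_sub, sub_eq_zero]
    have h1 : cv c a b = 0 := by
      by_contra h'
      exact hd (hc.deg a b h')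
    rw [h1]
    by_cases ha : Reg p a
    · by_cases hb : Reg p b
      · rw [cv_dlf f ha hb]
        refine (br_hom f ha.nonneg hb.nonneg fun e he => hf e ?_).symm
        rw [he]; exact hd
      · rw [cv, dlf_apply, prj_X0 hb]; simp
    · rw [cv, dlf_apply, prj_X0 ha]; simp
  lamQ := by
    intro i
    have ha : Reg p (W i (0 : Vec m) 2 0 0) := regW0 hp5 (by omega)
    have hb : Reg p (W i (0 : Vec m) (p - 1) 1 0) := regW0 hp5 (by omega)
    rw [cv_sub, hc.lamQ, cv_dlf f ha hb, br_W i (by simp) (by omega) (by omega) (by omega) (by omega)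
      (by omega) (by omega), X_big i.castSucc (by simp; omega),
      X_big i.castSucc (by simp; omega)]
    simp
  lam0 := by
    intro i
    have ha : Reg p (W i (0 : Vec m) 0 0 2) := regW0 hp5 (by omega)
    have hb : Reg p (W i (0 : Vec m) 0 0 (p - 1)) := regW0 hp5 (by omega)
    rw [cv_sub, hc.lam0, cv_dlf f ha hb, br_W i (by simp) (by omega) (by omega) (by omega) (by omega)
      (by omega) (by omega), X_big (Fin.last _) (by simp; omega),
      X_big (Fin.last _) (by simp; omega)]
    simp

/-- Normalisation one index at a time. -/
theorem fin_red {K : (A →ₗ[F] A →ₗ[F] F) → Prop} {P : Fin (2 * m) → (A →ₗ[F] A →ₗ[F] F) → Prop}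
    (step : ∀ c i, Coc c → K c → ∃ f, Coc (c - dlf f) ∧ K (c - dlf f) ∧ P i (c - dlf f) ∧
      ∀ j, P j c → P j (c - dlf f)) (fin : ∀ c, Coc c → K c → (∀ i, P i c) → Red c) :
    ∀ c, Coc c → K c → Red c := by
  classical
  have : ∀ S : Finset (Fin (2 * m)), ∀ c, Coc c → K c → (∀ i, i ∉ S → P i c) → Red c := by
    intro S
    induction S using Finset.induction_on with
    | empty => exact fun c hc hK h => fin c hc hK fun i => h i (by simp)
    | insert i S _ ih =>
      intro c hc hK h
      obtain ⟨f, h1, h2, h3, h4⟩ := step c i hc hK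
      refine Red.sub (ih _ h1 h2 fun j hj => ?_)
      by_cases hji : j = i
      · exact hji ▸ h3
      · exact h4 j (h j (by simp [hji, hj]))
  exact fun c hc hK => this Finset.univ c hc hK (by simp)
end

/-! ### Normalisation at the diagonal torus -/

section
variable {F : Type*} [Field F] {p m : ℕ} [CharP F p] [hp : Fact p.Prime]
local notation "A" => TruncP F p (2 * m + 1)

open Classical in
/-- The functional with values `φ b` on the regular monomials `X b` of degree `-2` modulo `p`
satisfying `Q`, and `0` on the other monomials. -/
def fs (Q : Vec m → Prop) (φ : Vec m → F) : A →ₗ[F] F :=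
  lmk F p fun b : Vec m => if Reg p b ∧ ((dg b + 2 : ℤ) : F) = 0 ∧ Q b then φ b else 0

theorem fs_pos {Q : Vec m → Prop} {φ : Vec m → F} {b : Vec m} (h : Reg p b)
    (h1 : ((dg b + 2 : ℤ) : F) = 0) (h2 : Q b) : fs Q φ (X F p b) = φ b := by
  classical
  rw [fs, lmk_X _ h.box, if_pos ⟨h, h1, h2⟩]

theorem fs_neg {Q : Vec m → Prop} {φ : Vec m → F} {b : Vec m}
    (h : ¬ (Reg p b ∧ ((dg b + 2 : ℤ) : F) = 0 ∧ Q b)) : fs Q φ (X F p b) = 0 := by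
  classical
  by_cases hb : Box p b
  · rw [fs, lmk_X _ hb, if_neg h]
  · rw [X_not_box hb, map_zero]

theorem Coc.sub_fs {c : A →ₗ[F] A →ₗ[F] F} (hp5 : 5 ≤ p) (hc : Coc c) (Q : Vec m → Prop) (φ : Vec m → F) :
    Coc (c - dlf (fs Q φ)) :=
  hc.sub_dlf hp5 fun _ he => fs_neg fun h => he h.2.1

/-- `ad (x_i x_{i'})` is diagonal on monomials. -/
theorem br_h (i : Fin (2 * m)) {b : Vec m} (hb : ∀ k, 0 ≤ b k) :
    br (X F p (W i 0 1 1 0)) (X F p b)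
      = (sg F m i * (b (cj m i).castSucc - b i.castSucc)) • X F p b := by
  rw [← W_self i b, br_W i hb (by omega) (by omega) (by omega) (hb _) (hb _) (hb _)]
  simp only [W_i, W_c, W_n, Int.cast_one, Int.cast_zero, one_mul, zero_mul, mul_zero, add_zero,
    zero_add, add_sub_cancel_left]
  rw [show ((1 : F) + 1 - 2) = 0 by ring, mul_zero, sub_zero, zero_smul, add_zero]

theorem br_sq (i : Fin (2 * m)) {w : Vec m} (hw : ∀ k, 0 ≤ w k) {α β l : ℤ} (h1 : 0 ≤ α) (h2 : 0 ≤ β)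
    (h3 : 0 ≤ l) : br (X F p (W i 0 2 0 0)) (X F p (W i w α β l))
      = (2 * sg F m i * β) • X F p (W i w (α + 1) (β - 1) l) := by
  rw [br_W i hw (by omega) (by omega) (by omega) h1 h2 h3]
  simp only [Int.cast_ofNat, Int.cast_zero, zero_mul, mul_zero, add_zero, zero_add, sub_zero,
    sub_self, zero_smul]
  rw [show (2 + α - 1 : ℤ) = α + 1 by ring, mul_left_comm, mul_assoc]

theorem reg_h (hp5 : 5 ≤ p) (i : Fin (2 * m)) : Reg p (W i (0 : Vec m) 1 1 0) := regW0 hp5 (by omega)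
theorem reg_sq (hp5 : 5 ≤ p) (i : Fin (2 * m)) : Reg p (W i (0 : Vec m) 2 0 0) := regW0 hp5 (by omega)

/-- The weight `b_{i'} - b_i`. -/
def wt (F : Type*) [Field F] (i : Fin (2 * m)) : Vec m →+ F :=
  (Int.castAddHom F).comp (Pi.evalAddMonoidHom (fun _ : Fin (2 * m + 1) => ℤ) (cj m i).castSucc
    - Pi.evalAddMonoidHom (fun _ : Fin (2 * m + 1) => ℤ) i.castSucc)

theorem wt_apply (i : Fin (2 * m)) (b : Vec m) :
    wt F i b = (b (cj m i).castSucc : F) - b i.castSucc := by simp [wt]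

theorem br_h' (i : Fin (2 * m)) {b : Vec m} (hb : Reg p b) :
    br (X F p (W i 0 1 1 0)) (X F p b) = (sg F m i * wt F i b) • X F p b := by
  rw [br_h i hb.nonneg, wt_apply]

theorem br_h_h (hp5 : 5 ≤ p) (i j : Fin (2 * m)) :
    br (X F p (W i (0 : Vec m) 1 1 0)) (X F p (W j 0 1 1 0)) = 0 := by
  rw [br_h' i (reg_h hp5 j), wt_apply]
  have : W j (0 : Vec m) 1 1 0 (cj m i).castSucc = W j (0 : Vec m) 1 1 0 i.castSucc := by
    by_cases h1 : i = j
    · subst h1; simp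
    by_cases h2 : i = cj m j
    · subst h2; rw [cj_cj]; simp
    rw [W_o _ _ _ _ h1 h2, W_o _ _ _ _ (fun e => h2 (by rw [← e, cj_cj])) (fun e => h1 (cj_inj.1 e))]
    rfl
  rw [this]; simp

/-- Normalisation at the torus element `x_i x_{i'}`, which keeps those already in the radical. -/
theorem stepA2 {c : A →ₗ[F] A →ₗ[F] F} (hp5 : 5 ≤ p) (hm : 1 ≤ m) (hc : Coc c) (i : Fin (2 * m)) :
    ∃ f, Coc (c - dlf f) ∧ (c - dlf f) (X F p (W i 0 1 1 0)) = 0 ∧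
      ∀ j, c (X F p (W j 0 1 1 0)) = 0 → (c - dlf f) (X F p (W j 0 1 1 0)) = 0 := by
  have hs := sg_ne (F := F) i
  obtain ⟨f, hf⟩ : ∃ f : A →ₗ[F] F, f = fs (fun b => wt F i b ≠ 0)
    (fun b => cv c (W i 0 1 1 0) b / (sg F m i * wt F i b)) := ⟨_, rfl⟩
  have hc' : Coc (c - dlf f) := hf ▸ hc.sub_fs hp5 _ _
  refine ⟨f, hc', R_of fun z => ?_, fun j hj => R_of fun z => ?_⟩
  · by_cases hz : Reg p z
    swap
    · exact cv_off hc' fun h => hz h.2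
    rw [cv_sub, cv_dlf f (reg_h hp5 i) hz, br_h' i hz, map_smul, smul_eq_mul]
    by_cases hw : wt F i z = 0
    · rw [hw, mul_zero, zero_mul, sub_zero]
      refine gen1 hp5 hm (wt F i) (fun j => ?_) (c (X F p (W i 0 1 1 0))) 0 (fun a b ha hb hab => ?_) hz hw
      · have e0 : wt F i (en m) = 0 := by rw [wt_apply]; simp
        rw [e0, wt_apply, wt_apply]
        by_cases h1 : j = i
        · subst h1; simp [q_ne (cj_ne j), q_ne (ne_cj j)]
        by_cases h2 : j = cj m i
        · subst h2; simp [q_ne (cj_ne i), q_ne (ne_cj i)]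
        have h3 : cj m j ≠ i := fun e => h2 (by rw [← e, cj_cj])
        have h4 : cj m j ≠ cj m i := fun e => h1 (cj_inj.1 e)
        simp [q_ne (Ne.symm h1), q_ne (Ne.symm h2), q_ne h3.symm, q_ne h4.symm]
      · have e0 : wt F i (en m) = 0 := by rw [wt_apply]; simp
        have h := hc.tri (reg_h hp5 i) ha hb
        rw [br_h' i ha, br_h' i hb, map_smul, map_smul, LinearMap.smul_apply, smul_eq_mul,
          smul_eq_mul] at h
        rw [e0, sub_zero] at hab
        linear_combination -h + sg F m i * c (X F p a) (X F p b) * hab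
    · by_cases hd : ((dg z + 2 : ℤ) : F) = 0
      · rw [hf, fs_pos hz hd hw]; field_simp; ring
      · have h0 : cv c (W i 0 1 1 0) z = 0 := by
          by_contra h
          apply hd
          rw [← hc.deg _ _ h, dg_W, rs_zero]; push_cast; ring
        rw [h0, hf, fs_neg fun h => hd h.2.1]; simp
  · by_cases hz : Reg p z
    swap
    · exact cv_off hc' fun h => hz h.2
    rw [cv_sub, cv_dlf f (reg_h hp5 j) hz, cv, hj, br_h' j hz, map_smul, smul_eq_mul,
      LinearMap.zero_apply, zero_sub, neg_eq_zero]
    by_cases h : Reg p z ∧ ((dg z + 2 : ℤ) : F) = 0 ∧ wt F i z ≠ 0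
    · have h2 := hc.com (reg_h hp5 i) (reg_h hp5 j) hz (br_h_h hp5 i j)
      rw [hj, br_h' j hz, map_smul, smul_eq_mul, LinearMap.zero_apply] at h2
      rw [hf, fs_pos h.1 h.2.1 h.2.2, cv]
      rw [← mul_div_assoc, h2, zero_div]
    · rw [hf, fs_neg h, mul_zero]

/-- Weights, once the torus lies in the radical. -/
theorem weight {c : A →ₗ[F] A →ₗ[F] F} (hp5 : 5 ≤ p) (hc : Coc c) {i : Fin (2 * m)} (h : c (X F p (W i 0 1 1 0)) = 0)
    {a b : Vec m} (hab : cv c a b ≠ 0) : wt F i a + wt F i b = 0 := by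
  obtain ⟨ha, hb⟩ := cv_ne hc hab
  have h1 := hc.inv' (reg_h hp5 i) ha hb h
  rw [br_h' i hb, br_h' i ha, map_smul, map_smul, LinearMap.smul_apply, smul_eq_mul, smul_eq_mul] at h1
  have h2 : sg F m i * (wt F i a + wt F i b) * cv c a b = 0 := by rw [cv]; linear_combination h1
  rcases mul_eq_zero.1 h2 with h3 | h3
  · exact (mul_eq_zero.1 h3).resolve_left (sg_ne (F := F) i)
  · exact absurd h3 hab
end

/-! ### Normalisation at the squares of the coordinates -/

section
variable {F : Type*} [Field F] {p m : ℕ} [CharP F p] [hp : Fact p.Prime]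
local notation "A" => TruncP F p (2 * m + 1)

theorem br_sq' (i : Fin (2 * m)) {b : Vec m} (hb : ∀ k, 0 ≤ b k) :
    br (X F p (W i 0 2 0 0)) (X F p b) = (2 * sg F m i * b (cj m i).castSucc) •
      X F p (W i b (b i.castSucc + 1) (b (cj m i).castSucc - 1) (b (Fin.last _))) := by
  conv_lhs => rw [← W_self i b]
  exact br_sq i hb (hb _) (hb _) (hb _)

theorem int_zero {x : ℤ} (h : (x : F) = 0) (h1 : -p < x) (h2 : x < p) : x = 0 :=
  dvd_small ((CharP.intCast_eq_zero_iff F p _).1 h) h1 h2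

theorem wt_zero {i : Fin (2 * m)} {b : Vec m} (hb : Box p b) (h : wt F i b = 0) :
    b (cj m i).castSucc = b i.castSucc := by
  have h1 := hb (cj m i).castSucc
  have h2 := hb i.castSucc
  rw [wt_apply, ← Int.cast_sub] at h
  have := int_zero h (by omega) (by omega)
  omega

theorem wt_W_o {i j : Fin (2 * m)} (h : Ind i j) (w : Vec m) (α β l : ℤ) :
    wt F j (W i w α β l) = wt F j w := by
  rw [wt_apply, wt_apply, W_o _ _ _ _ h.1 h.2, W_o _ _ _ _ h.cj.1 h.cj.2]

theorem wt_W (i : Fin (2 * m)) (w : Vec m) (α β l : ℤ) : wt F i (W i w α β l) = β - α := by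
  rw [wt_apply]; simp

theorem wt_0 (i : Fin (2 * m)) : wt F i (0 : Vec m) = 0 := map_zero _

theorem wt_W_c (i : Fin (2 * m)) (w : Vec m) (α β l : ℤ) : wt F (cj m i) (W i w α β l) = α - β := by
  rw [wt_apply, cj_cj]; simp

/-- Indices are equal, conjugate or independent. -/
theorem tri_i (i j : Fin (2 * m)) : j = i ∨ j = cj m i ∨ Ind i j := by
  by_cases h1 : j = i
  · exact Or.inl h1
  by_cases h2 : j = cj m i
  · exact Or.inr (Or.inl h2)
  exact Or.inr (Or.inr ⟨h1, h2⟩)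

/-- `c(x_i², z) = 0` if `z` is a multiple of `[e, b]` with `e` and `b` commuting with `x_i²`. -/
theorem kap0 {c : A →ₗ[F] A →ₗ[F] F} (hp5 : 5 ≤ p) (hc : Coc c) {i : Fin (2 * m)} {e b z : Vec m}
    {C : F} (he : Reg p e) (he' : e (cj m i).castSucc = 0) (hb : Reg p b)
    (hb' : b (cj m i).castSucc = 0 ∨ b i.castSucc = p - 1)
    (h : br (X F p e) (X F p b) = C • X F p z) (hC : C ≠ 0) : cv c (W i 0 2 0 0) z = 0 := by
  have h1 : br (X F p (W i 0 2 0 0)) (X F p e) = 0 := by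
    rw [br_sq' i he.nonneg, he']; simp
  have h2 : br (X F p (W i 0 2 0 0)) (X F p b) = 0 := by
    rw [br_sq' i hb.nonneg]
    rcases hb' with h | h
    · rw [h]; simp
    · rw [h, X_big i.castSucc (by simp)]; simp
  have h3 := hc.com (reg_sq hp5 i) he hb h1
  rw [h2, map_zero, h, map_smul, smul_eq_mul] at h3
  exact (mul_eq_zero.1 h3).resolve_left hC

/-- The values of `c(x_i², ·)` on the weight vectors at the edge of the truncation vanish. -/
theorem kappa {c : A →ₗ[F] A →ₗ[F] F} (hp5 : 5 ≤ p) (hc : Coc c) {i : Fin (2 * m)} {z : Vec m}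
    (hz : Reg p z) (hd : ((dg z + 2 : ℤ) : F) = 0)
    (hpl : ∀ j, Ind i j → z (cj m j).castSucc = z j.castSucc)
    (hi : (z i.castSucc = p - 2 ∧ z (cj m i).castSucc = 0) ∨
      (z i.castSucc = p - 1 ∧ z (cj m i).castSucc = 1)) : cv c (W i 0 2 0 0) z = 0 := by
  have hi' : z (cj m i).castSucc = 0 ∨ z i.castSucc = p - 1 := by tauto
  have hzi := reg_cases hz i
  have hd' : (dg z : F) = -2 := by push_cast at hd; linear_combination hd
  -- In each case below, apart from the last one without `x_n`, `z` is a multiple of a bracket `[e, b]` whose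
  -- factors commute with `x_i²`. Another plane with interior exponents allows `e = x_j²`.
  by_cases h1 : ∃ j, Ind i j ∧ 1 ≤ z j.castSucc ∧ z j.castSucc ≤ p - 2
  · obtain ⟨j, hij, hk1, hk2⟩ := h1
    have hzj := reg_cases hz j
    have hj' := hpl j hij
    refine kap0 hp5 hc (e := W j 0 2 0 0)
      (b := W j z (z j.castSucc - 1) (z j.castSucc + 1) (z (Fin.last _)))
      (C := 2 * sg F m j * ((z j.castSucc + 1 : ℤ) : F)) (reg_sq hp5 j) ?_
      (regW hz.box fun _ => by omega) ?_ ?_ ?_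
    · rw [W_o _ _ _ _ hij.symm.cj.1 hij.symm.cj.2]; rfl
    · rw [W_o _ _ _ _ hij.symm.cj.1 hij.symm.cj.2, W_o _ _ _ _ hij.symm.1 hij.symm.2]; exact hi'
    · rw [br_sq j hz.nonneg (by omega) (by omega) (by omega)]
      congr 2
      rw [show z j.castSucc - 1 + 1 = z j.castSucc by ring,
        show z j.castSucc + 1 - 1 = z (cj m j).castSucc by omega, W_self]
    · exact mul_ne_zero (mul_ne_zero (two_ne hp5) (sg_ne j)) (ic_ne (by omega) (by omega) (by omega))
  · by_cases hl0 : z (Fin.last _) = 0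
    · by_cases h2 : ∃ j, Ind i j ∧ z j.castSucc = p - 1
      -- A plane with both exponents `p - 1` allows `e = x_j x_{j'} x_n`.
      · obtain ⟨j, hij, hj⟩ := h2
        have hj' := hpl j hij
        have hzj := reg_cases hz j
        obtain ⟨b, hb⟩ : ∃ b, b = W j z (p - 2) (p - 2) 0 := ⟨_, rfl⟩
        have hdb : (dg b : F) = -4 := by
          have : dg b = dg z - 2 := by
            rw [hb, dg_W, dg_eq j z]; omega
          rw [this]; push_cast; rw [hd']; norm_num
        refine kap0 hp5 hc (e := W j 0 1 1 1) (b := b) (C := dg b) (regW0 hp5 (by omega)) ?_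
          (hb ▸ regW hz.box fun _ => by omega) ?_ ?_ ?_
        · rw [W_o _ _ _ _ hij.symm.cj.1 hij.symm.cj.2]; rfl
        · rw [hb, W_o _ _ _ _ hij.symm.cj.1 hij.symm.cj.2, W_o _ _ _ _ hij.symm.1 hij.symm.2]
          exact hi'
        · have e : W j z (1 + (p - 2)) (1 + (p - 2)) (1 + 0 - 1) = z := by
            conv_rhs => rw [← W_self j z]
            congr 1 <;> omega
          rw [hb, br_W j hz.nonneg (by omega) (by omega) (by omega) (by omega) (by omega) (by omega), e,
            dg_W]
          push_cast
          module
        · rw [hdb, neg_ne_zero]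
          have := ic_ne (F := F) (p := p) (x := 4) (by omega) (by omega) (by omega)
          exact_mod_cast this
      -- Only the plane of `i` is left: the degree forces `x_i^{p-1} x_{i'}`, where `LamQ` vanishes.
      · have h0 : ∀ j, Ind i j → z j.castSucc = 0 := by
          intro j hij
          have hzj := reg_cases hz j
          by_contra h
          by_cases h3 : z j.castSucc = p - 1
          · exact h2 ⟨j, hij, h3⟩
          · exact h1 ⟨j, hij, by omega, by omega⟩
        have hz0 : z = W i 0 (z i.castSucc) (z (cj m i).castSucc) 0 := by
          apply vec_ext i (by simp) (by simp) (by simp [hl0])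
          intro j h h'
          rw [W_o _ _ _ _ h h', h0 j ⟨h, h'⟩]; rfl
        rcases hi with ⟨ha, hb⟩ | ⟨ha, hb⟩
        · exfalso
          rw [hz0, dg_W, ha, hb, rs_zero] at hd'
          push_cast at hd'
          rw [CharP.cast_eq_zero] at hd'
          exact two_ne hp5 (show (2 : F) = 0 by linear_combination -hd')
        · rw [hz0, ha, hb]; exact hc.lamQ i
    · by_cases hl3 : z (Fin.last _) = p - 3
      -- `e = x_n³`; the coefficient of the bracket with `x_n²` is divisible by `p` here.
      · obtain ⟨b, hb⟩ : ∃ b, b = W i z (z i.castSucc) (z (cj m i).castSucc) (p - 5) := ⟨_, rfl⟩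
        have hdb : (dg b : F) = -6 := by
          have : dg b = dg z - 4 := by
            rw [hb, dg_W, dg_eq i z]; omega
          rw [this]; push_cast; rw [hd']; norm_num
        refine kap0 hp5 hc (e := W i 0 0 0 3) (b := b) (C := 2) (regW0 hp5 (by omega)) (by simp)
          (hb ▸ regW hz.box fun _ => by omega) (by simpa [hb] using hi') ?_ (two_ne hp5)
        have e : W i z (0 + z i.castSucc) (0 + z (cj m i).castSucc) (3 + (p - 5) - 1) = z := by
            conv_rhs => rw [← W_self i z]
            congr 1 <;> omega
        rw [hb, dg_W] at hdb
        rw [hb, br_W i hz.nonneg (by omega) (by omega) (by omega) (by omega) (by omega) (by omega), e]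
        push_cast at hdb ⊢
        rw [CharP.cast_eq_zero F p] at hdb ⊢
        rw [zero_mul, zero_mul, sub_zero, mul_zero, zero_smul, zero_add]
        congr 1
        linear_combination 3 * hdb
      -- `e = x_n²`.
      · obtain ⟨l, hl⟩ : ∃ l, l = z (Fin.last _) := ⟨_, rfl⟩
        obtain ⟨b, hb⟩ : ∃ b, b = W i z (z i.castSucc) (z (cj m i).castSucc) (l - 1) := ⟨_, rfl⟩
        have hdb : (dg b : F) = -4 := by
          have : dg b = dg z - 2 := by
            rw [hb, dg_W, dg_eq i z]; omega
          rw [this]; push_cast; rw [hd']; norm_num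
        refine kap0 hp5 hc (e := W i 0 0 0 2) (b := b) (C := -2 * ((l + 3 : ℤ) : F))
          (regW0 hp5 (by omega)) (by simp)
          (hb ▸ regW hz.box fun _ => by omega) (by simpa [hb] using hi') ?_ ?_
        · have e : W i z (0 + z i.castSucc) (0 + z (cj m i).castSucc) (2 + (l - 1) - 1) = z := by
            conv_rhs => rw [← W_self i z]
            congr 1 <;> omega
          rw [hb, dg_W] at hdb
          rw [hb, br_W i hz.nonneg (by omega) (by omega) (by omega) (by omega) (by omega) (by omega), e]
          push_cast at hdb ⊢
          rw [zero_mul, zero_mul, sub_zero, mul_zero, zero_smul, zero_add]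
          congr 1
          linear_combination 2 * hdb
        · refine mul_ne_zero (neg_ne_zero.2 (two_ne hp5)) fun h => ?_
          have : ((l + 3 - p : ℤ) : F) = 0 := by
            push_cast at h ⊢; rw [CharP.cast_eq_zero]; linear_combination h
          exact ic_ne (by omega) (by omega) (by omega) this

/-- The multi-indices with equal exponents in every plane, interior in the plane of `i`. -/
def Diag (p : ℕ) (i : Fin (2 * m)) (b : Vec m) : Prop :=
  (∀ j : Fin (2 * m), b (cj m j).castSucc = b j.castSucc) ∧ 1 ≤ b i.castSucc ∧ b i.castSucc ≤ p - 2

/-- Normalisation of the values at the root vectors `x_i²` and `x_{i'}²`. -/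
theorem stepA3 (hp5 : 5 ≤ p) {c : A →ₗ[F] A →ₗ[F] F} (hc : Coc c)
    (hh : ∀ j, c (X F p (W j 0 1 1 0)) = 0) (i : Fin (2 * m)) :
    ∃ f, Coc (c - dlf f) ∧ (∀ j, (c - dlf f) (X F p (W j 0 1 1 0)) = 0) ∧
      ((c - dlf f) (X F p (W i 0 2 0 0)) = 0 ∧ (c - dlf f) (X F p (W i 0 0 2 0)) = 0) ∧
      ∀ j, (c (X F p (W j 0 2 0 0)) = 0 ∧ c (X F p (W j 0 0 2 0)) = 0) →
        ((c - dlf f) (X F p (W j 0 2 0 0)) = 0 ∧ (c - dlf f) (X F p (W j 0 0 2 0)) = 0) := by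
  have hs := sg_ne (F := F) i
  have h2 := two_ne (F := F) hp5
  obtain ⟨φ, hφ⟩ : ∃ φ : Vec m → F, ∀ b, φ b = cv c (W i 0 2 0 0)
    (W i b (b i.castSucc - 1) (b i.castSucc + 1) (b (Fin.last _))) /
      (2 * sg F m i * (b i.castSucc + 1 : F)) := ⟨_, fun _ => rfl⟩
  obtain ⟨f, hf⟩ : ∃ f : A →ₗ[F] F, f = fs (Diag p i) φ := ⟨_, rfl⟩
  have hc' : Coc (c - dlf f) := hf ▸ hc.sub_fs hp5 _ _
  have hh' : ∀ j, (c - dlf f) (X F p (W j 0 1 1 0)) = 0 := by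
    refine fun j => R_of fun z => ?_
    by_cases hz : Reg p z
    swap
    · exact cv_off hc' fun h => hz h.2
    rw [cv_sub, cv_dlf f (reg_h hp5 j) hz, cv, hh, br_h' j hz, map_smul, smul_eq_mul,
      LinearMap.zero_apply, zero_sub, neg_eq_zero]
    by_cases h : Reg p z ∧ ((dg z + 2 : ℤ) : F) = 0 ∧ Diag p i z
    · rw [wt_apply, h.2.2.1 j]; simp
    · rw [hf, fs_neg h, mul_zero]
  have hdeg : ∀ j z, cv (c - dlf f) (W j 0 2 0 0) z ≠ 0 → ((dg z + 2 : ℤ) : F) = 0 := by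
    intro j z h
    rw [← hc'.deg _ _ h, dg_W, rs_zero]; congr 1; ring
  have hpl : ∀ j z, cv (c - dlf f) (W j 0 2 0 0) z ≠ 0 → ∀ k, Ind j k →
      z (cj m k).castSucc = z k.castSucc := by
    intro j z h k hk
    have := weight hp5 hc' (hh' k) h
    rw [wt_W_o hk, wt_0, zero_add] at this
    exact wt_zero (cv_ne hc' h).2.box this
  -- Weights are only defined modulo `p`; the last two alternatives are the wrap-around.
  have hii : ∀ j z, cv (c - dlf f) (W j 0 2 0 0) z ≠ 0 → z (cj m j).castSucc = z j.castSucc + 2 ∨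
      (z j.castSucc = p - 2 ∧ z (cj m j).castSucc = 0) ∨
      (z j.castSucc = p - 1 ∧ z (cj m j).castSucc = 1) := by
    intro j z h
    have h1 := weight hp5 hc' (hh' j) h
    have h3 := reg_cases (cv_ne hc' h).2 j
    rw [wt_W, wt_apply] at h1
    have h4 : ((z (cj m j).castSucc - z j.castSucc - 2 : ℤ) : F) = 0 := by
      push_cast at h1 ⊢; linear_combination h1
    by_cases h5 : -p < z (cj m j).castSucc - z j.castSucc - 2
    · have := int_zero h4 h5 (by omega); omega
    · have h6 : ((z (cj m j).castSucc - z j.castSucc - 2 + p : ℤ) : F) = 0 := by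
        rw [Int.cast_add, h4]; simp
      have := int_zero h6 (by omega) (by omega); omega
  have hP : (c - dlf f) (X F p (W i 0 2 0 0)) = 0 := by
    refine R_of fun z => by_contra fun hne => ?_
    have hz := (cv_ne hc' hne).2
    have hzi := reg_cases hz i
    rcases hii i z hne with h | h
    · obtain ⟨b, hb⟩ : ∃ b, b = W i z (z i.castSucc + 1) (z (cj m i).castSucc - 1) (z (Fin.last _)) :=
        ⟨_, rfl⟩
      have hbr : Reg p b := hb ▸ regW hz.box fun _ => by omega
      have hbd : ((dg b + 2 : ℤ) : F) = 0 := by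
        rw [← hdeg i z hne, hb, dg_W, dg_eq i z]; congr 1; ring
      have hbQ : Diag p i b := by
        refine ⟨fun j => ?_, by rw [hb, W_i]; omega, by rw [hb, W_i]; omega⟩
        rcases tri_i i j with rfl | rfl | hj
        · rw [hb, W_c, W_i]; omega
        · rw [hb, cj_cj, W_c, W_i]; omega
        · rw [hb, W_o _ _ _ _ hj.1 hj.2, W_o _ _ _ _ hj.cj.1 hj.cj.2]; exact hpl i z hne j hj
      apply hne
      rw [cv_sub, cv_dlf f (reg_sq hp5 i) hz, br_sq' i hz.nonneg, map_smul, ← hb, hf,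
        fs_pos hbr hbd hbQ, hφ, smul_eq_mul]
      have e : W i b (b i.castSucc - 1) (b i.castSucc + 1) (b (Fin.last _)) = z := by
        rw [hb, W_W, W_i, W_n]
        conv_rhs => rw [← W_self i z]
        congr 1 <;> omega
      rw [e]
      have h7 : (b i.castSucc + 1 : F) = z (cj m i).castSucc := by
        rw [hb, W_i, h]; push_cast; ring
      have h8 : (z (cj m i).castSucc : F) ≠ 0 := ic_ne (by omega) (by omega) (by omega)
      rw [h7]
      field_simp
      ring
    · exact hne (kappa hp5 hc' hz (hdeg i z hne) (hpl i z hne) h)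
  have hP' : (c - dlf f) (X F p (W i 0 0 2 0)) = 0 := by
    rw [← W_cj]
    refine R_of fun z => by_contra fun hne => ?_
    have hz := (cv_ne hc' hne).2
    have hzi := reg_cases hz i
    rcases hii _ z hne with h | h
    · rw [cj_cj] at h
      obtain ⟨b, hb⟩ : ∃ b, b = W i z (z i.castSucc - 1) (z (cj m i).castSucc + 1) (z (Fin.last _)) :=
        ⟨_, rfl⟩
      have hbr : Reg p b := hb ▸ regW hz.box fun _ => by omega
      have h1 := hc'.inv' (reg_sq hp5 i) (reg_sq hp5 (cj m i)) hbr hP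
      have e : W i z (z i.castSucc - 1 + 1) (z (cj m i).castSucc + 1 - 1) (z (Fin.last _)) = z := by
        rw [sub_add_cancel, add_sub_cancel_right, W_self]
      rw [W_cj, br_sq i (w := 0) (fun k => le_rfl) (by omega) (by omega) (by omega), map_smul,
        LinearMap.smul_apply, show W i (0 : Vec m) (0 + 1) (2 - 1) 0 = W i 0 1 1 0 from rfl, hh' i,
        hb, br_sq i hz.nonneg (by omega) (by omega) (by omega), e, map_smul] at h1
      rw [W_cj] at hne
      simp only [LinearMap.zero_apply, smul_zero, neg_zero, smul_eq_mul] at h1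
      have h8 : ((z (cj m i).castSucc + 1 : ℤ) : F) ≠ 0 := ic_ne (by omega) (by omega) (by omega)
      exact mul_ne_zero (mul_ne_zero (mul_ne_zero h2 hs) h8) hne (h1.trans (by simp))
    · exact hne (kappa hp5 hc' hz (hdeg _ z hne) (hpl _ z hne) h)
  have hI : ∀ j, Ind i j → c (X F p (W j 0 2 0 0)) = 0 → (c - dlf f) (X F p (W j 0 2 0 0)) = 0 := by
    intro j hij hj
    refine R_of fun z => ?_
    by_cases hz : Reg p z
    swap
    · exact cv_off hc' fun h => hz h.2
    obtain ⟨b, hb⟩ : ∃ b, b = W j z (z j.castSucc + 1) (z (cj m j).castSucc - 1) (z (Fin.last _)) :=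
      ⟨_, rfl⟩
    rw [cv_sub, cv_dlf f (reg_sq hp5 j) hz, cv, hj, LinearMap.zero_apply, zero_sub, neg_eq_zero,
      br_sq' j hz.nonneg, map_smul, smul_eq_mul, ← hb]
    by_cases h : Reg p b ∧ ((dg b + 2 : ℤ) : F) = 0 ∧ Diag p i b
    swap
    · rw [hf, fs_neg h, mul_zero]
    rw [hf, fs_pos h.1 h.2.1 h.2.2, hφ]
    obtain ⟨-, -, hQ1, hk1, hk2⟩ := h
    have hzi := reg_cases hz i
    have e1 : b i.castSucc = z i.castSucc := by rw [hb, W_o _ _ _ _ hij.symm.1 hij.symm.2]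
    have e2 : b (cj m i).castSucc = z (cj m i).castSucc := by
      rw [hb, W_o _ _ _ _ hij.symm.cj.1 hij.symm.cj.2]
    have h5 := hQ1 i
    rw [e1, e2] at h5
    rw [e1] at hk1 hk2
    have h6 : Reg p (W i z (z i.castSucc - 1) (z i.castSucc + 1) (z (Fin.last _))) :=
      regW hz.box fun _ => by omega
    have h0 : br (X F p (W i 0 2 0 0)) (X F p (W j 0 2 0 0)) = 0 := by
      rw [br_sq' i (reg_sq hp5 j).nonneg, W_o _ _ _ _ hij.symm.cj.1 hij.symm.cj.2]; simp
    have h7 := hc.com (reg_sq hp5 i) (reg_sq hp5 j) h6 h0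
    rw [hj, LinearMap.zero_apply, br_sq' j h6.nonneg, map_smul, smul_eq_mul,
      W_o _ _ _ _ hij.1 hij.2, W_o _ _ _ _ hij.cj.1 hij.cj.2, W_n,
      W_comm hij.symm.1 hij.symm.2 z _ _ _ _ _ _ 0] at h7
    have e3 : W i b (b i.castSucc - 1) (b i.castSucc + 1) (b (Fin.last _)) = W i (W j z
        (z j.castSucc + 1) (z (cj m j).castSucc - 1) 0) (z i.castSucc - 1) (z i.castSucc + 1)
        (z (Fin.last _)) := by
      rw [e1, hb, W_n]
      apply vec_ext i (by simp) (by simp) (by simp)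
      intro k hk hk'
      rw [W_o _ _ _ _ hk hk', W_o _ _ _ _ hk hk']
      rcases tri_i j k with rfl | rfl | hjk
      · simp
      · simp
      · rw [W_o _ _ _ _ hjk.1 hjk.2, W_o _ _ _ _ hjk.1 hjk.2]
    rw [e3, cv, ← mul_div_assoc, h7, zero_div]
  refine ⟨f, hc', hh', ⟨hP, hP'⟩, fun j hj => ?_⟩
  rcases tri_i i j with rfl | rfl | hij
  · exact ⟨hP, hP'⟩
  · rw [W_cj, W_cj]; exact ⟨hP', hP⟩
  · refine ⟨hI j hij hj.1, ?_⟩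
    have := hI (cj m j) hij.cj (by rw [W_cj]; exact hj.2)
    rwa [W_cj] at this
end

/-! ### Invariance under sl₂ in each plane, and the selection rule -/

section
variable {F : Type*} [Field F] {p m : ℕ} [CharP F p] [hp : Fact p.Prime]
local notation "A" => TruncP F p (2 * m + 1)

/-- Cocycles whose radical contains `x_i²` and `x_i x_{i'}` for all `i`, that is, a copy of `sl₂` for each
plane. -/
structure Coc3 (c : A →ₗ[F] A →ₗ[F] F) : Prop where
  coc : Coc c
  h : ∀ j, c (X F p (W j 0 1 1 0)) = 0
  sq : ∀ j, c (X F p (W j 0 2 0 0)) = 0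

/-- Invariance under an element of the radical, for arbitrary arguments. -/
theorem Coc.invP {c : A →ₗ[F] A →ₗ[F] F} (hc : Coc c) {a : Vec m} (ha : Reg p a)
    (h : c (X F p a) = 0) {x y : A} (hx : prj F p x = x) (hy : prj F p y = y) :
    c (br (X F p a) x) y = - c x (br (X F p a) y) := by
  have := lin_ext (f := (c.flip y).comp ((br (X F p a)).comp (prj F p)))
    (g := - (c.flip (br (X F p a) y)).comp (prj F p)) (by
    intro z _
    simp only [LinearMap.comp_apply, LinearMap.neg_apply, LinearMap.flip_apply]
    by_cases hz : Reg p z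
    · rw [prj_X hz, hc.inv ha hz h hy]
    · rw [prj_X0 hz]; simp)
  have h2 := LinearMap.congr_fun this x
  simpa only [LinearMap.comp_apply, LinearMap.neg_apply, LinearMap.flip_apply, hx] using h2

theorem sq_sq (i : Fin (2 * m)) {a : Vec m} (ha : ∀ k, 0 ≤ a k) :
    br (X F p (W i 0 2 0 0)) (br (X F p (W (cj m i) 0 2 0 0)) (X F p a))
      = (-4 * (a i.castSucc * (a (cj m i).castSucc + 1)) : F) • X F p a := by
  have hs : sg F m i * sg F m (cj m i) = -1 := by rw [sg_cj, mul_neg, sg_mul_self]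
  rw [br_sq' (cj m i) ha, map_smul, cj_cj, W_cj]
  by_cases h0 : a i.castSucc = 0
  · rw [h0]; simp
  · have h1 := ha i.castSucc
    have h2 := ha (cj m i).castSucc
    rw [br_sq i ha (by omega) (by omega) (ha _), smul_smul, sub_add_cancel, add_sub_cancel_right,
      W_self]
    congr 1
    push_cast
    linear_combination (4 * a i.castSucc * (a (cj m i).castSucc + 1) : F) * hs

/-- The selection rule: on two monomials paired nontrivially, the exponents in each plane are either
swapped or complementary. -/
theorem Coc3.sel {c : A →ₗ[F] A →ₗ[F] F} (hp5 : 5 ≤ p) (hc : Coc3 c) {a b : Vec m}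
    (hab : cv c a b ≠ 0) (i : Fin (2 * m)) :
    (b i.castSucc = a (cj m i).castSucc ∧ b (cj m i).castSucc = a i.castSucc) ∨
    (a i.castSucc + b i.castSucc = p - 1 ∧ a (cj m i).castSucc + b (cj m i).castSucc = p - 1) := by
  obtain ⟨ha, hb⟩ := cv_ne hc.coc hab
  have hai := reg_cases ha i
  have hbi := reg_cases hb i
  have hw := weight hp5 hc.coc (hc.h i) hab
  have e1 := hc.coc.invP (reg_sq hp5 (cj m i)) (hc.sq _)
    (prj_br hp5 (reg_sq hp5 i) ha) (prj_X hb)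
  have e2 := hc.coc.invP (reg_sq hp5 i) (hc.sq _) (prj_X ha)
    (prj_br hp5 (reg_sq hp5 (cj m i)) hb)
  rw [sq_sq i hb.nonneg, map_smul] at e2
  have e3 := sq_sq (F := F) (p := p) (cj m i) ha.nonneg
  rw [cj_cj] at e3
  rw [e3, map_smul, LinearMap.smul_apply, e2, neg_neg, ← sub_eq_zero, smul_eq_mul, smul_eq_mul,
    ← sub_mul] at e1
  have e4 := (mul_eq_zero.1 e1).resolve_right hab
  have e5 : (a (cj m i).castSucc * (a i.castSucc + 1) - b i.castSucc * (b (cj m i).castSucc + 1) : F)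
      = 0 := by
    have h4 : (-4 : F) ≠ 0 := by
      have := ic_ne (F := F) (p := p) (x := -4) (by omega) (by omega) (by omega)
      exact_mod_cast this
    refine (mul_eq_zero.1 (?_ : (-4 : F) * _ = 0)).resolve_left h4
    linear_combination e4
  rw [wt_apply, wt_apply] at hw
  have e6 : ((a (cj m i).castSucc - b i.castSucc : ℤ) : F)
      * ((a (cj m i).castSucc + b (cj m i).castSucc + 1 - p : ℤ) : F) = 0 := by
    push_cast
    rw [CharP.cast_eq_zero F p]
    linear_combination e5 - (a (cj m i).castSucc : F) * (- hw)
  rcases mul_eq_zero.1 e6 with h | h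
  · left
    have h1 := int_zero h (by omega) (by omega)
    have h2 : ((b (cj m i).castSucc - a i.castSucc : ℤ) : F) = 0 := by
      push_cast at h ⊢; linear_combination hw - h
    have h3 := int_zero h2 (by omega) (by omega)
    omega
  · right
    have h1 := int_zero h (by omega) (by omega)
    have h2 : ((a i.castSucc + b i.castSucc + 1 - p : ℤ) : F) = 0 := by
      push_cast at h ⊢; linear_combination -hw + h
    have h3 := int_zero h2 (by omega) (by omega)
    omega

/-- The value of `c` on a monomial in the plane of `i` and `x_n`, and another monomial. -/
def cw (c : A →ₗ[F] A →ₗ[F] F) (i : Fin (2 * m)) (w : Vec m) (α β k γ δ l : ℤ) : F :=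
  cv c (W i 0 α β k) (W i w γ δ l)

/-- The value of `c` on a monomial in the planes of `i`, `j` and `x_n`, and another monomial. -/
def cw2 (c : A →ₗ[F] A →ₗ[F] F) (i j : Fin (2 * m)) (w : Vec m)
    (α β α' β' k γ δ γ' δ' l : ℤ) : F :=
  cv c (W2 i j 0 α β α' β' k) (W2 i j w γ δ γ' δ' l)

theorem Coc3.selW {c : A →ₗ[F] A →ₗ[F] F} (hp5 : 5 ≤ p) (hc : Coc3 c) {i : Fin (2 * m)} {w v : Vec m}
    {α β k γ δ l : ℤ} (h : ¬ (0 ≤ γ ∧ γ < p ∧ 0 ≤ δ ∧ δ < p ∧ 0 ≤ l ∧ l < p ∧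
      0 ≤ α ∧ α < p ∧ 0 ≤ β ∧ β < p ∧
      ((γ = β ∧ δ = α) ∨ (α + γ = p - 1 ∧ β + δ = p - 1)))) :
    cv c (W i v α β k) (W i w γ δ l) = 0 := by
  by_contra hne
  have h1 := hc.sel hp5 hne i
  have h2 := (cv_ne hc.coc hne).2.bd
  have h3 := (cv_ne hc.coc hne).1.bd
  simp only [W_i, W_c] at h1
  apply h
  tauto

theorem Coc3.selz {c : A →ₗ[F] A →ₗ[F] F} (hp5 : 5 ≤ p) (hc : Coc3 c) {i : Fin (2 * m)} {w : Vec m}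
    {α β k γ δ l : ℤ} (h : ¬ (0 ≤ γ ∧ γ < p ∧ 0 ≤ δ ∧ δ < p ∧ 0 ≤ l ∧ l < p ∧
      0 ≤ α ∧ α < p ∧ 0 ≤ β ∧ β < p ∧
      ((γ = β ∧ δ = α) ∨ (α + γ = p - 1 ∧ β + δ = p - 1)))) :
    cw c i w α β k γ δ l = 0 := hc.selW hp5 h

theorem W2_i (i j : Fin (2 * m)) (w : Vec m) (α β γ δ l : ℤ) : W2 i j w α β γ δ l i.castSucc = α := by
  simp [W2]
theorem W2_c (i j : Fin (2 * m)) (w : Vec m) (α β γ δ l : ℤ) :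
    W2 i j w α β γ δ l (cj m i).castSucc = β := by
  simp [W2]
theorem W2_n (i j : Fin (2 * m)) (w : Vec m) (α β γ δ l : ℤ) : W2 i j w α β γ δ l (Fin.last _) = l := by
  simp [W2]
theorem W2_j {i j : Fin (2 * m)} (h : Ind i j) (w : Vec m) (α β γ δ l : ℤ) :
    W2 i j w α β γ δ l j.castSucc = γ := by
  rw [W2, W_o _ _ _ _ h.1 h.2, W_i]
theorem W2_cj {i j : Fin (2 * m)} (h : Ind i j) (w : Vec m) (α β γ δ l : ℤ) :
    W2 i j w α β γ δ l (cj m j).castSucc = δ := by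
  rw [W2, W_o _ _ _ _ h.cj.1 h.cj.2, W_c]

theorem W2_comm {i j : Fin (2 * m)} (h : Ind i j) (w : Vec m) (α β γ δ l : ℤ) :
    W2 i j w α β γ δ l = W2 j i w γ δ α β l := by
  apply vec_ext i
  · rw [W2_i, W2_j h.symm]
  · rw [W2_c, W2_cj h.symm]
  · rw [W2_n, W2_n]
  · intro k h1 h2
    rcases tri_i j k with rfl | rfl | hjk
    · rw [W2_j h, W2_i]
    · rw [W2_cj h, W2_c]
    · rw [W2, W2, W_o _ _ _ _ h1 h2, W_o _ _ _ _ hjk.1 hjk.2, W_o _ _ _ _ hjk.1 hjk.2,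
        W_o _ _ _ _ h1 h2]

theorem W2_self (i j : Fin (2 * m)) (w : Vec m) : W2 i j w (w i.castSucc) (w (cj m i).castSucc)
    (w j.castSucc) (w (cj m j).castSucc) (w (Fin.last _)) = w := by
  apply vec_ext i
  · rw [W2_i]
  · rw [W2_c]
  · rw [W2_n]
  · intro k h1 h2
    rw [W2, W_o _ _ _ _ h1 h2]
    rcases tri_i j k with rfl | rfl | hjk
    · rw [W_i]
    · rw [W_c]
    · rw [W_o _ _ _ _ hjk.1 hjk.2]

theorem rs_ge {i j : Fin (2 * m)} (hij : Ind i j) {w : Vec m} (hw : ∀ k, 0 ≤ w k) :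
    w j.castSucc + w (cj m j).castSucc ≤ rs i w := by
  have h := Finset.sum_le_sum_of_subset_of_nonneg
    (s := {j, cj m j}) (t := (Finset.univ.erase i).erase (cj m i)) (f := fun k => w k.castSucc)
    (by
      intro k hk
      simp only [Finset.mem_insert, Finset.mem_singleton] at hk
      rcases hk with rfl | rfl
      · simp [hij.1, hij.2]
      · simp [hij.cj.1, hij.1, cj_inj]) (fun k _ _ => hw _)
  rwa [Finset.sum_pair (ne_cj j)] at h

theorem regW2 {i j : Fin (2 * m)} (hij : Ind i j) {w : Vec m} (hw : Box p w)
    {α β γ δ l : ℤ} (h : 0 ≤ α ∧ α < p ∧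
    0 ≤ β ∧ β < p ∧ 0 ≤ γ ∧ γ < p ∧ 0 ≤ δ ∧ δ < p ∧ 0 ≤ l ∧ l < p ∧ 2 ≤ α + β + γ + δ + 2 * l ∧
    (l = 1 → 1 ≤ α + β + γ + δ) ∧
    (α + 2 ≤ p ∨ β + 2 ≤ p ∨ γ + 2 ≤ p ∨ δ + 2 ≤ p ∨ l + 2 ≤ p)) :
    Reg p (W2 i j w α β γ δ l) := by
  have key : ∀ {i j : Fin (2 * m)} (hij : Ind i j) {α β γ δ l : ℤ}, 0 ≤ α ∧ α < p ∧
      0 ≤ β ∧ β < p ∧ 0 ≤ γ ∧ γ < p ∧ 0 ≤ δ ∧ δ < p ∧ 0 ≤ l ∧ l < p ∧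
      2 ≤ α + β + γ + δ + 2 * l ∧ (l = 1 → 1 ≤ α + β + γ + δ) →
      (α + 2 ≤ p ∨ β + 2 ≤ p ∨ l + 2 ≤ p) → Reg p (W2 i j w α β γ δ l) := by
    intro i j hij α β γ δ l h h'
    have hb : Box p (W j w γ δ 0) := hw.W (by omega) (by omega) (by omega) (by omega) (by omega)
      (by omega)
    have hr := rs_ge hij fun k => (hb k).1
    rw [W_i, W_c] at hr
    exact reg_W hb (by omega) (by omega) (by omega) (by omega) (by omega) (by omega) (by omega)
      (by omega) h'
  by_cases h' : α + 2 ≤ p ∨ β + 2 ≤ p ∨ l + 2 ≤ p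
  · exact key hij (by omega) h'
  · rw [W2_comm hij]
    exact key hij.symm (by omega) (by omega)

/-- The cocycle identity for monomials in one plane and `x_n`. -/
theorem tri1 {c : A →ₗ[F] A →ₗ[F] F} (hc : Coc c) (i : Fin (2 * m)) {w : Vec m} (hw : Box p w)
    (α β k α' β' k' γ δ l : ℤ) {D : F} (hD : (dg (W i w γ δ l) : F) = D)
    (h1 : Reg p (W i (0 : Vec m) α β k)) (h2 : Reg p (W i (0 : Vec m) α' β' k'))
    (h3 : Reg p (W i w γ δ l)) {v1 v2 v3 v4 v5 v6 : F}
    (e1 : cw c i w (α + α' - 1) (β + β' - 1) (k + k') γ δ l = v1)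
    (e2 : cw c i w (α + α') (β + β') (k + k' - 1) γ δ l = v2)
    (e3 : cw c i w α β k (α' + γ - 1) (β' + δ - 1) (k' + l) = v3)
    (e4 : cw c i w α β k (α' + γ) (β' + δ) (k' + l - 1) = v4)
    (e5 : cw c i w α' β' k' (α + γ - 1) (β + δ - 1) (k + l) = v5)
    (e6 : cw c i w α' β' k' (α + γ) (β + δ) (k + l - 1) = v6) :
    sg F m i * (α * β' - β * α') * v1 + (k * (α' + β' + 2 * k' - 2) - k' * (α + β + 2 * k - 2)) * v2
      = sg F m i * (α' * δ - β' * γ) * v3 + (k' * D - l * (α' + β' + 2 * k' - 2)) * v4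
        - (sg F m i * (α * δ - β * γ) * v5 + (k * D - l * (α + β + 2 * k - 2)) * v6) := by
  have b1 := h1.bd
  have b2 := h2.bd
  have b3 := h3.bd
  have h := hc.tri h1 h2 h3
  have hw0 := fun k => (hw k).1
  have hD' : (rs i w + γ + δ + 2 * l - 2 : F) = D := by
    rw [← hD, dg_W]; push_cast; ring
  rw [br_W i (w := 0) (fun k => le_rfl) (by omega) (by omega) (by omega) (by omega) (by omega) (by omega),
    br_W i hw0 (by omega) (by omega) (by omega) (by omega) (by omega) (by omega),
    br_W i hw0 (by omega) (by omega) (by omega) (by omega) (by omega) (by omega)] at h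
  simp only [map_add, map_smul, LinearMap.add_apply, LinearMap.smul_apply, smul_eq_mul] at h
  rw [← e1, ← e2, ← e3, ← e4, ← e5, ← e6, ← hD']
  simp only [cw, cv]
  rw [rs_zero] at h
  push_cast at h
  linear_combination h

/-- The cocycle identity for monomials in two planes and `x_n`. -/
theorem tri2 {c : A →ₗ[F] A →ₗ[F] F} (hc : Coc c) {i j : Fin (2 * m)} (hij : Ind i j) {w : Vec m}
    (hw : Box p w) (α₁ β₁ γ₁ δ₁ k₁ α₂ β₂ γ₂ δ₂ k₂ α β γ δ l : ℤ) {D : F}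
    (hD : (dg (W2 i j w α β γ δ l) : F) = D)
    (h1 : Reg p (W2 i j (0 : Vec m) α₁ β₁ γ₁ δ₁ k₁)) (h2 : Reg p (W2 i j (0 : Vec m) α₂ β₂ γ₂ δ₂ k₂))
    (h3 : Reg p (W2 i j w α β γ δ l)) {v1 v2 v3 v4 v5 v6 v7 v8 v9 : F}
    (e1 : cw2 c i j w (α₁ + α₂ - 1) (β₁ + β₂ - 1) (γ₁ + γ₂) (δ₁ + δ₂) (k₁ + k₂) α β γ δ l = v1)
    (e2 : cw2 c i j w (α₁ + α₂) (β₁ + β₂) (γ₁ + γ₂ - 1) (δ₁ + δ₂ - 1) (k₁ + k₂) α β γ δ l = v2)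
    (e3 : cw2 c i j w (α₁ + α₂) (β₁ + β₂) (γ₁ + γ₂) (δ₁ + δ₂) (k₁ + k₂ - 1) α β γ δ l = v3)
    (e4 : cw2 c i j w α₁ β₁ γ₁ δ₁ k₁ (α₂ + α - 1) (β₂ + β - 1) (γ₂ + γ) (δ₂ + δ) (k₂ + l) = v4)
    (e5 : cw2 c i j w α₁ β₁ γ₁ δ₁ k₁ (α₂ + α) (β₂ + β) (γ₂ + γ - 1) (δ₂ + δ - 1) (k₂ + l) = v5)
    (e6 : cw2 c i j w α₁ β₁ γ₁ δ₁ k₁ (α₂ + α) (β₂ + β) (γ₂ + γ) (δ₂ + δ) (k₂ + l - 1) = v6)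
    (e7 : cw2 c i j w α₂ β₂ γ₂ δ₂ k₂ (α₁ + α - 1) (β₁ + β - 1) (γ₁ + γ) (δ₁ + δ) (k₁ + l) = v7)
    (e8 : cw2 c i j w α₂ β₂ γ₂ δ₂ k₂ (α₁ + α) (β₁ + β) (γ₁ + γ - 1) (δ₁ + δ - 1) (k₁ + l) = v8)
    (e9 : cw2 c i j w α₂ β₂ γ₂ δ₂ k₂ (α₁ + α) (β₁ + β) (γ₁ + γ) (δ₁ + δ) (k₁ + l - 1) = v9) :
    sg F m i * (α₁ * β₂ - β₁ * α₂) * v1 + sg F m j * (γ₁ * δ₂ - δ₁ * γ₂) * v2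
        + (k₁ * (α₂ + β₂ + γ₂ + δ₂ + 2 * k₂ - 2) - k₂ * (α₁ + β₁ + γ₁ + δ₁ + 2 * k₁ - 2)) * v3
      = sg F m i * (α₂ * β - β₂ * α) * v4 + sg F m j * (γ₂ * δ - δ₂ * γ) * v5
        + (k₂ * D - l * (α₂ + β₂ + γ₂ + δ₂ + 2 * k₂ - 2)) * v6
        - (sg F m i * (α₁ * β - β₁ * α) * v7 + sg F m j * (γ₁ * δ - δ₁ * γ) * v8
          + (k₁ * D - l * (α₁ + β₁ + γ₁ + δ₁ + 2 * k₁ - 2)) * v9) := by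
  have nn : ∀ {w : Vec m} {α β γ δ l : ℤ}, Reg p (W2 i j w α β γ δ l) →
      0 ≤ α ∧ 0 ≤ β ∧ 0 ≤ γ ∧ 0 ≤ δ ∧ 0 ≤ l := by
    intro w α β γ δ l h
    have b1 := h.nonneg i.castSucc
    have b2 := h.nonneg (cj m i).castSucc
    have b3 := h.nonneg j.castSucc
    have b4 := h.nonneg (cj m j).castSucc
    have b5 := h.nonneg (Fin.last _)
    rw [W2_i] at b1; rw [W2_c] at b2; rw [W2_j hij] at b3; rw [W2_cj hij] at b4; rw [W2_n] at b5
    exact ⟨b1, b2, b3, b4, b5⟩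
  obtain ⟨a1, a2, a3, a4, a5⟩ := nn h1
  obtain ⟨b1, b2, b3, b4, b5⟩ := nn h2
  obtain ⟨c1, c2, c3, c4, c5⟩ := nn h3
  have h := hc.tri h1 h2 h3
  have hw0 := fun k => (hw k).1
  have hd0 : dg (W2 i j (0 : Vec m) α₂ β₂ γ₂ δ₂ k₂) = α₂ + β₂ + γ₂ + δ₂ + 2 * k₂ - 2 := by
    rw [dg_eq j, W2_comm hij, W2, rs_W, ← W_n j 0 0 0 0]
    have := dg_W i (0 : Vec m) α₂ β₂ 0
    rw [dg_eq j, W_n, W_o _ _ _ _ hij.1 hij.2, W_o _ _ _ _ hij.cj.1 hij.cj.2, rs_zero] at this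
    simp only [Pi.zero_apply] at this
    simp only [W_i, W_c, W_n]
    omega
  rw [br_W2 hij (w := 0) (fun k => le_rfl) a1 a2 a3 a4 a5 b1 b2 b3 b4 b5,
    br_W2 hij hw0 a1 a2 a3 a4 a5 c1 c2 c3 c4 c5, br_W2 hij hw0 b1 b2 b3 b4 b5 c1 c2 c3 c4 c5, hd0,
    hD] at h
  simp only [map_add, map_smul, LinearMap.add_apply, LinearMap.smul_apply, smul_eq_mul] at h
  rw [← e1, ← e2, ← e3, ← e4, ← e5, ← e6, ← e7, ← e8, ← e9]
  simp only [cw2, cv]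
  push_cast at h
  linear_combination h

/-- Invariance under `x_i²`. -/
theorem Coc3.shift {c : A →ₗ[F] A →ₗ[F] F} (hp5 : 5 ≤ p) (hc : Coc3 c) {i : Fin (2 * m)} {w v : Vec m}
    {α β k γ δ l : ℤ} (h1 : Reg p (W i v α β k)) (h2 : Reg p (W i w γ δ l)) :
    (β : F) * cv c (W i v (α + 1) (β - 1) k) (W i w γ δ l)
      + δ * cv c (W i v α β k) (W i w (γ + 1) (δ - 1) l) = 0 := by
  have b1 := h1.bd
  have b2 := h2.bd
  have h := hc.coc.inv' (reg_sq hp5 i) h1 h2 (hc.sq i)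
  have e1 := br_sq (F := F) (p := p) i h1.nonneg b1.1 b1.2.2.1 b1.2.2.2.2.1
  have e2 := br_sq (F := F) (p := p) i h2.nonneg b2.1 b2.2.2.1 b2.2.2.2.2.1
  rw [W_W, W_W] at e1 e2
  rw [e1, e2, map_smul, map_smul, LinearMap.smul_apply, smul_eq_mul, smul_eq_mul] at h
  have h3 : (2 * sg F m i : F) ≠ 0 := mul_ne_zero (two_ne hp5) (sg_ne i)
  refine (mul_eq_zero.1 (?_ : (2 * sg F m i : F) * _ = 0)).resolve_left h3
  simp only [cv]
  linear_combination h

/-- Invariance under `x_{i'}²`. -/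
theorem Coc3.shift' {c : A →ₗ[F] A →ₗ[F] F} (hp5 : 5 ≤ p) (hc : Coc3 c) {i : Fin (2 * m)}
    {w v : Vec m} {α β k γ δ l : ℤ} (h1 : Reg p (W i v α β k)) (h2 : Reg p (W i w γ δ l)) :
    (α : F) * cv c (W i v (α - 1) (β + 1) k) (W i w γ δ l)
      + γ * cv c (W i v α β k) (W i w (γ - 1) (δ + 1) l) = 0 := by
  rw [← W_cj] at h1 h2
  have := hc.shift hp5 h1 h2
  rwa [W_cj, W_cj, W_cj, W_cj] at this
end

/-! ### A relation between the values at x_i³ and at x_i x_n -/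

section
variable {F : Type*} [Field F] {p m : ℕ} [CharP F p] [hp : Fact p.Prime]
local notation "A" => TruncP F p (2 * m + 1)

theorem three_ne (hp5 : 5 ≤ p) : (3 : F) ≠ 0 := by
  have := cast_ne (F := F) (p := p) (k := 3) (by omega) (by omega)
  exact_mod_cast this

/-- The relation between the values at `x_i³` and at `x_i x_n`. -/
theorem dagger {c : A →ₗ[F] A →ₗ[F] F} (hp5 : 5 ≤ p) (hc : Coc3 c) {o : Fin (2 * m)}
    (ho : sg F m o = 1) {w : Vec m} (hw : Box p w) {l : ℤ} (hl : 0 ≤ l) (hl' : l + 2 ≤ p)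
    (hd : (dg (W o w (p - 4) (p - 1) l) : F) = -5) :
    (l + 3) * cw c o w 3 0 0 (p - 4) (p - 1) (l + 1)
      = (l + 1 : F) * cw c o w 1 0 1 (p - 2) (p - 1) l := by
  have hp0 : (p : F) = 0 := CharP.cast_eq_zero F p
  obtain ⟨X1, hX1⟩ : ∃ x, x = cw c o w 1 0 1 (p - 2) (p - 1) l := ⟨_, rfl⟩
  obtain ⟨X2, hX2⟩ : ∃ x, x = cw c o w 2 0 1 (p - 3) (p - 1) l := ⟨_, rfl⟩
  obtain ⟨X3, hX3⟩ : ∃ x, x = cw c o w 3 0 0 (p - 4) (p - 1) (l + 1) := ⟨_, rfl⟩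
  obtain ⟨X3', hX3'⟩ : ∃ x, x = cw c o w 3 0 1 (p - 4) (p - 1) l := ⟨_, rfl⟩
  have rz : Reg p (W o w (p - 4) (p - 1) l) := regW hw fun _ => by omega
  have hd4 : (dg (W o w (p - 3) (p - 1) l) : F) = -4 := by
    have : dg (W o w (p - 3) (p - 1) l) = dg (W o w (p - 4) (p - 1) l) + 1 := by
      rw [dg_W, dg_W]; ring
    rw [this]; push_cast; rw [hd]; ring
  have h3 : (3 : F) ≠ 0 := three_ne hp5
  have t1 := tri1 hc.coc o hw 1 0 1 2 0 1 (p - 4) (p - 1) l hd (regW0 hp5 (by omega))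
    (regW0 hp5 (by omega)) rz (v2 := X3') (v3 := 0) (v4 := X1) (v5 := 0) (v6 := X2) rfl
    (by rw [hX3']; congr 1) (hc.selz hp5 (by omega)) (by rw [hX1]; congr 1 <;> ring)
    (hc.selz hp5 (by omega)) (by rw [hX2]; congr 1 <;> ring)
  have t4 : cw c o w 4 1 0 (p - 4) (p - 1) l = 0 := by
    have t := tri1 hc.coc o hw 3 0 0 2 2 0 (p - 4) (p - 1) l hd (regW0 hp5 (by omega))
      (regW0 hp5 (by omega)) rz (v1 := cw c o w 4 1 0 (p - 4) (p - 1) l) (v3 := 0) (v4 := 0)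
      (v5 := 0) (v6 := 0) (by congr 1) rfl
      (hc.selz hp5 (by omega)) (hc.selz hp5 (by omega))
      (hc.selz hp5 (by omega)) (hc.selz hp5 (by omega))
    have h6 : (2 * 3 : F) ≠ 0 := mul_ne_zero (two_ne hp5) h3
    push_cast at t
    rw [ho] at t
    refine (mul_eq_zero.1 (?_ : (2 * 3 : F) * _ = 0)).resolve_left h6
    linear_combination t
  have s1 := hc.shift hp5 (i := o) (w := w) (v := 0) (α := 1) (β := 1) (k := 1) (γ := p - 3)
    (δ := p - 1) (l := l) (regW0 hp5 (by omega)) (regW hw fun _ => by omega)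
  have s2 := hc.shift hp5 (i := o) (w := w) (v := 0) (α := 0) (β := 1) (k := 1) (γ := p - 2)
    (δ := p - 1) (l := l) (regW0 hp5 (by omega)) (regW hw fun _ => by omega)
  have t2 := tri1 hc.coc o hw 3 0 0 1 1 1 (p - 4) (p - 1) l hd (regW0 hp5 (by omega))
    (regW0 hp5 (by omega)) rz (v1 := X3') (v2 := 0) (v3 := X3) (v4 := 0) (v5 := X2) (v6 := 0)
    (by rw [hX3']; congr 1) (by rw [← t4]; congr 1) (by rw [hX3]; congr 1 <;> ring)
    (hc.selz hp5 (by omega)) (by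
      have : X2 - cw c o w 1 1 1 (p - 2) (p - 2) l = 0 := by
        rw [← s1, hX2]
        push_cast
        rw [hp0, cw, cw, show (p - 3 + 1 : ℤ) = p - 2 by ring, show (p - 1 - 1 : ℤ) = p - 2 by ring]
        norm_num
        ring
      rw [sub_eq_zero.1 this]; congr 1 <;> ring) (hc.selz hp5 (by omega))
  have t3 := tri1 hc.coc o hw 3 0 0 0 1 1 (p - 3) (p - 1) l hd4 (regW0 hp5 (by omega))
    (regW0 hp5 (by omega)) (regW hw fun _ => by omega) (v1 := X2) (v2 := 0) (v3 := X3) (v4 := 0)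
    (v5 := X1) (v6 := 0)
    (by rw [hX2]; congr 1) (hc.selz hp5 (by omega)) (by rw [hX3]; congr 1 <;> ring)
    (hc.selz hp5 (by omega)) (by
      have : X1 - cw c o w 0 1 1 (p - 1) (p - 2) l = 0 := by
        rw [← s2, hX1]
        push_cast
        rw [hp0, cw, cw, show (p - 2 + 1 : ℤ) = p - 1 by ring, show (p - 1 - 1 : ℤ) = p - 2 by ring]
        norm_num
        ring
      rw [sub_eq_zero.1 this]; congr 1 <;> ring) (hc.selz hp5 (by omega))
  push_cast at t1 t2 t3
  rw [hp0, ho] at t1 t2 t3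
  refine mul_left_cancel₀ h3 ?_
  rw [← hX1, ← hX3]
  have u2 : X3' = X3 + X2 := mul_left_cancel₀ h3 (by linear_combination t2)
  have u3 : X2 = X3 + X1 := mul_left_cancel₀ h3 (by linear_combination t3)
  rw [u2, u3] at t1
  linear_combination - 3 * t1
end

/-! ### Normalisation at monomials of vertex type -/

section
variable {F : Type*} [Field F] {p m : ℕ} [CharP F p] [hp : Fact p.Prime]
local notation "A" => TruncP F p (2 * m + 1)

/-- In the plane of `i`, the exponents are both `0` or both `p - 1`. -/
def Vx (p : ℕ) {m : ℕ} (b : Vec m) (i : Fin (2 * m)) : Prop :=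
  (b i.castSucc = 0 ∧ b (cj m i).castSucc = 0) ∨
  (b i.castSucc = p - 1 ∧ b (cj m i).castSucc = p - 1)

theorem Vx_cj {b : Vec m} {i : Fin (2 * m)} : Vx p b (cj m i) ↔ Vx p b i := by
  unfold Vx; rw [cj_cj]; tauto

theorem Vx_W {b : Vec m} {i j : Fin (2 * m)} (h : Ind i j) (α β l : ℤ) :
    Vx p (W i b α β l) j ↔ Vx p b j := by
  unfold Vx
  rw [W_o _ _ _ _ h.1 h.2, W_o _ _ _ _ h.cj.1 h.cj.2]

/-- A pairing with a monomial in the plane of `i` and `x_n` forces the other planes to be of vertex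
type. -/
theorem Coc3.vx {c : A →ₗ[F] A →ₗ[F] F} (hp5 : 5 ≤ p) (hc : Coc3 c) {i j : Fin (2 * m)} {α β k : ℤ}
    {z : Vec m} (h : cv c (W i 0 α β k) z ≠ 0) (hij : Ind i j) : Vx p z j := by
  have := hc.sel hp5 h j
  rw [W_o _ _ _ _ hij.1 hij.2, W_o _ _ _ _ hij.cj.1 hij.cj.2] at this
  simp only [Pi.zero_apply, zero_add] at this
  exact this

theorem reg_deg {b : Vec m} (hb : Box p b) (h0 : 0 ≤ dg b) (h : (dg b : F) = -2) (hp5 : 5 ≤ p) :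
    Reg p b := by
  refine ⟨hb, h0, ?_, ?_⟩
  · rintro rfl
    rw [dg_en] at h
    apply two_ne (F := F) hp5
    push_cast at h
    linear_combination h
  · rintro hd rfl
    obtain ⟨k, hk⟩ := hd
    have e : dg (tau p m) = 2 * (m + 1) * p - 2 * (m + 2) := by rw [dg_tau]; ring
    have hk' : (m : F) + 2 = 0 := by
      have := congrArg (Nat.cast : ℕ → F) hk
      push_cast at this
      rw [this, CharP.cast_eq_zero F p, zero_mul]
    rw [e] at h
    push_cast at h
    rw [CharP.cast_eq_zero F p] at h
    apply two_ne (F := F) hp5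
    linear_combination h + 2 * hk'

theorem Coc3.selz2 {c : A →ₗ[F] A →ₗ[F] F} (hp5 : 5 ≤ p) (hc : Coc3 c) {i j : Fin (2 * m)}
    (hij : Ind i j) {w : Vec m} {α β α' β' k γ δ γ' δ' l : ℤ} (h : ¬ (0 ≤ l ∧ l < p ∧
      (0 ≤ γ ∧ γ < p ∧ 0 ≤ δ ∧ δ < p ∧ 0 ≤ α ∧ α < p ∧ 0 ≤ β ∧ β < p ∧
      ((γ = β ∧ δ = α) ∨ (α + γ = p - 1 ∧ β + δ = p - 1))) ∧
      (0 ≤ γ' ∧ γ' < p ∧ 0 ≤ δ' ∧ δ' < p ∧ 0 ≤ α' ∧ α' < p ∧ 0 ≤ β' ∧ β' < p ∧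
      ((γ' = β' ∧ δ' = α') ∨ (α' + γ' = p - 1 ∧ β' + δ' = p - 1))))) :
    cw2 c i j w α β α' β' k γ δ γ' δ' l = 0 := by
  by_contra hne
  have h1 := hc.sel hp5 hne i
  have h1' := hc.sel hp5 hne j
  obtain ⟨h2, h3⟩ := cv_ne hc.coc hne
  have a1 := h2.box i.castSucc
  have a2 := h2.box (cj m i).castSucc
  have a3 := h2.box j.castSucc
  have a4 := h2.box (cj m j).castSucc
  have b1 := h3.box i.castSucc
  have b2 := h3.box (cj m i).castSucc
  have b3 := h3.box j.castSucc
  have b4 := h3.box (cj m j).castSucc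
  have b5 := h3.box (Fin.last _)
  simp only [W2_i, W2_c, W2_j hij, W2_cj hij, W2_n] at h1 h1' a1 a2 a3 a4 b1 b2 b3 b4 b5
  apply h
  tauto

open Classical in
/-- The normalisation functional at a monomial all of whose planes are of vertex type. -/
def phi4 (c : A →ₗ[F] A →ₗ[F] F) (o : Fin (2 * m)) (b : Vec m) : F :=
  if b o.castSucc = 0 then
    if b (Fin.last _) = 0 then
      if h : ∃ J, Ind o J ∧ b J.castSucc = p - 1 then
        - cw c h.choose b 1 0 1 (p - 2) (p - 1) 0 / 3
      else 0
    else cw c o b 1 0 1 0 1 (b (Fin.last _) - 1)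
  else if b (Fin.last _) = p - 3 then cw c o b 3 0 0 (p - 4) (p - 1) (p - 2) / 2
  else - cw c o b 1 0 1 (p - 2) (p - 1) (b (Fin.last _)) / (b (Fin.last _) + 3)

/-- Cocycles normalised at the monomials of vertex type. -/
structure Nrm (c : A →ₗ[F] A →ₗ[F] F) (o : Fin (2 * m)) : Prop extends Coc3 c where
  n1 : ∀ b, Reg p b → (dg b : F) = -2 → (∀ i, Vx p b i) → b o.castSucc = p - 1 →
    b (Fin.last _) ≠ p - 3 → cw c o b 1 0 1 (p - 2) (p - 1) (b (Fin.last _)) = 0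
  n2 : ∀ b, Reg p b → (dg b : F) = -2 → (∀ i, Vx p b i) → b o.castSucc = p - 1 →
    b (Fin.last _) = p - 3 → cw c o b 3 0 0 (p - 4) (p - 1) (p - 2) = 0
  n3 : ∀ b, Reg p b → (dg b : F) = -2 → (∀ i, Vx p b i) → b o.castSucc = 0 →
    b (Fin.last _) ≠ 0 → cw c o b 1 0 1 0 1 (b (Fin.last _) - 1) = 0
  n4 : ∀ b, Reg p b → (dg b : F) = -2 → (∀ i, Vx p b i) → b o.castSucc = 0 →
    b (Fin.last _) = 0 → ∃ J, Ind o J ∧ b J.castSucc = p - 1 ∧ cw c J b 1 0 1 (p - 2) (p - 1) 0 = 0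

/-- Normalisation by a functional supported on monomials of vertex type, whose coboundary still has `sl₂`
of each plane in the radical. -/
theorem stepA4 {c : A →ₗ[F] A →ₗ[F] F} (hp5 : 5 ≤ p) (hc : Coc3 c) {o : Fin (2 * m)}
    (ho : sg F m o = 1) : ∃ f, Nrm (c - dlf f) o := by
  have hp0 : (p : F) = 0 := CharP.cast_eq_zero F p
  have h3 : (3 : F) ≠ 0 := three_ne hp5
  have h2 : (2 : F) ≠ 0 := two_ne hp5
  obtain ⟨f, hf⟩ : ∃ f : A →ₗ[F] F, f = fs (fun b => ∀ i, Vx p b i) (phi4 c o) := ⟨_, rfl⟩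
  have hcf : Coc (c - dlf f) := hf ▸ hc.coc.sub_fs hp5 _ _
  have f0 : ∀ b, ∀ i, ¬ Vx p b i → f (X F p b) = 0 := by
    intro b i hb
    rw [hf]
    exact fs_neg fun h => hb (h.2.2 i)
  have f1 : ∀ b, Reg p b → (dg b : F) = -2 → (∀ i, Vx p b i) → f (X F p b) = phi4 c o b := by
    intro b h1 h2 h3
    rw [hf, fs_pos h1 (by push_cast; rw [h2]; ring) h3]
  refine ⟨f, ⟨hcf, fun j => R_of fun z => ?_, fun j => R_of fun z => ?_⟩, ?_, ?_, ?_, ?_⟩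
  · by_cases hz : Reg p z
    swap
    · exact cv_off hcf fun h => hz h.2
    rw [cv_sub, cv_dlf f (reg_h hp5 j) hz, cv, hc.h, br_h j hz.nonneg, map_smul]
    by_cases hv : Vx p z j
    · have : z (cj m j).castSucc = z j.castSucc := by
        rcases hv with h | h <;> omega
      rw [this]; simp
    · rw [f0 z j hv]; simp
  · by_cases hz : Reg p z
    swap
    · exact cv_off hcf fun h => hz h.2
    have hbd := reg_cases hz j
    rw [cv_sub, cv_dlf f (reg_sq hp5 j) hz, cv, hc.sq, br_sq' j hz.nonneg, map_smul, f0 _ j]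
    · simp
    · unfold Vx
      rw [W_i, W_c]
      omega
  · intro b hb hd hv hbo hbn
    have hbo' : b (cj m o).castSucc = p - 1 := by
      rcases hv o with h | h <;> omega
    have bd := reg_cases hb o
    have hz : Reg p (W o b (p - 2) (p - 1) (b (Fin.last _))) := regW hb.box fun _ => by omega
    have ha : Reg p (W o (0 : Vec m) 1 0 1) := regW0 hp5 (by omega)
    have hdz : dg (W o b (p - 2) (p - 1) (b (Fin.last _))) = dg b - 1 := by
      rw [dg_W, dg_eq o b]; omega
    rw [cw, cv_sub, cv_dlf f ha hz, br_W o hb.nonneg (by omega) (by omega) (by omega) (by omega)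
      (by omega) (by omega), map_add, map_smul, map_smul, f0 _ o (by unfold Vx; rw [W_i, W_c]; omega),
      show W o b (1 + (p - 2)) (0 + (p - 1)) (1 + b (Fin.last _) - 1) = b by
        conv_rhs => rw [← W_self o b]
        congr 1 <;> omega]
    rw [f1 b hb hd hv, phi4, if_neg (by omega), if_neg hbn]
    have hne : (b (Fin.last _) + 3 : F) ≠ 0 := by
      have h8 : ((b (Fin.last _) + 3 - p : ℤ) : F) ≠ 0 := ic_ne (by omega) (by omega) (by omega)
      push_cast at h8
      rwa [hp0, sub_zero] at h8
    rw [dg_W] at hdz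
    have hdz' := congrArg (Int.cast : ℤ → F) hdz
    push_cast at hdz'
    rw [hp0, hd] at hdz'
    simp only [smul_eq_mul, cw]
    push_cast
    rw [hp0]
    field_simp
    linear_combination (cv c (W o 0 1 0 1) (W o b (↑p - 2) (↑p - 1) (b (Fin.last (2 * m))))) * hdz'
  · intro b hb hd hv hbo hbn
    have hbo' : b (cj m o).castSucc = p - 1 := by
      rcases hv o with h | h <;> omega
    have bd := reg_cases hb o
    have hz : Reg p (W o b (p - 4) (p - 1) (p - 2)) := regW hb.box fun _ => by omega
    have ha : Reg p (W o (0 : Vec m) 3 0 0) := regW0 hp5 (by omega)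
    rw [cw, cv_sub, cv_dlf f ha hz, br_W o hb.nonneg (by omega) (by omega) (by omega) (by omega)
      (by omega) (by omega), map_add, map_smul, map_smul, f0 _ o (by unfold Vx; rw [W_i, W_c]; omega),
      show W o b (3 + (p - 4)) (0 + (p - 1)) (0 + (p - 2) - 1) = b by
        conv_rhs => rw [← W_self o b]
        congr 1 <;> omega]
    rw [f1 b hb hd hv, phi4, if_neg (by omega), if_pos hbn]
    simp only [smul_eq_mul, cw]
    push_cast
    rw [hp0]
    field_simp
    ring
  · intro b hb hd hv hbo hbn
    have hbo' : b (cj m o).castSucc = 0 := by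
      rcases hv o with h | h <;> omega
    have bd := reg_cases hb o
    by_cases hz : Reg p (W o b 0 1 (b (Fin.last _) - 1))
    swap
    · exact cv_off hcf fun h => hz h.2
    have ha : Reg p (W o (0 : Vec m) 1 0 1) := regW0 hp5 (by omega)
    rw [cw, cv_sub, cv_dlf f ha hz, br_W o hb.nonneg (by omega) (by omega) (by omega) (by omega)
      (by omega) (by omega), map_add, map_smul, map_smul,
      f0 (W o b (1 + 0) (0 + 1) _) o (by unfold Vx; rw [W_i, W_c]; omega),
      show W o b (1 + 0 - 1) (0 + 1 - 1) (1 + (b (Fin.last _) - 1)) = b by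
        conv_rhs => rw [← W_self o b]
        congr 1 <;> omega]
    rw [f1 b hb hd hv, phi4, if_pos hbo, if_neg hbn, ho]
    simp [cw]
  · intro b hb hd hv hbo hbn
    have hbo' : b (cj m o).castSucc = 0 := by
      rcases hv o with h | h <;> omega
    have bd := reg_cases hb o
    have hJ : ∃ J, Ind o J ∧ b J.castSucc = p - 1 := by
      by_contra hno
      push Not at hno
      have : dg b = -2 := by
        have h : dg b = (∑ j : Fin (2 * m), b j.castSucc) + 2 * b (Fin.last _) - 2 := rfl
        rw [h, hbn, Finset.sum_eq_zero]
        · ring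
        · intro j _
          rcases tri_i o j with rfl | rfl | hj
          · exact hbo
          · exact hbo'
          · rcases hv j with h | h
            · exact h.1
            · exact absurd h.1 (hno j hj)
      have := hb.deg
      omega
    refine ⟨hJ.choose, hJ.choose_spec.1, hJ.choose_spec.2, ?_⟩
    have hφ : phi4 c o b = - cw c hJ.choose b 1 0 1 (p - 2) (p - 1) 0 / 3 := by
      rw [phi4, if_pos hbo, if_pos hbn, dif_pos hJ]
    obtain ⟨hoJ, hbJ⟩ := hJ.choose_spec
    obtain ⟨J, hJ'⟩ : ∃ J, J = hJ.choose := ⟨_, rfl⟩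
    rw [← hJ'] at hφ hoJ hbJ ⊢
    have hbJ' : b (cj m J).castSucc = p - 1 := by
      rcases hv J with h | h <;> omega
    have hz : Reg p (W J b (p - 2) (p - 1) 0) := regW hb.box fun _ => by omega
    have ha : Reg p (W J (0 : Vec m) 1 0 1) := regW0 hp5 (by omega)
    have hdz : dg (W J b (p - 2) (p - 1) 0) = dg b - 1 := by
      rw [dg_W, dg_eq J b]; omega
    rw [cw, cv_sub, cv_dlf f ha hz, br_W J hb.nonneg (by omega) (by omega) (by omega) (by omega)
      (by omega) (by omega), map_add, map_smul, map_smul, f0 _ J (by unfold Vx; rw [W_i, W_c]; omega),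
      show W J b (1 + (p - 2)) (0 + (p - 1)) (1 + 0 - 1) = b by
        conv_rhs => rw [← W_self J b]
        congr 1 <;> omega]
    rw [f1 b hb hd hv, hφ]
    rw [dg_W] at hdz
    have hdz' := congrArg (Int.cast : ℤ → F) hdz
    push_cast at hdz'
    rw [hp0, hd] at hdz'
    simp only [smul_eq_mul, cw]
    push_cast
    rw [hp0]
    field_simp
    linear_combination (cv c (W J 0 1 0 1) (W J b (↑p - 2) (↑p - 1) 0)) * hdz'
end

/-! ### Consequences of the normalisation -/

section
variable {F : Type*} [Field F] {p m : ℕ} [CharP F p] [hp : Fact p.Prime]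
local notation "A" => TruncP F p (2 * m + 1)

/-- Consequences of the normalisation, for arbitrary monomials. -/
structure Coc4 (c : A →ₗ[F] A →ₗ[F] F) (o : Fin (2 * m)) : Prop extends Coc3 c where
  n1 : ∀ w (l : ℤ), cw c o w 1 0 1 (p - 2) (p - 1) l = 0
  n2 : ∀ w (l : ℤ), 1 ≤ l → cw c o w 3 0 0 (p - 4) (p - 1) l = 0
  n3 : ∀ w (l : ℤ), l + 2 ≤ p → cw c o w 1 0 1 0 1 l = 0
  n4 : ∀ w j, Ind o j → w o.castSucc = 0 → w (cj m o).castSucc = 0 →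
    cw c j w 1 0 1 (p - 2) (p - 1) 0 = 0

theorem cw_deg {c : A →ₗ[F] A →ₗ[F] F} (hc : Coc c) {i : Fin (2 * m)} {w : Vec m} {α β k γ δ l : ℤ}
    (h : cw c i w α β k γ δ l ≠ 0) : (dg (W i w γ δ l) : F) = - (α + β + 2 * k) := by
  have := hc.deg _ _ h
  rw [dg_W i 0, rs_zero] at this
  push_cast at this
  linear_combination this

theorem vx_W {c : A →ₗ[F] A →ₗ[F] F} (hp5 : 5 ≤ p) (hc : Coc3 c) {i : Fin (2 * m)} {w : Vec m}
    {α β k γ δ l : ℤ} (h : cw c i w α β k γ δ l ≠ 0) {γ' δ' l' : ℤ}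
    (h' : (γ' = 0 ∧ δ' = 0) ∨ (γ' = p - 1 ∧ δ' = p - 1)) : ∀ j, Vx p (W i w γ' δ' l') j := by
  intro j
  rcases tri_i i j with rfl | rfl | hj
  · unfold Vx; rw [W_i, W_c]; exact h'
  · rw [Vx_cj]; unfold Vx; rw [W_i, W_c]; exact h'
  · rw [Vx_W hj]
    have := hc.vx hp5 h hj
    rwa [Vx_W hj] at this

theorem box_W' {i : Fin (2 * m)} {w : Vec m} {γ δ l : ℤ} (h : Box p (W i w γ δ l)) {γ' δ' l' : ℤ}
    (h1 : 0 ≤ γ') (h1' : γ' < p) (h2 : 0 ≤ δ') (h2' : δ' < p) (h3 : 0 ≤ l') (h3' : l' < p) :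
    Box p (W i w γ' δ' l') := by
  have := h.W (i := i) h1 h1' h2 h2' h3 h3'
  rwa [W_W] at this

theorem Nrm.n1' {c : A →ₗ[F] A →ₗ[F] F} (hp5 : 5 ≤ p) {o : Fin (2 * m)} (ho : sg F m o = 1)
    (hc : Nrm c o) (w : Vec m) (l : ℤ) : cw c o w 1 0 1 (p - 2) (p - 1) l = 0 := by
  have hp0 : (p : F) = 0 := CharP.cast_eq_zero F p
  by_contra hne
  have hd := cw_deg hc.coc hne
  have hz := (cv_ne hc.coc hne).2
  have bd := hz.bd
  have e1 : dg (W o w (p - 1) (p - 1) l) = dg (W o w (p - 2) (p - 1) l) + 1 := by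
    rw [dg_W, dg_W]; ring
  have hdb : (dg (W o w (p - 1) (p - 1) l) : F) = -2 := by
    rw [e1]; push_cast; rw [hd]; push_cast; ring
  have hbox : Box p (W o w (p - 1) (p - 1) l) := box_W' hz.box (by omega) (by omega) (by omega)
    (by omega) (by omega) (by omega)
  have hb : Reg p (W o w (p - 1) (p - 1) l) := reg_deg hbox (by have := hz.deg; omega) hdb hp5
  have hv := vx_W hp5 hc.toCoc3 hne (γ' := p - 1) (δ' := p - 1) (l' := l) (Or.inr ⟨rfl, rfl⟩)
  by_cases hl : l = p - 3
  · have h2 := hc.n2 _ hb hdb hv (W_i _ _ _ _ _) (by rw [W_n, hl])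
    rw [cw, W_W] at h2
    have e2 : dg (W o w (p - 4) (p - 1) l) = dg (W o w (p - 2) (p - 1) l) - 2 := by
      rw [dg_W, dg_W]; ring
    have hbx := box_W' hz.box (γ' := 0) (δ' := 0) (l' := 0) (by omega) (by omega) (by omega)
      (by omega) (by omega) (by omega)
    have := dagger hp5 hc.toCoc3 ho (w := W o w 0 0 0) hbx (l := l) (by omega) (by omega)
      (by rw [W_W, e2]; push_cast; rw [hd]; push_cast; ring)
    rw [cw, W_W, cw, W_W, hl, show (p - 3 + 1 : ℤ) = p - 2 by ring, h2, mul_zero] at this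
    push_cast at this
    rw [hp0] at this
    apply hne
    have h2 := two_ne (F := F) hp5
    rw [hl, cw]
    refine (mul_eq_zero.1 (?_ : (2 : F) * _ = 0)).resolve_left h2
    linear_combination this
  · apply hne
    have h1 := hc.n1 _ hb hdb hv (W_i _ _ _ _ _) (by rwa [W_n])
    rwa [cw, W_W, W_n] at h1

theorem Nrm.n2' {c : A →ₗ[F] A →ₗ[F] F} (hp5 : 5 ≤ p) {o : Fin (2 * m)} (ho : sg F m o = 1)
    (hc : Nrm c o) (w : Vec m) (l : ℤ) (hl1 : 1 ≤ l) : cw c o w 3 0 0 (p - 4) (p - 1) l = 0 := by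
  have hp0 : (p : F) = 0 := CharP.cast_eq_zero F p
  by_contra hne
  have hd := cw_deg hc.coc hne
  have hz := (cv_ne hc.coc hne).2
  have bd := hz.bd
  by_cases hl : l = p - 2
  · have e1 : dg (W o w (p - 1) (p - 1) (p - 3)) = dg (W o w (p - 4) (p - 1) l) + 1 := by
      rw [dg_W, dg_W, hl]; ring
    have hdb : (dg (W o w (p - 1) (p - 1) (p - 3)) : F) = -2 := by
      rw [e1]; push_cast; rw [hd]; push_cast; ring
    have hbox : Box p (W o w (p - 1) (p - 1) (p - 3)) := box_W' hz.box (by omega) (by omega)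
      (by omega) (by omega) (by omega) (by omega)
    have hb := reg_deg hbox (by have := hz.deg; omega) hdb hp5
    have hv := vx_W hp5 hc.toCoc3 hne (γ' := p - 1) (δ' := p - 1) (l' := p - 3) (Or.inr ⟨rfl, rfl⟩)
    apply hne
    have h2 := hc.n2 _ hb hdb hv (W_i _ _ _ _ _) (by rw [W_n])
    rwa [cw, W_W, ← hl] at h2
  · have e2 : dg (W o w (p - 4) (p - 1) (l - 1)) = dg (W o w (p - 4) (p - 1) l) - 2 := by
      rw [dg_W, dg_W]; ring
    have hbx := box_W' hz.box (γ' := 0) (δ' := 0) (l' := 0) (by omega) (by omega) (by omega)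
      (by omega) (by omega) (by omega)
    have := dagger hp5 hc.toCoc3 ho (w := W o w 0 0 0) hbx (l := l - 1) (by omega) (by omega)
      (by rw [W_W, e2]; push_cast; rw [hd]; push_cast; ring)
    rw [hc.n1' hp5 ho, mul_zero, cw, W_W, sub_add_cancel] at this
    rcases mul_eq_zero.1 this with h | h
    · have h8 : ((l + 2 - p : ℤ) : F) ≠ 0 := ic_ne (by omega) (by omega) (by omega)
      apply h8
      push_cast at h ⊢
      rw [hp0]
      linear_combination h
    · exact hne h

theorem Nrm.n3' {c : A →ₗ[F] A →ₗ[F] F} (hp5 : 5 ≤ p) {o : Fin (2 * m)}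
    (hc : Nrm c o) (w : Vec m) (l : ℤ) (hl : l + 2 ≤ p) : cw c o w 1 0 1 0 1 l = 0 := by
  by_contra hne
  have hd := cw_deg hc.coc hne
  have hz := (cv_ne hc.coc hne).2
  have bd := hz.bd
  have e1 : dg (W o w 0 0 (l + 1)) = dg (W o w 0 1 l) + 1 := by
    rw [dg_W, dg_W]; ring
  have hdb : (dg (W o w 0 0 (l + 1)) : F) = -2 := by
    rw [e1]; push_cast; rw [hd]; push_cast; ring
  have hbox : Box p (W o w 0 0 (l + 1)) := box_W' hz.box (by omega) (by omega) (by omega)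
    (by omega) (by omega) (by omega)
  have hb := reg_deg hbox (by have := hz.deg; omega) hdb hp5
  have hv := vx_W hp5 hc.toCoc3 hne (γ' := 0) (δ' := 0) (l' := l + 1) (Or.inl ⟨rfl, rfl⟩)
  apply hne
  have h3 := hc.n3 _ hb hdb hv (W_i _ _ _ _ _) (by rw [W_n]; omega)
  rwa [cw, W_W, W_n, add_sub_cancel_right] at h3

theorem Nrm.n4' {c : A →ₗ[F] A →ₗ[F] F} (hp5 : 5 ≤ p) {o : Fin (2 * m)}
    (hc : Nrm c o) (w : Vec m) (j : Fin (2 * m)) (hoj : Ind o j) (hw : w o.castSucc = 0)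
    (hw' : w (cj m o).castSucc = 0) : cw c j w 1 0 1 (p - 2) (p - 1) 0 = 0 := by
  have hp0 : (p : F) = 0 := CharP.cast_eq_zero F p
  by_contra hne
  have hd := cw_deg hc.coc hne
  have hz := (cv_ne hc.coc hne).2
  have bd := hz.bd
  have e1 : dg (W j w (p - 1) (p - 1) 0) = dg (W j w (p - 2) (p - 1) 0) + 1 := by
    rw [dg_W, dg_W]; ring
  have hdb : (dg (W j w (p - 1) (p - 1) 0) : F) = -2 := by
    rw [e1]; push_cast; rw [hd]; push_cast; ring
  have hbox : Box p (W j w (p - 1) (p - 1) 0) := box_W' hz.box (by omega) (by omega) (by omega)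
    (by omega) (by omega) (by omega)
  have hb := reg_deg hbox (by have := hz.deg; omega) hdb hp5
  have hv := vx_W hp5 hc.toCoc3 hne (γ' := p - 1) (δ' := p - 1) (l' := 0) (Or.inr ⟨rfl, rfl⟩)
  obtain ⟨J, hoJ, hbJ, hJ⟩ := hc.n4 _ hb hdb hv
    (by rw [W_o _ _ _ _ hoj.symm.1 hoj.symm.2, hw]) (W_n _ _ _ _ _)
  rcases tri_i j J with rfl | rfl | hjJ
  · rw [cw, W_W] at hJ
    exact hne hJ
  · rw [cw, W_cj, W_cj, W_W] at hJ
    have s1 := hc.shift hp5 (i := j) (w := w) (v := 0) (α := 0) (β := 1) (k := 1) (γ := p - 2)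
      (δ := p - 1) (l := 0) (regW0 hp5 (by omega)) hz
    rw [show (p - 2 + 1 : ℤ) = p - 1 by ring, show (p - 1 - 1 : ℤ) = p - 2 by ring, hJ, mul_zero,
      add_zero] at s1
    apply hne
    simpa [cw] using s1
  · obtain ⟨b, hbe⟩ : ∃ b, b = W j w (p - 1) (p - 1) 0 := ⟨_, rfl⟩
    rw [← hbe] at hb hdb hv hJ hbJ hbox
    have hbJ' : b (cj m J).castSucc = p - 1 := by
      rcases hv J with h | h <;> omega
    have hbj : b j.castSucc = p - 1 := by rw [hbe, W_i]
    have hbj' : b (cj m j).castSucc = p - 1 := by rw [hbe, W_c]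
    have hbn : b (Fin.last _) = 0 := by rw [hbe, W_n]
    have x0 : ∀ i j : Fin (2 * m), W2 i j (0 : Vec m) 1 0 0 0 1 = W i 0 1 0 1 := by
      intro i j; rw [W2, W_zero]
    have y1 : W2 j J b (p - 2) (p - 1) (p - 1) (p - 1) 0 = W j w (p - 2) (p - 1) 0 := by
      have : W J b (p - 1) (p - 1) 0 = b := by
        conv_rhs => rw [← W_self J b, hbJ, hbJ', hbn]
      rw [W2, this, hbe, W_W]
    have y2 : W2 J j b (p - 2) (p - 1) (p - 1) (p - 1) 0 = W J b (p - 2) (p - 1) 0 := by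
      have : W j b (p - 1) (p - 1) 0 = b := by
        conv_rhs => rw [← W_self j b, hbj, hbj', hbn]
      rw [W2, this]
    have y3 : dg (W2 j J b (p - 2) (p - 1) (p - 2) (p - 1) 0) = dg b - 2 := by
      have := dg_W j (W J b (p - 2) (p - 1) 0) (p - 2) (p - 1) 0
      have h2 := dg_eq j (W J b (p - 2) (p - 1) 0)
      rw [W_o _ _ _ _ hjJ.symm.1 hjJ.symm.2, W_o _ _ _ _ hjJ.symm.cj.1 hjJ.symm.cj.2, W_n,
        dg_W] at h2
      rw [W2, this]
      have h3 := dg_eq J b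
      omega
    have t := tri2 hc.coc hjJ hbox 1 0 0 0 1 0 0 1 0 1 (p - 2) (p - 1) (p - 2) (p - 1) 0
      (D := -4) (by rw [y3]; push_cast; rw [hdb]; ring) (regW2 hjJ (box0 hp5) (by omega))
      (regW2 hjJ (box0 hp5) (by omega)) (regW2 hjJ hbox (by omega)) (v5 := 0)
      (v6 := cw c j w 1 0 1 (p - 2) (p - 1) 0) (v7 := 0) (v9 := 0) rfl rfl rfl rfl
      (hc.selz2 hp5 hjJ (by omega)) (by
        rw [cw, ← y1, ← x0 j J]
        congr 1 <;> ring) (hc.selz2 hp5 hjJ (by omega)) rfl (by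
        rw [← hJ, cw, ← y2, ← x0 J j, cw2, W2_comm hjJ, W2_comm hjJ]
        congr 2 <;> ring)
    apply hne
    have h2 := two_ne (F := F) hp5
    push_cast at t
    rw [hp0] at t
    refine (mul_eq_zero.1 (?_ : (2 * 2 : F) * _ = 0)).resolve_left (mul_ne_zero h2 h2)
    linear_combination t

theorem Nrm.coc4 {c : A →ₗ[F] A →ₗ[F] F} (hp5 : 5 ≤ p) {o : Fin (2 * m)} (ho : sg F m o = 1)
    (hc : Nrm c o) : Coc4 c o where
  toCoc3 := hc.toCoc3
  n1 := hc.n1' hp5 ho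
  n2 := hc.n2' hp5 ho
  n3 := hc.n3' hp5
  n4 := hc.n4' hp5
end

/-! ### x_n x_o lies in the radical -/

section
variable {F : Type*} [Field F] {p m : ℕ} [CharP F p] [hp : Fact p.Prime]
local notation "A" => TruncP F p (2 * m + 1)

theorem dg_W2_0 {i j : Fin (2 * m)} (hij : Ind i j) (α β γ δ k : ℤ) :
    dg (W2 i j (0 : Vec m) α β γ δ k) = α + β + γ + δ + 2 * k - 2 := by
  rw [dg_eq j, W2_comm hij, W2, rs_W, ← W_n j 0 0 0 0]
  have := dg_W i (0 : Vec m) α β 0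
  rw [dg_eq j, W_n, W_o _ _ _ _ hij.1 hij.2, W_o _ _ _ _ hij.cj.1 hij.cj.2, rs_zero] at this
  simp only [Pi.zero_apply] at this
  simp only [W_i, W_c, W_n]
  omega

/-- A change of the exponents in two planes and of `x_n` changes the degree accordingly. -/
theorem dg_W2 {i j : Fin (2 * m)} (hij : Ind i j) (w : Vec m) (α β γ δ k : ℤ) :
    dg (W2 i j w α β γ δ k) = dg w + α + β + γ + δ + 2 * k - w i.castSucc - w (cj m i).castSucc
      - w j.castSucc - w (cj m j).castSucc - 2 * w (Fin.last _) := by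
  have h1 := dg_eq i (W j w γ δ 0)
  rw [W_o _ _ _ _ hij.symm.1 hij.symm.2, W_o _ _ _ _ hij.symm.cj.1 hij.symm.cj.2, W_n,
    dg_W] at h1
  have h2 := dg_eq j w
  rw [W2, dg_W]
  omega

theorem dg_W' (i : Fin (2 * m)) (w : Vec m) (α β k : ℤ) : dg (W i w α β k)
    = dg w + α + β + 2 * k - w i.castSucc - w (cj m i).castSucc - 2 * w (Fin.last _) := by
  rw [dg_W, dg_eq i w]; ring

theorem cv_dg {c : A →ₗ[F] A →ₗ[F] F} (hc : Coc c) {a b : Vec m} (h : cv c a b ≠ 0) :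
    (dg b : F) = - dg a - 2 := by
  have := hc.deg _ _ h
  push_cast at this
  linear_combination this

/-- The radical is stable under `x_i²`. -/
theorem Coc3.rad_sq {c : A →ₗ[F] A →ₗ[F] F} (hp5 : 5 ≤ p) (hc : Coc3 c) {i : Fin (2 * m)} {w : Vec m}
    {α β k : ℤ} (h1 : Reg p (W i w α β k)) (h : c (X F p (W i w α β k)) = 0) (hβ : 1 ≤ β) :
    c (X F p (W i w (α + 1) (β - 1) k)) = 0 := by
  have bd := h1.bd
  have h2 := hc.coc.rad (reg_sq hp5 i) h1 (hc.sq i) h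
  have e1 := br_sq (F := F) (p := p) i h1.nonneg bd.1 bd.2.2.1 bd.2.2.2.2.1
  rw [W_W, W_W] at e1
  rw [e1, map_smul] at h2
  refine (smul_eq_zero.1 h2).resolve_left ?_
  exact mul_ne_zero (mul_ne_zero (two_ne hp5) (sg_ne i)) (ic_ne (by omega) (by omega) (by omega))

theorem Coc3.rad_sq' {c : A →ₗ[F] A →ₗ[F] F} (hp5 : 5 ≤ p) (hc : Coc3 c) {i : Fin (2 * m)} {w : Vec m}
    {α β k : ℤ} (h1 : Reg p (W i w α β k)) (h : c (X F p (W i w α β k)) = 0) (hα : 1 ≤ α) :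
    c (X F p (W i w (α - 1) (β + 1) k)) = 0 := by
  rw [← W_cj] at h1 h ⊢
  exact hc.rad_sq hp5 h1 h hα

/-- `x_n x_o` lies in the radical. -/
theorem Coc4.rnx {c : A →ₗ[F] A →ₗ[F] F} (hp5 : 5 ≤ p) {o : Fin (2 * m)} (hc : Coc4 c o) :
    c (X F p (W o 0 1 0 1)) = 0 := by
  have hp0 : (p : F) = 0 := CharP.cast_eq_zero F p
  refine R_of fun z => ?_
  by_contra h
  have hz := (cv_ne hc.coc h).2
  have hs := hc.sel hp5 h o
  have hd := cv_dg hc.coc h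
  rw [W_i, W_c] at hs
  have hself := W_self o z
  have bd := reg_cases hz o
  have hb0 : Box p (W o z 0 0 0) := hz.box.W (by omega) (by omega) (by omega) (by omega) (by omega)
    (by omega)
  rcases hs with ⟨h1, h2⟩ | ⟨h1, h2⟩
  swap
  · apply h
    rw [← hc.n1 z (z (Fin.last _)), cw]
    congr 1
    have e1 : z o.castSucc = p - 2 := by omega
    have e2 : z (cj m o).castSucc = p - 1 := by omega
    conv_lhs => rw [← hself, e1, e2]
  by_cases hl : z (Fin.last _) + 2 ≤ p
  · apply h
    rw [← hc.n3 z _ hl, cw]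
    congr 1
    conv_lhs => rw [← hself, h1, h2]
  have hl' : z (Fin.last _) = p - 1 := by omega
  have hdz : (dg z : F) = -3 := by
    rw [hd, dg_W, rs_zero]; push_cast; ring
  by_cases hj : ∃ j, Ind o j ∧ z j.castSucc = p - 1
  · obtain ⟨j, hoj, hzj⟩ := hj
    have hzj' : z (cj m j).castSucc = p - 1 := by
      rcases hc.vx hp5 h hoj with h | h <;> omega
    have hself2 := W2_self o j z
    rw [h1, h2, hzj, hzj', hl'] at hself2
    have t := tri2 hc.coc hoj hz.box 1 0 1 0 0 0 0 0 1 1 0 1 (p - 1) (p - 1) (p - 1) (D := -3)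
      (by rw [hself2, hdz]) (regW2 hoj (box0 hp5) (by omega)) (regW2 hoj (box0 hp5) (by omega))
      (by rwa [hself2]) (v2 := cv c (W o 0 1 0 1) z) (v5 := 0) (v6 := 0) (v7 := 0) (v8 := 0) (v9 := 0)
      rfl (by
        rw [cw2, hself2]; congr 1
        rw [W2, show (1 + 0 - 1 : ℤ) = 0 by rfl, show (0 + 1 - 1 : ℤ) = 0 by rfl, W_zero]; rfl)
      rfl rfl (hc.selz2 hp5 hoj (by omega)) (hc.selz2 hp5 hoj (by omega))
      (hc.selz2 hp5 hoj (by omega)) (hc.selz2 hp5 hoj (by omega)) (hc.selz2 hp5 hoj (by omega))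
    apply h
    refine (mul_eq_zero.1 (?_ : sg F m j * _ = 0)).resolve_left (sg_ne j)
    push_cast at t
    linear_combination t
  · have hz0 : z = W o 0 0 1 (p - 1) := by
      apply vec_ext o
      · rw [W_i, h1]
      · rw [W_c, h2]
      · rw [W_n, hl']
      · intro k hk hk'
        rw [W_o _ _ _ _ hk hk']
        rcases hc.vx hp5 h ⟨hk, hk'⟩ with h | h
        · exact h.1
        · exact absurd ⟨k, ⟨hk, hk'⟩, h.1⟩ hj
    have s1 := hc.shift hp5 (i := o) (w := 0) (v := 0) (α := 0) (β := 1) (k := 1) (γ := 0)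
      (δ := 1) (l := p - 1) (regW0 hp5 (by omega)) (regW0 hp5 (by omega))
    have hdd : (dg (W o (0 : Vec m) 0 0 (p - 1)) : F) = -4 := by
      rw [dg_W, rs_zero]; push_cast; rw [hp0]; ring
    have t := tri1 hc.coc o (box0 hp5) 1 0 1 0 1 1 0 0 (p - 1) hdd (regW0 hp5 (by omega))
      (regW0 hp5 (by omega)) (regW0 hp5 (by omega)) (v1 := 0)
      (v4 := cw c o 0 1 0 1 0 1 (p - 1)) (v6 := cw c o 0 0 1 1 1 0 (p - 1))
      (by rw [← hc.coc.lam0 o]; rfl) rfl rfl (by congr 1; ring) rfl (by congr 1; ring)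
    apply h
    rw [hz0]
    change cw c o 0 1 0 1 0 1 (p - 1) = 0
    have h2 := two_ne (F := F) hp5
    have h3 := three_ne (F := F) hp5
    refine (mul_eq_zero.1 (?_ : (2 * 3 : F) * _ = 0)).resolve_left (mul_ne_zero h2 h3)
    change _ * cw c o 0 1 0 1 0 1 (p - 1) + _ * cw c o 0 0 1 1 1 0 (p - 1) = 0 at s1
    push_cast at t s1
    rw [hp0] at t
    linear_combination t + 3 * s1
end

/-! ### Products from two planes lie in the radical -/

section
variable {F : Type*} [Field F] {p m : ℕ} [CharP F p] [hp : Fact p.Prime]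
local notation "A" => TruncP F p (2 * m + 1)

theorem W2_z (i j : Fin (2 * m)) (α β k : ℤ) : W2 i j (0 : Vec m) α β 0 0 k = W i 0 α β k := by
  rw [W2, W_zero]

theorem cw2_rad {c : A →ₗ[F] A →ₗ[F] F} {i j : Fin (2 * m)} {α β k : ℤ}
    (h : c (X F p (W i (0 : Vec m) α β k)) = 0) (w : Vec m) (γ δ γ' δ' l : ℤ) :
    cw2 c i j w α β 0 0 k γ δ γ' δ' l = 0 := by
  rw [cw2, W2_z, cv, h]; rfl

theorem br_disj {a b : Vec m} (ha : ∀ i, 0 ≤ a i) (hb : ∀ i, 0 ≤ b i)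
    (h : ∀ j : Fin (2 * m), a j.castSucc = 0 ∨ b (cj m j).castSucc = 0)
    (h' : a (Fin.last _) * dg b = b (Fin.last _) * dg a) : br (X F p a) (X F p b) = 0 := by
  rw [br_X' ha hb, Finset.sum_eq_zero, zero_add]
  · have : ((a (Fin.last _) * dg b - b (Fin.last _) * dg a : ℤ) : F) = 0 := by
      rw [h', sub_self, Int.cast_zero]
    push_cast at this
    rw [this, zero_smul]
  · intro j _
    rcases h j with h | h <;> rw [h] <;> simp

/-- The products `x_o x_j`, with `x_j` in another plane than `x_o`, lie in the radical. -/
theorem Coc4.rxx {c : A →ₗ[F] A →ₗ[F] F} (hp5 : 5 ≤ p) {o j : Fin (2 * m)} (hc : Coc4 c o)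
    (hoj : Ind o j) : c (X F p (W2 o j 0 1 0 1 0 0)) = 0 := by
  have hp0 : (p : F) = 0 := CharP.cast_eq_zero F p
  have h2 := two_ne (F := F) hp5
  have h3 := three_ne (F := F) hp5
  have so := sg_ne (F := F) o
  have hrnx := hc.rnx hp5
  have hrnx' : c (X F p (W o 0 0 1 1)) = 0 :=
    hc.rad_sq' hp5 (α := 1) (β := 0) (regW0 hp5 (by omega)) hrnx (by omega)
  have reg_a : Reg p (W2 o j (0 : Vec m) 1 0 1 0 0) := regW2 hoj (box0 hp5) (by omega)
  have reg_r : Reg p (W2 o j (0 : Vec m) 1 0 0 0 1) := regW2 hoj (box0 hp5) (by omega)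
  refine R_of fun z => ?_
  by_contra h
  have hz := (cv_ne hc.coc h).2
  have s1 := hc.sel hp5 h o
  have s2 := hc.sel hp5 h j
  have hd := cv_dg hc.coc h
  rw [W2_i, W2_c] at s1
  rw [W2_j hoj, W2_cj hoj] at s2
  rw [dg_W2_0 hoj] at hd
  have hself := W2_self o j z
  have b1 := reg_cases hz o
  have b2 := reg_cases hz j
  have hdW := dg_W2 hoj z
  have hbox := hz.box
  obtain ⟨a1, ha1⟩ : ∃ x, x = z o.castSucc := ⟨_, rfl⟩
  obtain ⟨a2, ha2⟩ : ∃ x, x = z (cj m o).castSucc := ⟨_, rfl⟩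
  obtain ⟨a3, ha3⟩ : ∃ x, x = z j.castSucc := ⟨_, rfl⟩
  obtain ⟨a4, ha4⟩ : ∃ x, x = z (cj m j).castSucc := ⟨_, rfl⟩
  obtain ⟨l, hl⟩ : ∃ x, x = z (Fin.last _) := ⟨_, rfl⟩
  rw [← ha1, ← ha2] at s1
  rw [← ha3, ← ha4] at s2
  rw [← ha1, ← ha2, ← ha3, ← ha4, ← hl] at hself
  simp only [← ha1, ← ha2, ← ha3, ← ha4, ← hl] at hdW
  rw [← ha1, ← ha2, ← hl] at b1
  rw [← ha3, ← ha4, ← hl] at b2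
  push_cast at hd
  have hX : cw2 c o j z 1 0 1 0 0 a1 a2 a3 a4 l = cv c (W2 o j 0 1 0 1 0 0) z := by
    rw [cw2, hself]
  rw [← hX] at h
  have key : (a1 = 0 ∧ a2 = 1 ∧ 1 ≤ l) ∨ (a1 = p - 2 ∧ a2 = p - 1 ∧ l ≠ p - 3) ∨
      (a1 = p - 2 ∧ a2 = p - 1 ∧ l = p - 3 ∧ a3 = 0 ∧ a4 = 1) ∨
      (a1 = 0 ∧ a2 = 1 ∧ l = 0 ∧ a3 = p - 2 ∧ a4 = p - 1) ∨
      ((a1 = 0 ∧ a2 = 1 ∧ l = 0 ∧ a3 = 0 ∧ a4 = 1) ∨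
      (a1 = p - 2 ∧ a2 = p - 1 ∧ l = p - 3 ∧ a3 = p - 2 ∧ a4 = p - 1)) := by
    obtain ⟨-, -, ⟨c1, -⟩, -⟩ := b1
    clear hdW hself hX hd b2 ha1 ha2 ha3 ha4 hl
    rcases s1 with ⟨s1, s1'⟩ | ⟨s1, s1'⟩ <;> rcases s2 with ⟨s2, s2'⟩ | ⟨s2, s2'⟩
    · rcases c1.eq_or_lt with c | c
      · exact Or.inr (Or.inr (Or.inr (Or.inr (Or.inl ⟨s1, s1', c.symm, s2, s2'⟩))))
      · exact Or.inl ⟨s1, s1', c⟩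
    · rcases c1.eq_or_lt with c | c
      · exact Or.inr (Or.inr (Or.inr (Or.inl ⟨s1, s1', c.symm, by omega, by omega⟩)))
      · exact Or.inl ⟨s1, s1', c⟩
    · by_cases c : l = p - 3
      · exact Or.inr (Or.inr (Or.inl ⟨by omega, by omega, c, s2, s2'⟩))
      · exact Or.inr (Or.inl ⟨by omega, by omega, c⟩)
    · by_cases c : l = p - 3
      · exact Or.inr (Or.inr (Or.inr (Or.inr (Or.inr
          ⟨by omega, by omega, c, by omega, by omega⟩))))
      · exact Or.inr (Or.inl ⟨by omega, by omega, c⟩)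
  rcases key with ⟨e1, e2, e5⟩ | ⟨e1, e2, e5⟩ | ⟨e1, e2, e5, e3, e4⟩ | ⟨e1, e2, e5, e3, e4⟩ | hlast
  · have t := tri2 hc.coc hoj hbox 1 0 0 0 1 1 0 1 0 0 0 2 a3 a4 (l - 1) (D := -3)
      (by rw [hdW]; push_cast; rw [hd, e1, e2]; push_cast; ring) reg_r reg_a
      (regW2 hoj hbox (by omega))
      rfl rfl rfl (cw2_rad hrnx _ _ _ _ _ _) (cw2_rad hrnx _ _ _ _ _ _)
      (cw2_rad hrnx _ _ _ _ _ _) (v7 := cw2 c o j z 1 0 1 0 0 a1 a2 a3 a4 l)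
      (by rw [e1, e2]; congr 1 <;> ring) rfl (hc.selz2 hp5 hoj (by omega))
    push_cast at t
    refine h ((mul_eq_zero.1 (?_ : (sg F m o * 2) * _ = 0)).resolve_left (mul_ne_zero so h2))
    linear_combination t
  · have hk : ((-3 - l : ℤ) : F) ≠ 0 := by
      have : ((p - 3 - l : ℤ) : F) ≠ 0 := ic_ne (by omega) (by omega) (by omega)
      push_cast at this ⊢
      rwa [hp0, zero_sub] at this
    have t := tri2 hc.coc hoj hbox 1 0 0 0 1 1 0 1 0 0 (p - 3) (p - 1) a3 a4 l (D := -3)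
      (by rw [hdW]; push_cast; rw [hd, e1, e2]; push_cast; ring) reg_r reg_a
      (regW2 hoj hbox (by omega))
      rfl rfl rfl (cw2_rad hrnx _ _ _ _ _ _) (cw2_rad hrnx _ _ _ _ _ _)
      (cw2_rad hrnx _ _ _ _ _ _) (hc.selz2 hp5 hoj (by omega)) rfl
      (v9 := cw2 c o j z 1 0 1 0 0 a1 a2 a3 a4 l)
      (by rw [e1, e2]; congr 1 <;> ring)
    push_cast at t
    rw [hp0] at t
    refine h ((mul_eq_zero.1 (?_ : ((-3 - l : ℤ) : F) * _ = 0)).resolve_left hk)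
    push_cast
    linear_combination t
  · have t := tri2 hc.coc hoj hbox 3 0 0 0 0 1 0 1 0 0 (p - 5) (p - 1) 0 1 (p - 2) (D := -3)
      (by rw [hdW]; push_cast; rw [hd, e1, e2, e3, e4, e5]; push_cast; rw [hp0]; ring)
      (regW2 hoj (box0 hp5) (by omega)) reg_a
      (regW2 hoj hbox (by omega))
      rfl rfl rfl (hc.selz2 hp5 hoj (by omega)) (v5 := 0) (by
        rw [← hc.n2 (W j z 0 0 0) (p - 2) (by omega), cw, cw2, W2_z, W2]
        congr 2 <;> ring) rfl (hc.selz2 hp5 hoj (by omega)) rfl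
      (v9 := cw2 c o j z 1 0 1 0 0 a1 a2 a3 a4 l)
      (by rw [e1, e2, e3, e4, e5]; congr 1 <;> ring)
    push_cast at t
    rw [hp0] at t
    refine h ((mul_eq_zero.1 (?_ : (2 : F) * _ = 0)).resolve_left h2)
    linear_combination t
  · have t := tri2 hc.coc hoj hbox 0 1 0 0 1 1 0 1 0 0 0 0 (p - 2) (p - 1) 0 (D := -3)
      (by rw [hdW]; push_cast; rw [hd, e1, e2, e3, e4, e5]; push_cast; ring)
      (regW2 hoj (box0 hp5) (by omega)) reg_a
      (regW2 hoj hbox (by omega)) (v1 := 0)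
      (by
        rw [← hc.n4 (W o z 0 0 0) j hoj (W_i _ _ _ _ _) (W_c _ _ _ _ _), cw, cw2, W2_comm hoj,
          W2_comm hoj, W2, W2]
        congr 2
        rw [show (0 + 1 - 1 : ℤ) = 0 by rfl, show (1 + 0 - 1 : ℤ) = 0 by rfl, W_zero])
      rfl rfl (cw2_rad hrnx' _ _ _ _ _ _) (cw2_rad hrnx' _ _ _ _ _ _)
      (cw2_rad hrnx' _ _ _ _ _ _) rfl rfl
      (v9 := cw2 c o j z 1 0 1 0 0 a1 a2 a3 a4 l)
      (by rw [e1, e2, e3, e4, e5]; congr 1 <;> ring)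
    push_cast at t
    refine h ((mul_eq_zero.1 (?_ : (3 : F) * _ = 0)).resolve_left h3)
    linear_combination -t
  · -- degree considerations give a third plane with both exponents equal to `p - 1`
    have hV : ∀ i, Ind o i → Ind j i → (z i.castSucc = 0 ∧ z (cj m i).castSucc = 0) ∨
        (z i.castSucc = p - 1 ∧ z (cj m i).castSucc = p - 1) := by
      intro i hoi hji
      have := hc.sel hp5 (by rwa [hX] at h) i
      rw [W2, W_o _ _ _ _ hoi.1 hoi.2, W_o _ _ _ _ hji.1 hji.2, W_o _ _ _ _ hoi.cj.1 hoi.cj.2,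
        W_o _ _ _ _ hji.cj.1 hji.cj.2] at this
      simpa using this
    obtain ⟨i, hoi, hji, hi, hi'⟩ : ∃ i, Ind o i ∧ Ind j i ∧ z i.castSucc = p - 1 ∧
        z (cj m i).castSucc = p - 1 := by
      by_contra hno
      have hz0 : z = W2 o j 0 a1 a2 a3 a4 l := by
        rw [← hself]
        apply vec_ext o
        · rw [W2_i, W2_i]
        · rw [W2_c, W2_c]
        · rw [W2_n, W2_n]
        · intro k hk hk'
          rcases tri_i j k with rfl | rfl | hjk
          · rw [W2_j hoj, W2_j hoj]
          · rw [W2_cj hoj, W2_cj hoj]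
          · rw [W2, W2, W_o _ _ _ _ hk hk', W_o _ _ _ _ hk hk', W_o _ _ _ _ hjk.1 hjk.2,
              W_o _ _ _ _ hjk.1 hjk.2]
            rcases hV k ⟨hk, hk'⟩ hjk with h | h
            · exact h.1
            · exact absurd ⟨k, ⟨hk, hk'⟩, hjk, h⟩ hno
      rw [hz0, dg_W2_0 hoj] at hd
      rcases hlast with ⟨e1, e2, e5, e3, e4⟩ | ⟨e1, e2, e5, e3, e4⟩
      · rw [e1, e2, e3, e4, e5] at hd
        apply h2
        push_cast at hd
        linear_combination hd
      · rw [e1, e2, e3, e4, e5] at hd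
        apply mul_ne_zero h2 (mul_ne_zero h2 h3)
        push_cast at hd
        rw [hp0] at hd
        linear_combination -hd
    have hl0 : l = 0 ∨ l = p - 3 := by omega
    have reg_h : Reg p (W i (0 : Vec m) 1 1 1) := regW0 hp5 (by omega)
    have reg_b : Reg p (W i z (p - 2) (p - 2) l) := regW hbox (by omega)
    have hdb : (dg (W i z (p - 2) (p - 2) l) : F) = -4 := by
      rw [dg_W', hi, hi', ← hl]; push_cast; rw [hd]; ring
    have hoi' : i ≠ o ∧ i ≠ cj m o := hoi
    have com := hc.coc.com reg_a reg_h reg_b (br_disj reg_a.nonneg reg_h.nonneg (by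
      intro k
      by_cases hk : k = o
      · right
        rw [hk, W_o _ _ _ _ hoi.symm.cj.1 hoi.symm.cj.2]; rfl
      by_cases hk' : k = j
      · right
        rw [hk', W_o _ _ _ _ hji.symm.cj.1 hji.symm.cj.2]; rfl
      left
      by_cases hk1 : k = cj m o
      · rw [hk1, W2_c]
      by_cases hk2 : k = cj m j
      · rw [hk2, W2_cj hoj]
      rw [W2, W_o _ _ _ _ hk hk1, W_o _ _ _ _ hk' hk2]; rfl) (by
      rw [W2_n, dg_W2_0 hoj]; ring))
    obtain ⟨b, hb⟩ : ∃ b, b = W i z (p - 2) (p - 2) l := ⟨_, rfl⟩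
    have hbself : b = W2 o j b a1 a2 a3 a4 l := by
      conv_lhs => rw [← W2_self o j b]
      rw [hb, W_o _ _ _ _ hoi.symm.1 hoi.symm.2, W_o _ _ _ _ hoi.symm.cj.1 hoi.symm.cj.2,
        W_o _ _ _ _ hji.symm.1 hji.symm.2, W_o _ _ _ _ hji.symm.cj.1 hji.symm.cj.2, W_n,
        ha1, ha2, ha3, ha4]
    have hV0 : ∀ α β γ δ k, ¬ (Vx p (W2 o j b α β γ δ k) o ∧ Vx p (W2 o j b α β γ δ k) j) →
        c (X F p (W i 0 1 1 1)) (X F p (W2 o j b α β γ δ k)) = 0 := by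
      intro α β γ δ k hn
      by_contra hne
      exact hn ⟨hc.vx hp5 hne hoi.symm, hc.vx hp5 hne hji.symm⟩
    have hzero : c (X F p (W i 0 1 1 1)) (br (X F p (W2 o j 0 1 0 1 0 0)) (X F p b)) = 0 := by
      rw [hbself, br_W2 hoj (by rw [hb]; exact reg_b.nonneg) (by omega) (by omega) (by omega)
        (by omega) (by omega) (by omega) (by omega) (by omega) (by omega) (by omega)]
      rw [show ((0 : ℤ) * (dg (W2 o j b a1 a2 a3 a4 l) : F)
          - l * ((1 : ℤ) + (0 : ℤ) + (1 : ℤ) + (0 : ℤ) + 2 * (0 : ℤ) - 2) : F) = 0 by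
            push_cast; ring, zero_smul, add_zero, map_add, map_smul, map_smul, hV0, hV0]
      · simp
      all_goals
        unfold Vx
        rw [W2_i, W2_c, W2_j hoj, W2_cj hoj]
        omega
    rw [← hb, hzero, hb, br_W i (fun k => (hbox k).1) (by omega) (by omega) (by omega) (by omega)
      (by omega) (by omega)] at com
    have hzz : W i z (1 + (p - 2)) (1 + (p - 2)) (1 + l - 1) = z := by
      conv_rhs => rw [← W_self i z, hi, hi', ← hl]
      congr 1 <;> ring
    have hrs : (rs i z + (p - 2 : ℤ) + (p - 2 : ℤ) + 2 * l - 2 : F) = -4 := by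
      rw [← hdb, dg_W]; push_cast; ring
    rw [hzz, hrs, map_add, map_smul, map_smul] at com
    have hk : ((l + 2 : ℤ) : F) ≠ 0 := ic_ne (by omega) (by omega) (by omega)
    rw [hX] at h
    refine h ((mul_eq_zero.1 (?_ : (-2 * ((l + 2 : ℤ) : F)) * _ = 0)).resolve_left
      (mul_ne_zero (neg_ne_zero.2 h2) hk))
    rw [cv]
    simp only [smul_eq_mul] at com
    push_cast at com ⊢
    linear_combination com
end

/-! ### Cubes lie in the radical -/

section
variable {F : Type*} [Field F] {p m : ℕ} [CharP F p] [hp : Fact p.Prime]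
local notation "A" => TruncP F p (2 * m + 1)

theorem cw_rad {c : A →ₗ[F] A →ₗ[F] F} {i : Fin (2 * m)} {α β k : ℤ}
    (h : c (X F p (W i (0 : Vec m) α β k)) = 0) (w : Vec m) (γ δ l : ℤ) :
    cw c i w α β k γ δ l = 0 := by
  rw [cw, cv, h]; rfl

/-- The pair `x_o³`, `x_o x_{o'}⁴ x_n^l`, excluded by the selection rule unless `p = 5`. -/
theorem Coc4.cube_one {c : A →ₗ[F] A →ₗ[F] F} (hp5 : 5 ≤ p) {o : Fin (2 * m)} (hc : Coc4 c o)
    (w : Vec m) {l : ℤ} (hl : 1 ≤ l) : cw c o w 3 0 0 1 4 l = 0 := by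
  by_cases h : p = 5
  · have := hc.n2 w l hl
    rwa [show (p - 4 : ℤ) = 1 by omega, show (p - 1 : ℤ) = 4 by omega] at this
  · exact hc.selz hp5 (by omega)

/-- The pair `x_o³`, `x_{o'}³ x_n^l`, with arbitrary exponents in the other planes of the latter. -/
theorem Coc4.cubeP {c : A →ₗ[F] A →ₗ[F] F} (hp5 : 5 ≤ p) {o : Fin (2 * m)} (hc : Coc4 c o)
    (ho : sg F m o = 1) (z : Vec m) (l : ℤ) (hz : Box p z) : cw c o z 3 0 0 0 3 l = 0 := by
  have hp0 : (p : F) = 0 := CharP.cast_eq_zero F p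
  have h2 := two_ne (F := F) hp5
  have h3 := three_ne (F := F) hp5
  by_contra hne
  have hreg := (cv_ne hc.coc hne).2
  have bd := hreg.bd
  have hd := cw_deg hc.coc hne
  by_cases hj : ∃ j, Ind o j ∧ z j.castSucc = p - 1
  · obtain ⟨j, hoj, hzj⟩ := hj
    have hzj' : z (cj m j).castSucc = p - 1 := by
      rcases hc.vx hp5 hne hoj with h | h
      · rw [W_o _ _ _ _ hoj.1 hoj.2] at h; omega
      · rw [W_o _ _ _ _ hoj.cj.1 hoj.cj.2] at h; exact h.2
    have hz2 : W2 o j z 0 3 (p - 1) (p - 1) l = W o z 0 3 l := by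
      conv_rhs => rw [← W2_self o j (W o z 0 3 l)]
      rw [W2_comm hoj, W2, W2, W_i, W_c, W_o _ _ _ _ hoj.1 hoj.2,
        W_o _ _ _ _ hoj.cj.1 hoj.cj.2, W_n, hzj, hzj']
      change W2 j o z _ _ _ _ _ = W2 o j _ _ _ _ _ _
      apply vec_ext o
      · rw [W2_i, W2_j hoj.symm]
      · rw [W2_c, W2_cj hoj.symm]
      · rw [W2_n, W2_n]
      · intro k h1 h2
        rw [← W2_comm hoj, W2, W2, W_o _ _ _ _ h1 h2, W_o _ _ _ _ h1 h2]
        rcases tri_i j k with rfl | rfl | hjk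
        · rw [W_i, W_i]
        · rw [W_c, W_c]
        · rw [W_o _ _ _ _ hjk.1 hjk.2, W_o _ _ _ _ hjk.1 hjk.2, W_o _ _ _ _ h1 h2]
    have hdb : dg (W2 o j z 0 4 (p - 2) (p - 1) l) = dg (W o z 0 3 l) := by
      rw [← hz2, dg_W2 hoj, dg_W2 hoj]; ring
    have hxx := hc.rxx hp5 hoj
    have hr : ∀ γ δ γ' δ' l, cw2 c o j z 1 0 1 0 0 γ δ γ' δ' l = 0 := by
      intro γ δ γ' δ' l
      rw [cw2, cv, hxx]; rfl
    have t := tri2 hc.coc hoj hz 1 0 1 0 0 3 0 0 0 0 0 4 (p - 2) (p - 1) l (D := -3)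
      (by rw [hdb, hd]; push_cast; ring) (regW2 hoj (box0 hp5) (by omega))
      (regW2 hoj (box0 hp5) (by omega))
      (regW2 hoj hz (by omega)) rfl rfl rfl (hr _ _ _ _ _) (hr _ _ _ _ _) (hr _ _ _ _ _)
      (v7 := cw c o z 3 0 0 0 3 l)
      (by
        rw [cw, ← hz2, cw2, W2_z]
        congr 2 <;> ring) (hc.selz2 hp5 hoj (by omega)) rfl
    push_cast at t
    refine hne ((mul_eq_zero.1 (?_ : (2 * 2 : F) * _ = 0)).resolve_left (mul_ne_zero h2 h2))
    rw [ho] at t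
    linear_combination t
  · have hz0 : W o z 0 3 l = W o 0 0 3 l := by
      apply vec_ext o
      · rw [W_i, W_i]
      · rw [W_c, W_c]
      · rw [W_n, W_n]
      · intro k hk hk'
        have h0 := hc.vx hp5 hne ⟨hk, hk'⟩
        unfold Vx at h0
        rw [W_o _ _ _ _ hk hk'] at h0 ⊢
        rw [W_o _ _ _ _ hk hk']
        rcases h0 with h | h
        · exact h.1
        · exact absurd ⟨k, ⟨hk, hk'⟩, h.1⟩ hj
    have hl : l = p - 2 := by
      rw [hz0, dg_W, rs_zero] at hd
      by_contra hl
      have : ((l + 2 - p : ℤ) : F) ≠ 0 := ic_ne (by omega) (by omega) (by omega)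
      push_cast at this hd
      rw [hp0] at this
      apply mul_ne_zero h2 this
      linear_combination hd
    rw [cw, hz0, hl] at hne
    change cw c o 0 3 0 0 0 3 (p - 2) ≠ 0 at hne
    have hdb : (dg (W o (0 : Vec m) 0 4 (p - 3)) : F) = -4 := by
      rw [dg_W, rs_zero]; push_cast; rw [hp0]; ring
    have hrnx := hc.rnx hp5
    have t1 := tri1 hc.coc o (box0 hp5) 1 0 1 3 0 0 0 4 (p - 3) hdb (regW0 hp5 (by omega))
      (regW0 hp5 (by omega)) (regW0 hp5 (by omega)) rfl rfl (cw_rad hrnx _ _ _ _)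
      (cw_rad hrnx _ _ _ _) (v2 := cw c o 0 4 0 0 0 4 (p - 3)) (v5 := cw c o 0 3 0 0 0 3 (p - 2))
      (by congr 1 <;> ring) (v6 := 0)
      (by rw [← hc.cube_one hp5 0 (l := p - 3) (by omega)]; congr 1 <;> ring)
    have s1 := hc.shift' hp5 (i := o) (w := 0) (v := 0) (α := 3) (β := 0) (k := 0) (γ := 2)
      (δ := 3) (l := p - 3) (regW0 hp5 (by omega)) (regW0 hp5 (by omega))
    have h1 := hc.cube_one hp5 0 (l := p - 3) (by omega)
    change _ * cw c o 0 2 1 0 2 3 (p - 3) + _ * cw c o 0 3 0 0 1 4 (p - 3) = 0 at s1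
    rw [h1, mul_zero, add_zero] at s1
    have h21 : cw c o 0 2 1 0 2 3 (p - 3) = 0 := (mul_eq_zero.1 s1).resolve_left (by
      push_cast; exact h3)
    have hp6 : p ≠ 6 := by
      rintro rfl
      exact absurd hp.out (by norm_num)
    have t2 := tri1 hc.coc o (box0 hp5) 3 0 0 2 1 0 0 4 (p - 3) hdb (regW0 hp5 (by omega))
      (regW0 hp5 (by omega)) (regW0 hp5 (by omega)) rfl rfl (v3 := 0)
      (by rw [← h1]; congr 1 <;> ring) (hc.selz hp5 (by omega)) (v5 := 0)
      (by rw [← h21]; congr 1 <;> ring) (hc.selz hp5 (by omega))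
      (v1 := cw c o 0 4 0 0 0 4 (p - 3))
    push_cast at t1 t2
    rw [ho, hp0] at t1 t2
    refine hne ((mul_eq_zero.1 (?_ : (3 * (2 * 2) : F) * _ = 0)).resolve_left
      (mul_ne_zero h3 (mul_ne_zero h2 h2)))
    linear_combination 3 * t1 - t2

/-- The pair `x_o³`, `x_o^{p-4} x_{o'}^{p-1} x_n^l`, with arbitrary exponents in the other planes of the latter. -/
theorem Coc4.cubeQ {c : A →ₗ[F] A →ₗ[F] F} (hp5 : 5 ≤ p) {o : Fin (2 * m)} (hc : Coc4 c o)
    (ho : sg F m o = 1) (z : Vec m) (l : ℤ) (hz : Box p z) :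
    cw c o z 3 0 0 (p - 4) (p - 1) l = 0 := by
  have hp0 : (p : F) = 0 := CharP.cast_eq_zero F p
  have h2 := two_ne (F := F) hp5
  have h3 := three_ne (F := F) hp5
  by_cases hl : 1 ≤ l
  · exact hc.n2 z l hl
  by_contra hne
  have hreg := (cv_ne hc.coc hne).2
  have bd := hreg.bd
  have hl0 : l = 0 := by omega
  have hd := cw_deg hc.coc hne
  subst hl0
  have hdb : (dg (W o z (p - 5) (p - 1) 0) : F) = -4 := by
    have : dg (W o z (p - 5) (p - 1) 0) = dg (W o z (p - 4) (p - 1) 0) - 1 := by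
      rw [dg_W, dg_W]; ring
    rw [this]; push_cast; rw [hd]; push_cast; ring
  have hrnx := hc.rnx hp5
  have hreg_b : Reg p (W o z (p - 5) (p - 1) 0) := regW hz (by omega)
  have t1 := tri1 hc.coc o hz 1 0 1 3 0 0 (p - 5) (p - 1) 0 hdb (regW0 hp5 (by omega))
    (regW0 hp5 (by omega)) hreg_b rfl rfl (cw_rad hrnx _ _ _ _)
    (cw_rad hrnx _ _ _ _) (v2 := cw c o z 4 0 0 (p - 5) (p - 1) 0) (v5 := 0)
    (by
      by_cases h : p = 5
      · rw [← hc.cubeP hp5 ho z 1 hz]; congr 1 <;> omega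
      · exact hc.selz hp5 (by omega))
    (v6 := cw c o z 3 0 0 (p - 4) (p - 1) 0) (by congr 1 <;> ring)
  have s1 := hc.shift' hp5 (i := o) (w := z) (v := 0) (α := 3) (β := 0) (k := 0) (γ := p - 3)
    (δ := p - 2) (l := 0) (regW0 hp5 (by omega)) (regW hz (by omega))
  rw [show (p - 3 - 1 : ℤ) = p - 4 by ring, show (p - 2 + 1 : ℤ) = p - 1 by ring] at s1
  change _ * cw c o z 2 1 0 (p - 3) (p - 2) 0 + _ * cw c o z 3 0 0 (p - 4) (p - 1) 0 = 0 at s1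
  have t2 := tri1 hc.coc o hz 3 0 0 2 1 0 (p - 5) (p - 1) 0 hdb (regW0 hp5 (by omega))
    (regW0 hp5 (by omega)) hreg_b rfl rfl (v3 := cw c o z 3 0 0 (p - 4) (p - 1) 0)
    (by congr 1 <;> ring) rfl (v5 := cw c o z 2 1 0 (p - 3) (p - 2) 0)
    (by congr 1 <;> ring) rfl
    (v1 := cw c o z 4 0 0 (p - 5) (p - 1) 0)
  push_cast at t1 t2 s1
  rw [ho, hp0] at t1 t2
  rw [hp0] at s1
  refine hne ((mul_eq_zero.1 (?_ : (3 * 2 : F) * _ = 0)).resolve_left (mul_ne_zero h3 h2))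
  linear_combination t2 - 3 * t1 + s1

/-- The cube `x_o³` lies in the radical. -/
theorem Coc4.rcube {c : A →ₗ[F] A →ₗ[F] F} (hp5 : 5 ≤ p) {o : Fin (2 * m)} (hc : Coc4 c o)
    (ho : sg F m o = 1) : c (X F p (W o 0 3 0 0)) = 0 := by
  refine R_of fun z => ?_
  by_contra h
  have hz := (cv_ne hc.coc h).2
  have hs := hc.sel hp5 h o
  rw [W_i, W_c] at hs
  have hself := W_self o z
  rcases hs with ⟨h1, h2⟩ | ⟨h1, h2⟩
  · apply h
    rw [← hc.cubeP hp5 ho z (z (Fin.last _)) hz.box, cw]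
    congr 1
    conv_lhs => rw [← hself, h1, h2]
  · apply h
    rw [← hc.cubeQ hp5 ho z (z (Fin.last _)) hz.box, cw]
    congr 1
    have e1 : z o.castSucc = p - 4 := by omega
    have e2 : z (cj m o).castSucc = p - 1 := by omega
    conv_lhs => rw [← hself, e1, e2]
end

/-! ### Monomials of degree zero and one -/

section
variable {F : Type*} [Field F] {p m : ℕ} [CharP F p] [hp : Fact p.Prime]
local notation "A" => TruncP F p (2 * m + 1)

theorem W_id {i : Fin (2 * m)} {w : Vec m} (h1 : w i.castSucc = 0) (h2 : w (cj m i).castSucc = 0)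
    (h3 : w (Fin.last _) = 0) : W i w 0 0 0 = w := by
  conv_rhs => rw [← W_self i w, h1, h2, h3]

theorem ex_ind {i : Fin (2 * m)} {w : Vec m} (hw : ∀ k, 0 ≤ w k) (h : rs i w ≠ 0) :
    ∃ j, Ind i j ∧ 1 ≤ w j.castSucc := by
  obtain ⟨j, hj, hj'⟩ := Finset.exists_ne_zero_of_sum_ne_zero h
  rw [Finset.mem_erase, Finset.mem_erase] at hj
  have := hw j.castSucc
  exact ⟨j, ⟨hj.2.1, hj.1⟩, by omega⟩

theorem ex_pos {w : Vec m} (hw : ∀ k, 0 ≤ w k) (o : Fin (2 * m))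
    (h : 0 < dg w + 2 - 2 * w (Fin.last _)) : ∃ j : Fin (2 * m), 1 ≤ w j.castSucc := by
  by_contra hno
  push Not at hno
  have h1 := dg_eq o w
  have h2 := hno o
  have h3 := hno (cj m o)
  obtain ⟨j, -, hj⟩ := ex_ind hw (i := o) (by omega)
  exact absurd hj (by have := hno j; omega)

/-- The products `x_i x_j` from different planes. -/
theorem Coc4.quad2 {c : A →ₗ[F] A →ₗ[F] F} (hp5 : 5 ≤ p) {o : Fin (2 * m)} (hc : Coc4 c o)
    {i j : Fin (2 * m)} (hij : Ind i j) : c (X F p (W2 i j 0 1 0 1 0 0)) = 0 := by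
  have key : ∀ j, Ind o j → c (X F p (W2 (cj m o) j 0 1 0 1 0 0)) = 0 := by
    intro j hj
    have := hc.rad_sq' hp5 (i := o) (w := W j 0 1 0 0) (α := 1) (β := 0) (k := 0)
      (regW2 hj (box0 hp5) (by omega)) (hc.rxx hp5 hj) (by omega)
    rwa [← W_cj] at this
  rcases tri_i o i with rfl | rfl | hoi
  · exact hc.rxx hp5 hij
  · exact key j (by have := hij.symm.cj.symm; exact ⟨fun e => hij.2 (by rw [e, cj_cj]), hij.1⟩)
  rcases tri_i o j with rfl | rfl | hoj
  · rw [W2_comm hij]; exact hc.rxx hp5 hij.symm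
  · rw [W2_comm hij]; exact key i hoi
  have e1 : W2 o i (W j 0 1 0 0) 1 0 0 0 0 = W2 o j 0 1 0 1 0 0 := by
    rw [W2, W2, W_id]
    · rw [W_o _ _ _ _ hij.symm.1 hij.symm.2]; rfl
    · rw [W_o _ _ _ _ hij.symm.cj.1 hij.symm.cj.2]; rfl
    · rw [W_n]
  have e2 : W2 o i (W j 0 1 0 0) 0 0 1 0 0 = W2 i j 0 1 0 1 0 0 := by
    rw [W2, W_id]
    · rfl
    · change W2 i j 0 1 0 1 0 0 _ = _
      rw [W2, W_o _ _ _ _ hoi.symm.1 hoi.symm.2, W_o _ _ _ _ hoj.symm.1 hoj.symm.2]; rfl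
    · change W2 i j 0 1 0 1 0 0 _ = _
      rw [W2, W_o _ _ _ _ hoi.symm.cj.1 hoi.symm.cj.2, W_o _ _ _ _ hoj.symm.cj.1 hoj.symm.cj.2]; rfl
    · rw [W_n]
  have hoi' : Ind (cj m o) i := hoi.symm.cj.symm
  have r1 : Reg p (W2 o i (0 : Vec m) 0 1 1 0 0) := regW2 hoi (box0 hp5) (by omega)
  have r2 : Reg p (W2 o j (0 : Vec m) 1 0 1 0 0) := regW2 hoj (box0 hp5) (by omega)
  have h := hc.coc.rad r1 r2 (by
    have := key i hoi
    rw [W2, W_cj] at this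
    exact this) (hc.rxx hp5 hoj)
  rw [← e1, br_W2 hoi (w := W j 0 1 0 0) (W_nonneg (w := 0) (fun _ => le_rfl) (by omega) (by omega) (by omega)) (by omega)
    (by omega) (by omega) (by omega) (by omega) (by omega) (by omega) (by omega) (by omega)
    (by omega)] at h
  norm_num at h
  rw [e2] at h
  exact h.resolve_left (sg_ne o)

theorem Coc4.nx {c : A →ₗ[F] A →ₗ[F] F} (hp5 : 5 ≤ p) {o : Fin (2 * m)} (hc : Coc4 c o)
    (i : Fin (2 * m)) : c (X F p (W i 0 1 0 1)) = 0 := by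
  have h1 := hc.rnx hp5
  have h2 := hc.rad_sq' hp5 (α := 1) (β := 0) (regW0 hp5 (by omega)) h1 (by omega)
  rcases tri_i o i with rfl | rfl | hoi
  · exact h1
  · rwa [← W_cj] at h2
  have h := hc.coc.rad (a := W2 o i 0 1 0 1 0 0) (b := W2 o i 0 0 1 0 0 1)
    (regW2 hoi (box0 hp5) (by omega)) (regW2 hoi (box0 hp5) (by omega)) (hc.rxx hp5 hoi)
    (by rw [W2_z]; exact h2)
  rw [br_W2 hoi (w := 0) (fun _ => le_rfl) (by omega) (by omega) (by omega) (by omega) (by omega) (by omega)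
    (by omega) (by omega) (by omega) (by omega)] at h
  norm_num at h
  have e : W2 o i (0 : Vec m) 0 0 1 0 1 = W i 0 1 0 1 := by rw [W2_comm hoi, W2_z]
  rw [e] at h
  exact h.resolve_left (sg_ne o)

/-- The action of `x_{i'} x_j` on monomials in `x_i, x_j`. -/
theorem Coc4.transfer {c : A →ₗ[F] A →ₗ[F] F} (hp5 : 5 ≤ p) {o : Fin (2 * m)} (hc : Coc4 c o)
    {i j : Fin (2 * m)} (hij : Ind i j) {a b : ℤ} (ha : 1 ≤ a) (ha' : a ≤ 4) (hb : 0 ≤ b)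
    (hb' : b ≤ 3) (hab : 2 ≤ a + b) (h : c (X F p (W2 i j 0 a 0 b 0 0)) = 0) :
    c (X F p (W2 i j 0 (a - 1) 0 (b + 1) 0 0)) = 0 := by
  have h0 : c (X F p (W2 i j 0 0 1 1 0 0)) = 0 := by
    have := hc.quad2 hp5 (i := cj m i) (j := j) hij.symm.cj.symm
    rwa [W2, W_cj] at this
  have h := hc.coc.rad (regW2 hij (box0 hp5) (by omega)) (regW2 hij (box0 hp5) (by omega)) h0 h
  rw [br_W2 hij (w := 0) (fun _ => le_rfl) (by omega) (by omega) (by omega) (by omega) (by omega) (by omega)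
    (by omega) (by omega) (by omega) (by omega)] at h
  norm_num at h
  have h8 : ((a : ℤ) : F) ≠ 0 := ic_ne (by omega) (by omega) (by omega)
  rw [add_comm b 1]
  exact h.resolve_left (fun h => h.elim (sg_ne i) h8)

theorem Coc4.cube {c : A →ₗ[F] A →ₗ[F] F} (hp5 : 5 ≤ p) {o : Fin (2 * m)} (hc : Coc4 c o)
    (ho : sg F m o = 1) (i : Fin (2 * m)) : c (X F p (W i 0 3 0 0)) = 0 := by
  have h1 := hc.rcube hp5 ho
  rcases tri_i o i with rfl | rfl | hoi
  · exact h1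
  · have h2 := hc.rad_sq' hp5 (α := 3) (β := 0) (regW0 hp5 (by omega)) h1 (by omega)
    have h3 := hc.rad_sq' hp5 (α := 2) (β := 1) (regW0 hp5 (by omega)) h2 (by omega)
    have h4 := hc.rad_sq' hp5 (α := 1) (β := 2) (regW0 hp5 (by omega)) h3 (by omega)
    rwa [← W_cj] at h4
  · rw [← W2_z o i] at h1
    have h2 := hc.transfer hp5 hoi (by omega) (by omega) (by omega) (by omega) (by omega) h1
    have h3 := hc.transfer hp5 hoi (by omega) (by omega) (by omega) (by omega) (by omega) h2
    have h4 := hc.transfer hp5 hoi (by omega) (by omega) (by omega) (by omega) (by omega) h3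
    have e : W2 o i (0 : Vec m) 0 0 3 0 0 = W i 0 3 0 0 := by rw [W2_comm hoi, W2_z]
    rw [← e]; exact h4

theorem Coc4.cube21 {c : A →ₗ[F] A →ₗ[F] F} (hp5 : 5 ≤ p) {o : Fin (2 * m)} (hc : Coc4 c o)
    (ho : sg F m o = 1) (i : Fin (2 * m)) : c (X F p (W i 0 2 1 0)) = 0 :=
  hc.rad_sq' hp5 (α := 3) (β := 0) (regW0 hp5 (by omega)) (hc.cube hp5 ho i) (by omega)

theorem Coc4.cube22 {c : A →ₗ[F] A →ₗ[F] F} (hp5 : 5 ≤ p) {o : Fin (2 * m)} (hc : Coc4 c o)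
    (ho : sg F m o = 1) {i j : Fin (2 * m)} (hij : Ind i j) :
    c (X F p (W2 i j 0 2 0 1 0 0)) = 0 := by
  have h1 := hc.cube hp5 ho i
  rw [← W2_z i j] at h1
  exact hc.transfer hp5 hij (by omega) (by omega) (by omega) (by omega) (by omega) h1

/-- The monomials of degree zero. -/
theorem Coc4.quad {c : A →ₗ[F] A →ₗ[F] F} (hp5 : 5 ≤ p) {o : Fin (2 * m)} (hc : Coc4 c o)
    {M : Vec m} (hM : Reg p M) (hd : dg M = 0) : c (X F p M) = 0 := by
  have hnn := hM.nonneg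
  have b := reg_cases hM o
  have h0 := dg_eq o M
  have hn : M (Fin.last _) = 0 := by omega
  obtain ⟨i, hi⟩ := ex_pos hnn o (by omega)
  have bi := reg_cases hM i
  have di := dg_eq i M
  by_cases hr : rs i M = 0
  · have hz : M = W i 0 (M i.castSucc) (M (cj m i).castSucc) 0 := by
      apply vec_ext i
      · rw [W_i]
      · rw [W_c]
      · rw [W_n, hn]
      · intro k hk hk'
        have := rs_ge (j := k) ⟨hk, hk'⟩ hnn
        have h1 := hnn k.castSucc
        have h2 := hnn (cj m k).castSucc
        rw [W_o _ _ _ _ hk hk', Pi.zero_apply]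
        omega
    rw [hz]
    have : (M i.castSucc = 2 ∧ M (cj m i).castSucc = 0) ∨
      (M i.castSucc = 1 ∧ M (cj m i).castSucc = 1) := by omega
    rcases this with ⟨e1, e2⟩ | ⟨e1, e2⟩
    · rw [e1, e2]; exact hc.sq i
    · rw [e1, e2]; exact hc.h i
  · obtain ⟨j, hij, hj⟩ := ex_ind hnn hr
    have hz : M = W2 i j 0 1 0 1 0 0 := by
      have := rs_ge hij hnn
      have h2 := hnn (cj m j).castSucc
      apply vec_ext i
      · rw [W2_i]; omega
      · rw [W2_c]; omega
      · rw [W2_n, hn]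
      · intro k hk hk'
        rcases tri_i j k with rfl | rfl | hjk
        · rw [W2_j hij]; omega
        · rw [W2_cj hij]; omega
        · have h5 : M k.castSucc + M j.castSucc ≤ rs i M := by
            have := Finset.sum_le_sum_of_subset_of_nonneg
              (s := {k, j}) (t := (Finset.univ.erase i).erase (cj m i))
              (f := fun k => M k.castSucc) (by
                intro x hx
                simp only [Finset.mem_insert, Finset.mem_singleton] at hx
                rcases hx with rfl | rfl
                · simp [hk, hk']
                · simp [hij.1, hij.2]) (fun x _ _ => hnn _)
            rwa [Finset.sum_pair hjk.1] at this
          have h1 := hnn k.castSucc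
          rw [W2, W_o _ _ _ _ hk hk', W_o _ _ _ _ hjk.1 hjk.2, Pi.zero_apply]
          omega
    rw [hz]
    exact hc.quad2 hp5 hij
end

/-! ### Induction on the degree -/

section
variable {F : Type*} [Field F] {p m : ℕ} [CharP F p] [hp : Fact p.Prime]
local notation "A" => TruncP F p (2 * m + 1)

/-- Lowering the exponent of `x_n` by bracketing with `x_n x_i`. -/
theorem Coc4.low {c : A →ₗ[F] A →ₗ[F] F} (hp5 : 5 ≤ p) {o : Fin (2 * m)} (hc : Coc4 c o)
    {M : Vec m} (hM : Reg p M) (hd : 2 ≤ dg M)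
    (ih1 : ∀ N, Reg p N → dg N < dg M → c (X F p N) = 0)
    (ih2 : ∀ N, Reg p N → dg N = dg M → N (Fin.last _) < M (Fin.last _) → c (X F p N) = 0)
    (hl : 1 ≤ M (Fin.last _)) (i : Fin (2 * m)) (hi : M (cj m i).castSucc + 2 ≤ p) :
    c (X F p M) = 0 := by
  have hs := reg_cases hM i
  have hdM := dg_eq i M
  obtain ⟨α, hα⟩ : ∃ x, x = M i.castSucc := ⟨_, rfl⟩
  obtain ⟨β, hβ⟩ : ∃ x, x = M (cj m i).castSucc := ⟨_, rfl⟩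
  obtain ⟨l, hl'⟩ : ∃ x, x = M (Fin.last _) := ⟨_, rfl⟩
  have hself := W_self i M
  rw [← hβ] at hi
  rw [← hl'] at hl
  rw [← hα, ← hβ, ← hl'] at hs hdM hself
  have hN : Reg p (W i M α (β + 1) (l - 1)) := regW hM.box (fun _ => by omega)
  have h := hc.coc.rad (regW0 hp5 (by omega)) hN (hc.nx hp5 i)
    (ih1 _ hN (by rw [dg_W]; omega))
  have hz : c (X F p (W i M (α + 1) (β + 1) (l - 1))) = 0 := by
    by_cases hb : α + 1 < p
    · have hR : Reg p (W i M (α + 1) (β + 1) (l - 1)) := regW hM.box (fun _ => by omega)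
      exact ih2 _ hR (by rw [dg_W]; omega) (by rw [W_n, ← hl']; omega)
    · rw [X_big i.castSucc (by rw [W_i]; omega), map_zero]
  rw [br_W i hM.nonneg (by omega) (by omega) (by omega) (by omega) (by omega) (by omega),
    map_add, map_smul, map_smul, show 1 + α = α + 1 by ring, show 0 + (β + 1) = β + 1 by ring,
    show 1 + (l - 1) - 1 = l - 1 by ring, hz, smul_zero, add_zero, smul_eq_zero,
    show α + 1 - 1 = α by ring, show β + 1 - 1 = β by ring, show 1 + (l - 1) = l by ring,
    hself] at h
  refine h.resolve_left ?_
  push_cast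
  have h8 : ((β + 1 : ℤ) : F) ≠ 0 := ic_ne (by omega) (by omega) (by omega)
  push_cast at h8
  simpa using ⟨sg_ne (F := F) i, h8⟩

/-- A plane with both exponents maximal. -/
theorem Coc4.topp {c : A →ₗ[F] A →ₗ[F] F} (hp5 : 5 ≤ p) {o : Fin (2 * m)} (hc : Coc4 c o)
    {M : Vec m} (hM : Reg p M)
    (ih1 : ∀ N, Reg p N → dg N < dg M → c (X F p N) = 0) (i : Fin (2 * m))
    (hi : M i.castSucc = p - 1) (hi' : M (cj m i).castSucc = p - 1)
    (hl : M (Fin.last _) + 2 ≤ p) : c (X F p M) = 0 := by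
  have hs := reg_cases hM i
  have hdM := dg_eq i M
  obtain ⟨l, hl'⟩ : ∃ x, x = M (Fin.last _) := ⟨_, rfl⟩
  have hself := W_self i M
  rw [← hl'] at hl
  rw [hi, hi', ← hl'] at hs hdM hself
  have hN : Reg p (W i M (p - 3) (p - 3) (l + 1)) := regW hM.box (fun _ => by omega)
  have ha : Reg p (W i (0 : Vec m) 2 2 0) := regW0 hp5 (by omega)
  have h := hc.coc.rad ha hN (ih1 _ ha (by rw [dg_W, rs_zero]; omega))
    (ih1 _ hN (by rw [dg_W]; omega))
  rw [br_W i hM.nonneg (by omega) (by omega) (by omega) (by omega) (by omega) (by omega),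
    map_add, map_smul, map_smul, show (2 + (p - 3) : ℤ) = p - 1 by ring,
    show 0 + (l + 1) - 1 = l by ring, hself] at h
  have h8 : ((-2 * (l + 1) : ℤ) : F) ≠ 0 := by
    push_cast
    have : ((l + 1 : ℤ) : F) ≠ 0 := ic_ne (by omega) (by omega) (by omega)
    push_cast at this
    simpa using ⟨two_ne hp5, this⟩
  refine (smul_eq_zero.1 (show ((-2 * (l + 1) : ℤ) : F) • c (X F p M) = 0 from ?_)).resolve_left h8
  rw [← h]
  push_cast
  module

/-- The top monomial, in case it is regular. -/
theorem Coc4.toptop {c : A →ₗ[F] A →ₗ[F] F} (hp5 : 5 ≤ p) {o : Fin (2 * m)} (hc : Coc4 c o)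
    {M : Vec m} (hM : Reg p M) (hT : M = tau p m)
    (ih1 : ∀ N, Reg p N → dg N < dg M → c (X F p N) = 0) : c (X F p M) = 0 := by
  have hs := reg_cases hM o
  have hdM := dg_eq o M
  have hself := W_self o M
  have e : ∀ k, M k = p - 1 := by rw [hT]; exact fun k => rfl
  rw [e, e, e] at hs hdM hself
  have hN : Reg p (W o M (p - 2) (p - 2) (p - 1)) := regW hM.box (fun _ => by omega)
  have ha : Reg p (W o (0 : Vec m) 1 1 1) := regW0 hp5 (by omega)
  have h := hc.coc.rad ha hN (ih1 _ ha (by rw [dg_W, rs_zero]; omega))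
    (ih1 _ hN (by rw [dg_W]; omega))
  rw [br_W o hM.nonneg (by omega) (by omega) (by omega) (by omega) (by omega) (by omega),
    map_add, map_smul, map_smul, show (1 + (p - 2) : ℤ) = p - 1 by ring,
    show (1 + (p - 1) - 1 : ℤ) = p - 1 by ring, hself] at h
  have hp0 : (p : F) = 0 := CharP.cast_eq_zero F p
  have h8 : ((-2 * ((m + 2 : ℕ) : ℤ) : ℤ) : F) ≠ 0 := by
    push_cast
    have : ((m + 2 : ℕ) : F) ≠ 0 := fun h' =>
      hM.top ((CharP.cast_eq_zero_iff F p _).1 h') hT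
    push_cast at this
    simpa using ⟨two_ne hp5, this⟩
  have hr : (rs o M : F) = 4 - 2 * ((m : F) + 1) := by
    have h1 : rs o M = (2 * m + 2) * (p - 1) - 4 * (p - 1) := by
      rw [hT, dg_tau] at hdM
      rw [hT]
      linear_combination - hdM
    rw [h1]
    push_cast
    rw [hp0]
    ring
  refine (smul_eq_zero.1 (show ((-2 * ((m + 2 : ℕ) : ℤ) : ℤ) : F) • c (X F p M) = 0
    from ?_)).resolve_left h8
  rw [← h, hr]
  push_cast
  rw [hp0]
  module

/-- Monomials without `x_n` and with some exponent at least two. -/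
theorem Coc4.big {c : A →ₗ[F] A →ₗ[F] F} (hp5 : 5 ≤ p) {o : Fin (2 * m)} (hc : Coc4 c o)
    (ho : sg F m o = 1) {M : Vec m} (hM : Reg p M) (hd : 1 ≤ dg M)
    (ih1 : ∀ N, Reg p N → dg N < dg M → c (X F p N) = 0) (hl : M (Fin.last _) = 0)
    (i : Fin (2 * m)) (hi : 2 ≤ M i.castSucc) (hi' : M (cj m i).castSucc + 2 ≤ p) :
    c (X F p M) = 0 := by
  have hs := reg_cases hM i
  have hdM := dg_eq i M
  obtain ⟨α, hα⟩ : ∃ x, x = M i.castSucc := ⟨_, rfl⟩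
  obtain ⟨β, hβ⟩ : ∃ x, x = M (cj m i).castSucc := ⟨_, rfl⟩
  have hself := W_self i M
  rw [← hβ] at hi'
  rw [← hα] at hi
  rw [← hα, ← hβ, hl] at hs hdM hself
  have hN : Reg p (W i M (α - 2) (β + 1) 0) := regW hM.box (fun _ => by omega)
  have h := hc.coc.rad (regW0 hp5 (by omega)) hN (hc.cube hp5 ho i)
    (ih1 _ hN (by rw [dg_W]; omega))
  rw [br_W i hM.nonneg (by omega) (by omega) (by omega) (by omega) (by omega) (by omega),
    map_add, map_smul, map_smul, show 3 + (α - 2) - 1 = α by ring,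
    show 0 + (β + 1) - 1 = β by ring, zero_add, hself] at h
  have h8 : ((3 * (β + 1) : ℤ) : F) ≠ 0 := by
    have h2 : ((β + 1 : ℤ) : F) ≠ 0 := ic_ne (by omega) (by omega) (by omega)
    have h3 : ((3 : ℤ) : F) ≠ 0 := ic_ne (by omega) (by omega) (by omega)
    rw [Int.cast_mul]; exact mul_ne_zero h3 h2
  refine (smul_eq_zero.1 (show (sg F m i * ((3 * (β + 1) : ℤ) : F)) • c (X F p M) = 0
    from ?_)).resolve_left (mul_ne_zero (sg_ne i) h8)
  rw [← h]
  push_cast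
  module

/-- Square-free monomials without `x_n`. -/
theorem Coc4.small {c : A →ₗ[F] A →ₗ[F] F} (hp5 : 5 ≤ p) {o : Fin (2 * m)} (hc : Coc4 c o)
    (ho : sg F m o = 1) {M : Vec m} (hM : Reg p M) (hd : 1 ≤ dg M)
    (ih1 : ∀ N, Reg p N → dg N < dg M → c (X F p N) = 0) (hl : M (Fin.last _) = 0)
    (h1 : ∀ i : Fin (2 * m), M i.castSucc ≤ 1) : c (X F p M) = 0 := by
  have hnn := hM.nonneg
  by_cases hpl : ∃ i : Fin (2 * m), M i.castSucc = 1 ∧ M (cj m i).castSucc = 1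
  · obtain ⟨i, hi, hi'⟩ := hpl
    have hs := reg_cases hM i
    have hdM := dg_eq i M
    have hself := W_self i M
    rw [hi, hi', hl] at hs hdM hself
    have hN : Reg p (W i M 0 1 0) := regW hM.box (fun _ => by omega)
    have h := hc.coc.rad (regW0 hp5 (by omega)) hN (hc.cube21 hp5 ho i)
      (ih1 _ hN (by rw [dg_W]; omega))
    rw [br_W i hnn (by omega) (by omega) (by omega) (by omega) (by omega) (by omega),
      map_add, map_smul, map_smul, show (2 + 0 - 1 : ℤ) = 1 by ring,
      show (1 + 1 - 1 : ℤ) = 1 by ring, zero_add, hself] at h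
    refine (smul_eq_zero.1 (show (sg F m i * 2) • c (X F p M) = 0
      from ?_)).resolve_left (mul_ne_zero (sg_ne i) (two_ne hp5))
    rw [← h]
    push_cast
    module
  · push Not at hpl
    obtain ⟨i, hi⟩ := ex_pos hnn o (by omega)
    have hi1 : M i.castSucc = 1 := by have := h1 i; omega
    have hi' : M (cj m i).castSucc = 0 := by
      have := hpl i hi1; have := h1 (cj m i); have := hnn (cj m i).castSucc; omega
    have hdM := dg_eq i M
    obtain ⟨j, hij, hj⟩ := ex_ind hnn (i := i) (by omega)
    have hj1 : M j.castSucc = 1 := by have := h1 j; omega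
    have hj' : M (cj m j).castSucc = 0 := by
      have := hpl j hj1; have := h1 (cj m j); have := hnn (cj m j).castSucc; omega
    have hself := W2_self i j M
    rw [hi1, hi', hj1, hj', hl] at hself
    have hdN := dg_W2 hij M 0 1 0 0 0
    have hdx := dg_W2 hij M 1 0 1 0 0
    rw [hself] at hdx
    have hN : Reg p (W2 i j M 0 1 0 0 0) := by
      refine ⟨(hM.box.W ?_ ?_ ?_ ?_ ?_ ?_).W ?_ ?_ ?_ ?_ ?_ ?_, by omega, ?_, fun _ => ?_⟩ <;>
        try omega
      · intro h; have := congrFun h (Fin.last _); rw [W2_n, en_last] at this; omega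
      · intro h; have := congrFun h (Fin.last _); rw [W2_n] at this; simp [tau] at this; omega
    have h := hc.coc.rad (regW2 hij (box0 hp5) (by omega)) hN (hc.cube22 hp5 ho hij)
      (ih1 _ hN (by omega))
    rw [br_W2 hij hnn (by omega) (by omega) (by omega) (by omega) (by omega) (by omega) (by omega)
      (by omega) (by omega) (by omega)] at h
    simp only [map_add, map_smul] at h
    rw [show (2 + 0 - 1 : ℤ) = 1 by ring, show (0 + 1 - 1 : ℤ) = 0 by ring,
      show (1 + 0 : ℤ) = 1 by ring, show (0 + 0 : ℤ) = 0 by ring, hself] at h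
    refine (smul_eq_zero.1 (show (sg F m i * 2) • c (X F p M) = 0
      from ?_)).resolve_left (mul_ne_zero (sg_ne i) (two_ne hp5))
    rw [← h]
    push_cast
    module

/-- In normalised form the cocycle vanishes. -/
theorem Coc4.zero {c : A →ₗ[F] A →ₗ[F] F} (hp5 : 5 ≤ p) {o : Fin (2 * m)} (hc : Coc4 c o)
    (ho : sg F m o = 1) {M : Vec m} (hM : Reg p M) : c (X F p M) = 0 := by
  have main : ∀ d l : ℕ, ∀ M : Vec m, Reg p M → dg M = d → M (Fin.last _) = l →
      c (X F p M) = 0 := by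
    intro d
    induction d using Nat.strong_induction_on with
    | _ d ihd =>
      intro l
      induction l using Nat.strong_induction_on with
      | _ l ihl =>
        intro M hM hd hl
        have hb := hM.box
        have ih1 : ∀ N, Reg p N → dg N < dg M → c (X F p N) = 0 := fun N hN hlt => by
          have h1 := hN.deg
          have h2 := (hN.box (Fin.last _)).1
          exact ihd (dg N).toNat (by omega) (N (Fin.last _)).toNat N hN (by omega) (by omega)
        have ih2 : ∀ N, Reg p N → dg N = dg M → N (Fin.last _) < M (Fin.last _) →
            c (X F p N) = 0 := fun N hN hlt hlt' => by
          have h2 := (hN.box (Fin.last _)).1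
          exact ihl (N (Fin.last _)).toNat (by omega) N hN (by omega) (by omega)
        clear ihd ihl
        by_cases hd0 : dg M = 0
        · exact hc.quad hp5 hM hd0
        by_cases hl0 : M (Fin.last _) = 0
        · by_cases hs : ∀ i : Fin (2 * m), M i.castSucc ≤ 1
          · exact hc.small hp5 ho hM (by omega) ih1 hl0 hs
          push Not at hs
          obtain ⟨i, hi⟩ := hs
          have b1 := hb i.castSucc
          have b2 := hb (cj m i).castSucc
          by_cases h2 : M (cj m i).castSucc + 2 ≤ p
          · exact hc.big hp5 ho hM (by omega) ih1 hl0 i (by omega) h2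
          by_cases h3 : M i.castSucc + 2 ≤ p
          · exact hc.big hp5 ho hM (by omega) ih1 hl0 (cj m i) (by omega) (by rw [cj_cj]; exact h3)
          · exact hc.topp hp5 hM ih1 i (by omega) (by omega) (by omega)
        have hln := (hb (Fin.last _))
        by_cases hd1 : dg M = 1
        · have h0 := dg_eq o M
          have hr := rs_nonneg o hM.nonneg
          have hn1 := (hb o.castSucc).1
          have hn2 := (hb (cj m o).castSucc).1
          obtain ⟨i, hi⟩ := ex_pos hM.nonneg o (by omega)
          have hdi := dg_eq i M
          have hri := rs_nonneg i hM.nonneg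
          have hn3 := (hb (cj m i).castSucc).1
          have hz : M = W i 0 1 0 1 := by
            apply vec_ext i
            · rw [W_i]; omega
            · rw [W_c]; omega
            · rw [W_n]; omega
            · intro k hk hk'
              have := rs_ge (j := k) ⟨hk, hk'⟩ hM.nonneg
              have h1 := (hb k.castSucc).1
              have h2 := (hb (cj m k).castSucc).1
              rw [W_o _ _ _ _ hk hk', Pi.zero_apply]
              omega
          rw [hz]
          exact hc.nx hp5 i
        by_cases hall : ∀ i : Fin (2 * m), M i.castSucc = p - 1
        · by_cases hlt : M (Fin.last _) + 2 ≤ p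
          · exact hc.topp hp5 hM ih1 o (hall _) (hall _) hlt
          · refine hc.toptop hp5 hM (funext fun k => ?_) ih1
            refine Fin.lastCases ?_ (fun i => ?_) k
            · simp only [tau]; omega
            · rw [hall]; rfl
        · push Not at hall
          obtain ⟨i, hi⟩ := hall
          have b1 := hb i.castSucc
          exact hc.low hp5 hM (by omega) ih1 ih2 (by omega) (cj m i) (by rw [cj_cj]; omega)
  have h1 := hM.deg
  have h2 := (hM.box (Fin.last _)).1
  exact main (dg M).toNat (M (Fin.last _)).toNat M hM (by omega) (by omega)
end

/-! ### Constant terms, primitives and perfectness -/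

section
variable {F : Type*} [Field F] {p m : ℕ} [CharP F p] [hp : Fact p.Prime]
local notation "A" => TruncP F p (2 * m + 1)

/-- A scalar cocycle on the regular monomials on which the detecting functionals vanish is the coboundary
of a functional. -/
theorem redA (hp5 : 5 ≤ p) (hm : 1 ≤ m) (c : A →ₗ[F] A →ₗ[F] F) (hc : Coc c) : Red c := by
  refine fin_red (K := fun _ => True) (P := fun i c => c (X F p (W i 0 1 1 0)) = 0)
    (fun c i hc _ => ?_) (fun c hc _ hh => ?_) c hc trivial
  · obtain ⟨f, h1, h2, h3⟩ := stepA2 hp5 hm hc i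
    exact ⟨f, h1, trivial, h2, h3⟩
  refine fin_red (K := fun c => ∀ j, c (X F p (W j 0 1 1 0)) = 0)
    (P := fun i c => c (X F p (W i 0 2 0 0)) = 0 ∧ c (X F p (W i 0 0 2 0)) = 0)
    (fun c i hc hh => stepA3 hp5 hc hh i) (fun c hc hh hs => ?_) c hc hh
  have hc3 : Coc3 c := ⟨hc, hh, fun j => (hs j).1⟩
  have ho : sg F m ⟨0, by omega⟩ = 1 := if_pos (by show 0 < m; omega)
  obtain ⟨f, hf⟩ := stepA4 hp5 hc3 ho
  refine Red.sub (f := f) ⟨0, fun a b ha hb => ?_⟩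
  rw [cv, (hf.coc4 hp5 ho).zero hp5 ho ha]
  rfl

theorem reg_mem {a : Vec m} (h : Reg p a) : X F p a ∈ Ksub F p m := X_mem hp.out.pos h.top

theorem cf0_one : cf F p (0 : Vec m) 1 = 1 := by
  classical
  rw [← X_zero, cf_X (box_zero hp.out.pos), if_pos rfl]

theorem cf0_dl_reg (f : A →ₗ[F] F) {a b : Vec m} (ha : Reg p a) (hb : Reg p b) :
    cf F p 0 (dl br (f.smulRight (1 : A)) (X F p a) (X F p b)) = - f (br (X F p a) (X F p b)) := by
  rw [dl_apply, map_sub, map_sub, cf0_reg ha, cf0_reg hb, LinearMap.smulRight_apply, map_smul,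
    cf0_one]
  simp

theorem cf0_dl_en (f : A →ₗ[F] F) {b : Vec m} (hb : Reg p b) :
    cf F p 0 (dl br (f.smulRight (1 : A)) (X F p (en m)) (X F p b))
      = - ((dg b : F) + 2) * f (X F p b) := by
  rw [dl_apply, map_sub, map_sub, cf0_en, cf0_reg hb, br_en _ hb.nonneg, map_smul, map_smul,
    LinearMap.smulRight_apply, map_smul, cf0_one]
  simp only [smul_eq_mul, mul_one]
  ring

/-- The cocycle identity for `x_n` and two regular monomials. -/
theorem cf0_coc_en (hp5 : 5 ≤ p) (hm : 1 ≤ m) {ψ : A →ₗ[F] A →ₗ[F] A}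
    (hψ : CocOn br (Ksub F p m) ψ) {a b : Vec m} (ha : Reg p a) (hb : Reg p b) :
    cf F p 0 (ψ (X F p (en m)) (br (X F p a) (X F p b)))
      = ((dg a : F) + dg b + 2) * cf F p 0 (ψ (X F p a) (X F p b)) := by
  have h := congrArg (cf F p (0 : Vec m))
    (hψ.coc _ (en_mem_K hp5 hm) _ (reg_mem ha) _ (reg_mem hb))
  simp only [map_add, map_sub, map_zero] at h
  rw [cf0_en, cf0_reg ha, cf0_reg hb, br_en _ ha.nonneg, br_en _ hb.nonneg, map_smul, map_smul,
    LinearMap.smul_apply, LinearMap.smul_apply, map_smul, map_smul,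
    hψ.skew (br_mem (X F p a) (X F p b)) (en_mem_K hp5 hm), hψ.skew (reg_mem hb) (reg_mem ha),
    map_neg, map_neg] at h
  simp only [smul_eq_mul] at h
  linear_combination h

/-- The cocycle identity for three regular monomials. -/
theorem cf0_coc_reg {ψ : A →ₗ[F] A →ₗ[F] A}
    (hψ : CocOn br (Ksub F p m) ψ) {a b z : Vec m} (ha : Reg p a) (hb : Reg p b) (hz : Reg p z) :
    cf F p 0 (ψ (br (X F p a) (X F p b)) (X F p z))
      = cf F p 0 (ψ (X F p a) (br (X F p b) (X F p z)))
        - cf F p 0 (ψ (X F p b) (br (X F p a) (X F p z))) := by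
  have h := congrArg (cf F p (0 : Vec m)) (hψ.coc _ (reg_mem ha) _ (reg_mem hb) _ (reg_mem hz))
  simp only [map_add, map_sub, map_zero] at h
  rw [cf0_reg ha, cf0_reg hb, cf0_reg hz,
    hψ.skew (br_mem (X F p a) (X F p z)) (reg_mem hb),
    hψ.skew (br_mem (X F p b) (X F p z)) (reg_mem ha), map_neg, map_neg] at h
  linear_combination -h

/-- The functional `b ↦ dg b + 2` on multi-indices. -/
def om (F : Type*) [Field F] (m : ℕ) : Vec m →+ F where
  toFun b := ((dg b + 2 : ℤ) : F)
  map_zero' := by simp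
  map_add' a b := by rw [dg_add]; push_cast; ring

/-- After subtracting a coboundary, the constant term of `ψ(x_n, ·)` vanishes. -/
theorem stepA1 (hp5 : 5 ≤ p) (hm : 1 ≤ m) {ψ : A →ₗ[F] A →ₗ[F] A}
    (hψ : CocOn br (Ksub F p m) ψ) : ∃ φ : A →ₗ[F] A, ∀ b, Reg p b →
      cf F p 0 ((ψ - dl br φ) (X F p (en m)) (X F p b)) = 0 := by
  classical
  obtain ⟨f, hf⟩ : ∃ f : A →ₗ[F] F, f = lmk F p fun b : Vec m =>
    - cf F p 0 (ψ (X F p (en m)) (X F p b)) / ((dg b : F) + 2) := ⟨_, rfl⟩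
  refine ⟨f.smulRight (1 : A), fun b hb => ?_⟩
  have hψ1 := hψ.sub_dl (lieSys hp5 hm) (f.smulRight (1 : A))
  by_cases h0 : (dg b : F) + 2 = 0
  · refine gen1 hp5 hm (om F m) (fun j => ?_)
      ((cf F p (0 : Vec m)) ∘ₗ ((ψ - dl br (f.smulRight (1 : A))) (X F p (en m)))) 0
      (fun a b ha hb hab => ?_) hb ?_
    · show ((dg (q j) + 2 : ℤ) : F) + ((dg (q (cj m j)) + 2 : ℤ) : F) = ((dg (en m) + 2 : ℤ) : F)
      rw [dg_q, dg_q, dg_en]; norm_num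
    · rw [LinearMap.comp_apply, cf0_coc_en hp5 hm hψ1 ha hb]
      have : ((dg a + 2 : ℤ) : F) + ((dg b + 2 : ℤ) : F) - ((dg (en m) + 2 : ℤ) : F) = 0 := hab
      rw [dg_en] at this
      push_cast at this
      rw [show (dg a : F) + dg b + 2 = 0 by linear_combination this, zero_mul]
    · show ((dg b + 2 : ℤ) : F) = 0
      push_cast; exact h0
  · rw [LinearMap.sub_apply, LinearMap.sub_apply, map_sub, cf0_dl_en f hb, hf, lmk_X _ hb.box]
    field_simp
    ring

/-- A cocycle on which the detecting functionals vanish is a coboundary on `K(n)`. -/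
theorem exact_of_lam (hp5 : 5 ≤ p) (hm : 1 ≤ m) {ψ : A →ₗ[F] A →ₗ[F] A}
    (hψ : CocOn br (Ksub F p m) ψ) (hQ : ∀ i, LamQ i ψ = 0) (h0 : Lam0 ψ = 0) :
    ∃ φ : A →ₗ[F] A, ∀ x ∈ Ksub F p m, ∀ y ∈ Ksub F p m, ψ x y = dl br φ x y := by
  classical
  have hL := lieSys (F := F) hp5 hm
  obtain ⟨φ0, hφ0⟩ := stepA1 hp5 hm hψ
  have hψ1 := hψ.sub_dl hL φ0
  obtain ⟨ψ1, e1⟩ : ∃ ψ1, ψ1 = ψ - dl br φ0 := ⟨_, rfl⟩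
  rw [← e1] at hφ0 hψ1
  have hQ1 : ∀ i, LamQ i ψ1 = 0 := fun i => by
    have h1 := hQ i
    have h2 := lamQ_dl hp5 i φ0
    rw [LamQ] at h1 h2 ⊢
    rw [e1, LinearMap.sub_apply, LinearMap.sub_apply, map_sub, h1, h2, sub_zero]
  have h01 : Lam0 ψ1 = 0 := by
    have h2 := lam0_dl hp5 hm φ0
    rw [Lam0] at h0 h2 ⊢
    rw [e1, LinearMap.sub_apply, LinearMap.sub_apply, map_sub, h0, h2, sub_zero]
  -- the constant term of the cocycle on the regular part
  obtain ⟨c, hcd⟩ : ∃ c : A →ₗ[F] A →ₗ[F] F,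
    c = (ψ1.compr₂ (cf F p (0 : Vec m))).compl₁₂ (prj F p) (prj F p) := ⟨_, rfl⟩
  have hca : ∀ x y, c x y = cf F p 0 (ψ1 (prj F p x) (prj F p y)) := fun x y => by rw [hcd]; rfl
  have hcv : ∀ {a b}, Reg p a → Reg p b → cv c a b = cf F p 0 (ψ1 (X F p a) (X F p b)) :=
    fun ha hb => by rw [cv, hca, prj_X ha, prj_X hb]
  have hpm : ∀ x : A, prj F p x ∈ Ksub F p m := fun x => by
    have : (Ksub F p m).mkQ ∘ₗ prj F p = 0 := lin_ext fun b _ => by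
      rw [LinearMap.comp_apply]
      by_cases hb : Reg p b
      · rw [prj_X hb]; simpa using reg_mem hb
      · rw [prj_X0 hb]; simp
    simpa using LinearMap.congr_fun this x
  have hdeg : ∀ a b, Reg p a → Reg p b → cv c a b ≠ 0 → ((dg a + dg b + 2 : ℤ) : F) = 0 := by
    intro a b ha hb hne
    have h1 := cf0_coc_en hp5 hm hψ1 ha hb
    have h2 : ((cf F p (0 : Vec m)) ∘ₗ (ψ1 (X F p (en m)))) ∘ₗ prj F p = 0 := lin_ext fun z _ => by
      rw [LinearMap.comp_apply]
      by_cases hz : Reg p z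
      · rw [prj_X hz, LinearMap.comp_apply, hφ0 z hz]; rfl
      · rw [prj_X0 hz]; simp
    have h3 := LinearMap.congr_fun h2 (br (X F p a) (X F p b))
    rw [LinearMap.comp_apply, prj_br hp5 ha hb, LinearMap.comp_apply, h1, ← hcv ha hb] at h3
    push_cast
    exact (mul_eq_zero.1 h3).resolve_right hne
  have hoff : ∀ a, ¬ Reg p a → ∀ y, c (X F p a) y = 0 := fun a ha y => by
    rw [hca, prj_X0 ha]; simp
  have hskew : ∀ x y, c x y = - c y x := fun x y => by
    rw [hca, hca, hψ1.skew (hpm x) (hpm y), map_neg]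
  have hc : Coc c := by
    refine ⟨hoff, hskew, ?_, ?_, ?_, ?_⟩
    · intro a b z ha hb hz
      simp only [hca, prj_br hp5 ha hb, prj_br hp5 ha hz, prj_br hp5 hb hz, prj_X ha, prj_X hb,
        prj_X hz]
      exact cf0_coc_reg hψ1 ha hb hz
    · intro a b hne
      have ha : Reg p a := by_contra fun h => hne (hoff a h _)
      have hb : Reg p b := by_contra fun h => hne (by rw [cv, hskew, hoff b h, neg_zero])
      exact hdeg a b ha hb hne
    · intro i
      rw [hcv (regW0 hp5 (by omega)) (regW0 hp5 (by omega))]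
      exact hQ1 i
    · intro i
      rw [hcv (regW0 hp5 (by omega)) (regW0 hp5 (by omega)), W_en, W_en]
      exact h01
  obtain ⟨f, hf⟩ := redA hp5 hm c hc
  -- The functional is restricted to degree `-2` modulo `p`, to keep the normalisation at `x_n`.
  obtain ⟨g, hg⟩ : ∃ g : A →ₗ[F] F, g = lmk F p fun b : Vec m =>
    if Reg p b ∧ ((dg b + 2 : ℤ) : F) = 0 then - f (X F p b) else 0 := ⟨_, rfl⟩
  have hgbr : ∀ a b, Reg p a → Reg p b →
      cv c a b = - g (br (X F p a) (X F p b)) := by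
    intro a b ha hb
    by_cases hd : ((dg a + dg b + 2 : ℤ) : F) = 0
    · have h1 := br_hom ((f + g) ∘ₗ prj F p) ha.nonneg hb.nonneg fun e he => by
        rw [LinearMap.comp_apply]
        by_cases hre : Reg p e
        · rw [prj_X hre, LinearMap.add_apply, hg, lmk_X _ hre.box, if_pos ⟨hre, by rw [he]; exact hd⟩]
          ring
        · rw [prj_X0 hre, map_zero]
      rw [LinearMap.comp_apply, prj_br hp5 ha hb, LinearMap.add_apply] at h1
      rw [hf a b ha hb]
      linear_combination h1
    · have h1 := br_hom g ha.nonneg hb.nonneg fun e he => by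
        by_cases hbe : Box p e
        · rw [hg, lmk_X _ hbe, if_neg fun h => hd (by rw [← he]; exact h.2)]
        · rw [X_not_box hbe, map_zero]
      rw [h1, neg_zero]
      by_contra hne
      exact hd (hdeg a b ha hb hne)
  have hψ2 := hψ1.sub_dl hL (g.smulRight (1 : A))
  have hen : ∀ b, Reg p b → cf F p 0 ((ψ1 - dl br (g.smulRight (1 : A))) (X F p (en m)) (X F p b))
      = 0 := fun b hb => by
    rw [LinearMap.sub_apply, LinearMap.sub_apply, map_sub, cf0_dl_en g hb, hφ0 b hb, hg,
      lmk_X _ hb.box]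
    split_ifs with h
    · have := h.2
      push_cast at this
      rw [this]; simp
    · simp
  obtain ⟨φ2, hφ2⟩ := partC hp5 hm _ hψ2 (by
    rintro a b (rfl | ha) (rfl | hb)
    · rw [hψ2.self _ (en_mem_K hp5 hm), map_zero]
    · exact hen b hb
    · rw [hψ2.skew (reg_mem ha) (en_mem_K hp5 hm), map_neg, hen a ha, neg_zero]
    · rw [LinearMap.sub_apply, LinearMap.sub_apply, map_sub, cf0_dl_reg g ha hb, ← hcv ha hb,
        hgbr a b ha hb, sub_self])
  refine ⟨φ0 + g.smulRight (1 : A) + φ2, fun x hx y hy => ?_⟩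
  have h := hφ2 x hx y hy
  rw [e1] at h
  simp only [LinearMap.sub_apply, dl_apply, LinearMap.add_apply, map_add] at h ⊢
  rw [sub_eq_iff_eq_add, sub_eq_iff_eq_add] at h
  rw [h]
  abel

/-- A primitive of a cocycle of `K(n)` preserves `K(n)`, because `K(n)` is perfect. -/
theorem prim_mem (hp5 : 5 ≤ p) (hm : 1 ≤ m) {ψ : A →ₗ[F] A →ₗ[F] A}
    (hV : ∀ x ∈ Ksub F p m, ∀ y ∈ Ksub F p m, ψ x y ∈ Ksub F p m) {φ : A →ₗ[F] A}
    (h : ∀ x ∈ Ksub F p m, ∀ y ∈ Ksub F p m, ψ x y = dl br φ x y) :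
    ∀ x ∈ Ksub F p m, φ x ∈ Ksub F p m := by
  have hbr : ∀ x ∈ Ksub F p m, ∀ y ∈ Ksub F p m, φ (br x y) ∈ Ksub F p m := by
    intro x hx y hy
    have h1 := h x hx y hy
    rw [dl_apply] at h1
    rw [show φ (br x y) = br x (φ y) - br y (φ x) - ψ x y by rw [h1]; abel]
    exact Submodule.sub_mem _ (Submodule.sub_mem _ (br_mem _ _) (br_mem _ _)) (hV x hx y hy)
  intro x hx
  rw [mem_Ksub hp.out.pos]
  intro hd
  have hb0 : ∀ x ∈ Ksub F p m, ∀ y ∈ Ksub F p m, cf F p (tau p m) (φ (br x y)) = 0 :=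
    fun x hx y hy => (mem_Ksub hp.out.pos _).1 (hbr x hx y hy) hd
  have h2 := two_ne (F := F) hp5
  refine K_ext (f := cf F p (tau p m) ∘ₗ φ) (fun a ha ht => ?_) x hx
  rw [LinearMap.comp_apply]
  rcases K_cases ha ht with (rfl | ⟨i, rfl⟩) | rfl | hr
  · have := hb0 _ (one_mem_K hp5 hm) _ (en_mem_K hp5 hm)
    rw [br_one_en, map_smul, map_smul, smul_eq_mul, ← X_zero] at this
    exact (mul_eq_zero.1 this).resolve_left h2
  · have := hb0 _ (q_mem_K hp5 hm i) _ (en_mem_K hp5 hm)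
    rwa [br_q_en] at this
  · have hr : Reg p (W (⟨0, by omega⟩ : Fin (2 * m)) (0 : Vec m) 0 0 2) := regW0 hp5 (by omega)
    have := hb0 _ (one_mem_K hp5 hm) _ (reg_mem hr)
    rw [br_one _ hr.nonneg, map_smul, map_smul, smul_eq_mul, W_n, W_en,
      show (2 : ℤ) • en m - en m = en m by rw [two_smul]; abel] at this
    refine (mul_eq_zero.1 this).resolve_left (mul_ne_zero h2 (by push_cast; exact h2))
  · exact gen1 hp5 hm 0 (fun j => by simp) (cf F p (tau p m) ∘ₗ φ) 0
      (fun a b ha hb _ => hb0 _ (reg_mem ha) _ (reg_mem hb)) hr rfl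
end

/-! ### Correction by squarings and uniqueness -/

section
variable {F : Type*} [Field F] {p m : ℕ} [CharP F p] [hp : Fact p.Prime]
local notation "A" => TruncP F p (2 * m + 1)

/-- The squaring of `ad z` as a bilinear map. -/
def S (z : A) : A →ₗ[F] A →ₗ[F] A := sq F p br (br z)

/-- The cochain `ψ - c₀ Sq(1) - ∑ cᵢ Sq(xᵢ)`. -/
def corr (ψ : A →ₗ[F] A →ₗ[F] A) (c : F × (Fin (2 * m) → F)) : A →ₗ[F] A →ₗ[F] A :=
  ψ - c.1 • S 1 - ∑ i, c.2 i • S (X F p (q i))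

theorem corr_apply (ψ : A →ₗ[F] A →ₗ[F] A) (c : F × (Fin (2 * m) → F)) (x y : A) :
    corr ψ c x y = ψ x y - c.1 • S 1 x y - ∑ i, c.2 i • S (X F p (q i)) x y := by
  rw [corr]
  simp only [LinearMap.sub_apply, LinearMap.smul_apply, LinearMap.sum_apply]

theorem lamQ_corr (hp5 : 5 ≤ p) (ψ : A →ₗ[F] A →ₗ[F] A) (c : F × (Fin (2 * m) → F))
    (i : Fin (2 * m)) :
    LamQ i (corr ψ c) = LamQ i ψ - c.2 (cj m i) * LamQ i (S (X F p (q (cj m i)))) := by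
  have h1 : LamQ i (S (1 : A)) = 0 := lamQ_sq_one hp5 i
  have h2 : ∀ j, j ≠ cj m i → LamQ i (S (X F p (q j))) = 0 := fun j hj => lamQ_sq_ne hp5 hj
  rw [LamQ] at h1
  simp only [LamQ] at h2
  rw [LamQ, LamQ, LamQ, corr_apply, map_sub, map_sub, map_smul, h1, map_sum,
    Finset.sum_eq_single (cj m i)]
  · rw [map_smul, smul_eq_mul, smul_eq_mul, mul_zero, sub_zero]
  · intro j _ hj
    rw [map_smul, h2 j hj, smul_zero]
  · intro h
    exact absurd (Finset.mem_univ _) h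

theorem lam0_corr (hp5 : 5 ≤ p) (ψ : A →ₗ[F] A →ₗ[F] A) (c : F × (Fin (2 * m) → F)) :
    Lam0 (corr ψ c) = Lam0 ψ - c.1 * Lam0 (S (1 : A)) := by
  have h2 : ∀ j, Lam0 (S (X F p (q j) : A)) = 0 := fun j => lam0_sq_q hp5 j
  simp only [Lam0] at h2
  rw [Lam0, Lam0, Lam0, corr_apply, map_sub, map_sub, map_smul, map_sum,
    Finset.sum_eq_zero (fun j _ => by rw [map_smul, h2 j, smul_zero]), sub_zero, smul_eq_mul]

theorem corr_self {V : Submodule F A} {ψ : A →ₗ[F] A →ₗ[F] A} {c : F × (Fin (2 * m) → F)}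
    (h1 : CocOn br V ψ) (h2 : CocOn br V (S 1)) (h3 : ∀ i, CocOn br V (S (X F p (q i)))) :
    CocOn br V (corr ψ c) := by
  have hsub : ∀ {α β : A →ₗ[F] A →ₗ[F] A} (t : F), CocOn br V α → CocOn br V β →
      CocOn br V (α - t • β) := by
    intro α β t ha hb
    refine ⟨fun x hx => ?_, fun x hx y hy z hz => ?_⟩
    · rw [LinearMap.sub_apply, LinearMap.sub_apply, LinearMap.smul_apply, LinearMap.smul_apply,
        ha.self x hx, hb.self x hx, smul_zero, sub_zero]
    · have e1 := ha.coc x hx y hy z hz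
      have e2 := hb.coc x hx y hy z hz
      simp only [LinearMap.sub_apply, LinearMap.smul_apply, map_sub, map_smul]
      have e3 := congrArg (t • ·) e2
      simp only [smul_sub, smul_add, smul_zero] at e3
      linear_combination (exp := 1) e1 - e3
  have key : ∀ s : Finset (Fin (2 * m)),
      CocOn br V (ψ - c.1 • S 1 - ∑ i ∈ s, c.2 i • S (X F p (q i))) := by
    classical
    intro s
    induction s using Finset.induction_on with
    | empty => rw [Finset.sum_empty, sub_zero]; exact hsub _ h1 h2
    | insert i s hi ih =>
      rw [Finset.sum_insert hi, add_comm (c.2 i • _), ← sub_sub]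
      exact hsub _ ih (h3 i)
  exact key _

theorem S_coc (hp5 : 5 ≤ p) (z : A) : CocOn br (Ksub F p m) (S z) := by
  obtain ⟨-, -, h1, h2⟩ := sqE_coc hp5 z
  simp only [sqE_eq, ← br_def] at h1 h2
  exact ⟨h1, h2⟩

theorem S_mem (hp5 : 5 ≤ p) (z : A) : ∀ x ∈ Ksub F p m, ∀ y ∈ Ksub F p m,
    S z x y ∈ Ksub F p m := by
  obtain ⟨-, h, -⟩ := sqE_coc hp5 z
  simp only [sqE_eq] at h
  exact h

/-- The functionals `Λ` only see the values of a cochain on `K(n)`, hence kill coboundaries. -/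
theorem lam_of_exact (hp5 : 5 ≤ p) (hm : 1 ≤ m) {ψ : A →ₗ[F] A →ₗ[F] A} {φ : A →ₗ[F] A}
    (h : ∀ x ∈ Ksub F p m, ∀ y ∈ Ksub F p m, ψ x y = dl br φ x y) :
    (∀ i, LamQ i ψ = 0) ∧ Lam0 ψ = 0 := by
  constructor
  · intro i
    have r1 : Reg p (W i (0 : Vec m) 2 0 0) := regW0 hp5 (by omega)
    have r2 : Reg p (W i (0 : Vec m) (p - 1) 1 0) := regW0 hp5 (by omega)
    have := lamQ_dl hp5 i φ
    rw [LamQ] at this ⊢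
    rwa [h _ (reg_mem r1) _ (reg_mem r2)]
  · have r1 : Reg p (W (⟨0, by omega⟩ : Fin (2 * m)) (0 : Vec m) 0 0 2) := regW0 hp5 (by omega)
    have r2 : Reg p (W (⟨0, by omega⟩ : Fin (2 * m)) (0 : Vec m) 0 0 (p - 1)) :=
      regW0 hp5 (by omega)
    rw [W_en] at r1 r2
    have := lam0_dl hp5 hm φ
    rw [Lam0] at this ⊢
    rwa [h _ (reg_mem r1) _ (reg_mem r2)]
end

end KH

/-- Theorem 1.3: `H²(K(n), K(n)) = ⊕_{i=1}^{2m} ⟨Sq(x_i)⟩_F ⊕ ⟨Sq(1)⟩_F` for the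
contact algebra `K(n)`, `n = 2m+1 ≥ 3`.  Each `Sq(x_i)` and `Sq(1)` is a 2-cocycle
with adjoint coefficients, and every 2-cocycle differs from a unique combination
`c_0·Sq(1) + ∑ c_i·Sq(x_i)` by a 2-coboundary. -/
theorem contact_second_cohomology
    (p m : ℕ) (hp : p.Prime) (hp5 : 5 ≤ p) (hm : 1 ≤ m)
    (F : Type*) [Field F] [IsAlgClosed F] [CharP F p] :
    ((∀ i : Fin (2 * m),
        IsCocycleOn F (Ksub F p m) (Kbr F p m)
          (SqE F p (Kbr F p m) (xpow F p (2 * m + 1) (Pi.single i.castSucc 1))))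
      ∧ IsCocycleOn F (Ksub F p m) (Kbr F p m)
          (SqE F p (Kbr F p m) (1 : TruncP F p (2 * m + 1))))
    ∧ ∀ ψ : TruncP F p (2 * m + 1) → TruncP F p (2 * m + 1) → TruncP F p (2 * m + 1),
        IsCocycleOn F (Ksub F p m) (Kbr F p m) ψ →
        ∃! c : F × (Fin (2 * m) → F),
          IsCoboundaryOn F (Ksub F p m) (Kbr F p m)
            (fun x y => ψ x y
              - c.1 • SqE F p (Kbr F p m) (1 : TruncP F p (2 * m + 1)) x y
              - ∑ i, c.2 i •
                  SqE F p (Kbr F p m) (xpow F p (2 * m + 1) (Pi.single i.castSucc 1)) x y) := by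
  haveI : Fact p.Prime := ⟨hp⟩
  refine ⟨⟨fun i => KH.sqE_coc hp5 _, KH.sqE_coc hp5 _⟩, fun ψ hψ => ?_⟩
  obtain ⟨⟨hb1, hb2⟩, hV, hs, hc⟩ := hψ
  obtain ⟨Ψ, hΨ⟩ : ∃ Ψ : TruncP F p (2 * m + 1) →ₗ[F] TruncP F p (2 * m + 1) →ₗ[F]
      TruncP F p (2 * m + 1), ∀ x y, Ψ x y = ψ x y :=
    ⟨LinearMap.mk₂ F ψ (fun x x' y => (hb2 y).map_add x x') (fun t x y => (hb2 y).map_smul t x)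
      (fun x y y' => (hb1 x).map_add y y') (fun t x y => (hb1 x).map_smul t y), fun _ _ => rfl⟩
  have hcoc : KH.CocOn KH.br (Ksub F p m) Ψ :=
    ⟨fun x hx => by rw [hΨ, hs x hx], fun x hx y hy z hz => by
      simp only [hΨ]
      exact hc x hx y hy z hz⟩
  -- In terms of the bilinear map `Ψ`, the corrected cochain is `corr Ψ c`.
  have hcorr : ∀ (c : F × (Fin (2 * m) → F)) (x y : TruncP F p (2 * m + 1)),
      ψ x y - c.1 • SqE F p (Kbr F p m) (1 : TruncP F p (2 * m + 1)) x y
        - ∑ i, c.2 i • SqE F p (Kbr F p m) (xpow F p (2 * m + 1) (Pi.single i.castSucc 1)) x y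
      = KH.corr Ψ c x y := by
    intro c x y
    rw [KH.corr_apply, hΨ]
    simp only [KH.sqE_eq, ← KH.X_q]
    rfl
  simp only [hcorr]
  have hn0 : KH.Lam0 (KH.S (1 : TruncP F p (2 * m + 1))) ≠ 0 := KH.lam0_sq_one hp5 hm
  have hnQ : ∀ i, KH.LamQ i (KH.S (KH.X F p (KH.q (cj m i)))) ≠ 0 := fun i => KH.lamQ_sq hp5 i
  refine ⟨(KH.Lam0 Ψ / KH.Lam0 (KH.S (1 : TruncP F p (2 * m + 1))), fun j => KH.LamQ (cj m j) Ψ /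
    KH.LamQ (cj m j) (KH.S (KH.X F p (KH.q j)))), ?_, ?_⟩
  · dsimp only
    obtain ⟨c, hcd⟩ : ∃ c : F × (Fin (2 * m) → F), c = (KH.Lam0 Ψ / KH.Lam0 (KH.S (1 : TruncP F p (2 * m + 1))), fun j =>
      KH.LamQ (cj m j) Ψ / KH.LamQ (cj m j) (KH.S (KH.X F p (KH.q j)))) := ⟨_, rfl⟩
    rw [← hcd]
    obtain ⟨φ, hφ⟩ := KH.exact_of_lam hp5 hm
      (KH.corr_self (c := c) hcoc (KH.S_coc hp5 1) fun i => KH.S_coc hp5 _)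
      (fun i => by
        rw [KH.lamQ_corr hp5, hcd]
        dsimp only
        rw [KH.cj_cj, div_mul_cancel₀ _ (hnQ i), sub_self])
      (by
        rw [KH.lam0_corr hp5, hcd]
        dsimp only
        rw [div_mul_cancel₀ _ hn0, sub_self])
    refine ⟨φ, KH.prim_mem hp5 hm (fun x hx y hy => ?_) hφ, fun x hx y hy => ?_⟩
    · rw [KH.corr_apply, hΨ]
      exact Submodule.sub_mem _ (Submodule.sub_mem _ (hV x hx y hy)
        (Submodule.smul_mem _ _ (KH.S_mem hp5 _ x hx y hy)))
        (Submodule.sum_mem _ fun i _ => Submodule.smul_mem _ _ (KH.S_mem hp5 _ x hx y hy))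
    · exact (hφ x hx y hy).trans (KH.dl_apply ..)
  · rintro c ⟨φ, -, hφ⟩
    obtain ⟨hQ, h0⟩ := KH.lam_of_exact hp5 hm (ψ := KH.corr Ψ c) (φ := φ) fun x hx y hy => by
      rw [KH.dl_apply]
      exact hφ x hx y hy
    rw [KH.lam0_corr hp5, sub_eq_zero] at h0
    refine Prod.ext ((eq_div_iff hn0).2 h0.symm) (funext fun j => ?_)
    have := hQ (cj m j)
    rw [KH.lamQ_corr hp5, sub_eq_zero, KH.cj_cj] at this
    have hj := hnQ (cj m j)
    rw [KH.cj_cj] at hj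
    exact (eq_div_iff hj).2 this.symm
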